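/- Let M = #^g (S¹ × S²) be the connected sum of g copies of S¹ × S², and let X = S¹ × M. Then every trisection of X has genus at least 3g+1, and in any (g₀; k₁, k₂, k₃)-trisection of X each kᵢ is at least g+1. Consequently the (3g+1; g+1)-trisection of X obtained from the trivial monodromy fixing the standard genus g Heegaard splitting of M is of minimal genus, and the bound 3g+1 in the main theorem cannot be improved in general. -/

import Mathlib

/-!
Notation: `FF g` is a disc with `g` holes, and all model spaces fibre over it with fibres which
collapse over the boundary: intervals for the handlebody of dimension three (`Hb3`), discs for the one
of dimension four (`Hb4`), pairs of points for the surface (`Two`) and circles for `#^g S¹ × S²`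
(`Circ`, written `MM g`). The manifold `X` becomes the compact subset `XX g` of a Euclidean space.

Lower bound. Cohomology with coefficients `ℤ/2` is set up as Alexander–Spanier cohomology of compact
subsets of metric spaces, which satisfies homotopy invariance and Mayer–Vietoris for arbitrary compact
pieces; no collars are needed, and a trisection is only assumed to be a topological decomposition. Let
`Y` be one sector and `W` the union of the other two. By Mayer–Vietoris `H³(W) = 0`. If a class
`α ∈ H¹(X)` restricts to zero on `Y`, then `α ∪ β = 0` for every `β ∈ H³(X)` (`cup_bound`). Descending
along the decompositions `XX g → MM g → Two → boundary of FF g` turns this into a statement about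
`α` restricted to the boundary circles of the planar region (`circ_step`, `sigma_step`, `bd_step`),
and there it forces `α = 0` (`Shape.no_ext`, `Shape.no_ext_O`). Hence `g + 1` independent classes of
`H¹(X)` stay independent in `H¹(Y)`, whose dimension is `kᵢ` (`lower_one`). Additivity of the Euler
characteristic and `χ(X) = 0` give `g₀ = k₁ + k₂ + k₃ - 2` (`genus_formula`), so `3 g + 1 ≤ g₀`.

Existence. Replace `FF g` by the homeomorphic comb `GG g`, a rectangle with `g` bands, so that `X` is a
family `XC g` of circles over `S¹ × GG g`, collapsed over the boundary. Away from the bands the circle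
fibre is cut into three arcs of equal length. Over the bands near the angles `0`, `1/3`, `2/3` of the
base circle one of the three arcs is shrunk to a point, the three arcs taking turns; the function `lam`
describes this, and a rotation by a third of a turn in both circles permutes the sectors cyclically. A
sector is a pinched product of an interval with a solid torus with `g` handles (`S0_pin`). The
intersection of two sectors is a graph over the circle times the rectangle with the bands over two arcs
of the circle, together with a second copy of the bands over the arc where the third sector is
shrunk: it is a solid torus with `2 g + g` one-handles, attached to its front face (`H_NF`). These are
identified with the standard models as follows. A pair of a solid and its boundary is in normal form
(`NF`) if it is a solid torus with one-handles attached along disjoint affine patches, one reversing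
and one preserving the orientation for each handle. Any two such configurations of patches are related
by a homeomorphism of the plane with compact support in the chart (`Good.rel`), because the space of
configurations with the given orientations is connected and nearby configurations are related by a
small perturbation of the identity. So the pair only depends on the number of handles, and the
standard handlebody is also in normal form (`std_NF`). Pinched products over homeomorphic pairs are
homeomorphic (`PH.pin`), which takes care of the sectors, and the boundary of the pair takes care of
the triple intersection.
-/


/-!
Formalization framework for trisections of smooth 4–manifolds (Gay–Kirby) and
Heegaard splittings of closed 3–manifolds, following "Trisections of 3–manifold
bundles over S¹".

Since Mathlib does not yet have handlebodies, trisections, etc., we set up concrete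
topological models:

* `chainSet n g` is a "chain" of `g` pairwise tangent unit circles (together with a base
  point) lying in the first two coordinates of `ℝⁿ`; a closed regular neighborhood of it
  (of radius `1/2`) is a genus `g` handlebody.
* `handlebodySet n g` is this closed neighborhood: for `n = 3` it is a model of the
  orientable genus `g` handlebody `♮^g S¹ × D²`, and for `n = 4` of `♮^g S¹ × B³`.
* `surfaceSet g`, the boundary of the 3–dimensional model, is a model of the closed
  orientable genus `g` surface, and `sumS1S2Set g`, the boundary of the 4–dimensional
  model, is a model of `#^g S¹ × S²`.

"Diffeomorphic" is rendered as "homeomorphic" (`≃ₜ`), as Mathlib has no workable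
notion of diffeomorphism for these spaces; smoothness of the manifolds themselves is
recorded via `SmoothManifoldWithCorners` typeclass assumptions.
-/

open Metric Set

noncomputable section

/-- The chain of `g` pairwise tangent unit circles in the first two coordinates of `ℝⁿ`
(together with the origin, which lies on the first circle, so that the set is nonempty
also for `g = 0`). -/
def chainSet (n : ℕ) [NeZero n] (g : ℕ) : Set (EuclideanSpace ℝ (Fin n)) :=
  {p | ∀ j, p j = 0} ∪
    ⋃ i ∈ Finset.range g,
      {p | (p 0 - (2 * (i : ℝ) + 1)) ^ 2 + p 1 ^ 2 = 1 ∧ ∀ j : Fin n, 2 ≤ (j : ℕ) → p j = 0}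

/-- Model of the `n`–dimensional orientable handlebody of genus `g`: the closed
`1/2`–neighborhood of a chain of `g` circles in `ℝⁿ`.  For `n = 3` this is
`♮^g S¹ × D²`, and for `n = 4` it is `♮^g S¹ × B³` (for `g = 0`, a ball). -/
def handlebodySet (n : ℕ) [NeZero n] (g : ℕ) : Set (EuclideanSpace ℝ (Fin n)) :=
  {p | infDist p (chainSet n g) ≤ 1 / 2}

/-- Model of the closed orientable surface of genus `g`: the boundary of the genus `g`
handlebody in `ℝ³`. -/
def surfaceSet (g : ℕ) : Set (EuclideanSpace ℝ (Fin 3)) :=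
  frontier (handlebodySet 3 g)

/-- Model of the connected sum `#^g (S¹ × S²)`: the boundary of the 4–dimensional
handlebody `♮^g S¹ × B³` in `ℝ⁴`. -/
def sumS1S2Set (g : ℕ) : Set (EuclideanSpace ℝ (Fin 4)) :=
  frontier (handlebodySet 4 g)

/-- The closed unit ball in `ℝⁿ`. -/
def ballModel (n : ℕ) : Set (EuclideanSpace ℝ (Fin n)) := Metric.closedBall 0 1

/-- The closed unit 2–disk. -/
def diskModel : Set (EuclideanSpace ℝ (Fin 2)) := Metric.closedBall 0 1

/-- The unit circle. -/
def circleModel : Set (EuclideanSpace ℝ (Fin 2)) := Metric.sphere 0 1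

/-- The unit interval `[0,1] ⊆ ℝ`. -/
def intervalModel : Set ℝ := Set.Icc 0 1

/-- The closed annulus `S¹ × [0,1]`. -/
abbrev annulusModel : Type := ↥circleModel × ↥intervalModel

/-- A `(g₀; k₁, k₂, k₃)`–trisection of a closed 4–manifold `X`: a decomposition
`X = X₁ ∪ X₂ ∪ X₃` where each `Xᵢ` is a 4–dimensional handlebody `♮^{kᵢ} S¹ × B³`, each
pairwise intersection is a 3–dimensional handlebody of genus `g₀`, and the triple
intersection is a closed genus `g₀` surface. -/
structure Trisection (X : Type*) [TopologicalSpace X] (g k1 k2 k3 : ℕ) where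
  X1 : Set X
  X2 : Set X
  X3 : Set X
  cover : X1 ∪ X2 ∪ X3 = univ
  piece1 : Nonempty (X1 ≃ₜ handlebodySet 4 k1)
  piece2 : Nonempty (X2 ≃ₜ handlebodySet 4 k2)
  piece3 : Nonempty (X3 ≃ₜ handlebodySet 4 k3)
  pair12 : Nonempty ((X1 ∩ X2 : Set X) ≃ₜ handlebodySet 3 g)
  pair23 : Nonempty ((X2 ∩ X3 : Set X) ≃ₜ handlebodySet 3 g)
  pair13 : Nonempty ((X1 ∩ X3 : Set X) ≃ₜ handlebodySet 3 g)
  triple : Nonempty ((X1 ∩ X2 ∩ X3 : Set X) ≃ₜ surfaceSet g)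

/-- A genus `g` Heegaard splitting of a closed 3–manifold `M`: a decomposition
`M = H₁ ∪_Σ H₂` into two genus `g` handlebodies meeting along the closed genus `g`
surface `Σ = H₁ ∩ H₂`. -/
structure HeegaardSplitting (M : Type*) [TopologicalSpace M] (g : ℕ) where
  H1 : Set M
  H2 : Set M
  cover : H1 ∪ H2 = univ
  handle1 : Nonempty (H1 ≃ₜ handlebodySet 3 g)
  handle2 : Nonempty (H2 ≃ₜ handlebodySet 3 g)
  surface : Nonempty ((H1 ∩ H2 : Set M) ≃ₜ surfaceSet g)

/-- The gluing relation for the mapping torus: `(1, x) ∼ (0, φ x)`. -/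
def MappingTorusRel (M : Type*) [TopologicalSpace M] (φ : M ≃ₜ M)
    (p q : ↥(Set.Icc (0 : ℝ) 1) × M) : Prop :=
  (p.1 : ℝ) = 1 ∧ (q.1 : ℝ) = 0 ∧ q.2 = φ p.2

/-- The mapping torus `(I × M) / ((1, x) ∼ (0, φ x))`: the total space of the
fiber bundle over `S¹` with fiber `M` and monodromy `φ`. -/
def MappingTorus (M : Type*) [TopologicalSpace M] (φ : M ≃ₜ M) : Type _ :=
  Quot (MappingTorusRel M φ)

instance (M : Type*) [TopologicalSpace M] (φ : M ≃ₜ M) :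
    TopologicalSpace (MappingTorus M φ) :=
  inferInstanceAs (TopologicalSpace (Quot (MappingTorusRel M φ)))

/-- `φ` preserves the Heegaard splitting: `φ(H₁) = H₁` and `φ(H₂) = H₂`. -/
def PreservesSplitting {M : Type*} [TopologicalSpace M] {g : ℕ}
    (φ : M ≃ₜ M) (H : HeegaardSplitting M g) : Prop :=
  ⇑φ '' H.H1 = H.H1 ∧ ⇑φ '' H.H2 = H.H2

/-- `φ` flips the Heegaard splitting: `φ(H₁) = H₂` and `φ(H₂) = H₁`. -/
def FlipsSplitting {M : Type*} [TopologicalSpace M] {g : ℕ}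
    (φ : M ≃ₜ M) (H : HeegaardSplitting M g) : Prop :=
  ⇑φ '' H.H1 = H.H2 ∧ ⇑φ '' H.H2 = H.H1

set_option linter.unusedSectionVars false
namespace AS
universe u v w

local notation "ℝ²" => ℝ × ℝ
local notation "𝕋" => UnitAddCircle
local notation "𝕀" => Icc (0 : ℝ) 1

/-- Cochains with `ℤ/2` coefficients: functions on finite lists of points.  Only the values on lists
of one length matter in each degree; lists of length `m` are the simplices of dimension `m - 1`, so
that the empty list provides the augmentation and all cohomology below is reduced. -/
abbrev Coch (E : Type u) := List E → ZMod 2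

variable {E : Type u} {E' : Type v}

lemma two_eq (x : ZMod 2) : x + x = 0 := CharTwo.add_self_eq_zero x

lemma add_eq_zero {V : Type*} [AddCommGroup V] [Module (ZMod 2) V] {x y : V} :
    x + y = 0 ↔ x = y := by
  have h : y + y = 0 := by
    rw [← two_smul (ZMod 2) y, show (2 : ZMod 2) = 0 from rfl, zero_smul]
  grind

/-- Evaluate a cochain on lists with a fixed first entry. -/
def sh (a : E) (φ : Coch E) : Coch E := fun l => φ (a :: l)

/-- Recursion behind the coboundary operator. -/
def dAux : List E → Coch E → ZMod 2
  | [], _ => 0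
  | a :: l, φ => φ l + dAux l (sh a φ)

/-- The coboundary operator: the sum of the values on all faces. -/
def d (φ : Coch E) : Coch E := fun l => dAux l φ

@[simp] theorem d_nil (φ : Coch E) : d φ [] = 0 := rfl
lemma d_cons (φ : Coch E) (a : E) (l : List E) : d φ (a :: l) = φ l + d (sh a φ) l := rfl

lemma sh_d (φ : Coch E) (a : E) : sh a (d φ) = φ + d (sh a φ) := rfl

lemma sh_add (φ ψ : Coch E) (a : E) : sh a (φ + ψ) = sh a φ + sh a ψ := rfl
lemma d_add (φ ψ : Coch E) : d (φ + ψ) = d φ + d ψ := by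
  funext l
  induction l generalizing φ ψ with
  | nil => simp
  | cons a l ih =>
    have := ih (sh a φ) (sh a ψ)
    simp only [d_cons, Pi.add_apply, sh_add] at this ⊢
    rw [this]; ring

lemma d_smul (c : ZMod 2) (φ : Coch E) : d (c • φ) = c • d φ := by
  funext l
  induction l generalizing φ with
  | nil => simp
  | cons a l ih =>
    have := ih (sh a φ)
    simp only [d_cons, Pi.smul_apply, smul_eq_mul] at this ⊢
    rw [show sh a (c • φ) = c • sh a φ from rfl, this]; ring

lemma d_d (φ : Coch E) : d (d φ) = 0 := by
  funext l
  induction l generalizing φ with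
  | nil => simp
  | cons a l ih =>
    rw [d_cons, sh_d, d_add, Pi.add_apply, ih (sh a φ), Pi.zero_apply, add_zero, two_eq]
    rfl

/-- The coboundary as a linear map. -/
def dL : Coch E →ₗ[ZMod 2] Coch E where
  toFun := d
  map_add' := d_add
  map_smul' := d_smul

lemma d_zero : d (0 : Coch E) = 0 := (dL (E := E)).map_zero

lemma d_map (f : E → E') (φ : Coch E') (l : List E) :
    d (fun l => φ (l.map f)) l = d φ (l.map f) := by
  induction l generalizing φ with
  | nil => simp
  | cons a l ih => simp only [d_cons, List.map_cons]; rw [← ih (sh (f a) φ)]; rfl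

lemma d_eq_zero {φ : Coch E} {l : List E}
    (h : ∀ l' : List E, l'.Sublist l → l'.length + 1 = l.length → φ l' = 0) : d φ l = 0 := by
  induction l generalizing φ with
  | nil => simp
  | cons a l ih =>
    rw [d_cons, h l (List.sublist_cons_self a l) (by simp), zero_add]
    exact ih fun l' hl' hlen => h (a :: l') (hl'.cons_cons a) (by simp [hlen])

/-- Recursion behind the prism operator. -/
def prAux (f g : E → E') : List E → Coch E' → ZMod 2
  | [], _ => 0
  | a :: l, φ => φ (f a :: g a :: l.map g) + prAux f g l (sh (f a) φ)

/-- The prism operator of two maps. -/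
def pr (f g : E → E') (φ : Coch E') : Coch E := fun l => prAux f g l φ

lemma pr_cons (f g : E → E') (φ : Coch E') (a : E) (l : List E) :
    pr f g φ (a :: l) = φ (f a :: g a :: l.map g) + pr f g (sh (f a) φ) l := rfl

lemma pr_add (f g : E → E') (φ ψ : Coch E') : pr f g (φ + ψ) = pr f g φ + pr f g ψ := by
  funext l
  induction l generalizing φ ψ with
  | nil => simp [pr, prAux]
  | cons a l ih =>
    have := ih (sh (f a) φ) (sh (f a) ψ)
    simp only [pr_cons, Pi.add_apply, sh_add] at this ⊢
    rw [this]; ring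

/-- The prism operator is a chain homotopy between the two pull-backs. -/
lemma d_pr (f g : E → E') (φ : Coch E') (l : List E) :
    d (pr f g φ) l + pr f g (d φ) l = φ (l.map f) + φ (l.map g) := by
  induction l generalizing φ with
  | nil => simp [pr, prAux, two_eq]
  | cons a l ih =>
    have h1 : sh a (pr f g φ) = (fun l => sh (g a) (sh (f a) φ) (l.map g)) + pr f g (sh (f a) φ) :=
      rfl
    rw [d_cons, h1, d_add, Pi.add_apply, d_map, pr_cons, sh_d, pr_add, Pi.add_apply, d_cons, d_cons]
    have e1 : sh (f a) φ (l.map f) = φ (f a :: l.map f) := rfl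
    grind

lemma pr_eq_zero {f g : E → E'} {φ : Coch E'} {l : List E}
    (h : ∀ l' : List E', l'.length = l.length + 1 → (∀ x ∈ l', ∃ a ∈ l, x = f a ∨ x = g a) →
      φ l' = 0) : pr f g φ l = 0 := by
  induction l generalizing φ with
  | nil => rfl
  | cons a l ih =>
    rw [pr_cons, h, zero_add]
    · refine ih fun l' hl' hx => h (f a :: l') (by simp [hl']) ?_
      grind
    · simp
    · grind

/-! ### Cohomology of subsets of a metric space -/

variable [MetricSpace E] [MetricSpace E']

/-- Lists of length `m` in `A` of diameter less than `ε`. -/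
structure Sm (A : Set E) (ε : ℝ) (m : ℕ) (l : List E) : Prop where
  len : l.length = m
  mem : ∀ x ∈ l, x ∈ A
  close : ∀ x ∈ l, ∀ y ∈ l, dist x y < ε

/-- Cochains vanishing on all sufficiently small `m`-lists of `A`. -/
def L (A : Set E) (m : ℕ) : Submodule (ZMod 2) (Coch E) where
  carrier := {φ | ∃ ε > 0, ∀ l, Sm A ε m l → φ l = 0}
  add_mem' := by
    rintro φ ψ ⟨ε, hε, h⟩ ⟨ε', hε', h'⟩
    refine ⟨min ε ε', lt_min hε hε', fun l hl => ?_⟩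
    rw [Pi.add_apply, h l ⟨hl.len, hl.mem, fun x hx y hy => (hl.close x hx y hy).trans_le
      (min_le_left _ _)⟩, h' l ⟨hl.len, hl.mem, fun x hx y hy => (hl.close x hx y hy).trans_le
      (min_le_right _ _)⟩, add_zero]
  zero_mem' := ⟨1, one_pos, fun _ _ => rfl⟩
  smul_mem' := by
    rintro c φ ⟨ε, hε, h⟩
    exact ⟨ε, hε, fun l hl => by simp [h l hl]⟩

lemma L_mono {A B : Set E} (h : A ⊆ B) (m : ℕ) : L B m ≤ L A m := by
  rintro φ ⟨ε, hε, hφ⟩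
  exact ⟨ε, hε, fun l hl => hφ l ⟨hl.len, fun x hx => h (hl.mem x hx), hl.close⟩⟩

lemma d_mem_L {A : Set E} {m : ℕ} {φ : Coch E} (h : φ ∈ L A m) : d φ ∈ L A (m + 1) := by
  obtain ⟨ε, hε, h⟩ := h
  refine ⟨ε, hε, fun l hl => d_eq_zero fun l' hs hlen => h l' ⟨?_, ?_, ?_⟩⟩
  · have := hl.len; omega
  · exact fun x hx => hl.mem x (hs.subset hx)
  · exact fun x hx y hy => hl.close x (hs.subset hx) y (hs.subset hy)

/-- Cocycles. -/
def Z (A : Set E) (m : ℕ) : Submodule (ZMod 2) (Coch E) := (L A (m + 1)).comap dL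

/-- Coboundaries, up to cochains vanishing on small lists. -/
def B (A : Set E) : ℕ → Submodule (ZMod 2) (Coch E)
  | m => L A m ⊔ LinearMap.range (dL (E := E))

lemma mem_Z {A : Set E} {m : ℕ} {φ : Coch E} : φ ∈ Z A m ↔ d φ ∈ L A (m + 1) := Iff.rfl

lemma mem_B {A : Set E} {m : ℕ} {φ : Coch E} : φ ∈ B A m ↔ ∃ ψ, φ + d ψ ∈ L A m := by
  unfold B
  rw [Submodule.mem_sup]
  constructor
  · rintro ⟨y, hy, z, ⟨ψ, rfl⟩, rfl⟩
    refine ⟨ψ, ?_⟩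
    have : d ψ + d ψ = 0 := add_eq_zero.2 rfl
    change y + d ψ + d ψ ∈ _
    rwa [add_assoc, this, add_zero]
  · rintro ⟨ψ, h⟩
    refine ⟨_, h, d ψ, ⟨ψ, rfl⟩, ?_⟩
    grind

lemma L_le_B (A : Set E) (m : ℕ) : L A m ≤ B A m := le_sup_left
lemma d_mem_B (A : Set E) (m : ℕ) (φ : Coch E) : d φ ∈ B A m :=
  (le_sup_right : _ ≤ B A m) ⟨φ, rfl⟩

lemma B_le_Z (A : Set E) (m : ℕ) : B A m ≤ Z A m := by
  intro φ h
  obtain ⟨ψ, h⟩ := mem_B.1 h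
  have := d_mem_L h
  rwa [d_add, d_d, add_zero] at this

lemma Z_mono {A A' : Set E} (h : A ⊆ A') (m : ℕ) : Z A' m ≤ Z A m :=
  fun _ hφ => L_mono h _ hφ

lemma B_mono {A A' : Set E} (h : A ⊆ A') (m : ℕ) : B A' m ≤ B A m :=
  sup_le_sup_right (L_mono h m) _

/-- Reduced Alexander–Spanier cohomology in degree `m - 1`. -/
abbrev H (A : Set E) (m : ℕ) := Z A m ⧸ (B A m).submoduleOf (Z A m)

/-- Triviality of the cohomology group `H A m`. -/
def Triv (A : Set E) (m : ℕ) : Prop := Z A m ≤ B A m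

/-- Pull-back of cochains. -/
def pb (f : E → E') : Coch E' →ₗ[ZMod 2] Coch E where
  toFun φ := fun l => φ (l.map f)
  map_add' _ _ := rfl
  map_smul' _ _ := rfl

lemma pb_apply (f : E → E') (φ : Coch E') (l : List E) : pb f φ l = φ (l.map f) := rfl

lemma d_pb (f : E → E') (φ : Coch E') : d (pb f φ) = pb f (d φ) := funext fun l => d_map f φ l

lemma unif {A : Set E} (hA : IsCompact A) {f : E → E'} (hf : ContinuousOn f A) {ε : ℝ}
    (hε : 0 < ε) : ∃ δ > 0, ∀ x ∈ A, ∀ y ∈ A, dist x y < δ → dist (f x) (f y) < ε :=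
  Metric.uniformContinuousOn_iff.1 (hA.uniformContinuousOn_of_continuous hf) ε hε

lemma pb_L {A : Set E} {A' : Set E'} (hA : IsCompact A) {f : E → E'} (hf : ContinuousOn f A)
    (hm : MapsTo f A A') {m : ℕ} {φ : Coch E'} (h : φ ∈ L A' m) : pb f φ ∈ L A m := by
  obtain ⟨ε, hε, h⟩ := h
  obtain ⟨δ, hδ, hu⟩ := unif hA hf hε
  refine ⟨δ, hδ, fun l hl => h _ ⟨by simp [hl.len], ?_, ?_⟩⟩
  · intro x hx
    obtain ⟨a, ha, rfl⟩ := List.mem_map.1 hx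
    exact hm (hl.mem a ha)
  · intro x hx y hy
    obtain ⟨a, ha, rfl⟩ := List.mem_map.1 hx
    obtain ⟨b, hb, rfl⟩ := List.mem_map.1 hy
    exact hu a (hl.mem a ha) b (hl.mem b hb) (hl.close a ha b hb)

lemma pb_Z {A : Set E} {A' : Set E'} (hA : IsCompact A) {f : E → E'} (hf : ContinuousOn f A)
    (hm : MapsTo f A A') {m : ℕ} {φ : Coch E'} (h : φ ∈ Z A' m) : pb f φ ∈ Z A m := by
  rw [mem_Z, d_pb]; exact pb_L hA hf hm h

lemma pb_B {A : Set E} {A' : Set E'} (hA : IsCompact A) {f : E → E'} (hf : ContinuousOn f A)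
    (hm : MapsTo f A A') {m : ℕ} {φ : Coch E'} (h : φ ∈ B A' m) : pb f φ ∈ B A m := by
  obtain ⟨ψ, h⟩ := mem_B.1 h
  refine mem_B.2 ⟨pb f ψ, ?_⟩
  have := pb_L hA hf hm h
  rwa [map_add, ← d_pb] at this

/-- Uniformly close maps pull a cocycle back to cohomologous cocycles. -/
lemma close_maps {A : Set E} {A' : Set E'} (hA : IsCompact A) {m : ℕ} {φ : Coch E'}
    (hφ : φ ∈ Z A' m) : ∃ ε > 0, ∀ f g : E → E', ContinuousOn f A → ContinuousOn g A →
      MapsTo f A A' → MapsTo g A A' → (∀ x ∈ A, dist (f x) (g x) < ε) →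
      pb f φ + pb g φ ∈ B A m := by
  obtain ⟨ε, hε, h⟩ := hφ
  refine ⟨ε / 2, by positivity, fun f g hf hg hfA hgA hd => ?_⟩
  obtain ⟨δ₁, hδ₁, hu₁⟩ := unif hA hf (half_pos hε)
  obtain ⟨δ₂, hδ₂, hu₂⟩ := unif hA hg (half_pos hε)
  refine mem_B.2 ⟨pr f g φ, min δ₁ δ₂, lt_min hδ₁ hδ₂, fun l hl => ?_⟩
  have hp : pr f g (d φ) l = 0 := by
    refine pr_eq_zero fun l' hlen hmem => h l' ⟨by rw [hlen, hl.len], ?_, ?_⟩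
    · intro x hx
      obtain ⟨a, ha, rfl | rfl⟩ := hmem x hx
      · exact hfA (hl.mem a ha)
      · exact hgA (hl.mem a ha)
    · intro x hx y hy
      obtain ⟨a, ha, hxa⟩ := hmem x hx
      obtain ⟨b, hb, hyb⟩ := hmem y hy
      have hab := hl.close a ha b hb
      have h1 := hu₁ a (hl.mem a ha) b (hl.mem b hb) (hab.trans_le (min_le_left _ _))
      have h2 := hu₂ a (hl.mem a ha) b (hl.mem b hb) (hab.trans_le (min_le_right _ _))
      have h4 := hd b (hl.mem b hb)
      rcases hxa with rfl | rfl <;> rcases hyb with rfl | rfl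
      · linarith
      · linarith [dist_triangle (f a) (f b) (g b)]
      · linarith [dist_triangle (g a) (g b) (f b), dist_comm (f b) (g b)]
      · linarith
  have := d_pr f g φ l
  rw [hp, add_zero] at this
  rw [Pi.add_apply, Pi.add_apply, pb_apply, pb_apply, this]
  exact two_eq _

/-- Homotopy of maps `A → A'`, for maps defined on the ambient spaces. -/
def Htpy (A : Set E) (A' : Set E') (f g : E → E') : Prop :=
  ∃ F : ℝ → E → E', ContinuousOn (Function.uncurry F) (Icc 0 1 ×ˢ A) ∧
    (∀ t ∈ 𝕀, MapsTo (F t) A A') ∧ (∀ x ∈ A, F 0 x = f x) ∧ ∀ x ∈ A, F 1 x = g x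

lemma pb_congr {A : Set E} {f g : E → E'} (h : ∀ x ∈ A, f x = g x) (m : ℕ) (φ : Coch E') :
    pb f φ + pb g φ ∈ L A m := by
  refine ⟨1, one_pos, fun l hl => ?_⟩
  have : l.map f = l.map g := List.map_congr_left fun x hx => h x (hl.mem x hx)
  rw [Pi.add_apply, pb_apply, pb_apply, this, two_eq]

lemma sub_chain {V : Type*} [AddCommGroup V] [Module (ZMod 2) V] (S : Submodule (ZMod 2) V)
    {x y z : V} (h : x + y ∈ S) (h' : y + z ∈ S) : x + z ∈ S := by
  have := S.add_mem h h'
  have e : y + y = 0 := add_eq_zero.2 rfl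
  grind

lemma htpy {A : Set E} {A' : Set E'} (hA : IsCompact A) {f g : E → E'} (hfg : Htpy A A' f g)
    {m : ℕ} {φ : Coch E'} (hφ : φ ∈ Z A' m) : pb f φ + pb g φ ∈ B A m := by
  obtain ⟨F, hF, hm, h0, h1⟩ := hfg
  obtain ⟨ε, hε, hcl⟩ := close_maps hA hφ
  obtain ⟨δ, hδ, hu⟩ := unif (isCompact_Icc.prod hA) hF hε
  obtain ⟨n, hn⟩ := exists_nat_gt (1 / δ)
  have hn0 : (0 : ℝ) < n := (by positivity : (0 : ℝ) < 1 / δ).trans hn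
  have hc : ∀ t ∈ 𝕀, ContinuousOn (F t) A := fun t ht =>
    hF.comp (f := fun x => (t, x)) (by fun_prop) fun x hx => ⟨ht, hx⟩
  have key : ∀ i : ℕ, i ≤ n → pb (F 0) φ + pb (F (i / n)) φ ∈ B A m := by
    intro i
    induction i with
    | zero =>
      intro _
      have : pb (F 0) φ + pb (F ((0 : ℕ) / n)) φ = 0 := by
        rw [add_eq_zero]; simp
      rw [this]; exact zero_mem _
    | succ i ih =>
      intro hi
      refine sub_chain _ (ih (by omega)) ?_
      have hi1 : ((i : ℝ) + 1) ≤ n := by exact_mod_cast hi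
      have a1 : (i : ℝ) / n ∈ 𝕀 := ⟨by positivity, by rw [div_le_one hn0]; linarith⟩
      have a2 : ((i + 1 : ℕ) : ℝ) / n ∈ 𝕀 :=
        ⟨by positivity, by rw [div_le_one hn0]; push_cast; linarith⟩
      refine hcl _ _ (hc _ a1) (hc _ a2) (hm _ a1) (hm _ a2) fun x hx => ?_
      refine hu (_, x) ⟨a1, hx⟩ (_, x) ⟨a2, hx⟩ ?_
      rw [Prod.dist_eq, dist_self, max_eq_left dist_nonneg, Real.dist_eq]
      have : (i : ℝ) / n - ((i + 1 : ℕ) : ℝ) / n = - (1 / n) := by push_cast; field_simp; ring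
      rw [this, abs_neg, abs_of_pos (by positivity), div_lt_iff₀ hn0]
      rw [div_lt_iff₀ hδ] at hn
      linarith
  have h := key n le_rfl
  rw [div_self hn0.ne'] at h
  refine sub_chain _ (L_le_B _ _ (pb_congr (fun x hx => (h0 x hx).symm) m φ)) (sub_chain _ h ?_)
  exact L_le_B _ _ (pb_congr h1 m φ)

variable {E : Type u} {E' : Type v} [MetricSpace E] [MetricSpace E']

/-! ### Mayer–Vietoris -/

lemma straddle {P Q : Set E} (hP : IsCompact P) (hQ : IsCompact Q) {η : ℝ} (hη : 0 < η) :
    ∃ ε > 0, ∀ a ∈ P, ∀ b ∈ Q, dist a b < ε → ∃ y ∈ P ∩ Q, dist a y < η ∧ dist b y < η := by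
  let K : Set (E × E) := (P ×ˢ Q) ∩ ⋂ y ∈ P ∩ Q, {z | η ≤ dist z.1 y ∨ η ≤ dist z.2 y}
  have hK : IsCompact K := by
    refine (hP.prod hQ).inter_right (isClosed_biInter fun y _ => ?_)
    exact (isClosed_le continuous_const (continuous_fst.dist continuous_const)).union
      (isClosed_le continuous_const (continuous_snd.dist continuous_const))
  by_cases hne : K.Nonempty
  · obtain ⟨z, hz, hmin⟩ := hK.exists_isMinOn hne (f := fun z => dist z.1 z.2) (by fun_prop)
    refine ⟨dist z.1 z.2, ?_, fun a ha b hb hab => ?_⟩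
    · refine dist_pos.2 fun h => ?_
      have h2 : z.1 ∈ Q := h ▸ hz.1.2
      have h3 := mem_iInter₂.1 hz.2 z.1 ⟨hz.1.1, h2⟩
      rcases h3 with h3 | h3
      · rw [dist_self] at h3; linarith
      · rw [h, dist_self] at h3; linarith
    · by_contra! hcon
      have : (a, b) ∈ K := by
        refine ⟨⟨ha, hb⟩, mem_iInter₂.2 fun y hy => ?_⟩
        grind
      exact absurd (hmin this) (not_le.2 hab)
  · refine ⟨1, one_pos, fun a ha b hb _ => ?_⟩
    by_contra! hcon
    refine hne ⟨(a, b), ⟨ha, hb⟩, mem_iInter₂.2 fun y hy => ?_⟩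
    grind

/-- A cochain on `P ∪ Q` whose coboundary vanishes locally and which vanishes locally on `P` and on
`Q` is the coboundary of a cochain with the same vanishing property: push the lists which lie in
neither of the two sets into `P ∩ Q`. -/
lemma excise {P Q : Set E} (hP : IsCompact P) (hQ : IsCompact Q) {m : ℕ} {φ : Coch E}
    (h1 : φ ∈ L P m) (h2 : φ ∈ L Q m) (h3 : φ ∈ Z (P ∪ Q) m) :
    ∃ ψ, (∀ n, m = n + 1 → ψ ∈ L P n ∧ ψ ∈ L Q n) ∧ φ + d ψ ∈ L (P ∪ Q) m := by
  classical
  obtain ⟨ε₁, hε₁, h1⟩ := h1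
  obtain ⟨ε₂, hε₂, h2⟩ := h2
  obtain ⟨ε₃, hε₃, h3⟩ := h3
  obtain ⟨ε, hε, l1, l2, l3⟩ : ∃ ε > 0, ε ≤ ε₁ ∧ ε ≤ ε₂ ∧ ε ≤ ε₃ :=
    ⟨min ε₁ (min ε₂ ε₃), by positivity, by simp, by simp, by simp⟩
  obtain ⟨ε', hε', hst⟩ := straddle hP hQ (show 0 < ε / 4 by positivity)
  let r : E → E := fun x => if h : ∃ y ∈ P ∩ Q, dist x y < ε / 4 then h.choose else x
  have hr1 : ∀ x, r x ∈ P ∩ Q ∨ r x = x := by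
    intro x
    by_cases h : ∃ y ∈ P ∩ Q, dist x y < ε / 4
    · grind
    · grind
  have hr2 : ∀ x, dist x (r x) < ε / 4 := by
    intro x
    by_cases h : ∃ y ∈ P ∩ Q, dist x y < ε / 4
    · grind
    · simp only [r, dif_neg h, dist_self]; positivity
  have hr3 : ∀ x y, y ∈ P ∩ Q → dist x y < ε / 4 → r x ∈ P ∩ Q := by
    intro x y hy hxy
    have h : ∃ y ∈ P ∩ Q, dist x y < ε / 4 := ⟨y, hy, hxy⟩
    grind
  have hrP : MapsTo r P P := fun x hx => (hr1 x).elim (fun h => h.1) fun h => h.symm ▸ hx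
  have hrQ : MapsTo r Q Q := fun x hx => (hr1 x).elim (fun h => h.2) fun h => h.symm ▸ hx
  -- distances in the prism over a list of diameter at most `ε / 4`
  have hdist : ∀ l : List E, (∀ x ∈ l, ∀ y ∈ l, dist x y < ε / 4) → ∀ x y : E,
      (∃ a ∈ l, x = id a ∨ x = r a) → (∃ a ∈ l, y = id a ∨ y = r a) → dist x y < ε := by
    rintro l hl x y ⟨a, ha, hxa⟩ ⟨b, hb, hyb⟩
    have h1 := hl a ha b hb
    have h2 := hr2 a
    have h3 := hr2 b
    have hx : dist x a < ε / 4 := by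
      rcases hxa with rfl | rfl
      · simpa using hε
      · rwa [dist_comm]
    have hy : dist b y < ε / 4 := by
      rcases hyb with rfl | rfl
      · simpa using hε
      · exact h3
    linarith [dist_triangle x a y, dist_triangle a b y]
  refine ⟨pr id r φ, ?_, min ε' (ε / 4), by positivity, ?_⟩
  · rintro n rfl
    constructor
    · refine ⟨ε / 4, by positivity, fun l hl => pr_eq_zero fun l' hlen hmem => h1 l' ⟨?_, ?_, ?_⟩⟩
      · rw [hlen, hl.len]
      · intro x hx
        obtain ⟨a, ha, h | h⟩ := hmem x hx <;> rw [h]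
        · exact hl.mem a ha
        · exact hrP (hl.mem a ha)
      · exact fun x hx y hy => (hdist l hl.close x y (hmem x hx) (hmem y hy)).trans_le l1
    · refine ⟨ε / 4, by positivity, fun l hl => pr_eq_zero fun l' hlen hmem => h2 l' ⟨?_, ?_, ?_⟩⟩
      · rw [hlen, hl.len]
      · intro x hx
        obtain ⟨a, ha, h | h⟩ := hmem x hx <;> rw [h]
        · exact hl.mem a ha
        · exact hrQ (hl.mem a ha)
      · exact fun x hx y hy => (hdist l hl.close x y (hmem x hx) (hmem y hy)).trans_le l2
  · intro l hl
    have hcl : ∀ x ∈ l, ∀ y ∈ l, dist x y < ε / 4 := fun x hx y hy =>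
      (hl.close x hx y hy).trans_le (min_le_right _ _)
    have hcl' : ∀ x ∈ l, ∀ y ∈ l, dist x y < ε' := fun x hx y hy =>
      (hl.close x hx y hy).trans_le (min_le_left _ _)
    have hp : pr id r (d φ) l = 0 := by
      refine pr_eq_zero fun l' hlen hmem => h3 l' ⟨by rw [hlen, hl.len], ?_, ?_⟩
      · intro x hx
        obtain ⟨a, ha, h | h⟩ := hmem x hx <;> rw [h]
        · exact hl.mem a ha
        · exact (hl.mem a ha).elim (fun h => Or.inl (hrP h)) fun h => Or.inr (hrQ h)
      · exact fun x hx y hy => (hdist l hcl x y (hmem x hx) (hmem y hy)).trans_le l3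
    have hmapd : ∀ x ∈ l.map r, ∀ y ∈ l.map r, dist x y < ε := by
      intro x hx y hy
      obtain ⟨a, ha, rfl⟩ := List.mem_map.1 hx
      obtain ⟨b, hb, rfl⟩ := List.mem_map.1 hy
      exact hdist l hcl _ _ ⟨a, ha, Or.inr rfl⟩ ⟨b, hb, Or.inr rfl⟩
    have hrl : φ (l.map r) = 0 := by
      by_cases hlP : ∀ x ∈ l, x ∈ P
      · refine h1 _ ⟨by simp [hl.len], ?_, fun x hx y hy => (hmapd x hx y hy).trans_le l1⟩
        grind
      refine h2 _ ⟨by simp [hl.len], ?_, fun x hx y hy => (hmapd x hx y hy).trans_le l2⟩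
      intro x hx
      obtain ⟨a, ha, rfl⟩ := List.mem_map.1 hx
      rcases hl.mem a ha with haP | haQ
      · push Not at hlP
        obtain ⟨b, hb, hbP⟩ := hlP
        have hbQ : b ∈ Q := (hl.mem b hb).resolve_left hbP
        grind
      · exact hrQ haQ
    have := d_pr id r φ l
    rw [hp, add_zero, hrl, add_zero, List.map_id] at this
    rw [Pi.add_apply, this]
    exact two_eq _

/-- Cochains on `P` and `Q` which agree locally on the intersection glue. -/
lemma glue {P Q : Set E} {m : ℕ} {p q : Coch E} (h : p + q ∈ L (P ∩ Q) m) :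
    ∃ ψ : Coch E, ψ + p ∈ L P m ∧ ψ + q ∈ L Q m := by
  classical
  obtain ⟨ε, hε, h⟩ := h
  refine ⟨fun l => if ∀ x ∈ l, x ∈ P then p l else q l, ⟨1, one_pos, fun l hl => ?_⟩,
    ⟨ε, hε, fun l hl => ?_⟩⟩
  · simp only [Pi.add_apply, if_pos hl.mem, two_eq]
  · by_cases hP : ∀ x ∈ l, x ∈ P
    · simp only [Pi.add_apply, if_pos hP]
      exact h l ⟨hl.len, fun x hx => ⟨hP x hx, hl.mem x hx⟩, hl.close⟩
    · simp only [Pi.add_apply, if_neg hP, two_eq]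

/-- Existence of the connecting homomorphism. -/
lemma connect {P Q : Set E} (hP : IsCompact P) (hQ : IsCompact Q) {m : ℕ} {c : Coch E}
    (hc : c ∈ Z (P ∩ Q) m) : ∃ φ ∈ Z (P ∪ Q) (m + 1), φ + d c ∈ L P (m + 1) ∧ φ ∈ L Q (m + 1) := by
  obtain ⟨φ, h1, h2⟩ := glue (P := P) (Q := Q) (m := m + 1) (p := d c) (q := 0)
    (by rw [add_zero]; exact hc)
  rw [add_zero] at h2
  have d1 : d φ ∈ L P (m + 2) := by have := d_mem_L h1; rwa [d_add, d_d, add_zero] at this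
  have d2 : d φ ∈ L Q (m + 2) := d_mem_L h2
  obtain ⟨ψ, hψ, h⟩ := excise hP hQ d1 d2 (by rw [mem_Z, d_d]; exact zero_mem _)
  obtain ⟨h3, h4⟩ := hψ (m + 1) rfl
  refine ⟨φ + ψ, ?_, ?_, add_mem h2 h4⟩
  · rw [mem_Z, d_add]; exact h
  · rw [add_right_comm]; exact add_mem h1 h3

/-- Exactness of the Mayer–Vietoris sequence at `P ∪ Q`, in one direction. -/
lemma bound_of_glue {P Q : Set E} (hP : IsCompact P) (hQ : IsCompact Q) {m : ℕ} {φ p q : Coch E}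
    (hφ : φ ∈ Z (P ∪ Q) (m + 1)) (hp : φ + d p ∈ L P (m + 1)) (hq : φ + d q ∈ L Q (m + 1))
    (h : p + q ∈ L (P ∩ Q) m) : φ ∈ B (P ∪ Q) (m + 1) := by
  obtain ⟨ψ, h1, h2⟩ := glue h
  have e1 : φ + d ψ ∈ L P (m + 1) := by
    have h1 := d_mem_L h1
    rw [d_add, add_comm (d ψ) _] at h1
    exact sub_chain _ hp h1
  have e2 : φ + d ψ ∈ L Q (m + 1) := by
    have h2 := d_mem_L h2
    rw [d_add, add_comm (d ψ) _] at h2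
    exact sub_chain _ hq h2
  obtain ⟨χ, -, hχ⟩ := excise hP hQ e1 e2 (by
    rw [mem_Z, d_add, d_d, add_zero]; exact hφ)
  refine mem_B.2 ⟨ψ + χ, ?_⟩
  rwa [d_add, ← add_assoc]

lemma self_add (φ : Coch E) : φ + φ = 0 := add_eq_zero.2 rfl

lemma bound_of_split {P Q : Set E} (hP : IsCompact P) (hQ : IsCompact Q) {m : ℕ}
    {φ p q a b : Coch E}
    (hφ : φ ∈ Z (P ∪ Q) (m + 1)) (hp : φ + d p ∈ L P (m + 1)) (hq : φ + d q ∈ L Q (m + 1))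
    (ha : a ∈ Z P m) (hb : b ∈ Z Q m) (h : p + q + (a + b) ∈ B (P ∩ Q) m) :
    φ ∈ B (P ∪ Q) (m + 1) := by
  obtain ⟨ψ, h⟩ := mem_B.1 h
  refine bound_of_glue hP hQ (p := p + a + d ψ) (q := q + b) hφ ?_ ?_ ?_
  · rw [d_add, d_add, d_d, add_zero, ← add_assoc]; exact add_mem hp ha
  · rw [d_add, ← add_assoc]; exact add_mem hq hb
  · convert h using 1; abel

lemma Triv.union {P Q : Set E} (hP : IsCompact P) (hQ : IsCompact Q) {m : ℕ}
    (h1 : Triv P (m + 1)) (h2 : Triv Q (m + 1)) (h3 : Triv (P ∩ Q) m) : Triv (P ∪ Q) (m + 1) := by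
  intro φ hφ
  obtain ⟨p, hp⟩ := mem_B.1 (h1 (Z_mono subset_union_left _ hφ))
  obtain ⟨q, hq⟩ := mem_B.1 (h2 (Z_mono subset_union_right _ hφ))
  refine bound_of_split hP hQ (a := 0) (b := 0) hφ hp hq (zero_mem _) (zero_mem _) ?_
  rw [add_zero, add_zero]
  refine h3 ?_
  rw [mem_Z, d_add]
  have e1 := L_mono (inter_subset_left (t := Q)) _ hp
  rw [add_comm φ _] at e1
  exact sub_chain _ e1 (L_mono (inter_subset_right (s := P)) _ hq)

lemma Triv.zero {A : Set E} (h : A.Nonempty) : Triv A 0 := by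
  rintro φ ⟨ε, hε, hφ⟩
  obtain ⟨a, ha⟩ := h
  refine L_le_B _ _ ⟨1, one_pos, fun l hl => ?_⟩
  have hl : l = [] := List.length_eq_zero_iff.1 hl.len
  subst hl
  have : d φ [a] = 0 := hφ [a] ⟨rfl, by simpa using ha, by simpa using hε⟩
  simpa [d_cons] using this

lemma triv_empty (m : ℕ) : Triv (∅ : Set E) (m + 1) := by
  intro φ _
  refine L_le_B _ _ ⟨1, one_pos, fun l hl => ?_⟩
  rcases l with _ | ⟨a, l⟩
  · exact absurd hl.len (by simp)
  · exact absurd (hl.mem a (by simp)) (by simp)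

lemma triv_singleton (a : E) (m : ℕ) : Triv {a} m := by
  rintro φ ⟨ε, hε, hφ⟩
  refine mem_B.2 ⟨sh a φ, 1, one_pos, fun l hl => ?_⟩
  have := hφ (a :: l) ⟨by simp [hl.len], ?_, ?_⟩
  · exact this
  · intro x hx
    rcases List.mem_cons.1 hx with rfl | hx
    · rfl
    · exact hl.mem x hx
  · have h : ∀ x ∈ a :: l, x = a := by
      intro x hx
      rcases List.mem_cons.1 hx with rfl | hx
      · rfl
      · exact hl.mem x hx
    intro x hx y hy
    rw [h x hx, h y hy, dist_self]; exact hε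

/-- Acyclicity: all reduced cohomology vanishes. -/
def Acyc (A : Set E) : Prop := ∀ m, Triv A m

/-- Transfer of vanishing along a homotopy retraction `A → A' → A`. -/
lemma Triv.of_retract {A : Set E} {A' : Set E'} (hA : IsCompact A) (hA' : IsCompact A')
    {f : E → E'} {g : E' → E} (hf : ContinuousOn f A) (hg : ContinuousOn g A')
    (hfA : MapsTo f A A') (hgA : MapsTo g A' A) (hh : Htpy A A (g ∘ f) id) {m : ℕ}
    (h : Triv A' m) : Triv A m := by
  intro φ hφ
  have h1 := htpy hA hh hφ
  have h2 : pb (g ∘ f) φ = pb f (pb g φ) := by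
    funext l; simp [pb_apply]
  have h3 : pb (id : E → E) φ = φ := by funext l; simp [pb_apply]
  rw [h2, h3] at h1
  have := add_mem (pb_B hA hf hfA (h (pb_Z hA' hg hgA hφ))) h1
  rwa [← add_assoc, self_add, zero_add] at this

lemma Acyc.of_contract {A : Set E} (hA : IsCompact A) {a : E} (ha : a ∈ A)
    (h : Htpy A A (fun _ => a) id) : Acyc A := fun m =>
  Triv.of_retract (A' := {a}) hA isCompact_singleton (f := fun _ => a) (g := fun _ => a)
    continuousOn_const continuousOn_const (fun _ _ => rfl) (fun _ _ => ha) h (triv_singleton a m)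

lemma Htpy.of_eq {A : Set E} {A' : Set E'} {f g : E → E'} (hf : ContinuousOn f A)
    (hm : MapsTo f A A') (h : ∀ x ∈ A, f x = g x) : Htpy A A' f g :=
  ⟨fun _ => f, hf.comp (f := Prod.snd) (by fun_prop) fun _ h => h.2, fun _ _ => hm, fun _ _ => rfl, h⟩

variable {E : Type u} {E' : Type v} [MetricSpace E] [MetricSpace E']

/-- Two cocycles which agree locally on the intersection glue to a cocycle. -/
lemma extend {P Q : Set E} (hP : IsCompact P) (hQ : IsCompact Q) {m : ℕ} {p q : Coch E}
    (hp : p ∈ Z P m) (hq : q ∈ Z Q m) (h : p + q ∈ L (P ∩ Q) m) :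
    ∃ φ ∈ Z (P ∪ Q) m, φ + p ∈ L P m ∧ φ + q ∈ L Q m := by
  obtain ⟨φ, h1, h2⟩ := glue h
  have d1 : d φ ∈ L P (m + 1) := by
    have := d_mem_L h1; rw [d_add] at this
    exact (Submodule.add_mem_iff_left _ (mem_Z.1 hp)).1 this
  have d2 : d φ ∈ L Q (m + 1) := by
    have := d_mem_L h2; rw [d_add] at this
    exact (Submodule.add_mem_iff_left _ (mem_Z.1 hq)).1 this
  obtain ⟨ψ, hψ, h⟩ := excise hP hQ d1 d2 (by rw [mem_Z, d_d]; exact zero_mem _)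
  obtain ⟨h3, h4⟩ := hψ m rfl
  refine ⟨φ + ψ, ?_, ?_, ?_⟩
  · rw [mem_Z, d_add]; exact h
  · rw [add_right_comm]; exact add_mem h1 h3
  · rw [add_right_comm]; exact add_mem h2 h4

/-- If the image of `c` under the connecting homomorphism bounds, then `c` is a sum of restrictions
of cocycles on `P` and on `Q`. -/
lemma split_of_bound {P Q : Set E} {m : ℕ} {c φ : Coch E}
    (h1 : φ + d c ∈ L P (m + 1)) (h2 : φ ∈ L Q (m + 1)) (h : φ ∈ B (P ∪ Q) (m + 1)) :
    ∃ a ∈ Z P m, ∃ b ∈ Z Q m, a + b = c := by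
  obtain ⟨ψ, h⟩ := mem_B.1 h
  refine ⟨c + ψ, ?_, ψ, ?_, ?_⟩
  · rw [mem_Z, d_add]
    rw [add_comm φ _] at h1
    exact sub_chain _ h1 (L_mono subset_union_left _ h)
  · exact (Submodule.add_mem_iff_right _ h2).1 (L_mono subset_union_right _ h)
  · grind

lemma split_of_triv {P Q : Set E} (hP : IsCompact P) (hQ : IsCompact Q) {m : ℕ}
    (h : Triv (P ∪ Q) (m + 1)) {c : Coch E} (hc : c ∈ Z (P ∩ Q) m) :
    ∃ a ∈ Z P m, ∃ b ∈ Z Q m, a + b = c := by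
  obtain ⟨φ, h0, h1, h2⟩ := connect hP hQ hc
  exact split_of_bound h1 h2 (h h0)

/-! ### Products with one-dimensional classes -/

/-- The product of the function `a ↦ p [a]` with a cochain. -/
def wcup (p φ : Coch E) : Coch E
  | [] => 0
  | b :: l => p [b] * φ (b :: l)

/-- The cup product of a `1`-cochain with a cochain. -/
def cup (α φ : Coch E) : Coch E
  | [] => 0
  | a :: l => wcup (sh a α) φ l

lemma wcup_add (p φ ψ : Coch E) : wcup p (φ + ψ) = wcup p φ + wcup p ψ := by
  funext l; rcases l with _ | ⟨b, l⟩
  · simp [wcup]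
  · simp [wcup, mul_add]

lemma add_wcup (p q φ : Coch E) : wcup (p + q) φ = wcup p φ + wcup q φ := by
  funext l; rcases l with _ | ⟨b, l⟩
  · simp [wcup]
  · simp [wcup, add_mul]

lemma cup_add (p φ ψ : Coch E) : cup p (φ + ψ) = cup p φ + cup p ψ := by
  funext l; rcases l with _ | ⟨b, l⟩
  · simp [cup]
  · simp [cup, wcup_add]

lemma add_cup (p q φ : Coch E) : cup (p + q) φ = cup p φ + cup q φ := by
  funext l; rcases l with _ | ⟨b, l⟩
  · simp [cup]
  · simp [cup, sh_add, add_wcup]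

lemma d_wcup (p φ : Coch E) (b : E) (l : List E) :
    d (wcup p φ) (b :: l) = wcup p φ l + p [b] * (d φ (b :: l) + φ l) := by
  have : sh b (wcup p φ) = p [b] • sh b φ := by funext l; rfl
  rw [d_cons, this, d_smul, d_cons, add_right_comm, two_eq, zero_add]; rfl

lemma d_cup (α φ : Coch E) (a b c : E) (l : List E) :
    d (cup α φ) (a :: b :: c :: l)
      = cup α (d φ) (a :: b :: c :: l) + d α [a, b, c] * φ (c :: l) := by
  have : sh a (cup α φ) = wcup (sh a α) φ := by funext l; rfl
  rw [d_cons, this, d_wcup]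
  simp only [cup, wcup, sh, d_cons, d_nil]
  ring_nf

lemma wcup_mem_L {A : Set E} {m : ℕ} (p : Coch E) {φ : Coch E} (h : φ ∈ L A m) :
    wcup p φ ∈ L A m := by
  obtain ⟨ε, hε, h⟩ := h
  refine ⟨ε, hε, fun l hl => ?_⟩
  rcases l with _ | ⟨b, l⟩
  · rfl
  · simp [wcup, h _ hl]

lemma Sm.tail {A : Set E} {ε : ℝ} {m : ℕ} {a : E} {l : List E} (h : Sm A ε (m + 1) (a :: l)) :
    Sm A ε m l :=
  ⟨by simpa using h.len, fun x hx => h.mem x (List.mem_cons_of_mem _ hx),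
    fun x hx y hy => h.close x (List.mem_cons_of_mem _ hx) y (List.mem_cons_of_mem _ hy)⟩

lemma Sm.sub {A : Set E} {ε : ℝ} {m n : ℕ} {l l' : List E} (h : Sm A ε m l) (hn : l'.length = n)
    (hs : l' ⊆ l) : Sm A ε n l' :=
  ⟨hn, fun x hx => h.mem x (hs hx), fun x hx y hy => h.close x (hs hx) y (hs hy)⟩

lemma cup_mem_L {A : Set E} {m : ℕ} (α : Coch E) {φ : Coch E} (h : φ ∈ L A m) :
    cup α φ ∈ L A (m + 1) := by
  obtain ⟨ε, hε, h⟩ := h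
  refine ⟨ε, hε, fun l hl => ?_⟩
  rcases l with _ | ⟨a, _ | ⟨b, l⟩⟩
  · rfl
  · rfl
  · simp [cup, wcup, h _ hl.tail]

lemma cup_mem_L_left {A : Set E} {m : ℕ} {α : Coch E} (φ : Coch E) (h : α ∈ L A 2) :
    cup α φ ∈ L A m := by
  obtain ⟨ε, hε, h⟩ := h
  refine ⟨ε, hε, fun l hl => ?_⟩
  rcases l with _ | ⟨a, _ | ⟨b, l⟩⟩
  · rfl
  · rfl
  · simp [cup, wcup, sh, (h [a, b] (hl.sub rfl (by simp)))]

/-- The Leibniz rule for a cocycle in the left factor. -/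
lemma leibniz {A : Set E} {m : ℕ} {α : Coch E} (hα : α ∈ Z A 2) (φ : Coch E) :
    d (cup α φ) + cup α (d φ) ∈ L A (m + 3) := by
  obtain ⟨ε, hε, h⟩ := hα
  refine ⟨ε, hε, fun l hl => ?_⟩
  rcases l with _ | ⟨a, _ | ⟨b, _ | ⟨c, l⟩⟩⟩
  · exact absurd hl.len (by simp)
  · exact absurd hl.len (by simp)
  · exact absurd hl.len (by simp)
  · have : d α [a, b, c] = 0 := h [a, b, c] (hl.sub rfl (by simp))
    rw [Pi.add_apply, d_cup, this, zero_mul, add_zero, two_eq]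

lemma cup_mem_Z {A : Set E} {m : ℕ} {α φ : Coch E} (hα : α ∈ Z A 2) (hφ : φ ∈ Z A (m + 1)) :
    cup α φ ∈ Z A (m + 2) :=
  (Submodule.add_mem_iff_left _ (cup_mem_L α hφ)).1 (leibniz hα φ)

lemma leibniz_w (A : Set E) {m : ℕ} (p φ : Coch E) :
    d (wcup p φ) + cup (d p) φ + wcup p (d φ) ∈ L A (m + 2) := by
  refine ⟨1, one_pos, fun l hl => ?_⟩
  rcases l with _ | ⟨b, _ | ⟨c, l⟩⟩
  · exact absurd hl.len (by simp)
  · exact absurd hl.len (by simp)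
  · simp only [Pi.add_apply, d_wcup]
    simp only [cup, wcup, sh, d_cons, d_nil, add_zero]
    grind

/-- Products vanish when the factors are supported on complementary pieces. -/
lemma cup_bound {P Q : Set E} (hP : IsCompact P) (hQ : IsCompact Q) {m : ℕ} {α β : Coch E}
    (hα : α ∈ Z (P ∪ Q) 2) (hβ : β ∈ Z (P ∪ Q) (m + 2)) (h1 : α ∈ B P 2) (h2 : β ∈ B Q (m + 2)) :
    cup α β ∈ B (P ∪ Q) (m + 3) := by
  obtain ⟨p, hp⟩ := mem_B.1 h1
  obtain ⟨ψ, hψ⟩ := mem_B.1 h2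
  have z1 : α + d p ∈ Z (P ∪ Q) 2 := add_mem hα (B_le_Z _ _ (d_mem_B _ _ _))
  have z2 : β + d ψ ∈ Z (P ∪ Q) (m + 2) := add_mem hβ (B_le_Z _ _ (d_mem_B _ _ _))
  obtain ⟨χ, -, hχ⟩ := excise hP hQ (cup_mem_L_left (m := m + 3) (β + d ψ) hp)
    (cup_mem_L (α + d p) hψ) (cup_mem_Z z1 z2)
  have e0 : cup (α + d p) (β + d ψ) ∈ B (P ∪ Q) (m + 3) := mem_B.2 ⟨_, hχ⟩
  -- `cup α β + cup (α + d p) (β + d ψ) = cup (d p) β + cup (α + d p) (d ψ)`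
  have e1 : cup (d p) β ∈ B (P ∪ Q) (m + 3) := by
    have := leibniz_w (P ∪ Q) (m := m + 1) p β
    have h3 := (Submodule.add_mem_iff_left _ (wcup_mem_L p hβ)).1 this
    exact mem_B.2 ⟨wcup p β, by rwa [add_comm (cup (d p) β) _]⟩
  have e2 : cup (α + d p) (d ψ) ∈ B (P ∪ Q) (m + 3) := by
    refine mem_B.2 ⟨cup (α + d p) ψ, ?_⟩
    rw [add_comm (cup (α + d p) (d ψ)) _]
    exact leibniz z1 ψ
  have : cup α β = cup (α + d p) (β + d ψ) + cup (d p) β + cup (α + d p) (d ψ) := by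
    simp only [cup_add, add_cup]
    grind
  rw [this]
  exact add_mem (add_mem e0 e1) e2

variable {E : Type u} {E' : Type v} [MetricSpace E] [MetricSpace E']

/-! ### Euler characteristics -/

/-- The cohomology class of a cocycle. -/
def cls (A : Set E) (m : ℕ) : Z A m →ₗ[ZMod 2] H A m := Submodule.mkQ _

lemma cls_surj (A : Set E) (m : ℕ) : Function.Surjective (cls A m) := Submodule.mkQ_surjective _

lemma cls_eq_zero {A : Set E} {m : ℕ} {φ : Z A m} : cls A m φ = 0 ↔ φ.1 ∈ B A m := by
  rw [cls, Submodule.mkQ_apply, Submodule.Quotient.mk_eq_zero]; rfl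

lemma cls_eq {A : Set E} {m : ℕ} {φ ψ : Z A m} : cls A m φ = cls A m ψ ↔ φ.1 + ψ.1 ∈ B A m := by
  rw [← add_eq_zero, ← map_add, cls_eq_zero]; rfl

/-- The map induced on cohomology by a linear map of cochains. -/
def hmap {A : Set E} {A' : Set E'} {m n : ℕ} (T : Coch E →ₗ[ZMod 2] Coch E')
    (hZ : ∀ φ ∈ Z A m, T φ ∈ Z A' n) (hB : ∀ φ ∈ B A m, T φ ∈ B A' n) :
    H A m →ₗ[ZMod 2] H A' n :=
  Submodule.mapQ _ _ (T.restrict hZ) fun φ hφ => hB φ.1 hφ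

/-- Restriction to a smaller set. -/
def res {A A' : Set E} (h : A ⊆ A') (m : ℕ) : H A' m →ₗ[ZMod 2] H A m :=
  hmap LinearMap.id (fun _ hφ => Z_mono h m hφ) fun _ hφ => B_mono h m hφ

/-- Two quotients of a space with the same kernel are isomorphic. -/
def equivOfKer {W V₁ V₂ : Type*} [AddCommGroup W] [AddCommGroup V₁] [AddCommGroup V₂]
    [Module (ZMod 2) W] [Module (ZMod 2) V₁] [Module (ZMod 2) V₂] (f : W →ₗ[ZMod 2] V₁)
    (g : W →ₗ[ZMod 2] V₂) (hf : Function.Surjective f) (hg : Function.Surjective g)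
    (h : LinearMap.ker f = LinearMap.ker g) : V₁ ≃ₗ[ZMod 2] V₂ :=
  (f.quotKerEquivOfSurjective hf).symm ≪≫ₗ Submodule.quotEquivOfEq _ _ h ≪≫ₗ
    g.quotKerEquivOfSurjective hg

section MV
variable (P Q : Set E) (m : ℕ)

/-- The first map in the Mayer–Vietoris sequence. -/
def mvf : H (P ∪ Q) m →ₗ[ZMod 2] H P m × H Q m :=
  (res subset_union_left m).prod (res subset_union_right m)

/-- The second map in the Mayer–Vietoris sequence. -/
def mvg : H P m × H Q m →ₗ[ZMod 2] H (P ∩ Q) m :=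
  (res inter_subset_left m).coprod (res inter_subset_right m)

variable {P Q m}

lemma mvf_cls (φ : Z (P ∪ Q) m) : mvf P Q m (cls _ _ φ) = 0 ↔ φ.1 ∈ B P m ∧ φ.1 ∈ B Q m := by
  rw [← cls_eq_zero (φ := ⟨φ.1, Z_mono subset_union_left m φ.2⟩),
    ← cls_eq_zero (φ := ⟨φ.1, Z_mono subset_union_right m φ.2⟩)]
  exact Prod.ext_iff

lemma mvg_cls (p : Z P m) (q : Z Q m) (c : Z (P ∩ Q) m) :
    mvg P Q m (cls _ _ p, cls _ _ q) = cls _ _ c ↔ p.1 + q.1 + c.1 ∈ B (P ∩ Q) m := by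
  exact cls_eq (φ := ⟨p.1, Z_mono inter_subset_left m p.2⟩ + ⟨q.1, Z_mono inter_subset_right m q.2⟩)

lemma mv_exact (hP : IsCompact P) (hQ : IsCompact Q) :
    LinearMap.ker (mvg P Q m) = LinearMap.range (mvf P Q m) := by
  ext ⟨x, y⟩
  obtain ⟨p, rfl⟩ := cls_surj _ _ x
  obtain ⟨q, rfl⟩ := cls_surj _ _ y
  rw [LinearMap.mem_ker, ← map_zero (cls _ _), mvg_cls, LinearMap.mem_range]
  constructor
  · intro h
    obtain ⟨ψ, h⟩ := mem_B.1 h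
    obtain ⟨φ, hφ, h1, h2⟩ := extend hP hQ (p := p.1 + d ψ) (q := q.1)
      (add_mem p.2 (B_le_Z _ _ (d_mem_B _ _ _))) q.2 (by
        convert h using 1
        simp only [ZeroMemClass.coe_zero]; abel)
    refine ⟨cls _ _ ⟨φ, hφ⟩, Prod.ext ?_ ?_⟩
    · refine cls_eq.2 (mem_B.2 ⟨ψ, ?_⟩)
      rwa [add_assoc]
    · exact cls_eq.2 (L_le_B _ _ h2)
  · rintro ⟨z, hz⟩
    obtain ⟨φ, rfl⟩ := cls_surj _ _ z
    have h1 := cls_eq.1 (congrArg Prod.fst hz)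
    have h1 := B_mono (inter_subset_left (t := Q)) _ h1
    rw [add_comm _ p.1] at h1
    simpa using (sub_chain _ h1 (B_mono (inter_subset_right (s := P)) _ (cls_eq.1 (congrArg Prod.snd hz))))

/-- Pairs consisting of a cocycle on the intersection and a representative of its image under the
connecting homomorphism. -/
def mvW (P Q : Set E) (m : ℕ) : Submodule (ZMod 2) (Z (P ∩ Q) m × Z (P ∪ Q) (m + 1)) where
  carrier := {w | w.2.1 + d w.1.1 ∈ L P (m + 1) ∧ w.2.1 ∈ L Q (m + 1)}
  zero_mem' := by simp [d_zero]
  add_mem' := by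
    rintro a b ⟨h1, h2⟩ ⟨h3, h4⟩
    refine ⟨?_, add_mem h2 h4⟩
    convert add_mem h1 h3 using 1
    simp only [Prod.fst_add, Prod.snd_add, Submodule.coe_add, d_add]; abel
  smul_mem' := by
    rintro c a ⟨h1, h2⟩
    refine ⟨?_, Submodule.smul_mem _ c h2⟩
    convert Submodule.smul_mem _ c h1 using 1
    simp only [Prod.smul_fst, Prod.smul_snd, Submodule.coe_smul, d_smul, smul_add]

def mvW1 (P Q : Set E) (m : ℕ) :
    mvW P Q m →ₗ[ZMod 2] H (P ∩ Q) m ⧸ LinearMap.range (mvg P Q m) :=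
  (LinearMap.range (mvg P Q m)).mkQ ∘ₗ cls _ _ ∘ₗ LinearMap.fst _ _ _ ∘ₗ (mvW P Q m).subtype

def mvW2 (P Q : Set E) (m : ℕ) : mvW P Q m →ₗ[ZMod 2] LinearMap.ker (mvf P Q (m + 1)) :=
  (cls _ _ ∘ₗ LinearMap.snd _ _ _ ∘ₗ (mvW P Q m).subtype).codRestrict _ fun w => by
    rw [LinearMap.mem_ker]
    exact (mvf_cls _).2 ⟨mem_B.2 ⟨_, w.2.1⟩, L_le_B _ _ w.2.2⟩

lemma mvW1_surj (hP : IsCompact P) (hQ : IsCompact Q) : Function.Surjective (mvW1 P Q m) := by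
  intro x
  obtain ⟨y, rfl⟩ := Submodule.mkQ_surjective _ x
  obtain ⟨c, rfl⟩ := cls_surj _ _ y
  obtain ⟨φ, h0, h1, h2⟩ := connect hP hQ c.2
  exact ⟨⟨(c, ⟨φ, h0⟩), h1, h2⟩, rfl⟩

lemma mvW2_surj : Function.Surjective (mvW2 P Q m) := by
  rintro ⟨x, hx⟩
  obtain ⟨φ, rfl⟩ := cls_surj _ _ x
  obtain ⟨h1, h2⟩ := (mvf_cls _).1 hx
  obtain ⟨p, hp⟩ := mem_B.1 h1
  obtain ⟨q, hq⟩ := mem_B.1 h2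
  have hc : p + q ∈ Z (P ∩ Q) m := by
    rw [mem_Z, d_add]
    have e1 := L_mono (inter_subset_left (t := Q)) _ hp
    rw [add_comm φ.1 _] at e1
    exact sub_chain _ e1 (L_mono (inter_subset_right (s := P)) _ hq)
  refine ⟨⟨(⟨p + q, hc⟩, ⟨φ.1 + d q, add_mem φ.2 (B_le_Z _ _ (d_mem_B _ _ _))⟩), ?_, hq⟩, ?_⟩
  · convert hp using 1
    simp only [d_add]
    grind
  · refine Subtype.ext (cls_eq.2 ?_)
    have h : φ.1 + d q + φ.1 = d q := by linear_combination self_add φ.1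
    exact h.symm ▸ d_mem_B (P ∪ Q) (m + 1) q

lemma mvW_ker (hP : IsCompact P) (hQ : IsCompact Q) :
    LinearMap.ker (mvW1 P Q m) = LinearMap.ker (mvW2 P Q m) := by
  ext ⟨⟨c, φ⟩, h1, h2⟩
  rw [LinearMap.mem_ker, LinearMap.mem_ker]
  have e1 : mvW1 P Q m ⟨⟨c, φ⟩, h1, h2⟩ = 0 ↔ cls _ _ c ∈ LinearMap.range (mvg P Q m) :=
    Submodule.Quotient.mk_eq_zero _
  have e2 : mvW2 P Q m ⟨⟨c, φ⟩, h1, h2⟩ = 0 ↔ φ.1 ∈ B (P ∪ Q) (m + 1) := by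
    rw [← cls_eq_zero, Subtype.ext_iff]; rfl
  rw [e1, e2]
  constructor
  · rintro ⟨⟨x, y⟩, hxy⟩
    obtain ⟨a, rfl⟩ := cls_surj _ _ x
    obtain ⟨b, rfl⟩ := cls_surj _ _ y
    have := (mvg_cls _ _ _).1 hxy
    refine bound_of_split hP hQ (p := c.1) (q := 0) φ.2 h1 ?_ a.2 b.2 ?_
    · rw [d_zero, add_zero]; exact h2
    · rwa [add_zero, add_comm]
  · intro h
    obtain ⟨a, ha, b, hb, hab⟩ := split_of_bound h1 h2 h
    refine ⟨(cls _ _ ⟨a, ha⟩, cls _ _ ⟨b, hb⟩), (mvg_cls _ _ _).2 ?_⟩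
    simp only [hab]
    rw [self_add]; exact zero_mem _

/-- The cokernel of one map of the Mayer–Vietoris sequence is the kernel of the next. -/
def mvEquiv (hP : IsCompact P) (hQ : IsCompact Q) :
    (H (P ∩ Q) m ⧸ LinearMap.range (mvg P Q m)) ≃ₗ[ZMod 2] LinearMap.ker (mvf P Q (m + 1)) :=
  equivOfKer (mvW1 P Q m) (mvW2 P Q m) (mvW1_surj hP hQ) mvW2_surj (mvW_ker hP hQ)

lemma mvf_zero : LinearMap.ker (mvf P Q 0) = ⊥ := by
  rw [eq_bot_iff]
  intro x hx
  obtain ⟨φ, rfl⟩ := cls_surj _ _ x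
  obtain ⟨h1, -⟩ := (mvf_cls _).1 hx
  refine cls_eq_zero.2 (mem_B.2 ?_)
  obtain ⟨ψ, ε, hε, h⟩ := mem_B.1 h1
  refine ⟨ψ, ε, hε, fun l hl => ?_⟩
  obtain rfl := List.length_eq_zero_iff.1 hl.len
  exact h _ ⟨rfl, by simp, by simp⟩

end MV

/-- `HasChi A c`: the reduced cohomology of `A` is finite and its alternating sum is `c`. The index
`m` refers to lists of length `m`, so that `c` is minus the reduced Euler characteristic. -/
def HasChi (A : Set E) (c : ℤ) : Prop :=
  (∀ m, Module.Finite (ZMod 2) (H A m)) ∧ ∃ N, (∀ m ≥ N, Module.finrank (ZMod 2) (H A m) = 0) ∧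
    ∑ m ∈ Finset.range N, (-1) ^ m * (Module.finrank (ZMod 2) (H A m) : ℤ) = c

lemma HasChi.sum_eq {A : Set E} {c : ℤ} (h : HasChi A c) :
    ∃ N, ∀ n ≥ N, Module.finrank (ZMod 2) (H A n) = 0 ∧
      ∑ m ∈ Finset.range n, (-1) ^ m * (Module.finrank (ZMod 2) (H A m) : ℤ) = c := by
  obtain ⟨-, N, h1, h2⟩ := h
  refine ⟨N, fun n hn => ⟨h1 n hn, ?_⟩⟩
  induction n, hn using Nat.le_induction with
  | base => exact h2
  | succ n hn ih => rw [Finset.sum_range_succ, ih, h1 n hn]; simp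

lemma HasChi.unique {A : Set E} {c c' : ℤ} (h : HasChi A c) (h' : HasChi A c') : c = c' := by
  obtain ⟨N, hN⟩ := h.sum_eq
  obtain ⟨N', hN'⟩ := h'.sum_eq
  rw [← (hN (max N N') (le_max_left _ _)).2, (hN' (max N N') (le_max_right _ _)).2]

lemma HasChi.union {P Q : Set E} (hP : IsCompact P) (hQ : IsCompact Q) {a b c : ℤ}
    (ha : HasChi P a) (hb : HasChi Q b) (hc : HasChi (P ∩ Q) c) : HasChi (P ∪ Q) (a + b - c) := by
  have := ha.1
  have := hb.1
  have := hc.1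
  have fk : ∀ m, Module.Finite (ZMod 2) (LinearMap.ker (mvf P Q m)) := by
    rintro (_ | m)
    · rw [mvf_zero]; infer_instance
    · exact Module.Finite.equiv (mvEquiv hP hQ)
  have fU : ∀ m, Module.Finite (ZMod 2) (H (P ∪ Q) m) := fun m => by
    have := fk m
    have : Module.Finite (ZMod 2) (H (P ∪ Q) m ⧸ LinearMap.ker (mvf P Q m)) :=
      Module.Finite.equiv (mvf P Q m).quotKerEquivRange.symm
    exact Module.Finite.of_submodule_quotient (LinearMap.ker (mvf P Q m))
  obtain ⟨N1, h1⟩ := ha.sum_eq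
  obtain ⟨N2, h2⟩ := hb.sum_eq
  obtain ⟨N3, h3⟩ := hc.sum_eq
  let κ : ℕ → ℤ := fun m => Module.finrank (ZMod 2) (LinearMap.ker (mvf P Q m))
  have key : ∀ m, (Module.finrank (ZMod 2) (H (P ∪ Q) m) : ℤ) =
      Module.finrank (ZMod 2) (H P m) + Module.finrank (ZMod 2) (H Q m)
      - Module.finrank (ZMod 2) (H (P ∩ Q) m) + κ m + κ (m + 1) := by
    intro m
    have e1 := (mvf P Q m).finrank_range_add_finrank_ker
    have e2 := (mvg P Q m).finrank_range_add_finrank_ker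
    rw [mv_exact hP hQ, Module.finrank_prod] at e2
    have e3 := (mvEquiv (m := m) hP hQ).finrank_eq
    have e4 := (LinearMap.range (mvg P Q m)).finrank_quotient_add_finrank
    linarith
  have κ0 : κ 0 = 0 := by
    have : Module.finrank (ZMod 2) (LinearMap.ker (mvf P Q 0)) = 0 := by
      rw [mvf_zero]; exact finrank_bot _ _
    linarith
  have hsum : ∀ n, ∑ m ∈ Finset.range n, (-1) ^ m * (Module.finrank (ZMod 2) (H (P ∪ Q) m) : ℤ) =
      ∑ m ∈ Finset.range n, (-1) ^ m * (Module.finrank (ZMod 2) (H P m) : ℤ)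
      + ∑ m ∈ Finset.range n, (-1) ^ m * (Module.finrank (ZMod 2) (H Q m) : ℤ)
      - ∑ m ∈ Finset.range n, (-1) ^ m * (Module.finrank (ZMod 2) (H (P ∩ Q) m) : ℤ)
      - (-1) ^ n * κ n := by
    intro n
    induction n with
    | zero => simp [κ0]
    | succ n ih =>
      simp only [Finset.sum_range_succ, ih, key n]
      ring
  have hκ : ∀ n ≥ N3, κ (n + 1) = 0 := by
    intro n hn
    have e3 := (mvEquiv (m := n) hP hQ).finrank_eq
    have e4 := (LinearMap.range (mvg P Q n)).finrank_quotient_add_finrank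
    grind
  refine ⟨fU, max N1 (max N2 N3) + 1, fun m hm => ?_, ?_⟩
  · obtain ⟨m, rfl⟩ : ∃ n, m = n + 1 := ⟨m - 1, by omega⟩
    have := key (m + 1)
    rw [(h1 (m + 1) (by omega)).1, (h2 (m + 1) (by omega)).1, (h3 (m + 1) (by omega)).1,
      hκ m (by omega), hκ (m + 1) (by omega)] at this
    simpa using this
  · grind

lemma finrank_of_triv {A : Set E} {m : ℕ} (h : Triv A m) :
    Module.Finite (ZMod 2) (H A m) ∧ Module.finrank (ZMod 2) (H A m) = 0 := by
  have : Subsingleton (H A m) := ⟨fun x y => by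
    obtain ⟨p, rfl⟩ := cls_surj _ _ x
    obtain ⟨q, rfl⟩ := cls_surj _ _ y
    exact cls_eq.2 (h (add_mem p.2 q.2))⟩
  exact ⟨inferInstance, Module.finrank_zero_of_subsingleton⟩

lemma Acyc.chi {A : Set E} (h : Acyc A) : HasChi A 0 :=
  ⟨fun m => (finrank_of_triv (h m)).1, 0, fun m _ => (finrank_of_triv (h m)).2, by simp⟩

lemma chi_of_triv {A : Set E} {n : ℕ} (h : ∀ m, m ≠ n → Triv A m) {c : ℤ} (hA : HasChi A c) :
    (-1) ^ n * (Module.finrank (ZMod 2) (H A n) : ℤ) = c := by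
  obtain ⟨N, hN⟩ := hA.sum_eq
  rw [← (hN (N + n + 1) (by omega)).2, Finset.sum_eq_single_of_mem n (by simp)]
  intro m _ hm
  rw [(finrank_of_triv (h m hm)).2]; simp

variable {E : Type u} {E' : Type v} [MetricSpace E] [MetricSpace E']

/-- Homotopy equivalence of subsets of metric spaces, through maps of the ambient spaces. -/
def Heq (A : Set E) (A' : Set E') : Prop :=
  ∃ (f : E → E') (g : E' → E), ContinuousOn f A ∧ ContinuousOn g A' ∧ MapsTo f A A' ∧
    MapsTo g A' A ∧ Htpy A A (g ∘ f) id ∧ Htpy A' A' (f ∘ g) id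

lemma Heq.symm {A : Set E} {A' : Set E'} (h : Heq A A') : Heq A' A := by
  obtain ⟨f, g, h1, h2, h3, h4, h5, h6⟩ := h
  exact ⟨g, f, h2, h1, h4, h3, h6, h5⟩

lemma pb_comp {E'' : Type*} (f : E → E') (g : E' → E'') (φ : Coch E'') :
    pb f (pb g φ) = pb (g ∘ f) φ := by funext l; simp [pb_apply]

lemma pb_id (φ : Coch E) : pb id φ = φ := by funext l; simp [pb_apply]

/-- A homotopy to the identity, read on cochains. -/
lemma htpy_id {A : Set E} (hA : IsCompact A) {f : E → E'} {g : E' → E} (h : Htpy A A (g ∘ f) id)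
    {m : ℕ} {φ : Coch E} (hφ : φ ∈ Z A m) : pb f (pb g φ) + φ ∈ B A m := by
  have := htpy hA h hφ
  rwa [pb_id, ← pb_comp] at this

lemma Heq.equiv {A : Set E} {A' : Set E'} (hA : IsCompact A) (hA' : IsCompact A')
    (h : Heq A A') (m : ℕ) : Nonempty (H A m ≃ₗ[ZMod 2] H A' m) := by
  obtain ⟨f, g, h1, h2, h3, h4, h5, h6⟩ := h
  let F : H A m →ₗ[ZMod 2] H A' m := hmap (pb g) (fun φ hφ => pb_Z hA' h2 h4 hφ)
    fun φ hφ => pb_B hA' h2 h4 hφ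
  let G : H A' m →ₗ[ZMod 2] H A m := hmap (pb f) (fun φ hφ => pb_Z hA h1 h3 hφ)
    fun φ hφ => pb_B hA h1 h3 hφ
  refine ⟨LinearEquiv.ofLinearMap F G (LinearMap.ext fun x => ?_) (LinearMap.ext fun x => ?_)⟩
  · obtain ⟨φ, rfl⟩ := cls_surj _ _ x
    exact cls_eq.2 (htpy_id hA' h6 φ.2)
  · obtain ⟨φ, rfl⟩ := cls_surj _ _ x
    exact cls_eq.2 (htpy_id hA h5 φ.2)

lemma Heq.chi {A : Set E} {A' : Set E'} (hA : IsCompact A) (hA' : IsCompact A')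
    (h : Heq A A') {c : ℤ} (hc : HasChi A c) : HasChi A' c := by
  obtain ⟨h1, N, h2, h3⟩ := hc
  have e := fun m => (h.equiv hA hA' m).some
  have e' := fun m => (e m).finrank_eq
  refine ⟨fun m => ?_, N, fun m hm => ?_, ?_⟩
  · have := h1 m; exact Module.Finite.equiv (e m)
  · rw [← e', h2 m hm]
  · rw [← h3]; exact Finset.sum_congr rfl fun m _ => by rw [e']

lemma Heq.triv {A : Set E} {A' : Set E'} (hA : IsCompact A) (hA' : IsCompact A')
    (h : Heq A A') {m : ℕ} (ht : Triv A m) : Triv A' m := by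
  obtain ⟨f, g, h1, h2, h3, h4, h5, h6⟩ := h
  exact Triv.of_retract hA' hA h2 h1 h4 h3 h6 ht

/-- Homeomorphic sets are homotopy equivalent. -/
lemma Heq.of_homeo {A : Set E} {A' : Set E'} (hA : A.Nonempty) (e : A ≃ₜ A') : Heq A A' := by
  classical
  obtain ⟨a, ha⟩ := hA
  let f : E → E' := fun x => if h : x ∈ A then e ⟨x, h⟩ else (e ⟨a, ha⟩)
  let g : E' → E := fun x => if h : x ∈ A' then e.symm ⟨x, h⟩ else a
  have hf : ContinuousOn f A := by
    rw [continuousOn_iff_continuous_domRestrict]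
    have : A.domRestrict f = fun x => (e x : E') := by
      grind
    rw [this]; fun_prop
  have hg : ContinuousOn g A' := by
    rw [continuousOn_iff_continuous_domRestrict]
    have : A'.domRestrict g = fun x => (e.symm x : E) := by
      grind
    rw [this]; fun_prop
  have hfm : MapsTo f A A' := fun x hx => by simp only [f, dif_pos hx]; exact Subtype.coe_prop _
  have hgm : MapsTo g A' A := fun x hx => by simp only [g, dif_pos hx]; exact Subtype.coe_prop _
  refine ⟨f, g, hf, hg, hfm, hgm, Htpy.of_eq (hg.comp hf hfm) (hgm.comp hfm) fun x hx => ?_,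
    Htpy.of_eq (hf.comp hg hgm) (hfm.comp hgm) fun x hx => ?_⟩
  · simp [f, g, hx]
  · simp [f, g, hx]

lemma chi_empty : HasChi (∅ : Set E) 1 := by
  have h1 : Nonempty (H (∅ : Set E) 0 ≃ₗ[ZMod 2] ZMod 2) := by
    let ev : Z (∅ : Set E) 0 →ₗ[ZMod 2] ZMod 2 :=
      { toFun := fun φ => φ.1 [], map_add' := fun _ _ => rfl, map_smul' := fun _ _ => rfl }
    refine ⟨equivOfKer (cls _ _) ev (cls_surj _ _) (fun c => ?_) ?_⟩
    · refine ⟨⟨fun _ => c, 1, one_pos, fun l hl => ?_⟩, rfl⟩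
      rcases l with _ | ⟨a, l⟩
      · exact absurd hl.len (by simp)
      · exact absurd (hl.mem a (by simp)) (by simp)
    · ext φ
      rw [LinearMap.mem_ker, LinearMap.mem_ker, cls_eq_zero, mem_B]
      constructor
      · rintro ⟨ψ, ε, hε, h⟩
        have := h [] ⟨rfl, by simp, by simp⟩
        rwa [Pi.add_apply, d_nil, add_zero] at this
      · intro h
        refine ⟨0, 1, one_pos, fun l hl => ?_⟩
        obtain rfl := List.length_eq_zero_iff.1 hl.len
        rw [Pi.add_apply, d_nil, add_zero]; exact h
  obtain ⟨e⟩ := h1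
  have h2 := fun m => finrank_of_triv (triv_empty (E := E) m)
  refine ⟨fun m => ?_, 1, fun m hm => ?_, ?_⟩
  · rcases m with _ | m
    · exact Module.Finite.equiv e.symm
    · exact (h2 m).1
  · obtain ⟨m, rfl⟩ : ∃ n, m = n + 1 := ⟨m - 1, by omega⟩
    exact (h2 m).2
  · simp [e.finrank_eq]

lemma HasChi.disjoint {P Q : Set E} (hP : IsCompact P) (hQ : IsCompact Q) {a b : ℤ}
    (ha : HasChi P a) (hb : HasChi Q b) (h : Disjoint P Q) : HasChi (P ∪ Q) (a + b - 1) :=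
  ha.union hP hQ hb (by rw [disjoint_iff_inter_eq_empty.1 h]; exact chi_empty)

/-! ### Vertical strips -/

/-- The set of points between two graphs over an interval. -/
def strip (a b : ℝ) (p q : ℝ → ℝ) : Set ℝ² := {u | u.1 ∈ Icc a b ∧ p u.1 ≤ u.2 ∧ u.2 ≤ q u.1}

lemma strip_compact (a b : ℝ) {p q : ℝ → ℝ} (hp : Continuous p) (hq : Continuous q) :
    IsCompact (strip a b p q) := by
  obtain ⟨c, hc⟩ := (isCompact_Icc (a := a) (b := b)).bddBelow_image hp.continuousOn
  obtain ⟨e, he⟩ := (isCompact_Icc (a := a) (b := b)).bddAbove_image hq.continuousOn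
  refine (isCompact_Icc.prod isCompact_Icc : IsCompact (Icc a b ×ˢ Icc c e)).of_isClosed_subset ?_ ?_
  · refine (isClosed_Icc.preimage continuous_fst).inter
      ((isClosed_le (hp.comp continuous_fst) continuous_snd).inter
        (isClosed_le continuous_snd (hq.comp continuous_fst)))
  · rintro ⟨x, y⟩ ⟨h1, h2, h3⟩
    exact ⟨h1, (hc ⟨x, h1, rfl⟩).trans h2, h3.trans (he ⟨x, h1, rfl⟩)⟩

lemma Icc_acyc {a b : ℝ} (h : a ≤ b) : Acyc (Icc a b) := by
  refine Acyc.of_contract isCompact_Icc (left_mem_Icc.2 h) ⟨fun t x => (1 - t) * a + t * x, ?_, ?_,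
    by simp, by simp⟩
  · exact Continuous.continuousOn (by simp only [Function.uncurry_def]; fun_prop)
  · rintro t ⟨h0, h1⟩ x ⟨hx, hx'⟩
    constructor <;> nlinarith

lemma strip_acyc {a b : ℝ} {p q : ℝ → ℝ} (hp : Continuous p) (hq : Continuous q)
    (hab : a ≤ b) (h : ∀ x ∈ Icc a b, p x ≤ q x) : Acyc (strip a b p q) := fun m => by
  refine Triv.of_retract (A' := Icc a b) (f := Prod.fst) (g := fun x => (x, p x))
    (strip_compact a b hp hq) isCompact_Icc (by fun_prop) (by fun_prop) (fun u hu => hu.1)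
    (fun x hx => ⟨hx, le_rfl, h x hx⟩) ?_ (Icc_acyc hab m)
  refine ⟨fun t u => (u.1, (1 - t) * p u.1 + t * u.2), ?_, ?_, by simp, by simp⟩
  · exact Continuous.continuousOn (by simp only [Function.uncurry_def]; fun_prop)
  · rintro t ⟨h0, h1⟩ u ⟨hx, h2, h3⟩
    refine ⟨hx, ?_, ?_⟩ <;> dsimp only <;> nlinarith

/-- A section of a projection which is a fibrewise deformation retract. -/
lemma Heq.of_fst {E : Type u} {E' : Type v} [MetricSpace E] [MetricSpace E'] {A : Set (E × E')}
    {A' : Set E} (σ : E → E') (hσ : ContinuousOn σ A') (h1 : ∀ x ∈ A', (x, σ x) ∈ A)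
    (h2 : ∀ z ∈ A, z.1 ∈ A') (K : ℝ → E × E' → E')
    (hK : ContinuousOn (Function.uncurry K) (Icc 0 1 ×ˢ A))
    (hKA : ∀ t ∈ 𝕀, ∀ z ∈ A, (z.1, K t z) ∈ A) (h0 : ∀ z ∈ A, K 0 z = σ z.1)
    (h3 : ∀ z ∈ A, K 1 z = z.2) : Heq A A' := by
  refine ⟨Prod.fst, fun x => (x, σ x), by fun_prop, by fun_prop, h2, h1, ⟨fun t z => (z.1, K t z),
    ?_, hKA, fun z hz => by simp [h0 z hz], fun z hz => by simp [h3 z hz]⟩, ?_⟩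
  · exact (by fun_prop : ContinuousOn (fun z : ℝ × E × E' => z.2.1) _).prodMk hK
  · exact Htpy.of_eq (f := Prod.fst ∘ fun x => (x, σ x)) continuousOn_id (fun x hx => hx)
      fun x _ => rfl

/-! ### The planar domain and the sets built on it -/

/-- A planar domain with `k` holes, symmetric under reflection in the horizontal axis, given by its
upper boundary functions `lo ≤ f`, together with a radius function `h` vanishing on the boundary.
The holes lie over the intervals `(2 j + 1/2, 2 j + 3/2)`. -/
structure Shape (k : ℕ) where
  lo : ℝ → ℝ
  f : ℝ → ℝ
  h : ℝ × ℝ → ℝ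
  lo_cont : Continuous lo
  f_cont : Continuous f
  lo_nonneg : ∀ x, 0 ≤ lo x
  lo_pos : ∀ x, 0 < lo x ↔ ∃ j < k, x ∈ Ioo (2 * (j : ℝ) + 1 / 2) (2 * j + 3 / 2)
  lo_lt : ∀ x ∈ Ioo (-1 / 2 : ℝ) (2 * k + 1 / 2), lo x < f x
  f_left : f (-1 / 2) = 0
  f_right : f (2 * k + 1 / 2) = 0
  h_zero : ∀ u : ℝ × ℝ, u.1 ∈ Icc (-1 / 2 : ℝ) (2 * k + 1 / 2) → lo u.1 ≤ |u.2| → |u.2| ≤ f u.1 →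
    (h u = 0 ↔ |u.2| = f u.1 ∨
      |u.2| = lo u.1 ∧ ∃ j < k, u.1 ∈ Icc (2 * (j : ℝ) + 1 / 2) (2 * j + 3 / 2))

namespace Shape
variable {k : ℕ} (S : Shape k)

/-- The planar region. -/
def F : Set ℝ² := {u | u.1 ∈ Icc (-1 / 2 : ℝ) (2 * k + 1 / 2) ∧ S.lo u.1 ≤ |u.2| ∧ |u.2| ≤ S.f u.1}

/-- The upper half of `F`; `Fm` is the lower one. -/
def Fp : Set ℝ² := strip (-1 / 2) (2 * k + 1 / 2) S.lo S.f
def Fm : Set ℝ² := strip (-1 / 2) (2 * k + 1 / 2) (fun x => - S.f x) (fun x => - S.lo x)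

/-- The components of the intersection of `F` with the horizontal axis. -/
def seg (i : ℕ) : Set ℝ² := strip (2 * i - 1 / 2) (2 * i + 1 / 2) (fun _ => 0) (fun _ => 0)

/-- The union of the first `n` segments. -/
def segs (n : ℕ) : Set ℝ² := ⋃ i ∈ Finset.range n, seg i

lemma segs_succ (n : ℕ) : segs (n + 1) = segs n ∪ seg n := by
  simp [segs, Finset.range_add_one, union_comm]

lemma range_pos : (-1 / 2 : ℝ) ≤ 2 * k + 1 / 2 := by
  linarith

lemma hole_sub {j : ℕ} (hj : j < k) {x : ℝ} (hx : x ∈ Icc (2 * (j : ℝ) + 1 / 2) (2 * j + 3 / 2)) :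
    x ∈ Ioo (-1 / 2 : ℝ) (2 * k + 1 / 2) := by
  have h1 : (j : ℝ) + 1 ≤ k := by exact_mod_cast hj
  grind

lemma lo_left {j : ℕ} : S.lo (2 * j + 1 / 2) = 0 := by
  refine le_antisymm (not_lt.1 fun h => ?_) (S.lo_nonneg _)
  obtain ⟨i, -, h1, h2⟩ := (S.lo_pos _).1 h
  have h1 : (i : ℝ) < j := by linarith
  have h2 : (j : ℝ) < i + 1 := by linarith
  norm_cast at h1 h2
  omega

lemma lo_right {j : ℕ} : S.lo (2 * j + 3 / 2) = 0 := by
  refine le_antisymm (not_lt.1 fun h => ?_) (S.lo_nonneg _)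
  obtain ⟨i, -, h1, h2⟩ := (S.lo_pos _).1 h
  have h1 : (i : ℝ) < j + 1 := by linarith
  have h2 : (j : ℝ) < i := by linarith
  norm_cast at h1 h2
  omega

lemma lo_le {x : ℝ} (hx : x ∈ Icc (-1 / 2 : ℝ) (2 * k + 1 / 2)) : S.lo x ≤ S.f x := by
  rcases hx.1.eq_or_lt with rfl | h1
  · rw [S.f_left]
    refine not_lt.1 fun h => ?_
    obtain ⟨i, -, h1, h2⟩ := (S.lo_pos _).1 h
    linarith
  rcases hx.2.eq_or_lt with rfl | h2
  · rw [S.f_right, S.lo_left]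
  exact (S.lo_lt x ⟨h1, h2⟩).le

lemma F_eq : S.F = S.Fp ∪ S.Fm := by
  ext ⟨x, y⟩
  simp only [F, Fp, Fm, strip, mem_setOf_eq, mem_union]
  constructor
  · grind
  · have := S.lo_nonneg x
    grind

/-- Away from the holes the real line splits into the segments. -/
lemma mem_segs {n : ℕ} {x y : ℝ} : (x, y) ∈ segs n ↔
    y = 0 ∧ ∃ i < n, x ∈ Icc (2 * (i : ℝ) - 1 / 2) (2 * i + 1 / 2) := by
  simp only [segs, Finset.mem_range, mem_iUnion, seg, strip, mem_setOf_eq, exists_prop]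
  grind

lemma off_holes {x : ℝ} (hx : x ∈ Icc (-1 / 2 : ℝ) (2 * k + 1 / 2)) :
    (∃ i < k + 1, x ∈ Icc (2 * (i : ℝ) - 1 / 2) (2 * i + 1 / 2)) ∨
      ∃ j < k, x ∈ Ioo (2 * (j : ℝ) + 1 / 2) (2 * j + 3 / 2) := by
  by_cases h : ∃ i < k + 1, x ∈ Icc (2 * (i : ℝ) - 1 / 2) (2 * i + 1 / 2)
  · exact Or.inl h
  have h0 : (0 : ℝ) ≤ (x + 1 / 2) / 2 := by linarith [hx.1]
  obtain ⟨j, hj⟩ : ∃ j : ℕ, j = ⌊(x + 1 / 2) / 2⌋₊ := ⟨_, rfl⟩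
  have h1 := Nat.floor_le h0
  have h2 := Nat.lt_floor_add_one ((x + 1 / 2) / 2)
  rw [← hj] at h1 h2
  have hjk : j < k + 1 := by
    have : (j : ℝ) < k + 1 := by linarith [hx.2]
    exact_mod_cast this
  grind

lemma Fpm : S.Fp ∩ S.Fm = segs (k + 1) := by
  ext ⟨x, y⟩
  rw [mem_segs]
  simp only [Fp, Fm, strip, mem_setOf_eq, mem_inter_iff]
  constructor
  · rintro ⟨⟨h1, h2, h3⟩, -, h4, h5⟩
    have h0 := S.lo_nonneg x
    refine ⟨by linarith, (off_holes h1).resolve_right fun h => ?_⟩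
    linarith [(S.lo_pos x).2 h]
  · rintro ⟨rfl, i, hi, h1⟩
    have hik : (i : ℝ) ≤ k := by exact_mod_cast Nat.lt_succ_iff.1 hi
    have hx : x ∈ Icc (-1 / 2 : ℝ) (2 * k + 1 / 2) := ⟨by linarith [h1.1], by linarith [h1.2]⟩
    have h0 : S.lo x = 0 := by
      refine le_antisymm (not_lt.1 fun h => ?_) (S.lo_nonneg _)
      obtain ⟨j, -, h3, h4⟩ := (S.lo_pos _).1 h
      have h5 : (j : ℝ) < i := by linarith [h1.1, h1.2]
      have h6 : (i : ℝ) < j + 1 := by linarith [h1.1, h1.2]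
      norm_cast at h5 h6
      omega
    have := S.lo_le hx
    grind

lemma Fp_compact : IsCompact S.Fp := strip_compact _ _ S.lo_cont S.f_cont
lemma Fm_compact : IsCompact S.Fm := strip_compact _ _ S.f_cont.neg S.lo_cont.neg
lemma F_compact : IsCompact S.F := by rw [F_eq]; exact S.Fp_compact.union S.Fm_compact
lemma seg_compact (i : ℕ) : IsCompact (seg i) := strip_compact _ _ continuous_const continuous_const
lemma segs_compact (n : ℕ) : IsCompact (segs n) := Finset.isCompact_biUnion _ fun i _ => seg_compact i

lemma Fp_acyc : Acyc S.Fp := strip_acyc S.lo_cont S.f_cont range_pos fun x hx => S.lo_le hx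
lemma Fm_acyc : Acyc S.Fm := strip_acyc S.f_cont.neg S.lo_cont.neg range_pos
  fun x hx => neg_le_neg (S.lo_le hx)
lemma seg_acyc (i : ℕ) : Acyc (seg i) := strip_acyc continuous_const continuous_const (by linarith)
  fun x _ => le_rfl

lemma segs_disj (n : ℕ) : segs n ∩ seg n = ∅ := by
  rw [eq_empty_iff_forall_notMem]
  rintro ⟨x, y⟩ ⟨h1, h2, -⟩
  obtain ⟨-, i, hi, h3, h4⟩ := mem_segs.1 h1
  have : (i : ℝ) + 1 ≤ n := by exact_mod_cast hi
  linarith [h2.1]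

lemma segs_chi (n : ℕ) : HasChi (segs n) (1 - n) := by
  induction n with
  | zero => simpa [segs] using chi_empty
  | succ n ih =>
    rw [segs_succ]
    convert ih.disjoint (segs_compact n) (seg_compact n) (seg_acyc n).chi
      (disjoint_iff_inter_eq_empty.2 (segs_disj n)) using 1
    push_cast; ring

lemma segs_triv (n m : ℕ) : Triv (segs n) (m + 2) := by
  induction n with
  | zero => simpa [segs] using triv_empty _
  | succ n ih =>
    rw [segs_succ]
    exact ih.union (segs_compact n) (seg_compact n) (seg_acyc n _)
      (by rw [segs_disj]; exact triv_empty m)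

lemma mem_segs_zero (n : ℕ) : ((0, 0) : ℝ × ℝ) ∈ segs (n + 1) :=
  mem_segs.2 ⟨rfl, 0, by simp, by norm_num, by norm_num⟩

lemma F_chi : HasChi S.F k := by
  rw [F_eq]
  have := S.Fp_acyc.chi.union S.Fp_compact S.Fm_compact S.Fm_acyc.chi (S.Fpm ▸ segs_chi (k + 1))
  grind

lemma F_triv {m : ℕ} (hm : m ≠ 2) : Triv S.F m := by
  rw [F_eq]
  have h0 : (0, 0) ∈ S.Fp ∩ S.Fm := by rw [Fpm]; exact mem_segs_zero k
  rcases m with _ | m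
  · exact Triv.zero ⟨_, Or.inl h0.1⟩
  refine Triv.union S.Fp_compact S.Fm_compact (S.Fp_acyc _) (S.Fm_acyc _) ?_
  rcases m with _ | _ | m
  · exact Triv.zero ⟨_, h0⟩
  · exact absurd rfl hm
  · rw [Fpm]; exact segs_triv _ _

/-! ### Boundary circles -/

/-- The two graphs `±p` over an interval. -/
def cir (a b : ℝ) (p : ℝ → ℝ) : Set ℝ² := strip a b p p ∪ strip a b (fun x => - p x) fun x => - p x

lemma mem_cir {a b : ℝ} {p : ℝ → ℝ} (hp : ∀ x ∈ Icc a b, 0 ≤ p x) {u : ℝ × ℝ} :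
    u ∈ cir a b p ↔ u.1 ∈ Icc a b ∧ |u.2| = p u.1 := by
  simp only [cir, strip, mem_union, mem_setOf_eq]
  grind

lemma cir_compact (a b : ℝ) {p : ℝ → ℝ} (hp : Continuous p) : IsCompact (cir a b p) :=
  (strip_compact a b hp hp).union (strip_compact a b hp.neg hp.neg)

lemma cir_inter {a b : ℝ} {p : ℝ → ℝ} (hab : a < b) (ha : p a = 0) (hb : p b = 0)
    (h : ∀ x ∈ Ioo a b, p x ≠ 0) :
    strip a b p p ∩ strip a b (fun x => - p x) (fun x => - p x) = {(a, 0)} ∪ {(b, 0)} := by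
  ext ⟨x, y⟩
  simp only [strip, mem_inter_iff, mem_setOf_eq, mem_union, mem_singleton_iff, Prod.mk.injEq]
  grind

lemma cir_chi {a b : ℝ} {p : ℝ → ℝ} (hp : Continuous p) (hab : a < b) (ha : p a = 0) (hb : p b = 0)
    (h : ∀ x ∈ Ioo a b, p x ≠ 0) : HasChi (cir a b p) 1 := by
  have hn : Continuous fun x => - p x := hp.neg
  have := (strip_acyc hp hp hab.le fun x _ => le_rfl).chi.union (strip_compact a b hp hp)
    (strip_compact a b hn hn) (strip_acyc hn hn hab.le fun x _ => le_rfl).chi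
    (c := -1) (by
      rw [cir_inter hab ha hb h]
      have := HasChi.disjoint (P := {(a, (0 : ℝ))}) (Q := {(b, (0 : ℝ))}) isCompact_singleton
        isCompact_singleton (Acyc.chi (triv_singleton _)) (Acyc.chi (triv_singleton _)) (by simp [hab.ne])
      simpa using this)
  exact this

/-- The boundary circle of the hole `j`. -/
def K (j : ℕ) : Set ℝ² := cir (2 * j + 1 / 2) (2 * j + 3 / 2) S.lo
/-- The outer boundary circle. -/
def O : Set ℝ² := cir (-1 / 2) (2 * k + 1 / 2) S.f
/-- The outer boundary circle together with the first `n` inner ones. -/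
def bd (n : ℕ) : Set ℝ² := S.O ∪ ⋃ j ∈ Finset.range n, S.K j

lemma bd_succ (n : ℕ) : S.bd (n + 1) = S.bd n ∪ S.K n := by
  simp only [bd, Finset.range_add_one, Finset.set_biUnion_insert]
  grind

lemma f_nonneg {x : ℝ} (hx : x ∈ Icc (-1 / 2 : ℝ) (2 * k + 1 / 2)) : 0 ≤ S.f x :=
  (S.lo_nonneg x).trans (S.lo_le hx)

lemma mem_O {u : ℝ × ℝ} : u ∈ S.O ↔ u.1 ∈ Icc (-1 / 2 : ℝ) (2 * k + 1 / 2) ∧ |u.2| = S.f u.1 :=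
  mem_cir fun _ hx => S.f_nonneg hx

lemma mem_K {j : ℕ} {u : ℝ × ℝ} :
    u ∈ S.K j ↔ u.1 ∈ Icc (2 * (j : ℝ) + 1 / 2) (2 * j + 3 / 2) ∧ |u.2| = S.lo u.1 :=
  mem_cir fun x _ => S.lo_nonneg x

lemma O_compact : IsCompact S.O := cir_compact _ _ S.f_cont
lemma K_compact (j : ℕ) : IsCompact (S.K j) := cir_compact _ _ S.lo_cont
lemma bd_compact (n : ℕ) : IsCompact (S.bd n) :=
  S.O_compact.union (Finset.isCompact_biUnion _ fun i _ => S.K_compact i)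

lemma O_chi : HasChi S.O 1 :=
  cir_chi S.f_cont (by have : (0 : ℝ) ≤ k := Nat.cast_nonneg k
                       linarith) S.f_left S.f_right fun x hx =>
    ((S.lo_nonneg x).trans_lt (S.lo_lt x hx)).ne'

lemma K_chi {j : ℕ} (hj : j < k) : HasChi (S.K j) 1 :=
  cir_chi S.lo_cont (by linarith) S.lo_left S.lo_right fun x hx => ((S.lo_pos x).2 ⟨j, hj, hx⟩).ne'

lemma O_disj {j : ℕ} (hj : j < k) : Disjoint S.O (S.K j) := by
  rw [Set.disjoint_left]
  intro u h1 h2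
  rw [mem_O] at h1
  rw [mem_K] at h2
  linarith [h1.2, h2.2, S.lo_lt _ (hole_sub hj h2.1)]

lemma K_disj {i j : ℕ} (hij : i < j) : Disjoint (S.K i) (S.K j) := by
  rw [Set.disjoint_left]
  intro u h1 h2
  rw [mem_K] at h1 h2
  have : (i : ℝ) + 1 ≤ j := by exact_mod_cast hij
  grind

lemma bd_disj {n : ℕ} (hn : n < k) : Disjoint (S.bd n) (S.K n) := by
  rw [bd, disjoint_union_left]
  refine ⟨S.O_disj hn, ?_⟩
  simp only [Finset.mem_range, disjoint_iUnion_left]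
  exact fun i hi => S.K_disj hi

lemma bd_chi {n : ℕ} (hn : n ≤ k) : HasChi (S.bd n) 1 := by
  induction n with
  | zero => simpa [bd] using S.O_chi
  | succ n ih =>
    rw [bd_succ]
    simpa using (ih (by omega)).disjoint (S.bd_compact n) (S.K_compact n) (S.K_chi hn) (S.bd_disj hn)

lemma bd_eq : S.bd k = {u | u ∈ S.F ∧ S.h u = 0} := by
  ext u
  simp only [bd, mem_union, mem_O, Finset.mem_range, mem_iUnion, mem_K, exists_prop, mem_setOf_eq, F]
  constructor
  · rintro (⟨h1, h2⟩ | ⟨j, hj, h1, h2⟩)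
    · have := S.lo_le h1
      exact ⟨⟨h1, by linarith, h2.le⟩, (S.h_zero u h1 (by linarith) h2.le).2 (Or.inl h2)⟩
    · have h3 := Ioo_subset_Icc_self (hole_sub hj h1)
      have := S.lo_le h3
      exact ⟨⟨h3, h2.ge, by linarith⟩,
        (S.h_zero u h3 h2.ge (by linarith)).2 (Or.inr ⟨h2, j, hj, h1⟩)⟩
  · rintro ⟨⟨h1, h2, h3⟩, h4⟩
    rcases (S.h_zero u h1 h2 h3).1 h4 with h | ⟨h, j, hj, h5⟩
    · grind
    · grind

end Shape

/-! ### Circle bundles with collapsing fibres -/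

section circ
variable {E : Type u} [MetricSpace E] (B : Set E) (r : E → ℝ)

/-- The two halves of `Circ`. -/
def Arc (s : ℝ) : Set (E × ℝ²) :=
  {z | z.1 ∈ B ∧ z.2.1 ^ 2 + z.2.2 ^ 2 = r z.1 ^ 2 ∧ 0 ≤ s * z.2.2}
/-- The circles of radius `r x` over the points `x` of `B`. -/
def Circ : Set (E × ℝ²) := {z | z.1 ∈ B ∧ z.2.1 ^ 2 + z.2.2 ^ 2 = r z.1 ^ 2}
/-- The graph of `ε r`. -/
def Gr (ε : ℝ) : Set (E × ℝ²) := {z | z.1 ∈ B ∧ z.2 = (ε * r z.1, 0)}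
/-- The intersection of the two halves of `Circ`: two copies of `B`, glued where `r = 0`. -/
def Two : Set (E × ℝ²) := {z | z.1 ∈ B ∧ z.2.1 ^ 2 = r z.1 ^ 2 ∧ z.2.2 = 0}
/-- The zero set of `r`. -/
def Zs : Set E := {x | x ∈ B ∧ r x = 0}

variable {B r}

lemma Circ_eq : Circ B r = Arc B r 1 ∪ Arc B r (-1) := by
  ext z
  simp only [Circ, Arc, mem_union, mem_ofPred_eq]
  grind

lemma Arc_inter : Arc B r 1 ∩ Arc B r (-1) = Two B r := by
  ext z
  simp only [Two, Arc, mem_inter_iff, mem_ofPred_eq]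
  grind

lemma Two_eq : Two B r = Gr B r 1 ∪ Gr B r (-1) := by
  ext ⟨x, a, b⟩
  simp only [Two, Gr, mem_union, mem_ofPred_eq, Prod.mk.injEq, sq_eq_sq_iff_eq_or_eq_neg]
  grind

lemma Gr_inter : Gr B r 1 ∩ Gr B r (-1) = Gr (Zs B r) r 1 := by
  ext ⟨x, a, b⟩
  simp only [Gr, Zs, mem_inter_iff, mem_ofPred_eq, Prod.mk.injEq]
  grind

variable (hr : Continuous r)
include hr

lemma Circ_compact (hB : IsCompact B) : IsCompact (Circ B r) := by
  obtain ⟨C, hC⟩ := (hB.image hr.abs).bddAbove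
  have : Circ B r ⊆ B ×ˢ (Icc (-C) C ×ˢ Icc (-C) C) := by
    rintro ⟨x, a, b⟩ ⟨h1, h2⟩
    have h3 : |r x| ≤ C := hC (mem_image_of_mem _ h1)
    refine ⟨h1, abs_le.1 (le_trans ?_ h3), abs_le.1 (le_trans ?_ h3)⟩
    · rw [← sq_le_sq]; nlinarith [sq_nonneg b]
    · rw [← sq_le_sq]; nlinarith [sq_nonneg a]
  have h2 : Circ B r = (B ×ˢ (Icc (-C) C ×ˢ Icc (-C) C)) ∩
      {z | z.2.1 ^ 2 + z.2.2 ^ 2 = r z.1 ^ 2} := by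
    ext z
    exact ⟨fun h => ⟨this h, h.2⟩, fun h => ⟨h.1.1, h.2⟩⟩
  rw [h2]
  refine (hB.prod (isCompact_Icc.prod isCompact_Icc)).inter_right (isClosed_eq ?_ ?_) <;> fun_prop

lemma Arc_compact (hB : IsCompact B) (s : ℝ) : IsCompact (Arc B r s) := by
  have h2 : Arc B r s = Circ B r ∩ {z | 0 ≤ s * z.2.2} := by
    ext z
    exact ⟨fun h => ⟨⟨h.1, h.2.1⟩, h.2.2⟩, fun h => ⟨h.1.1, h.1.2, h.2⟩⟩
  rw [h2]
  exact (Circ_compact hr hB).inter_right (isClosed_le continuous_const (by fun_prop))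

lemma Gr_compact (hB : IsCompact B) (ε : ℝ) : IsCompact (Gr B r ε) := by
  have : Gr B r ε = (fun x => (x, ((ε * r x, 0) : ℝ × ℝ))) '' B := by
    simp only [Gr, mem_ofPred_eq, mem_image, Prod.mk.injEq]
    grind
  rw [this]
  exact hB.image (by fun_prop)

lemma Zs_compact (hB : IsCompact B) : IsCompact (Zs B r) :=
  hB.inter_right (isClosed_eq hr continuous_const)

lemma Two_compact (hB : IsCompact B) : IsCompact (Two B r) := by
  rw [Two_eq]; exact (Gr_compact hr hB _).union (Gr_compact hr hB _)

lemma Gr_heq (ε : ℝ) : Heq (Gr B r ε) B :=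
  Heq.of_fst (fun x => (ε * r x, 0)) (by fun_prop) (fun x hx => ⟨hx, rfl⟩) (fun z hz => hz.1)
    (fun _ z => z.2) (by fun_prop) (fun t _ z hz => hz) (fun z hz => hz.2) fun z hz => rfl

/-- The homotopy contracting the arcs to one of their ends. -/
def arcH (r : E → ℝ) (s t : ℝ) (z : E × ℝ²) : ℝ × ℝ :=
  ((1 - t) * r z.1 + t * z.2.1, s * √(r z.1 ^ 2 - ((1 - t) * r z.1 + t * z.2.1) ^ 2))

omit hr in
lemma arcH_mem (h0 : ∀ x, 0 ≤ r x) {s : ℝ} (hs : s ^ 2 = 1) {t : ℝ} (ht : t ∈ 𝕀)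
    {z : E × ℝ²} (hz : z ∈ Arc B r s) : (z.1, arcH r s t z) ∈ Arc B r s := by
  obtain ⟨h1, h2, h3⟩ := hz
  obtain ⟨t0, t1⟩ := ht
  have ha : |z.2.1| ≤ r z.1 := by
    rw [← abs_of_nonneg (h0 z.1), ← sq_le_sq]; nlinarith [sq_nonneg z.2.2]
  obtain ⟨ha1, ha2⟩ := abs_le.1 ha
  have hb : ((1 - t) * r z.1 + t * z.2.1) ^ 2 ≤ r z.1 ^ 2 := by
    rw [sq_le_sq, abs_of_nonneg (h0 z.1), abs_le]
    have := h0 z.1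
    constructor <;> nlinarith
  refine ⟨h1, ?_, ?_⟩
  · simp only [arcH]
    rw [mul_pow, hs, Real.sq_sqrt (by linarith)]; ring
  · simp only [arcH]
    rw [← mul_assoc, ← sq, hs, one_mul]; positivity

lemma Arc_heq (h0 : ∀ x, 0 ≤ r x) {s : ℝ} (hs : s ^ 2 = 1) : Heq (Arc B r s) B := by
  refine Heq.of_fst (fun x => (r x, 0)) (by fun_prop) (fun x hx => ⟨hx, by simp, by simp⟩)
    (fun z hz => hz.1) (arcH r s) ?_ (fun t ht z hz => arcH_mem h0 hs ht hz) ?_ ?_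
  · apply Continuous.continuousOn
    unfold arcH Function.uncurry
    fun_prop
  · intro z _; simp [arcH]
  · rintro ⟨x, a, b⟩ ⟨h1, h2, h3⟩
    have : r x ^ 2 - a ^ 2 = (s * b) ^ 2 := by rw [mul_pow, hs]; linarith
    simp only [arcH, sub_self, zero_mul, one_mul, zero_add, this, Real.sqrt_sq h3, Prod.mk.injEq, true_and]
    grind

lemma Two_chi (hB : IsCompact B) {b c : ℤ} (hb : HasChi B b) (hc : HasChi (Zs B r) c) :
    HasChi (Two B r) (2 * b - c) := by
  rw [Two_eq]
  have h1 := fun ε => (Gr_heq hr (B := B) ε).symm.chi hB (Gr_compact hr hB ε) hb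
  have := (h1 1).union (Gr_compact hr hB 1) (Gr_compact hr hB (-1)) (h1 (-1)) (c := c) (by
    rw [Gr_inter]
    exact (Gr_heq hr 1).symm.chi (Zs_compact hr hB) (Gr_compact hr (Zs_compact hr hB) 1) hc)
  grind

lemma Circ_chi (h0 : ∀ x, 0 ≤ r x) (hB : IsCompact B) {b c : ℤ} (hb : HasChi B b)
    (hc : HasChi (Zs B r) c) : HasChi (Circ B r) c := by
  rw [Circ_eq]
  have h1 := fun s hs => (Arc_heq hr (B := B) h0 (s := s) hs).symm.chi hB (Arc_compact hr hB s) hb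
  have := (h1 1 (by simp)).union (Arc_compact hr hB 1) (Arc_compact hr hB (-1)) (h1 (-1) (by simp))
    (c := 2 * b - c) (by rw [Arc_inter]; exact Two_chi hr hB hb hc)
  grind

end circ

/-! ### The chain of circles -/

/-- Distance from `x` to the centres of the circles of the chain. -/
def rr (k : ℕ) (x : ℝ) : ℝ := infDist x ((fun j : ℕ => 2 * (j : ℝ) + 1) '' {j | j < k})

lemma rr_cont (k : ℕ) : Continuous (rr k) := continuous_infDist_pt _
lemma rr_nonneg (k : ℕ) (x : ℝ) : 0 ≤ rr k x := infDist_nonneg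

lemma rr_le {k j : ℕ} (hj : j < k) (x : ℝ) : rr k x ≤ |x - (2 * j + 1)| := by
  exact infDist_le_dist_of_mem ⟨j, hj, rfl⟩

lemma rr_eq {k : ℕ} (hk : 0 < k) (x : ℝ) : ∃ j < k, rr k x = |x - (2 * j + 1)| := by
  have hc : IsCompact ((fun j : ℕ => 2 * (j : ℝ) + 1) '' {j | j < k}) :=
    ((finite_lt_nat k).image _).isCompact
  obtain ⟨y, ⟨j, hj, rfl⟩, h⟩ := hc.exists_infDist_eq_dist ⟨_, 0, hk, rfl⟩ x
  exact ⟨j, hj, by rw [rr, h, Real.dist_eq]⟩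

lemma rr_le_iff {k : ℕ} (hk : 0 < k) (x c : ℝ) : rr k x ≤ c ↔ ∃ j < k, |x - (2 * j + 1)| ≤ c := by
  constructor
  · obtain ⟨j, hj, e⟩ := rr_eq hk x
    grind
  · rintro ⟨j, hj, h⟩
    exact (rr_le hj x).trans h

lemma rr_lt_iff {k : ℕ} (hk : 0 < k) (x c : ℝ) : rr k x < c ↔ ∃ j < k, |x - (2 * j + 1)| < c := by
  constructor
  · obtain ⟨j, hj, e⟩ := rr_eq hk x
    grind
  · rintro ⟨j, hj, h⟩
    exact (rr_le hj x).trans_lt h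

lemma rr_range {k : ℕ} {x : ℝ} (h : rr k x ≤ 3 / 2) (hk : 0 < k) :
    x ∈ Icc (-1 / 2 : ℝ) (2 * k + 1 / 2) := by
  obtain ⟨j, hj, h⟩ := (rr_le_iff hk _ _).1 h
  have h1 : (j : ℝ) + 1 ≤ k := by exact_mod_cast hj
  grind

lemma rr_range' {k : ℕ} {x : ℝ} (hk : 0 < k) (h : x ∈ Ioo (-1 / 2 : ℝ) (2 * k + 1 / 2)) :
    rr k x < 3 / 2 := by
  rw [rr_lt_iff hk]
  rcases le_or_gt x 0 with hx | hx
  · exact ⟨0, hk, by rw [abs_lt]; push_cast; constructor <;> linarith [h.1]⟩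
  have h1 := Nat.floor_le (by positivity : 0 ≤ x / 2)
  have h2 := Nat.lt_floor_add_one (x / 2)
  rcases lt_or_ge ⌊x / 2⌋₊ k with hj | hj
  · grind
  · have hj : (k : ℝ) ≤ ⌊x / 2⌋₊ := by exact_mod_cast hj
    refine ⟨k - 1, by omega, ?_⟩
    rw [Nat.cast_sub hk]
    grind

lemma rr_left {k : ℕ} (hk : 0 < k) : rr k (-1 / 2) = 3 / 2 := by
  refine le_antisymm ((rr_le hk _).trans ?_) ?_
  · linarith
  · obtain ⟨j, hj, e⟩ := rr_eq hk (-1 / 2)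
    grind

lemma rr_right {k : ℕ} (hk : 0 < k) : rr k (2 * k + 1 / 2) = 3 / 2 := by
  refine le_antisymm ((rr_le (j := k - 1) (by omega) _).trans ?_) ?_
  · rw [Nat.cast_sub hk, abs_le]; push_cast; constructor <;> linarith
  · obtain ⟨j, hj, e⟩ := rr_eq hk (2 * k + 1 / 2)
    have h0 : (j : ℝ) + 1 ≤ k := by exact_mod_cast hj
    grind

/-- Planar distance to the chain of circles. -/
def del (k : ℕ) (u : ℝ × ℝ) : ℝ :=
  if k = 0 then √(u.1 ^ 2 + u.2 ^ 2) else |√(rr k u.1 ^ 2 + u.2 ^ 2) - 1|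

lemma del_cont (k : ℕ) : Continuous (del k) := by
  unfold del
  have := rr_cont k
  split_ifs <;> fun_prop

lemma del_nonneg (k : ℕ) (u : ℝ × ℝ) : 0 ≤ del k u := by
  unfold del; split_ifs <;> positivity

lemma sqrt_max_lt {a b : ℝ} (h : a < b) (hb : 0 < b) : √(max 0 a) < √(max 0 b) :=
  Real.sqrt_lt_sqrt (le_max_left _ _) (by rw [max_eq_right hb.le]; exact max_lt hb h)

lemma sqrt_max_le {a y : ℝ} : √(max 0 a) ≤ |y| ↔ a ≤ y ^ 2 := by
  rw [Real.sqrt_le_left (abs_nonneg y), sq_abs, max_le_iff]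
  exact ⟨fun h => h.2, fun h => ⟨sq_nonneg y, h⟩⟩

lemma abs_eq_sqrt_max {a y : ℝ} (ha : 0 ≤ a) : |y| = √(max 0 a) ↔ y ^ 2 = a := by
  rw [max_eq_right ha, ← Real.sqrt_sq_eq_abs, Real.sqrt_inj (sq_nonneg _) ha]

lemma abs_le_sqrt_max {a y : ℝ} (ha : 0 ≤ a) : |y| ≤ √(max 0 a) ↔ y ^ 2 ≤ a := by
  rw [max_eq_right ha, ← Real.sqrt_sq_eq_abs, Real.sqrt_le_sqrt_iff ha]

lemma h_zero_iff {d : ℝ} (h0 : 0 ≤ d) (h : d ≤ 1 / 2) : √(max 0 (1 / 4 - d ^ 2)) = 0 ↔ d = 1 / 2 := by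
  rw [max_eq_right (by nlinarith), Real.sqrt_eq_zero (by nlinarith)]
  exact ⟨by intro h; nlinarith, by grind⟩

lemma sqrt_sub_one {N : ℝ} (h : 0 ≤ N) : |√N - 1| ≤ 1 / 2 ↔ 1 / 4 ≤ N ∧ N ≤ 9 / 4 := by
  rw [abs_le, neg_le_sub_iff_le_add, sub_le_iff_le_add]
  have h1 : (1 : ℝ) ≤ √N + 1 / 2 ↔ 1 / 4 ≤ N := by
    rw [← sub_le_iff_le_add, Real.le_sqrt' (by norm_num)]; norm_num
  have h2 : √N ≤ 1 / 2 + 1 ↔ N ≤ 9 / 4 := by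
    rw [Real.sqrt_le_left (by norm_num)]; norm_num
  rw [h1, h2]

lemma sqrt_sub_one_eq {N : ℝ} (h : 0 ≤ N) : |√N - 1| = 1 / 2 ↔ N = 1 / 4 ∨ N = 9 / 4 := by
  rw [abs_eq (by norm_num)]
  constructor
  · grind
  · rintro (rfl | rfl)
    · right; rw [show (1 / 4 : ℝ) = (1 / 2) ^ 2 by norm_num, Real.sqrt_sq (by norm_num)]; norm_num
    · left; rw [show (9 / 4 : ℝ) = (3 / 2) ^ 2 by norm_num, Real.sqrt_sq (by norm_num)]; norm_num

/-- Radius function of the handlebody over its planar shadow. -/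
def hh (k : ℕ) (u : ℝ × ℝ) : ℝ := √(max 0 (1 / 4 - del k u ^ 2))

lemma hh_cont (k : ℕ) : Continuous (hh k) := by
  have := del_cont k
  unfold hh; fun_prop

lemma chain_zero : ∃ S : Shape 0, S.h = hh 0 ∧ ∀ u, u ∈ S.F ↔ del 0 u ≤ 1 / 2 := by
  refine ⟨⟨fun _ => 0, fun x => √(max 0 (1 / 4 - x ^ 2)), hh 0, by fun_prop, by fun_prop,
    fun _ => le_rfl, by simp, ?_, ?_, ?_, ?_⟩, rfl, ?_⟩
  · rintro x ⟨h1, h2⟩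
    exact Real.sqrt_pos.2 (lt_max_of_lt_right (by nlinarith))
  · norm_num
  · norm_num
  · rintro ⟨x, y⟩ ⟨h1, h2⟩ - h3
    have hx : 0 ≤ 1 / 4 - x ^ 2 := by nlinarith
    have h4 := (abs_le_sqrt_max hx).1 h3
    have hN : √(x ^ 2 + y ^ 2) ≤ 1 / 2 := by
      rw [Real.sqrt_le_left (by norm_num)]; linarith
    have hd : del 0 (x, y) = √(x ^ 2 + y ^ 2) := by simp [del]
    rw [hh, hd, h_zero_iff (Real.sqrt_nonneg _) hN, abs_eq_sqrt_max hx,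
      Real.sqrt_eq_iff_mul_self_eq (by positivity) (by norm_num)]
    grind
  · rintro ⟨x, y⟩
    simp only [Shape.F, mem_ofPred_eq, del, if_true, Nat.cast_zero, mem_Icc]
    rw [Real.sqrt_le_left (by norm_num)]
    constructor
    · rintro ⟨⟨h1, h2⟩, -, h3⟩
      have hx : 0 ≤ 1 / 4 - x ^ 2 := by nlinarith
      linarith [(abs_le_sqrt_max hx).1 h3]
    · intro h
      refine ⟨⟨by nlinarith [sq_nonneg y], by nlinarith [sq_nonneg y]⟩, abs_nonneg _, ?_⟩
      rw [abs_le_sqrt_max (by nlinarith [sq_nonneg y])]; linarith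

lemma chain_pos {k : ℕ} (hk : 0 < k) : ∃ S : Shape k, S.h = hh k ∧ ∀ u, u ∈ S.F ↔ del k u ≤ 1 / 2 := by
  have hr := rr_cont k
  have hd : ∀ x y, del k (x, y) = |√(rr k x ^ 2 + y ^ 2) - 1| := fun x y => by simp [del, hk.ne']
  have hle : ∀ x ∈ Icc (-1 / 2 : ℝ) (2 * k + 1 / 2), rr k x ≤ 3 / 2 := by
    intro x hx
    rcases hx.1.eq_or_lt with rfl | h1
    · exact (rr_left hk).le
    rcases hx.2.eq_or_lt with rfl | h2
    · exact (rr_right hk).le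
    exact (rr_range' hk ⟨h1, h2⟩).le
  refine ⟨⟨fun x => √(max 0 (1 / 4 - rr k x ^ 2)), fun x => √(max 0 (9 / 4 - rr k x ^ 2)), hh k,
    by fun_prop, by fun_prop, fun _ => Real.sqrt_nonneg _, ?_, ?_, ?_, ?_, ?_⟩, rfl, ?_⟩
  · intro x
    rw [Real.sqrt_pos, lt_max_iff, or_iff_right (lt_irrefl 0)]
    have h0 := rr_nonneg k x
    have : 0 < 1 / 4 - rr k x ^ 2 ↔ rr k x < 1 / 2 := by constructor <;> intro <;> nlinarith
    rw [this, rr_lt_iff hk]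
    grind
  · intro x hx
    have h0 := rr_nonneg k x
    have := rr_range' hk hx
    exact sqrt_max_lt (by linarith) (by nlinarith)
  · rw [rr_left hk]; norm_num
  · rw [rr_right hk]; norm_num
  · rintro ⟨x, y⟩ hx h2 h3
    have h0 := rr_nonneg k x
    have hx := hle x hx
    have hx : 0 ≤ 9 / 4 - rr k x ^ 2 := by nlinarith
    simp only at h2 h3 ⊢
    rw [abs_le_sqrt_max hx] at h3
    rw [sqrt_max_le] at h2
    have hN := (sqrt_sub_one (N := rr k x ^ 2 + y ^ 2) (by positivity)).2 ⟨by linarith, by linarith⟩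
    rw [← hd] at hN
    rw [hh, h_zero_iff (del_nonneg _ _) hN, hd, sqrt_sub_one_eq (by positivity), abs_eq_sqrt_max hx, or_comm]
    refine or_congr (by constructor <;> intro <;> linarith) ?_
    have : (∃ j < k, x ∈ Icc (2 * (j : ℝ) + 1 / 2) (2 * j + 3 / 2)) ↔ rr k x ≤ 1 / 2 := by
      rw [rr_le_iff hk]
      refine exists_congr fun j => and_congr_right fun _ => ?_
      rw [abs_le, mem_Icc]
      constructor <;> rintro ⟨h1, h2⟩ <;> constructor <;> linarith
    rw [this]
    constructor
    · intro h
      have : rr k x ≤ 1 / 2 := by nlinarith [sq_nonneg y]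
      refine ⟨?_, this⟩
      rw [abs_eq_sqrt_max (by nlinarith)]; linarith
    · rintro ⟨h, h'⟩
      rw [abs_eq_sqrt_max (by nlinarith)] at h; linarith
  · rintro ⟨x, y⟩
    have h0 := rr_nonneg k x
    simp only [Shape.F, mem_ofPred_eq]
    rw [hd, sqrt_sub_one (by positivity), sqrt_max_le]
    constructor
    · rintro ⟨h1, h2, h3⟩
      have hx := hle x h1
      have hx : 0 ≤ 9 / 4 - rr k x ^ 2 := by nlinarith
      rw [abs_le_sqrt_max hx] at h3
      exact ⟨by linarith, by linarith⟩
    · rintro ⟨h1, h2⟩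
      have : rr k x ≤ 3 / 2 := by nlinarith [sq_nonneg y]
      refine ⟨rr_range this hk, by linarith, ?_⟩
      rw [abs_le_sqrt_max (by nlinarith)]; linarith

lemma chain_shape (k : ℕ) : ∃ S : Shape k, S.h = hh k ∧ ∀ u, u ∈ S.F ↔ del k u ≤ 1 / 2 := by
  rcases k.eq_zero_or_pos with rfl | h
  exacts [chain_zero, chain_pos h]

/-- The planar chain. -/
def pch (k : ℕ) (a b : ℝ) : Prop :=
  (a = 0 ∧ b = 0) ∨ ∃ i < k, (a - (2 * (i : ℝ) + 1)) ^ 2 + b ^ 2 = 1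

lemma pch_near (k : ℕ) (x y : ℝ) : ∃ a b, pch k a b ∧ (x - a) ^ 2 + (y - b) ^ 2 = del k (x, y) ^ 2 := by
  rcases k.eq_zero_or_pos with rfl | hk
  · refine ⟨0, 0, Or.inl ⟨rfl, rfl⟩, ?_⟩
    simp [del, Real.sq_sqrt (by positivity : (0 : ℝ) ≤ x ^ 2 + y ^ 2)]
  · obtain ⟨j, hj, e⟩ := rr_eq hk x
    have hd : del k (x, y) ^ 2 = (√((x - (2 * j + 1)) ^ 2 + y ^ 2) - 1) ^ 2 := by
      simp [del, hk.ne', e]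
    set c : ℝ := 2 * j + 1
    set N := √((x - c) ^ 2 + y ^ 2) with hN
    have hN2 : N ^ 2 = (x - c) ^ 2 + y ^ 2 := Real.sq_sqrt (by positivity)
    rcases eq_or_ne N 0 with h0 | h0
    · refine ⟨c + 1, 0, Or.inr ⟨j, hj, by simp [c]⟩, ?_⟩
      have : x - c = 0 := by nlinarith [sq_nonneg y, sq_nonneg (x - c)]
      linarith
    · refine ⟨c + (x - c) / N, y / N, Or.inr ⟨j, hj, ?_⟩, ?_⟩
      · grind
      · grind

lemma sqrt_tri (a b c d : ℝ) : √(a ^ 2 + b ^ 2) ≤ √((a - c) ^ 2 + (b - d) ^ 2) + √(c ^ 2 + d ^ 2) := by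
  have := norm_add_le (!₂[a - c, b - d] : EuclideanSpace ℝ (Fin 2)) !₂[c, d]
  simpa [EuclideanSpace.norm_eq, Fin.sum_univ_two] using this

lemma pch_far {k : ℕ} (x y : ℝ) {a b : ℝ} (h : pch k a b) :
    del k (x, y) ^ 2 ≤ (x - a) ^ 2 + (y - b) ^ 2 := by
  rcases k.eq_zero_or_pos with rfl | hk
  · rcases h with ⟨rfl, rfl⟩ | ⟨i, hi, -⟩
    · simp [del, Real.sq_sqrt (by positivity : (0 : ℝ) ≤ x ^ 2 + y ^ 2)]
    · omega
  · have : ∃ i < k, (a - (2 * (i : ℝ) + 1)) ^ 2 + b ^ 2 = 1 := by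
      rcases h with ⟨rfl, rfl⟩ | h
      exacts [⟨0, hk, by simp⟩, h]
    obtain ⟨i, hi, e1⟩ := this
    obtain ⟨j, hj, e⟩ := rr_eq hk x
    have hd : del k (x, y) = |√((x - (2 * j + 1)) ^ 2 + y ^ 2) - 1| := by
      simp [del, hk.ne', e]
    have hji : |x - (2 * (j : ℝ) + 1)| ≤ |x - (2 * i + 1)| := e ▸ rr_le hi x
    have t1 := sqrt_tri (x - (2 * i + 1)) y (a - (2 * i + 1)) b
    have t2 := sqrt_tri (a - (2 * i + 1)) b (x - (2 * i + 1)) y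
    rw [e1, Real.sqrt_one] at t1 t2
    rw [sub_sub_sub_cancel_right] at t1 t2
    rw [sub_sq_comm a x, sub_sq_comm b y] at t2
    have hNN : √((x - (2 * j + 1)) ^ 2 + y ^ 2) ≤ √((x - (2 * i + 1)) ^ 2 + y ^ 2) :=
      Real.sqrt_le_sqrt (by have := sq_le_sq.2 hji; linarith)
    have key : del k (x, y) ≤ √((x - a) ^ 2 + (y - b) ^ 2) := by
      rw [hd, abs_le]
      refine ⟨?_, by linarith⟩
      rcases eq_or_ne i j with rfl | hij
      · linarith
      · have t3 := sqrt_tri (2 * (i - j) : ℝ) 0 (2 * i + 1 - x) (- y)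
        have h4 : 2 ≤ √((2 * ((i : ℝ) - j)) ^ 2 + 0 ^ 2) := by
          apply Real.le_sqrt_of_sq_le
          have : (1 : ℤ) ≤ ((i : ℤ) - j) ^ 2 := by
            have : (i : ℤ) - j ≠ 0 := by omega
            have := sq_pos_of_ne_zero this
            omega
          have : (1 : ℝ) ≤ ((i : ℝ) - j) ^ 2 := by exact_mod_cast this
          nlinarith
        grind
    calc _ ≤ √((x - a) ^ 2 + (y - b) ^ 2) ^ 2 := by
            have := del_nonneg k (x, y); gcongr
      _ = _ := Real.sq_sqrt (by positivity)

lemma mem_chain {n : ℕ} [NeZero n] {k : ℕ}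
    (h01 : ∀ j : Fin n, 2 ≤ (j : ℕ) ∨ j = 0 ∨ j = 1) {q : EuclideanSpace ℝ (Fin n)} :
    q ∈ chainSet n k ↔ pch k (q 0) (q 1) ∧ ∀ j : Fin n, 2 ≤ (j : ℕ) → q j = 0 := by
  simp only [chainSet, mem_union, mem_ofPred_eq, mem_iUnion, Finset.mem_range, pch]
  grind

lemma infDist_chain {n : ℕ} [NeZero n] (k : ℕ)
    (h01 : ∀ j : Fin n, 2 ≤ (j : ℕ) ∨ j = 0 ∨ j = 1) (ρ : EuclideanSpace ℝ (Fin n) → ℝ)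
    (hρ : ∀ p, 0 ≤ ρ p)
    (hd : ∀ p q : EuclideanSpace ℝ (Fin n), (∀ j : Fin n, 2 ≤ (j : ℕ) → q j = 0) →
      dist p q = √((p 0 - q 0) ^ 2 + (p 1 - q 1) ^ 2 + ρ p))
    (hmk : ∀ a b : ℝ, ∃ q : EuclideanSpace ℝ (Fin n), q 0 = a ∧ q 1 = b ∧
      ∀ j : Fin n, 2 ≤ (j : ℕ) → q j = 0) (p : EuclideanSpace ℝ (Fin n)) :
    infDist p (chainSet n k) = √(del k (p 0, p 1) ^ 2 + ρ p) := by
  apply le_antisymm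
  · obtain ⟨a, b, h1, h2⟩ := pch_near k (p 0) (p 1)
    obtain ⟨q, q0, q1, hq⟩ := hmk a b
    refine (infDist_le_dist_of_mem ((mem_chain h01).2 ⟨q0 ▸ q1 ▸ h1, hq⟩)).trans ?_
    rw [hd p q hq, q0, q1, h2]
  · rw [le_infDist (s := chainSet n k) ⟨0, Or.inl fun j => rfl⟩]
    intro q hq
    obtain ⟨h1, h2⟩ := (mem_chain h01).1 hq
    rw [hd p q h2]
    exact Real.sqrt_le_sqrt (by linarith [pch_far (p 0) (p 1) h1])

lemma infDist3 (k : ℕ) (p : EuclideanSpace ℝ (Fin 3)) :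
    infDist p (chainSet 3 k) = √(del k (p 0, p 1) ^ 2 + p 2 ^ 2) := by
  refine infDist_chain k (by decide) (fun p => p 2 ^ 2) (fun p => sq_nonneg _) ?_ ?_ p
  · intro p q h
    simp [EuclideanSpace.dist_eq, Fin.sum_univ_three, Real.dist_eq, h 2 (by decide)]
  · intro a b
    refine ⟨!₂[a, b, 0], by simp, by simp, fun j hj => ?_⟩
    fin_cases j <;> simp at hj ⊢

lemma infDist4 (k : ℕ) (p : EuclideanSpace ℝ (Fin 4)) :
    infDist p (chainSet 4 k) = √(del k (p 0, p 1) ^ 2 + (p 2 ^ 2 + p 3 ^ 2)) := by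
  refine infDist_chain k (by decide) (fun p => p 2 ^ 2 + p 3 ^ 2)
    (fun p => by positivity) ?_ ?_ p
  · intro p q h
    simp [EuclideanSpace.dist_eq, Fin.sum_univ_four, Real.dist_eq, h 2 (by decide), h 3 (by decide), add_assoc]
  · intro a b
    refine ⟨!₂[a, b, 0, 0], by simp, by simp, fun j hj => ?_⟩
    fin_cases j <;> simp at hj ⊢

lemma sqrt_half {N : ℝ} : √N ≤ 1 / 2 ↔ N ≤ 1 / 4 := by
  rw [Real.sqrt_le_left (by norm_num)]; norm_num

lemma mem_hb3 {k : ℕ} {p : EuclideanSpace ℝ (Fin 3)} :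
    p ∈ handlebodySet 3 k ↔ del k (p 0, p 1) ≤ 1 / 2 ∧ p 2 ^ 2 ≤ hh k (p 0, p 1) ^ 2 := by
  have h0 := del_nonneg k (p 0, p 1)
  rw [handlebodySet, mem_ofPred_eq, infDist3, sqrt_half, hh, Real.sq_sqrt (le_max_left _ _)]
  constructor
  · intro h
    exact ⟨by nlinarith [sq_nonneg (p 2)], le_max_of_le_right (by linarith)⟩
  · rintro ⟨h1, h2⟩
    rw [max_eq_right (by nlinarith)] at h2; linarith

lemma mem_hb4 {k : ℕ} {p : EuclideanSpace ℝ (Fin 4)} :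
    p ∈ handlebodySet 4 k ↔ del k (p 0, p 1) ≤ 1 / 2 ∧ p 2 ^ 2 + p 3 ^ 2 ≤ hh k (p 0, p 1) ^ 2 := by
  have h0 := del_nonneg k (p 0, p 1)
  rw [handlebodySet, mem_ofPred_eq, infDist4, sqrt_half, hh, Real.sq_sqrt (le_max_left _ _)]
  constructor
  · intro h
    exact ⟨by nlinarith [sq_nonneg (p 2), sq_nonneg (p 3)], le_max_of_le_right (by linarith)⟩
  · rintro ⟨h1, h2⟩
    rw [max_eq_right (by nlinarith)] at h2; linarith

/-- The frontier of a sublevel set all of whose level points can be pushed outwards. -/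
lemma frontier_sub {E : Type*} [TopologicalSpace E] {f : E → ℝ} (hf : Continuous f) {c : ℝ}
    (h : ∀ p, f p = c → ∃ γ : ℝ → E, Continuous γ ∧ γ 0 = p ∧ ∀ t, 0 < t → c < f (γ t)) :
    frontier {p | f p ≤ c} = {p | f p = c} := by
  apply Subset.antisymm
  · exact frontier_le_subset_eq hf continuous_const
  · intro p hp
    rw [frontier, (isClosed_le hf continuous_const).closure_eq]
    refine ⟨le_of_eq hp, fun hi => ?_⟩
    obtain ⟨γ, hγ, h0, h1⟩ := h p hp
    have : ∀ᶠ t in nhds (0 : ℝ), f (γ t) ≤ c := by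
      have : γ ⁻¹' interior {p | f p ≤ c} ∈ nhds (0 : ℝ) :=
        hγ.continuousAt.preimage_mem_nhds (by rw [h0]; exact isOpen_interior.mem_nhds hi)
      filter_upwards [this] with t ht
      exact interior_subset (s := {p | f p ≤ c}) ht
    obtain ⟨t, ht, ht0⟩ := ((this.filter_mono nhdsWithin_le_nhds).and
      (self_mem_nhdsWithin (a := (0 : ℝ)) (s := Ioi 0))).exists
    grind

lemma mem_surf {k : ℕ} {p : EuclideanSpace ℝ (Fin 3)} :
    p ∈ surfaceSet k ↔ del k (p 0, p 1) ≤ 1 / 2 ∧ p 2 ^ 2 = hh k (p 0, p 1) ^ 2 := by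
  have h0 := del_nonneg k (p 0, p 1)
  have : surfaceSet k = {p | del k (p 0, p 1) ^ 2 + p 2 ^ 2 = 1 / 4} := by
    rw [surfaceSet]
    have : handlebodySet 3 k = {p | del k (p 0, p 1) ^ 2 + p 2 ^ 2 ≤ 1 / 4} := by
      ext p; rw [handlebodySet, mem_ofPred_eq, infDist3, sqrt_half]; rfl
    rw [this]
    have hc := del_cont k
    apply frontier_sub (by fun_prop)
    intro p hp
    refine ⟨fun t => !₂[p 0, p 1, p 2 + t * (if 0 ≤ p 2 then 1 else -1)], by fun_prop, ?_, ?_⟩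
    · ext i; fin_cases i <;> simp
    · intro t ht
      simp only [Matrix.cons_val]
      have : p 2 ^ 2 < (p 2 + t * (if 0 ≤ p 2 then 1 else -1)) ^ 2 := by
        split_ifs with h <;> nlinarith
      linarith
  rw [this, mem_ofPred_eq, hh, Real.sq_sqrt (le_max_left _ _)]
  constructor
  · intro h
    have : del k (p 0, p 1) ≤ 1 / 2 := by nlinarith [sq_nonneg (p 2)]
    refine ⟨this, ?_⟩
    rw [max_eq_right (by nlinarith)]; linarith
  · rintro ⟨h1, h2⟩
    rw [max_eq_right (by nlinarith)] at h2; linarith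

lemma mem_sum {k : ℕ} {p : EuclideanSpace ℝ (Fin 4)} :
    p ∈ sumS1S2Set k ↔ del k (p 0, p 1) ≤ 1 / 2 ∧ p 2 ^ 2 + p 3 ^ 2 = hh k (p 0, p 1) ^ 2 := by
  have h0 := del_nonneg k (p 0, p 1)
  have : sumS1S2Set k = {p | del k (p 0, p 1) ^ 2 + (p 2 ^ 2 + p 3 ^ 2) = 1 / 4} := by
    rw [sumS1S2Set]
    have : handlebodySet 4 k = {p | del k (p 0, p 1) ^ 2 + (p 2 ^ 2 + p 3 ^ 2) ≤ 1 / 4} := by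
      ext p; rw [handlebodySet, mem_ofPred_eq, infDist4, sqrt_half]; rfl
    rw [this]
    have hc := del_cont k
    apply frontier_sub (by fun_prop)
    intro p hp
    refine ⟨fun t => !₂[p 0, p 1, p 2 + t * (if 0 ≤ p 2 then 1 else -1), p 3], by fun_prop, ?_, ?_⟩
    · ext i; fin_cases i <;> simp
    · intro t ht
      simp only [Matrix.cons_val]
      have : p 2 ^ 2 < (p 2 + t * (if 0 ≤ p 2 then 1 else -1)) ^ 2 := by
        split_ifs with h <;> nlinarith
      linarith
  rw [this, mem_ofPred_eq, hh, Real.sq_sqrt (le_max_left _ _)]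
  constructor
  · intro h
    have : del k (p 0, p 1) ≤ 1 / 2 := by nlinarith [sq_nonneg (p 2), sq_nonneg (p 3)]
    refine ⟨this, ?_⟩
    rw [max_eq_right (by nlinarith)]; linarith
  · rintro ⟨h1, h2⟩
    rw [max_eq_right (by nlinarith)] at h2; linarith

/-- The planar shadow of the handlebody. -/
def FF (k : ℕ) : Set ℝ² := {u | del k u ≤ 1 / 2}

def surfHomeo (k : ℕ) : surfaceSet k ≃ₜ Two (FF k) (hh k) where
  toFun p := ⟨((p.1 0, p.1 1), (p.1 2, 0)), by
    have := mem_surf.1 p.2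
    exact ⟨this.1, this.2, rfl⟩⟩
  invFun z := ⟨!₂[z.1.1.1, z.1.1.2, z.1.2.1], mem_surf.2 ⟨z.2.1, z.2.2.1⟩⟩
  left_inv p := by
    ext i; fin_cases i <;> simp
  right_inv z := by
    obtain ⟨⟨⟨x, y⟩, a, b⟩, h1, h2, h3⟩ := z
    simp only at h3
    subst h3
    simp
  continuous_toFun := by fun_prop
  continuous_invFun := by fun_prop

def sumHomeo (k : ℕ) : sumS1S2Set k ≃ₜ Circ (FF k) (hh k) where
  toFun p := ⟨((p.1 0, p.1 1), (p.1 2, p.1 3)), by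
    have := mem_sum.1 p.2
    exact ⟨this.1, this.2⟩⟩
  invFun z := ⟨!₂[z.1.1.1, z.1.1.2, z.1.2.1, z.1.2.2], mem_sum.2 ⟨z.2.1, z.2.2⟩⟩
  left_inv p := by
    ext i; fin_cases i <;> simp
  right_inv z := by
    obtain ⟨⟨⟨x, y⟩, a, b⟩, h1, h2⟩ := z
    simp
  continuous_toFun := by fun_prop
  continuous_invFun := by fun_prop

/-- The intervals of half-length `h` over `B`. -/
def Hb3 (B : Set ℝ²) (h : ℝ × ℝ → ℝ) : Set (ℝ² × ℝ) := {z | z.1 ∈ B ∧ z.2 ^ 2 ≤ h z.1 ^ 2}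
/-- The discs of radius `h` over `B`. -/
def Hb4 (B : Set ℝ²) (h : ℝ × ℝ → ℝ) : Set (ℝ² × ℝ²) :=
  {z | z.1 ∈ B ∧ z.2.1 ^ 2 + z.2.2 ^ 2 ≤ h z.1 ^ 2}

def hb3Homeo (k : ℕ) : handlebodySet 3 k ≃ₜ Hb3 (FF k) (hh k) where
  toFun p := ⟨((p.1 0, p.1 1), p.1 2), mem_hb3.1 p.2⟩
  invFun z := ⟨!₂[z.1.1.1, z.1.1.2, z.1.2], mem_hb3.2 ⟨z.2.1, z.2.2⟩⟩
  left_inv p := by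
    ext i; fin_cases i <;> simp
  right_inv z := by
    obtain ⟨⟨⟨x, y⟩, a⟩, h1, h2⟩ := z
    simp
  continuous_toFun := by fun_prop
  continuous_invFun := by fun_prop

def hb4Homeo (k : ℕ) : handlebodySet 4 k ≃ₜ Hb4 (FF k) (hh k) where
  toFun p := ⟨((p.1 0, p.1 1), (p.1 2, p.1 3)), mem_hb4.1 p.2⟩
  invFun z := ⟨!₂[z.1.1.1, z.1.1.2, z.1.2.1, z.1.2.2], mem_hb4.2 ⟨z.2.1, z.2.2⟩⟩
  left_inv p := by
    ext i; fin_cases i <;> simp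
  right_inv z := by
    obtain ⟨⟨⟨x, y⟩, a, b⟩, h1, h2⟩ := z
    simp
  continuous_toFun := by fun_prop
  continuous_invFun := by fun_prop

lemma Hb3_heq (B : Set ℝ²) (h : ℝ × ℝ → ℝ) : Heq (Hb3 B h) B := by
  refine Heq.of_fst (fun _ => 0) (by fun_prop) (fun x hx => ⟨hx, by simp; positivity⟩) (fun z hz => hz.1)
    (fun t z => t * z.2) (by fun_prop) ?_ (by simp) (by simp)
  rintro t ⟨h0, h1⟩ z ⟨h2, h3⟩
  refine ⟨h2, ?_⟩
  have : t ^ 2 ≤ 1 := by nlinarith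
  nlinarith [sq_nonneg z.2]

lemma Hb4_heq (B : Set ℝ²) (h : ℝ × ℝ → ℝ) : Heq (Hb4 B h) B := by
  refine Heq.of_fst (fun _ => 0) (by fun_prop) (fun x hx => ⟨hx, by simp; positivity⟩) (fun z hz => hz.1)
    (fun t z => (t * z.2.1, t * z.2.2)) (by fun_prop) ?_ (by simp) (by simp)
  rintro t ⟨h0, h1⟩ z ⟨h2, h3⟩
  refine ⟨h2, ?_⟩
  have : t ^ 2 ≤ 1 := by nlinarith
  nlinarith [sq_nonneg z.2.1, sq_nonneg z.2.2]

lemma FF_eq {k : ℕ} {S : Shape k} (h : ∀ u, u ∈ S.F ↔ del k u ≤ 1 / 2) : FF k = S.F := by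
  ext u; exact (h u).symm

lemma FF_compact (k : ℕ) : IsCompact (FF k) := by
  obtain ⟨S, -, h⟩ := chain_shape k
  rw [FF_eq h]; exact S.F_compact

lemma FF_chi (k : ℕ) : HasChi (FF k) k := by
  obtain ⟨S, -, h⟩ := chain_shape k
  rw [FF_eq h]; exact S.F_chi

lemma FF_triv (k : ℕ) {m : ℕ} (hm : m ≠ 2) : Triv (FF k) m := by
  obtain ⟨S, -, h⟩ := chain_shape k
  rw [FF_eq h]; exact S.F_triv hm

lemma hh_nonneg (k : ℕ) (u : ℝ × ℝ) : 0 ≤ hh k u := Real.sqrt_nonneg _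

lemma Zs_chi (k : ℕ) : HasChi (Zs (FF k) (hh k)) 1 := by
  obtain ⟨S, h', h⟩ := chain_shape k
  rw [FF_eq h, ← h', show Zs S.F S.h = S.bd k from S.bd_eq.symm]
  exact S.bd_chi le_rfl

lemma chain_nonempty (k : ℕ) : (chainSet 3 k).Nonempty := ⟨0, Or.inl fun _ => rfl⟩

lemma FF_nonempty (k : ℕ) : (FF k).Nonempty := by
  obtain ⟨p, hp⟩ := chain_nonempty k
  refine ⟨(p 0, p 1), (mem_hb3 (p := p).1 ?_).1⟩
  simp [handlebodySet, infDist_zero_of_mem hp]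

lemma Hb4_compact (k : ℕ) : IsCompact (Hb4 (FF k) (hh k)) := by
  have : Hb4 (FF k) (hh k) ⊆ FF k ×ˢ (Icc (-(1 / 2)) (1 / 2) ×ˢ Icc (-(1 / 2)) (1 / 2)) := by
    rintro ⟨u, a, b⟩ ⟨h1, h2⟩
    have h3 : hh k u ^ 2 ≤ 1 / 4 := by
      rw [hh, Real.sq_sqrt (le_max_left _ _)]
      exact max_le (by norm_num) (by nlinarith [sq_nonneg (del k u)])
    refine ⟨h1, ⟨?_, ?_⟩, ?_, ?_⟩ <;> nlinarith [sq_nonneg a, sq_nonneg b]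
  refine ((FF_compact k).prod (isCompact_Icc.prod isCompact_Icc)).of_isClosed_subset ?_ this
  have := hh_cont k
  have hF : IsClosed (FF k) := (FF_compact k).isClosed
  exact (hF.preimage continuous_fst).inter
    (isClosed_le (f := fun z : ℝ² × ℝ² => z.2.1 ^ 2 + z.2.2 ^ 2)
      (g := fun z => hh k z.1 ^ 2) (by fun_prop) (by fun_prop))

lemma Hb3_compact (k : ℕ) : IsCompact (Hb3 (FF k) (hh k)) := by
  have : Hb3 (FF k) (hh k) = (fun z : ℝ² × ℝ² => (z.1, z.2.1)) '' Hb4 (FF k) (hh k) := by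
    ext ⟨u, a⟩
    constructor
    · rintro ⟨h1, h2⟩
      exact ⟨(u, (a, 0)), ⟨h1, by simpa using h2⟩, rfl⟩
    · rintro ⟨⟨v, b, c⟩, ⟨h1, h2⟩, e⟩
      obtain ⟨rfl, rfl⟩ := e
      exact ⟨h1, by simp only; nlinarith [sq_nonneg c]⟩
  rw [this]
  exact (Hb4_compact k).image (by fun_prop)

section
variable {E : Type u} [MetricSpace E] {Y : Set E}

/-- Cohomological properties of a genus `k` handlebody. -/
structure IsHb (Y : Set E) (k : ℕ) : Prop where
  compact : IsCompact Y
  chi : HasChi Y k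
  triv : ∀ m, m ≠ 2 → Triv Y m

lemma IsHb.finrank {k : ℕ} (h : IsHb Y k) : Module.finrank (ZMod 2) (H Y 2) = k := by
  simpa using (chi_of_triv (n := 2) h.triv h.chi)

lemma compact_of_homeo {E' : Type v} [MetricSpace E'] {Y' : Set E'} (e : Y ≃ₜ Y') (h : IsCompact Y') :
    IsCompact Y := by
  rw [isCompact_iff_compactSpace] at h ⊢
  exact e.symm.compactSpace

lemma IsHb.of_heq {E' : Type v} [MetricSpace E'] {k : ℕ} {Y' : Set E'} (e : Y ≃ₜ Y')
    (hc : IsCompact Y') (hn : Y'.Nonempty) (h : Heq Y' (FF k)) : IsHb Y k := by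
  have hY := compact_of_homeo e hc
  have h2 := Heq.of_homeo hn e.symm
  exact ⟨hY, h2.chi hc hY (h.symm.chi (FF_compact k) hc (FF_chi k)), fun m hm =>
    h2.triv hc hY (h.symm.triv (FF_compact k) hc (FF_triv k hm))⟩

lemma isHb3 {k : ℕ} (e : Y ≃ₜ handlebodySet 3 k) : IsHb Y k := by
  refine IsHb.of_heq (e.trans (hb3Homeo k)) (Hb3_compact k) ?_ (Hb3_heq _ _)
  obtain ⟨u, hu⟩ := FF_nonempty k
  exact ⟨(u, 0), hu, by simp; positivity⟩

lemma isHb4 {k : ℕ} (e : Y ≃ₜ handlebodySet 4 k) : IsHb Y k := by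
  refine IsHb.of_heq (e.trans (hb4Homeo k)) (Hb4_compact k) ?_ (Hb4_heq _ _)
  obtain ⟨u, hu⟩ := FF_nonempty k
  exact ⟨(u, 0), hu, by simp; positivity⟩

lemma surf_chi {k : ℕ} (e : Y ≃ₜ surfaceSet k) : IsCompact Y ∧ HasChi Y (2 * k - 1) := by
  have e' := e.trans (surfHomeo k)
  have hT := Two_compact (hh_cont k) (FF_compact k)
  have hY := compact_of_homeo e' hT
  obtain ⟨u, hu⟩ := FF_nonempty k
  have hne : (Two (FF k) (hh k)).Nonempty := ⟨(u, (hh k u, 0)), hu, by simp⟩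
  refine ⟨hY, (Heq.of_homeo hne e'.symm).chi hT hY
    (Two_chi (hh_cont k) (FF_compact k) (FF_chi k) (Zs_chi k))⟩
end

/-- The product of the circle with the `3`-manifold, as a subset of Euclidean space. -/
def MM (g : ℕ) : Set (ℝ² × ℝ²) := Circ (FF g) (hh g)
/-- The model of `S¹ × #^g S¹ × S²`. -/
def XX (g : ℕ) : Set ((ℝ² × ℝ²) × ℝ²) := Circ (MM g) fun _ => 1

lemma MM_compact (g : ℕ) : IsCompact (MM g) := Circ_compact (hh_cont g) (FF_compact g)
lemma XX_compact (g : ℕ) : IsCompact (XX g) := Circ_compact continuous_const (MM_compact g)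

lemma MM_chi (g : ℕ) : HasChi (MM g) 1 :=
  Circ_chi (hh_cont g) (hh_nonneg g) (FF_compact g) (FF_chi g) (Zs_chi g)

lemma XX_chi (g : ℕ) : HasChi (XX g) 1 :=
  Circ_chi continuous_const (fun _ => zero_le_one) (MM_compact g) (MM_chi g) (by
    have : Zs (MM g) (fun _ => (1 : ℝ)) = ∅ := by ext; simp [Zs]
    rw [this]; exact chi_empty)

lemma mem_circ2 {p : EuclideanSpace ℝ (Fin 2)} :
    p ∈ sphere (0 : EuclideanSpace ℝ (Fin 2)) 1 ↔ p 0 ^ 2 + p 1 ^ 2 = 1 := by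
  simp [EuclideanSpace.norm_eq, Fin.sum_univ_two]

def prodHomeo (g : ℕ) : (sphere (0 : EuclideanSpace ℝ (Fin 2)) 1) × sumS1S2Set g ≃ₜ XX g where
  toFun p := ⟨((sumHomeo g p.2).1, (p.1.1 0, p.1.1 1)), (sumHomeo g p.2).2, by
    simpa using mem_circ2.1 p.1.2⟩
  invFun z := (⟨!₂[z.1.2.1, z.1.2.2], mem_circ2.2 (by simpa using z.2.2)⟩, (sumHomeo g).symm ⟨z.1.1, z.2.1⟩)
  left_inv p := by
    ext1
    · ext i; fin_cases i <;> simp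
    · exact (sumHomeo g).symm_apply_apply p.2
  right_inv z := by
    obtain ⟨⟨w, x, y⟩, h1, h2⟩ := z
    simp
  continuous_toFun := by fun_prop
  continuous_invFun := by fun_prop

section
variable {E : Type u} [MetricSpace E]

lemma genus_formula {Y1 Y2 Y3 : Set E} {g k1 k2 k3 : ℕ} (h1 : IsHb Y1 k1) (h2 : IsHb Y2 k2)
    (h3 : IsHb Y3 k3) (h12 : IsHb (Y1 ∩ Y2) g) (h23 : IsHb (Y2 ∩ Y3) g) (h13 : IsHb (Y1 ∩ Y3) g)
    (h123 : HasChi (Y1 ∩ Y2 ∩ Y3) (2 * g - 1)) (hX : HasChi (Y1 ∪ Y2 ∪ Y3) 1) : g + 2 = k1 + k2 + k3 := by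
  have b := h12.chi.union h12.compact h13.compact h13.chi (c := 2 * g - 1) (by
    convert h123 using 1; ext; simp; tauto)
  rw [← inter_union_distrib_left] at b
  have c := h1.chi.union h1.compact (h2.compact.union h3.compact) (h2.chi.union h2.compact h3.compact h3.chi h23.chi) b
  rw [← union_assoc] at c
  have := c.unique hX
  omega

/-- A handlebody decomposition transported into a metric space. -/
lemma image_inter_homeo {X : Type v} [TopologicalSpace X] {φ : X → E} (hφ : Topology.IsEmbedding φ)
    (A : Set X) : Nonempty (φ '' A ≃ₜ A) := ⟨(hφ.homeomorphImage A).symm⟩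

lemma W_triv {Y2 Y3 : Set E} {g k2 k3 : ℕ} (h2 : IsHb Y2 k2)
    (h3 : IsHb Y3 k3) (h23 : IsHb (Y2 ∩ Y3) g) : Triv (Y2 ∪ Y3) 4 :=
  Triv.union h2.compact h3.compact (h2.triv 4 (by norm_num)) (h3.triv 4 (by norm_num))
    (h23.triv 3 (by norm_num))

end

/-! ### Descending cup products through a decomposition -/

section
variable {E : Type u} {E' : Type v}

lemma pb_wcup (f : E → E') (p φ : Coch E') : pb f (wcup p φ) = wcup (pb f p) (pb f φ) := by
  funext l; rcases l with _ | ⟨b, l⟩ <;> rfl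

lemma pb_cup (f : E → E') (p φ : Coch E') : pb f (cup p φ) = cup (pb f p) (pb f φ) := by
  funext l; rcases l with _ | ⟨a, _ | ⟨b, l⟩⟩ <;> rfl

/-- The constant cochain. -/
def one : Coch E := fun _ => 1

variable [MetricSpace E] [MetricSpace E']

lemma one_mem_Z (A : Set E) : (one : Coch E) ∈ Z A 1 := by
  refine ⟨1, one_pos, fun l hl => ?_⟩
  have := hl.len
  rcases l with _ | ⟨a, _ | ⟨b, _ | ⟨c, l⟩⟩⟩
  · simp at this
  · simp at this
  · change (1 : ZMod 2) + (1 + 0) = 0; decide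
  · simp at this

lemma cup_one (A : Set E) (α : Coch E) : cup α one + α ∈ L A 2 := by
  refine ⟨1, one_pos, fun l hl => ?_⟩
  have := hl.len
  rcases l with _ | ⟨a, _ | ⟨b, _ | ⟨c, l⟩⟩⟩
  · simp at this
  · simp at this
  · simp only [Pi.add_apply, cup, wcup, one, sh, mul_one]; exact two_eq _
  · simp at this

lemma one_wcup (A : Set E) (m : ℕ) (φ : Coch E) : wcup one φ + φ ∈ L A (m + 1) := by
  refine ⟨1, one_pos, fun l hl => ?_⟩
  have := hl.len
  rcases l with _ | ⟨a, l⟩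
  · simp at this
  · simp only [Pi.add_apply, wcup, one, one_mul]; exact two_eq _

lemma wcup_mem_L_left {A : Set E} (m : ℕ) {p : Coch E} (φ : Coch E) (h : p ∈ L A 1) :
    wcup p φ ∈ L A m := by
  obtain ⟨ε, hε, h⟩ := h
  refine ⟨ε, hε, fun l hl => ?_⟩
  rcases l with _ | ⟨b, l⟩
  · rfl
  · rw [wcup, h [b] (hl.sub rfl (by simp)), zero_mul]

lemma L_empty (m : ℕ) (φ : Coch E) : φ ∈ L (∅ : Set E) (m + 1) := by
  refine ⟨1, one_pos, fun l hl => ?_⟩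
  rcases l with _ | ⟨a, l⟩
  · simpa using hl.len
  · exact absurd (hl.mem a (by simp)) (by simp)

/-- Cocycles on disjoint compact sets have a common extension. -/
lemma extend_disj {P Q : Set E} (hP : IsCompact P) (hQ : IsCompact Q) (h : P ∩ Q = ∅) {m : ℕ}
    {p : Coch E} (hp : p ∈ Z P (m + 1)) :
    ∃ φ ∈ Z (P ∪ Q) (m + 1), φ + p ∈ L P (m + 1) ∧ φ ∈ L Q (m + 1) := by
  obtain ⟨φ, h1, h2, h3⟩ := extend hP hQ hp (Submodule.zero_mem (Z Q (m + 1))) (by rw [h]; exact L_empty _ _)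
  exact ⟨φ, h1, h2, by simpa using h3⟩

lemma cup_chain {P Q : Set E} (hP : IsCompact P) (hQ : IsCompact Q) {m : ℕ} {α c : Coch E}
    (hα : α ∈ Z (P ∪ Q) 2) (h : ∀ β ∈ Z (P ∪ Q) (m + 2), cup α β ∈ B (P ∪ Q) (m + 3))
    (hc : c ∈ Z (P ∩ Q) (m + 1)) : ∃ a ∈ Z P (m + 2), ∃ b ∈ Z Q (m + 2), a + b = cup α c := by
  obtain ⟨β, h0, h1, h2⟩ := connect hP hQ hc
  refine split_of_bound (φ := cup α β) ?_ (cup_mem_L α h2) (h β h0)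
  have e1 := cup_mem_L α h1
  rw [cup_add] at e1
  refine sub_chain _ e1 ?_
  rw [add_comm (cup α (d c))]
  exact leibniz (Z_mono subset_union_left _ hα) c

variable {M : Set E}

def sec (ε : ℝ) (x : E) : E × ℝ² := (x, (ε, 0))

lemma sec_mem {ε s : ℝ} (hε : ε ^ 2 = 1) : MapsTo (sec ε) M (Arc M (fun _ => 1) s) :=
  fun x hx => ⟨hx, by simp [sec, hε], by simp [sec]⟩

lemma sec_cont (ε : ℝ) : Continuous (sec ε : E → _) := by unfold sec; fun_prop

lemma sec_htpy {s : ℝ} (hs : s ^ 2 = 1) : Htpy M (Arc M (fun _ => 1) s) (sec 1) (sec (-1)) := by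
  refine ⟨fun t x => (x, arcH (fun _ => 1) s t (sec (-1) x)), ?_, ?_, ?_, ?_⟩
  · unfold arcH Function.uncurry sec
    fun_prop
  · intro t ht x hx
    exact arcH_mem (r := fun _ => 1) (fun _ => zero_le_one) hs ht (sec_mem (by norm_num) hx)
  · intro x _; simp [arcH, sec]
  · intro x _; simp [arcH, sec]

/-- A class on the two ends which splits over the two halves of the circle restricts to cohomologous
classes at the two ends. -/
lemma ends_eq (hM : IsCompact M) {m : ℕ} {a b : Coch (E × ℝ²)}
    (ha : a ∈ Z (Arc M (fun _ => 1) 1) m) (hb : b ∈ Z (Arc M (fun _ => 1) (-1)) m) :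
    pb (sec 1) (a + b) + pb (sec (-1)) (a + b) ∈ B M m := by
  have := add_mem (htpy hM (sec_htpy (s := 1) (by norm_num)) ha) (htpy hM (sec_htpy (s := -1) (by norm_num)) hb)
  grind

lemma Two_one : Gr M (fun _ => 1) 1 ∩ Gr M (fun _ => 1) (-1) = ∅ := by
  ext ⟨x, a, b⟩
  simp only [Gr, mem_inter_iff, mem_ofPred_eq, Prod.mk.injEq, mem_empty_iff_false, iff_false]
  grind

lemma sec_Gr (ε : ℝ) : MapsTo (sec ε) M (Gr M (fun _ => 1) ε) := fun x hx => ⟨hx, by simp [sec]⟩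

/-- A cochain on the two ends which is a given cocycle at one end and vanishes at the other one. -/
lemma two_ext (hM : IsCompact M) {m : ℕ} {p : Coch E} (hp : p ∈ Z M (m + 1)) :
    ∃ c ∈ Z (Two M fun _ => 1) (m + 1), pb (sec 1) c + p ∈ L M (m + 1) ∧
      pb (sec (-1)) c ∈ L M (m + 1) := by
  have hG := fun ε => Gr_compact (continuous_const (y := (1 : ℝ))) hM ε
  obtain ⟨c, h1, h2, h3⟩ := extend_disj (hG 1) (hG (-1)) Two_one
    (pb_Z (hG 1) continuous_fst.continuousOn (fun z hz => hz.1) hp)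
  rw [← Two_eq] at h1
  refine ⟨c, h1, ?_, pb_L hM (sec_cont _).continuousOn (sec_Gr _) h3⟩
  have := pb_L hM (sec_cont _).continuousOn (sec_Gr _) h2
  rw [map_add, pb_comp, show Prod.fst ∘ sec 1 = (id : E → E) from rfl, pb_id] at this
  exact this

section
variable (hM : IsCompact M) {X : Set (E × ℝ²)} (hX : X = Circ M fun _ => 1)
include hM hX

lemma circ_step {A : Coch E} {α : Coch (E × ℝ²)} (hα : α ∈ Z X 2)
    (hA : pb (sec 1) α + A ∈ L M 2) {m : ℕ} (h : ∀ β ∈ Z X (m + 2), cup α β ∈ B X (m + 3)) :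
    ∀ β ∈ Z M (m + 1), cup A β ∈ B M (m + 2) := by
  have hr : Continuous fun _ : E => (1 : ℝ) := continuous_const
  intro β hβ
  rw [hX, Circ_eq] at hα h
  obtain ⟨c, h1, h2, h3⟩ := two_ext hM hβ
  rw [← Arc_inter] at h1
  obtain ⟨a, ha, b, hb, e⟩ := cup_chain (Arc_compact hr hM 1) (Arc_compact hr hM (-1)) hα h h1
  have := ends_eq hM ha hb
  rw [e, pb_cup, pb_cup] at this
  have e1 : cup (pb (sec 1) α) (pb (sec 1) c) ∈ B M (m + 2) :=
    (Submodule.add_mem_iff_left _ (L_le_B _ _ (cup_mem_L _ h3))).1 this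
  have e2 : cup (pb (sec 1) α) (pb (sec 1) c) + cup (pb (sec 1) α) β ∈ L M (m + 2) := by
    rw [← cup_add]; exact cup_mem_L _ h2
  have e3 : cup (pb (sec 1) α) β + cup A β ∈ L M (m + 2) := by
    rw [← add_cup]; exact cup_mem_L_left _ hA
  exact (Submodule.add_mem_iff_right _ e1).1 (L_le_B _ _ (sub_chain _ e2 e3))

lemma circ_step_t {t : Coch (E × ℝ²)} {p : Coch (E × ℝ²)}
    (ht : t + d p ∈ L (Arc M (fun _ => 1) 1) 2) (ht' : t ∈ L (Arc M (fun _ => 1) (-1)) 2)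
    (hp : pb (sec 1) p + one ∈ L M 1) (hp' : pb (sec (-1)) p ∈ L M 1) {m : ℕ}
    (h : ∀ β ∈ Z X (m + 1), cup t β ∈ B X (m + 2)) : Triv M (m + 1) := by
  have hr : Continuous fun _ : E => (1 : ℝ) := continuous_const
  intro β hβ
  have hXc : IsCompact X := hX ▸ Circ_compact hr hM
  have hb := pb_Z hXc (f := Prod.fst) continuous_fst.continuousOn (fun z hz => by rw [hX] at hz; exact hz.1) hβ
  have hb2 := h _ hb
  rw [hX, Circ_eq] at hb hb2
  obtain ⟨a, ha, b, hb, e⟩ := split_of_bound (c := wcup p (pb Prod.fst β)) (m := m + 1) (by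
    have e1 := cup_mem_L_left (m := m + 2) (pb Prod.fst β) ht
    rw [add_cup] at e1
    have e2 := leibniz_w (Arc M (fun _ => 1) 1) (m := m) p (pb Prod.fst β)
    have hw : wcup p (d (pb Prod.fst β)) ∈ L (Arc M (fun _ => 1) 1) (m + 2) :=
      wcup_mem_L p (Z_mono subset_union_left _ hb)
    rw [Submodule.add_mem_iff_left _ hw, add_comm (d _)] at e2
    exact sub_chain _ e1 e2) (cup_mem_L_left _ ht') hb2
  have := ends_eq hM ha hb
  rw [e, pb_wcup, pb_wcup, pb_comp, pb_comp] at this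
  change wcup _ (pb id β) + wcup _ (pb id β) ∈ _ at this
  rw [pb_id] at this
  have e1 := (Submodule.add_mem_iff_left _ (L_le_B _ _ (wcup_mem_L_left _ β hp'))).1 this
  have e2 := wcup_mem_L_left (m + 1) β hp
  rw [add_wcup] at e2
  exact (Submodule.add_mem_iff_right _ e1).1 (L_le_B _ _ (sub_chain _ e2 (one_wcup M m β)))

end

variable {F : Set E} {h : E → ℝ} (hF : IsCompact F) (hh : Continuous h) (h0 : ∀ x, 0 ≤ h x)
include hF hh h0

lemma Arc_triv {m : ℕ} (ht : Triv F m) {s : ℝ} (hs : s ^ 2 = 1) : Triv (Arc F h s) m :=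
  (Arc_heq hh h0 hs).symm.triv hF (Arc_compact hh hF s) ht

lemma sigma_step {α : Coch (E × ℝ²)} (hα : α ∈ Z (Circ F h) 2) {m : ℕ} (hT : Triv F (m + 2))
    (H : ∀ β ∈ Z (Circ F h) (m + 2), cup α β ∈ B (Circ F h) (m + 3)) :
    ∀ β ∈ Z (Two F h) (m + 1), cup α β ∈ B (Two F h) (m + 2) := by
  intro β hβ
  rw [← Arc_inter] at hβ ⊢
  rw [Circ_eq] at hα H
  obtain ⟨a, ha, b, hb, e⟩ := cup_chain (Arc_compact hh hF 1) (Arc_compact hh hF (-1)) hα H hβ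
  rw [← e]
  exact add_mem (B_mono inter_subset_left _ (Arc_triv hF hh h0 hT (by norm_num) ha))
    (B_mono inter_subset_right _ (Arc_triv hF hh h0 hT (by norm_num) hb))

lemma sigma_triv {m : ℕ} (hT : Triv F m) (H : Triv (Circ F h) (m + 1)) : Triv (Two F h) m := by
  intro β hβ
  rw [← Arc_inter] at hβ ⊢
  rw [Circ_eq] at H
  obtain ⟨a, ha, b, hb, e⟩ := split_of_triv (Arc_compact hh hF 1) (Arc_compact hh hF (-1)) H hβ
  rw [← e]
  exact add_mem (B_mono inter_subset_left _ (Arc_triv hF hh h0 hT (by norm_num) ha))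
    (B_mono inter_subset_right _ (Arc_triv hF hh h0 hT (by norm_num) hb))

def sgr (h : E → ℝ) (ε : ℝ) (x : E) : E × ℝ² := (x, (ε * h x, 0))

omit hF hh h0 in
lemma sgr_mem {F : Set E} (ε : ℝ) : MapsTo (sgr h ε) F (Gr F h ε) := fun _ hx => ⟨hx, rfl⟩
omit hF h0 in
lemma sgr_cont (ε : ℝ) : Continuous (sgr h ε) := by unfold sgr; fun_prop

omit h0 in
/-- A cochain on the common boundary of the two sheets which splits comes from `F`. -/
lemma sheet_split {m : ℕ} {a b : Coch (E × ℝ²)} (ha : a ∈ Z (Gr F h 1) m)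
    (hb : b ∈ Z (Gr F h (-1)) m) : ∃ x ∈ Z F m, x + pb (sgr h 1) (a + b) ∈ L (Zs F h) m := by
  refine ⟨pb (sgr h 1) a + pb (sgr h (-1)) b, add_mem (pb_Z hF (sgr_cont hh _).continuousOn (sgr_mem _) ha)
    (pb_Z hF (sgr_cont hh _).continuousOn (sgr_mem _) hb), ?_⟩
  have : ∀ x ∈ Zs F h, sgr h (-1) x = sgr h 1 x := fun x hx => by simp [sgr, hx.2]
  have := pb_congr this m b
  rw [map_add]
  convert this using 1
  have e : pb (sgr h 1) a + pb (sgr h 1) a = 0 := add_eq_zero.2 rfl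
  linear_combination e

omit h0 in
lemma bd_step {A : Coch E} (hA : A ∈ Z F 2)
    (H : ∀ β ∈ Z (Two F h) 2, cup (pb Prod.fst A) β ∈ B (Two F h) 3) {c : Coch E}
    (hc : c ∈ Z (Zs F h) 1) : ∃ x ∈ Z F 2, x + cup A c ∈ L (Zs F h) 2 := by
  have hG := fun ε => Gr_compact hh hF ε
  have hα : pb Prod.fst A ∈ Z (Two F h) 2 := pb_Z (Two_compact hh hF) continuous_fst.continuousOn
    (fun z hz => hz.1) hA
  rw [Two_eq] at H hα
  have hc' : pb Prod.fst c ∈ Z (Gr F h 1 ∩ Gr F h (-1)) 1 := by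
    rw [Gr_inter]
    exact pb_Z (Gr_compact hh (Zs_compact hh hF) _) continuous_fst.continuousOn (fun z hz => hz.1) hc
  obtain ⟨a, ha, b, hb, e⟩ := cup_chain (hG 1) (hG (-1)) hα H hc'
  obtain ⟨x, hx, h1⟩ := sheet_split hF hh ha hb
  refine ⟨x, hx, ?_⟩
  rw [e, pb_cup, pb_comp, pb_comp, show Prod.fst ∘ sgr h 1 = (id : E → E) from rfl, pb_id, pb_id] at h1
  exact h1

omit h0 in
lemma bd_step_t (H : Triv (Two F h) 3) {c : Coch E} (hc : c ∈ Z (Zs F h) 2) :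
    ∃ x ∈ Z F 2, x + c ∈ L (Zs F h) 2 := by
  have hG := fun ε => Gr_compact hh hF ε
  rw [Two_eq] at H
  have hc' : pb Prod.fst c ∈ Z (Gr F h 1 ∩ Gr F h (-1)) 2 := by
    rw [Gr_inter]
    exact pb_Z (Gr_compact hh (Zs_compact hh hF) _) continuous_fst.continuousOn (fun z hz => hz.1) hc
  obtain ⟨a, ha, b, hb, e⟩ := split_of_triv (hG 1) (hG (-1)) H hc'
  obtain ⟨x, hx, h1⟩ := sheet_split hF hh ha hb
  refine ⟨x, hx, ?_⟩
  rw [e, pb_comp, show Prod.fst ∘ sgr h 1 = (id : E → E) from rfl, pb_id] at h1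
  exact h1

end

/-! ### The classes on the boundary circles -/

section
variable {E : Type u} [MetricSpace E]

lemma const_of_acyc {U : Set E} (hU : Acyc U) {p : Coch E} (hp : p ∈ Z U 1) {a b : E} (ha : a ∈ U)
    (hb : b ∈ U) : p [a] = p [b] := by
  obtain ⟨ψ, ε, hε, h⟩ := mem_B.1 (hU 1 hp)
  have key : ∀ a ∈ U, p [a] = ψ [] := fun a ha => by
    exact (add_eq_zero.1 (by simpa [d_cons] using (h [a] ⟨rfl, by simpa using ha, by simpa using hε⟩)) : p [a] = ψ [])
  grind

/-- Comparison of potentials along a circle made of two arcs. -/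
lemma circle_pot {P Q U D : Set E} (hU : Acyc U) (hD : Acyc D) (hUP : U ⊆ P) (hDQ : D ⊆ Q)
    {x γ p q r : Coch E} (hp : x + d p ∈ L P 2) (hq : x + d q ∈ L Q 2) (h1 : γ + d r ∈ L U 2)
    (h2 : γ ∈ L D 2) (hx : x + γ ∈ L (U ∪ D) 2) {a b : E} (ha : a ∈ U ∩ D) (hb : b ∈ U ∩ D) :
    (p + q) [a] + (p + q) [b] = r [a] + r [b] := by
  have e1 : p + r ∈ Z U 1 := by
    rw [mem_Z, d_add]
    have e : x + γ + (x + γ) = 0 := add_eq_zero.2 rfl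
    convert (add_mem (add_mem (L_mono hUP _ hp) h1) (L_mono subset_union_left _ hx)) using 1
    linear_combination -e
  have e2 : q ∈ Z D 1 := by
    rw [mem_Z]
    have e : x + γ + (x + γ) = 0 := add_eq_zero.2 rfl
    convert (add_mem (add_mem (L_mono hDQ _ hq) h2) (L_mono subset_union_right _ hx)) using 1
    linear_combination -e
  have f1 := const_of_acyc hU e1 ha.1 hb.1
  have f2 := const_of_acyc hD e2 ha.2 hb.2
  simp only [Pi.add_apply] at f1 ⊢
  grind

end

namespace Shape
variable {k : ℕ} (S : Shape k)

/-- The indicator of the part to the right of the `j`-th hole. -/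
def ind (j : ℕ) : Coch ℝ² := fun l => match l with
  | [] => 0
  | z :: _ => by classical exact if 2 * (j : ℝ) + 1 < z.1 then 1 else 0

lemma ind_Z (j : ℕ) : ind j ∈ Z (segs (k + 1)) 1 := by
  refine ⟨1, one_pos, fun l hl => ?_⟩
  obtain ⟨a, b, rfl⟩ := List.length_eq_two.1 hl.len
  have ha := hl.mem a (by simp)
  have hb := hl.mem b (by simp)
  have hd : |a.1 - b.1| < 1 := lt_of_le_of_lt (le_max_left _ _) (hl.close a (by simp) b (by simp))
  obtain ⟨a1, a2⟩ := a
  obtain ⟨b1, b2⟩ := b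
  obtain ⟨-, i, -, h1, h2⟩ := mem_segs.1 ha
  obtain ⟨-, i', -, h1', h2'⟩ := mem_segs.1 hb
  have key : (2 * (j : ℝ) + 1 < a1 ↔ 2 * (j : ℝ) + 1 < b1) := by
    rw [abs_lt] at hd
    constructor
    · intro h
      have e1 : (j : ℝ) < i := by linarith
      have e1 : (j : ℝ) + 1 ≤ i := by norm_cast at e1 ⊢
      by_contra hb
      have e2 : (i' : ℝ) < j + 1 := by linarith
      have e2 : (i' : ℝ) ≤ j := by norm_cast at e2 ⊢; omega
      linarith
    · intro h
      have e1 : (j : ℝ) < i' := by linarith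
      have e1 : (j : ℝ) + 1 ≤ i' := by norm_cast at e1 ⊢
      by_contra hb
      have e2 : (i : ℝ) < j + 1 := by linarith
      have e2 : (i : ℝ) ≤ j := by norm_cast at e2 ⊢; omega
      linarith
  change (if 2 * (j : ℝ) + 1 < b1 then (1 : ZMod 2) else 0) +
    ((if 2 * (j : ℝ) + 1 < a1 then (1 : ZMod 2) else 0) + 0) = 0
  grind

/-- A class dual to an arc crossing the `j`-th hole. -/
lemma exists_phi (j : ℕ) : ∃ φ ∈ Z S.F 2, φ + d (ind j) ∈ L S.Fp 2 ∧ φ ∈ L S.Fm 2 := by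
  have := connect S.Fp_compact S.Fm_compact (S.Fpm ▸ ind_Z j)
  rwa [← F_eq] at this

lemma K_diff {j : ℕ} (hj : j < k) {x γ p q r : Coch ℝ²} (hp : x + d p ∈ L S.Fp 2)
    (hq : x + d q ∈ L S.Fm 2) (h1 : γ + d r ∈ L S.Fp 2) (h2 : γ ∈ L S.Fm 2)
    (hx : x + γ ∈ L (S.K j) 2) :
    (p + q) [(2 * (j : ℝ) + 1 / 2, 0)] + (p + q) [(2 * (j : ℝ) + 3 / 2, 0)] =
      r [(2 * (j : ℝ) + 1 / 2, 0)] + r [(2 * (j : ℝ) + 3 / 2, 0)] := by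
  have i1 : strip (2 * (j : ℝ) + 1 / 2) (2 * j + 3 / 2) S.lo S.lo ⊆ S.Fp := fun u hu => by
    have := Ioo_subset_Icc_self (hole_sub hj hu.1)
    exact ⟨this, hu.2.1, hu.2.2.trans (S.lo_le this)⟩
  have i2 : strip (2 * (j : ℝ) + 1 / 2) (2 * j + 3 / 2) (fun x => - S.lo x) (fun x => - S.lo x) ⊆ S.Fm :=
    fun u hu => by
    have := Ioo_subset_Icc_self (hole_sub hj hu.1)
    exact ⟨this, (neg_le_neg (S.lo_le this)).trans hu.2.1, hu.2.2⟩
  have hi := cir_inter (a := 2 * (j : ℝ) + 1 / 2) (b := 2 * j + 3 / 2) (p := S.lo) (by linarith)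
    S.lo_left S.lo_right fun x hx => ((S.lo_pos x).2 ⟨j, hj, hx⟩).ne'
  have hn : Continuous fun x => - S.lo x := S.lo_cont.neg
  exact circle_pot (strip_acyc S.lo_cont S.lo_cont (by linarith) fun x _ => le_rfl)
    (strip_acyc hn hn (by linarith) fun x _ => le_rfl) i1 i2
    hp hq (L_mono i1 _ h1) (L_mono i2 _ h2) hx (by rw [hi]; simp) (by rw [hi]; simp)

/-- The upper half of `O`; `Om` is the lower one. -/
def Op : Set ℝ² := strip (-1 / 2) (2 * k + 1 / 2) S.f S.f
def Om : Set ℝ² := strip (-1 / 2) (2 * k + 1 / 2) (fun x => - S.f x) fun x => - S.f x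

lemma lt_ends : (-1 / 2 : ℝ) < 2 * k + 1 / 2 := by
  linarith

lemma O_inter : S.Op ∩ S.Om = {(-1 / 2, 0)} ∪ {(2 * (k : ℝ) + 1 / 2, 0)} :=
  cir_inter lt_ends S.f_left S.f_right fun x hx => ((S.lo_nonneg x).trans_lt (S.lo_lt x hx)).ne'

lemma O_diff {x γ p q r : Coch ℝ²} (hp : x + d p ∈ L S.Fp 2)
    (hq : x + d q ∈ L S.Fm 2) (h1 : γ + d r ∈ L S.Op 2) (h2 : γ ∈ L S.Om 2)
    (hx : x + γ ∈ L S.O 2) :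
    (p + q) [(-1 / 2, 0)] + (p + q) [(2 * (k : ℝ) + 1 / 2, 0)] =
      r [(-1 / 2, 0)] + r [(2 * (k : ℝ) + 1 / 2, 0)] := by
  have i1 : S.Op ⊆ S.Fp := fun u hu => ⟨hu.1, (S.lo_le hu.1).trans hu.2.1, hu.2.2⟩
  have i2 : S.Om ⊆ S.Fm := fun u hu => ⟨hu.1, hu.2.1, hu.2.2.trans (neg_le_neg (S.lo_le hu.1))⟩
  exact circle_pot (strip_acyc S.f_cont S.f_cont range_pos fun x _ => le_rfl)
    (strip_acyc S.f_cont.neg S.f_cont.neg range_pos fun x _ => le_rfl) i1 i2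
    hp hq h1 h2 hx (S.O_inter.symm ▸ Or.inl rfl : _ ∈ S.Op ∩ S.Om)
    (S.O_inter.symm ▸ Or.inr rfl : _ ∈ S.Op ∩ S.Om)

/-- A one-dimensional class of `F` is described by a function on the segments; here its jumps are
related to the restrictions of the class to the boundary circles. -/
lemma potential {x : Coch ℝ²} (hx : x ∈ Z S.F 2) : ∃ p q : Coch ℝ²,
    x + d p ∈ L S.Fp 2 ∧ x + d q ∈ L S.Fm 2 ∧
    ∀ i < k + 1, (p + q) [(2 * (i : ℝ) - 1 / 2, 0)] = (p + q) [(2 * (i : ℝ) + 1 / 2, 0)] := by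
  rw [F_eq] at hx
  obtain ⟨p, hp⟩ := mem_B.1 (S.Fp_acyc 2 (Z_mono subset_union_left _ hx))
  obtain ⟨q, hq⟩ := mem_B.1 (S.Fm_acyc 2 (Z_mono subset_union_right _ hx))
  refine ⟨p, q, hp, hq, fun i hi => ?_⟩
  have hpq : p + q ∈ Z (segs (k + 1)) 1 := by
    rw [mem_Z, d_add, ← S.Fpm]
    convert (add_mem (L_mono inter_subset_left _ hp) (L_mono inter_subset_right _ hq)) using 1
    grind
  have hs : seg i ⊆ segs (k + 1) := by
    rintro ⟨a, b⟩ ⟨h1, h2, h3⟩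
    exact mem_segs.2 ⟨le_antisymm h3 h2, i, hi, h1⟩
  refine const_of_acyc (seg_acyc i) (Z_mono hs _ hpq) ?_ ?_
  · exact ⟨⟨le_rfl, by simp only; linarith⟩, le_rfl, le_rfl⟩
  · exact ⟨⟨by simp only; linarith, le_rfl⟩, le_rfl, le_rfl⟩

/-- Sum of jumps around the chain. -/
lemma jump_sum (a b : ℕ → ZMod 2) (δ : ℕ → ZMod 2) (h1 : ∀ i < k + 1, a i = b i)
    (h2 : ∀ j < k, b j + a (j + 1) = δ j) : a 0 + b k = ∑ j ∈ Finset.range k, δ j := by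
  have : ∀ n ≤ k, a 0 + b n = ∑ j ∈ Finset.range n, δ j := by
    intro n
    induction n with
    | zero => intro _; rw [h1 0 (by omega)]; simpa using two_eq _
    | succ n ih =>
      intro hn
      rw [Finset.sum_range_succ, ← ih (by omega), ← h2 n (by omega), h1 (n + 1) (by omega)]
      grind
  exact this k le_rfl

lemma sum_jumps {p q : Coch ℝ²} {δ : ℕ → ZMod 2} {δ' : ZMod 2}
    (h : ∀ i < k + 1, (p + q) [(2 * (i : ℝ) - 1 / 2, 0)] = (p + q) [(2 * (i : ℝ) + 1 / 2, 0)])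
    (hK : ∀ j < k, (p + q) [(2 * (j : ℝ) + 1 / 2, 0)] + (p + q) [(2 * (j : ℝ) + 3 / 2, 0)] = δ j)
    (hO : (p + q) [(-1 / 2, 0)] + (p + q) [(2 * (k : ℝ) + 1 / 2, 0)] = δ') :
    δ' = ∑ j ∈ Finset.range k, δ j := by
  rw [← hO, ← jump_sum (fun i => (p + q) [(2 * (i : ℝ) - 1 / 2, 0)])
    (fun i => (p + q) [(2 * (i : ℝ) + 1 / 2, 0)]) δ h fun j hj => ?_]
  · norm_num
  · rw [← hK j hj]
    grind

/-- A class restricting to `A` on the `j`-th inner circle and to zero on the other circles does not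
extend to `F`, unless `A` does not wind around the `j`-th hole. -/
lemma no_ext {A r : Coch ℝ²} (h1 : A + d r ∈ L S.Fp 2) (h2 : A ∈ L S.Fm 2) {j : ℕ} (hj : j < k)
    (H : ∀ c ∈ Z (S.bd k) 1, ∃ x ∈ Z S.F 2, x + cup A c ∈ L (S.bd k) 2) :
    r [(2 * (j : ℝ) + 1 / 2, 0)] + r [(2 * (j : ℝ) + 3 / 2, 0)] = 0 := by
  let R := S.O ∪ ⋃ i ∈ (Finset.range k).erase j, S.K i
  have hR : IsCompact R := S.O_compact.union (Finset.isCompact_biUnion _ fun i _ => S.K_compact i)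
  have hdis : S.K j ∩ R = ∅ := by
    rw [← disjoint_iff_inter_eq_empty, disjoint_comm, disjoint_union_left]
    refine ⟨S.O_disj hj, ?_⟩
    simp only [disjoint_iUnion_left, Finset.mem_erase]
    rintro i ⟨hi, -⟩
    rcases lt_or_gt_of_ne hi with h | h
    · exact S.K_disj h
    · exact (S.K_disj h).symm
  have hbd : S.K j ∪ R = S.bd k := by
    ext u
    simp only [R, bd, mem_union, mem_iUnion, Finset.mem_erase, Finset.mem_range, exists_prop]
    grind
  obtain ⟨c, hc, c1, c2⟩ := extend_disj (S.K_compact j) hR hdis (one_mem_Z (S.K j))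
  rw [hbd] at hc
  obtain ⟨x, hx, e⟩ := H c hc
  rw [← hbd] at e
  have e1 : x + A ∈ L (S.K j) 2 := by
    have f2 := cup_mem_L A c1
    rw [cup_add] at f2
    exact sub_chain _ (sub_chain _ (L_mono subset_union_left _ e) f2) (cup_one _ A)
  have e2 : x ∈ L R 2 :=
    (Submodule.add_mem_iff_left _ (cup_mem_L A c2)).1 (L_mono subset_union_right _ e)
  obtain ⟨p, q, hp, hq, hpq⟩ := S.potential hx
  have h0 : ∀ {C : Set ℝ²} {m : ℕ}, (0 : Coch ℝ²) + d 0 ∈ L C m := by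
    intro C m
    have : d (0 : Coch ℝ²) = 0 := dL.map_zero
    rw [this, add_zero]; exact zero_mem _
  have hK : ∀ i < k, (p + q) [(2 * (i : ℝ) + 1 / 2, 0)] + (p + q) [(2 * (i : ℝ) + 3 / 2, 0)] =
      if i = j then r [(2 * (j : ℝ) + 1 / 2, 0)] + r [(2 * (j : ℝ) + 3 / 2, 0)] else 0 := by
    intro i hi
    split_ifs with hij
    · subst hij
      exact S.K_diff hj hp hq h1 h2 e1
    · have := S.K_diff hi hp hq h0 (zero_mem _) (by
        rw [add_zero]
        refine L_mono (fun u hu => Or.inr ?_) _ e2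
        simp only [mem_iUnion, Finset.mem_erase, Finset.mem_range, exists_prop]
        exact ⟨i, ⟨hij, hi⟩, hu⟩)
      simpa using this
  have := sum_jumps hpq hK (S.O_diff hp hq h0 (zero_mem _) (by rw [add_zero]; exact L_mono subset_union_left _ e2))
  rw [Finset.sum_ite_eq' (Finset.range k) j, if_pos (Finset.mem_range.2 hj)] at this
  rw [← this]; simp

/-- The fundamental class of the outer circle does not extend to `F`. -/
lemma no_ext_O (H : ∀ c ∈ Z (S.bd k) 2, ∃ x ∈ Z S.F 2, x + c ∈ L (S.bd k) 2) : False := by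
  let r : Coch ℝ² := fun l => if l = [(2 * (k : ℝ) + 1 / 2, 0)] then 1 else 0
  have hOp : IsCompact S.Op := strip_compact _ _ S.f_cont S.f_cont
  have hOm : IsCompact S.Om := strip_compact _ _ S.f_cont.neg S.f_cont.neg
  have hr : r ∈ Z (S.Op ∩ S.Om) 1 := by
    refine ⟨1, one_pos, fun l hl => ?_⟩
    obtain ⟨a, b, rfl⟩ := List.length_eq_two.1 hl.len
    have ha := hl.mem a (by simp)
    have hb := hl.mem b (by simp)
    have hd : |a.1 - b.1| < 1 := lt_of_le_of_lt (le_max_left _ _) (hl.close a (by simp) b (by simp))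
    rw [O_inter] at ha hb
    have : a = b := by
      grind
    subst this
    change r [a] + (r [a] + 0) = 0
    grind
  obtain ⟨γ, hγ, g1, g2⟩ := connect hOp hOm hr
  let R := ⋃ i ∈ Finset.range k, S.K i
  have hR : IsCompact R := Finset.isCompact_biUnion _ fun i _ => S.K_compact i
  have hdis : S.O ∩ R = ∅ := by
    rw [← disjoint_iff_inter_eq_empty]
    simp only [R, disjoint_iUnion_right, Finset.mem_range]
    exact fun i hi => S.O_disj hi
  obtain ⟨c, hc, c1, c2⟩ := extend_disj S.O_compact hR hdis hγ
  obtain ⟨x, hx, e⟩ := H c hc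
  have e1 : x + γ ∈ L S.O 2 := sub_chain _ (L_mono subset_union_left _ e) c1
  have e2 : x ∈ L R 2 := (Submodule.add_mem_iff_left _ c2).1 (L_mono subset_union_right _ e)
  obtain ⟨p, q, hp, hq, hpq⟩ := S.potential hx
  have h0 : ∀ {C : Set ℝ²} {m : ℕ}, (0 : Coch ℝ²) + d 0 ∈ L C m := by
    intro C m
    have : d (0 : Coch ℝ²) = 0 := dL.map_zero
    rw [this, add_zero]; exact zero_mem _
  have hK : ∀ i < k, (p + q) [(2 * (i : ℝ) + 1 / 2, 0)] + (p + q) [(2 * (i : ℝ) + 3 / 2, 0)] = 0 := by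
    intro i hi
    have := S.K_diff hi hp hq h0 (zero_mem _) (by
      rw [add_zero]
      refine L_mono (fun u hu => ?_) _ e2
      simp only [R, mem_iUnion, Finset.mem_range, exists_prop]
      exact ⟨i, hi, hu⟩)
    simpa using this
  have := sum_jumps (δ := fun _ => 0) hpq hK (S.O_diff hp hq g1 g2 e1)
  have r1 : r [(2 * (k : ℝ) + 1 / 2, 0)] = 1 := if_pos rfl
  have r0 : r [(-1 / 2, 0)] = 0 := if_neg (by simpa using (lt_ends (k := k)).ne)
  rw [r1, r0] at this
  simp at this

end Shape

/-! ### The lower bound -/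

lemma lower_one {g k1 : ℕ} {Y W : Set ((ℝ² × ℝ²) × ℝ²)} (hY : IsHb Y k1)
    (hW : IsCompact W) (hWt : Triv W 4) (hX : Y ∪ W = XX g) : g + 1 ≤ k1 := by
  obtain ⟨S, hS, hSF⟩ := chain_shape g
  have hF : FF g = S.F := FF_eq hSF
  have hZs : Zs (FF g) (hh g) = S.bd g := by
    rw [hF, ← hS]; exact S.bd_eq.symm
  have hM := MM_compact g
  have hXc := XX_compact g
  have hr : Continuous fun _ : ℝ² × ℝ² => (1 : ℝ) := continuous_const
  choose φ hφ hφp hφm using S.exists_phi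
  obtain ⟨p, hp, hp1, hp2⟩ := two_ext hM (one_mem_Z (MM g))
  rw [← Arc_inter] at hp
  obtain ⟨t, ht, ht1, ht2⟩ := connect (Arc_compact hr hM 1) (Arc_compact hr hM (-1)) hp
  rw [← Circ_eq] at ht
  change t ∈ Z (XX g) 2 at ht
  let ff : (ℝ² × ℝ²) × ℝ² → ℝ × ℝ := fun z => z.1.1
  let w : Option (Fin g) → Z Y 2 := fun i => ⟨i.elim t (fun j => pb ff (φ j)), by
    refine Z_mono (hX ▸ subset_union_left) _ (?_ : _ ∈ Z (XX g) 2)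
    rcases i with _ | j
    · exact ht
    · exact pb_Z hXc (by fun_prop) (fun z hz => by rw [← hF]; exact hz.1.1) (hφ j)⟩
  have hli : LinearIndependent (ZMod 2) (fun i => cls Y 2 (w i)) := by
    rw [Fintype.linearIndependent_iff]
    intro v hv
    simp only [← map_smul, ← map_sum] at hv
    rw [cls_eq_zero] at hv
    rw [AddSubmonoidClass.coe_finsetSum, Fintype.sum_option] at hv
    let A : Coch ℝ² := ∑ j : Fin g, v (some j) • φ j
    let r : Coch ℝ² := ∑ j : Fin g, v (some j) • Shape.ind j
    have hA : A ∈ Z S.F 2 := Submodule.sum_mem _ fun j _ => Submodule.smul_mem _ _ (hφ j)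
    have hAm : A ∈ L S.Fm 2 := Submodule.sum_mem _ fun j _ => Submodule.smul_mem _ _ (hφm j)
    have hAp : A + d r ∈ L S.Fp 2 := by
      have : A + dL r = ∑ j : Fin g, v (some j) • (φ j + d (Shape.ind j)) := by
        simp only [A, r, map_sum, map_smul, smul_add, Finset.sum_add_distrib]; rfl
      change A + dL r ∈ _
      rw [this]
      exact Submodule.sum_mem _ fun j _ => Submodule.smul_mem _ _ (hφp j)
    let α : Coch ((ℝ² × ℝ²) × ℝ²) := v none • t + pb ff A
    have hαB : α ∈ B Y 2 := by
      convert hv using 1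
      simp only [α, A, map_sum, map_smul]
      rfl
    have hα : α ∈ Z (XX g) 2 := add_mem (Submodule.smul_mem _ _ ht)
      (pb_Z hXc (by fun_prop) (fun z hz => by rw [← hF]; exact hz.1.1) hA)
    have hcup : ∀ β ∈ Z (XX g) 4, cup α β ∈ B (XX g) 5 := by
      intro β hβ
      rw [← hX] at hα hβ ⊢
      exact cup_bound hY.compact hW hα hβ hαB (hWt (Z_mono subset_union_right _ hβ))
    have hsec : pb (sec 1) α + pb Prod.fst A ∈ L (MM g) 2 := by
      have e1 : pb (sec 1) t ∈ L (MM g) 2 :=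
        pb_L hM (sec_cont _).continuousOn (sec_mem (by norm_num)) ht2
      have e2 : pb (sec 1) α = v none • pb (sec 1) t + pb Prod.fst A := by
        simp only [α, map_add, map_smul, pb_comp]; rfl
      rw [e2, add_assoc, add_eq_zero.2 rfl, add_zero]
      exact Submodule.smul_mem _ _ e1
    have s1 := circ_step hM rfl hα hsec hcup
    have s2 := sigma_step (FF_compact g) (hh_cont g) (hh_nonneg g) (m := 1)
      (pb_Z hM continuous_fst.continuousOn (fun z hz => hz.1) (hF ▸ hA)) (FF_triv g (by norm_num)) s1
    have s3 : ∀ c ∈ Z (S.bd g) 1, ∃ x ∈ Z S.F 2, x + cup A c ∈ L (S.bd g) 2 := by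
      intro c hc
      rw [← hZs, ← hF] at *
      exact bd_step (FF_compact g) (hh_cont g) hA s2 hc
    have hvj : ∀ j : Fin g, v (some j) = 0 := by
      intro j
      have e := S.no_ext hAp hAm j.2 s3
      have e1 : ∀ x, r [(x, 0)] = ∑ i : Fin g, v (some i) * if 2 * ((i : ℕ) : ℝ) + 1 < x then 1 else 0 := by
        intro x
        simp only [r, Finset.sum_apply, Pi.smul_apply, smul_eq_mul]
        rfl
      rw [e1, e1, ← Finset.sum_add_distrib, Finset.sum_eq_single j] at e
      · grind
      · intro i _ hij
        have hij : (i : ℕ) ≠ j := fun h => hij (Fin.ext h)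
        rcases lt_or_gt_of_ne hij with h | h
        · have h : ((i : ℕ) : ℝ) + 1 ≤ (j : ℕ) := by exact_mod_cast h
          grind
        · have h : ((j : ℕ) : ℝ) + 1 ≤ (i : ℕ) := by exact_mod_cast h
          rw [if_neg (by linarith), if_neg (by linarith)]
          simp
      · simp
    have hA0 : A = 0 := Finset.sum_eq_zero fun j _ => by rw [hvj, zero_smul]
    have hv0 : v none = 0 := by
      by_contra hne
      have h1 : v none = 1 := by
        generalize v none = x at hne
        revert x; decide
      have hαt : α = t := by simp [α, hA0, h1]
      rw [hαt] at hcup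
      have u1 : Triv (MM g) 4 := circ_step_t hM rfl ht1 ht2 hp1 hp2 hcup
      have u2 := sigma_triv (FF_compact g) (hh_cont g) (hh_nonneg g) (FF_triv g (by norm_num)) u1
      refine S.no_ext_O fun c hc => ?_
      rw [← hZs, ← hF] at *
      exact bd_step_t (FF_compact g) (hh_cont g) u2 hc
    intro i
    rcases i with _ | j
    exacts [hv0, hvj j]
  have := hY.chi.1 2
  have := hli.fintype_card_le_finrank
  rw [hY.finrank] at this
  simpa using this

lemma lower_bound {g : ℕ} {X : Type*} [TopologicalSpace X]
    (e : X ≃ₜ (sphere (0 : EuclideanSpace ℝ (Fin 2)) 1) × sumS1S2Set g) {g₀ k1 k2 k3 : ℕ}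
    (T : Trisection X g₀ k1 k2 k3) : 3 * g + 1 ≤ g₀ ∧ g + 1 ≤ k1 ∧ g + 1 ≤ k2 ∧ g + 1 ≤ k3 := by
  let φ : X → (ℝ² × ℝ²) × ℝ² := fun x => (prodHomeo g (e x)).1
  have hφ : Topology.IsEmbedding φ :=
    Topology.IsEmbedding.subtypeVal.comp (e.trans (prodHomeo g)).isEmbedding
  have hr : range φ = XX g := by
    have : φ = Subtype.val ∘ (e.trans (prodHomeo g)) := rfl
    rw [this, range_comp, (e.trans (prodHomeo g)).surjective.range_eq, image_univ, Subtype.range_coe]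
  obtain ⟨X1, X2, X3, hc, ⟨e1⟩, ⟨e2⟩, ⟨e3⟩, ⟨e12⟩, ⟨e23⟩, ⟨e13⟩, ⟨e123⟩⟩ := T
  have hI := fun A B => image_inter (s := A) (t := B) hφ.injective
  have im : ∀ A : Set X, Nonempty (φ '' A ≃ₜ A) := image_inter_homeo hφ
  have h1 : IsHb (φ '' X1) k1 := isHb4 ((im X1).some.trans e1)
  have h2 : IsHb (φ '' X2) k2 := isHb4 ((im X2).some.trans e2)
  have h3 : IsHb (φ '' X3) k3 := isHb4 ((im X3).some.trans e3)
  have h12 : IsHb (φ '' X1 ∩ φ '' X2) g₀ := by rw [← hI]; exact isHb3 ((im _).some.trans e12)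
  have h23 : IsHb (φ '' X2 ∩ φ '' X3) g₀ := by rw [← hI]; exact isHb3 ((im _).some.trans e23)
  have h13 : IsHb (φ '' X1 ∩ φ '' X3) g₀ := by rw [← hI]; exact isHb3 ((im _).some.trans e13)
  have h123 : HasChi (φ '' X1 ∩ φ '' X2 ∩ φ '' X3) (2 * g₀ - 1) := by
    rw [← hI, ← hI]; exact (surf_chi ((im _).some.trans e123)).2
  have hU : φ '' X1 ∪ φ '' X2 ∪ φ '' X3 = XX g := by
    rw [← image_union, ← image_union, hc, image_univ, hr]
  have hgf := genus_formula h1 h2 h3 h12 h23 h13 h123 (hU ▸ XX_chi g)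
  have b1 : g + 1 ≤ k1 := lower_one h1 (h2.compact.union h3.compact) (W_triv h2 h3 h23)
    (by rw [← hU, union_assoc])
  have b2 : g + 1 ≤ k2 := lower_one h2 (h1.compact.union h3.compact) (W_triv h1 h3 h13)
    (by rw [← hU]; ext; simp only [mem_union]; tauto)
  have b3 : g + 1 ≤ k3 := lower_one h3 (h1.compact.union h2.compact) (W_triv h1 h2 h12)
    (by rw [← hU]; ext; simp only [mem_union]; tauto)
  grind

/-! ### Pairs and their presentations as quotients -/

/-- The pairs `(V, bd)` and `(V', bd')` are homeomorphic. -/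
def PH {W : Type*} {W' : Type*} [TopologicalSpace W] [TopologicalSpace W'] (V bd : Set W)
    (V' bd' : Set W') : Prop :=
  ∃ Φ : V ≃ₜ V', ∀ x : V, (x : W) ∈ bd ↔ (Φ x : W') ∈ bd'

section
variable {W W' W'' : Type*} [TopologicalSpace W] [TopologicalSpace W'] [TopologicalSpace W'']
  {V bd : Set W} {V' bd' : Set W'} {V'' bd'' : Set W''}

lemma PH.symm (h : PH V bd V' bd') : PH V' bd' V bd := by
  obtain ⟨Φ, hΦ⟩ := h
  exact ⟨Φ.symm, fun x => by rw [hΦ, Φ.apply_symm_apply]⟩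

lemma PH.trans (h : PH V bd V' bd') (h' : PH V' bd' V'' bd'') : PH V bd V'' bd'' := by
  obtain ⟨Φ, hΦ⟩ := h
  obtain ⟨Ψ, hΨ⟩ := h'
  exact ⟨Φ.trans Ψ, fun x => (hΦ x).trans (hΨ _)⟩

lemma PH.homeo_bd (h : PH V bd V' bd') (hb : bd ⊆ V) (hb' : bd' ⊆ V') : Nonempty (bd ≃ₜ bd') := by
  obtain ⟨Φ, hΦ⟩ := h
  refine ⟨⟨⟨fun x => ⟨Φ ⟨x, hb x.2⟩, (hΦ ⟨x, hb x.2⟩).1 x.2⟩,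
    fun y => ⟨Φ.symm ⟨y, hb' y.2⟩, (hΦ _).2 (by rw [Φ.apply_symm_apply]; exact y.2)⟩,
    fun x => by simp, fun y => by simp⟩, ?_, ?_⟩⟩
  · fun_prop
  · fun_prop

/-- Two continuous images of a compact set with the same identifications are homeomorphic. -/
lemma PH.of_param {α : Type*} [TopologicalSpace α] [T2Space W] [T2Space W'] {K : Set α}
    (hK : IsCompact K) {f : α → W} {f' : α → W'} (hf : ContinuousOn f K) (hf' : ContinuousOn f' K)
    (hV : f '' K = V) (hV' : image f' K = V')
    (hker : ∀ a ∈ K, ∀ b ∈ K, (f a = f b ↔ f' a = f' b))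
    (hbd : ∀ a ∈ K, (f a ∈ bd ↔ f' a ∈ bd')) : PH V bd V' bd' := by
  subst hV hV'
  have : CompactSpace K := isCompact_iff_compactSpace.1 hK
  let p : K → f '' K := fun a => ⟨f a, mem_image_of_mem f a.2⟩
  let p' : K → image f' K := fun a => ⟨f' a, mem_image_of_mem f' a.2⟩
  have hp : Continuous p := hf.domRestrict.subtype_mk _
  have hp' : Continuous p' := hf'.domRestrict.subtype_mk _
  have hps : Function.Surjective p := by rintro ⟨_, a, ha, rfl⟩; exact ⟨⟨a, ha⟩, rfl⟩
  have hps' : Function.Surjective p' := by rintro ⟨_, a, ha, rfl⟩; exact ⟨⟨a, ha⟩, rfl⟩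
  have hq : Topology.IsQuotientMap p := (hp.isClosedMap).isQuotientMap hp hps
  have hk : ∀ a b, p a = p b ↔ p' a = p' b := fun a b => by
    grind
  let s := Function.surjInv hps
  have hs : ∀ x, p (s x) = x := Function.surjInv_eq hps
  let q : f '' K → image f' K := fun x => p' (s x)
  have hqp : ∀ a, q (p a) = p' a := fun a => (hk _ _).1 (hs _)
  have hqc : Continuous q := hq.continuous_iff.2 (by
    have : q ∘ p = p' := funext hqp
    rwa [this])
  have hqb : Function.Bijective q := by
    refine ⟨fun x y h => ?_, fun y => ?_⟩
    · grind
    · obtain ⟨a, rfl⟩ := hps' y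
      exact ⟨p a, hqp a⟩
  have : CompactSpace (f '' K) := isCompact_iff_compactSpace.1 (hK.image_of_continuousOn hf)
  refine ⟨Continuous.homeoOfEquivCompactToT2 (f := Equiv.ofBijective q hqb) hqc, ?_⟩
  rintro ⟨_, a, ha, rfl⟩
  change f a ∈ bd ↔ ((q (p ⟨a, ha⟩)) : W') ∈ bd'
  grind

end

/-! ### Pinched products -/

/-- The product of `V` with an interval of half-length `h`. -/
def Pin {W : Type*} (V : Set W) (h : W → ℝ) : Set (W × ℝ) := {z | z.1 ∈ V ∧ |z.2| ≤ h z.1}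

/-- The boundary of `Pin V h` when `h` vanishes exactly on the boundary of `V`. -/
def PinBd {W : Type*} (V : Set W) (h : W → ℝ) : Set (W × ℝ) := {z | z.1 ∈ V ∧ |z.2| = h z.1}

lemma mul_abs_cases {b h : ℝ} (hb : |b| ≤ 1) (h0 : 0 ≤ h) : |b * h| ≤ h := by
  rw [abs_mul, abs_of_nonneg h0]; nlinarith

lemma mul_abs_eq {b h : ℝ} (h0 : 0 ≤ h) : |b * h| = h ↔ h = 0 ∨ |b| = 1 := by
  rw [abs_mul, abs_of_nonneg h0]
  grind

lemma pin_image {U : Type*} (V : Set U) (r : U → ℝ) (h0 : ∀ x ∈ V, 0 ≤ r x) :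
    (fun p : V × ℝ => ((p.1 : U), p.2 * r p.1)) '' (univ ×ˢ Icc (-1) 1) = Pin V r := by
  ext ⟨x, a⟩
  constructor
  · rintro ⟨⟨v, b⟩, ⟨-, hb⟩, e⟩
    obtain ⟨rfl, rfl⟩ := Prod.ext_iff.1 e
    exact ⟨v.2, mul_abs_cases (abs_le.2 hb) (h0 _ v.2)⟩
  · rintro ⟨hx, ha⟩
    refine ⟨(⟨x, hx⟩, a / r x), ⟨trivial, abs_le.1 ?_⟩, ?_⟩
    · rw [abs_div, abs_of_nonneg (h0 x hx)]
      exact div_le_one_of_le₀ ha (h0 x hx)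
    · grind

/-- The pinched product only depends on the pair `(V, bd)`, not on the height function. -/
lemma PH.pin {W W' : Type*} [TopologicalSpace W] [TopologicalSpace W'] [T2Space W] [T2Space W']
    {V bd : Set W} {V' bd' : Set W'} (hV : IsCompact V) (h : PH V bd V' bd') {r : W → ℝ} {r' : W' → ℝ}
    (hr : ContinuousOn r V) (hr' : ContinuousOn r' V') (h0 : ∀ x ∈ V, 0 ≤ r x)
    (h0' : ∀ x ∈ V', 0 ≤ r' x) (hz : ∀ x ∈ V, (r x = 0 ↔ x ∈ bd)) (hz' : ∀ x ∈ V', (r' x = 0 ↔ x ∈ bd')) :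
    PH (Pin V r) (PinBd V r) (Pin V' r') (PinBd V' r') := by
  obtain ⟨Φ, hΦ⟩ := h
  have : CompactSpace V := isCompact_iff_compactSpace.1 hV
  have hΦr : Continuous fun v : V => r' (Φ v) :=
    (continuousOn_iff_continuous_domRestrict.1 hr').comp Φ.continuous
  have hrr : Continuous fun v : V => r v := continuousOn_iff_continuous_domRestrict.1 hr
  refine PH.of_param (α := V × ℝ) (K := univ ×ˢ Icc (-1) 1) (isCompact_univ.prod isCompact_Icc)
    (f := fun p => ((p.1 : W), p.2 * r p.1)) (f' := fun p => ((Φ p.1 : W'), p.2 * r' (Φ p.1)))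
    (Continuous.continuousOn ((by fun_prop : Continuous fun p : V × ℝ => (p.1 : W)).prodMk
      (continuous_snd.mul (hrr.comp continuous_fst))))
    (Continuous.continuousOn ((by fun_prop : Continuous fun p : V × ℝ => (Φ p.1 : W')).prodMk
      (continuous_snd.mul (hΦr.comp continuous_fst)))) (pin_image V r h0) ?_ ?_ ?_
  · rw [← pin_image V' r' h0']
    ext z
    constructor
    · rintro ⟨⟨v, b⟩, hb, rfl⟩
      exact ⟨(Φ v, b), hb, rfl⟩
    · rintro ⟨⟨v, b⟩, hb, rfl⟩
      exact ⟨(Φ.symm v, b), hb, by simp⟩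
  · simp only [Prod.mk.injEq, Subtype.coe_inj, EmbeddingLike.apply_eq_iff_eq]
    grind
  · rintro ⟨v, b⟩ -
    have e : r v = 0 ↔ r' (Φ v) = 0 := (hz v v.2).trans ((hΦ v).trans (hz' _ (Φ v).2).symm)
    simp only [PinBd, Set.mem_ofPred_eq, Subtype.coe_prop, true_and]
    rw [mul_abs_eq (h0 v v.2), mul_abs_eq (h0' _ (Φ v).2), e]

/-! ### Solid tori with one-handles -/

lemma circ_eq_iff {a b : ℝ} : (a : 𝕋) = b ↔ ∃ n : ℤ, b - a = n := by
  rw [QuotientAddGroup.eq, AddSubgroup.mem_zmultiples_iff]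
  grind

lemma circ_eq_Icc {a b : ℝ} (ha : a ∈ 𝕀) (hb : b ∈ 𝕀) :
    (a : 𝕋) = b ↔ a = b ∨ a = 0 ∧ b = 1 ∨ a = 1 ∧ b = 0 := by
  rw [circ_eq_iff]
  constructor
  · rintro ⟨n, h⟩
    have h1 : (n : ℝ) ≤ 1 := by linarith [ha.1, hb.2]
    have h2 : (-1 : ℝ) ≤ n := by linarith [ha.2, hb.1]
    have h1' : n ≤ 1 := by exact_mod_cast h1
    have h2' : -1 ≤ n := by exact_mod_cast h2
    obtain rfl | rfl | rfl : n = -1 ∨ n = 0 ∨ n = 1 := by omega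
    · grind
    · grind
    · grind
  · rintro (rfl | ⟨rfl, rfl⟩ | ⟨rfl, rfl⟩)
    · exact ⟨0, by simp⟩
    · exact ⟨1, by simp⟩
    · exact ⟨-1, by simp⟩

/-- The chart on the front face of the core: the annulus `S¹ × [-1, 1]` cut open along a radius. -/
def sq : Set ℂ := {P | P.re ∈ 𝕀 ∧ P.im ∈ Icc (-1 : ℝ) 1}
/-- The interior of the chart rectangle. -/
def sqo : Set ℂ := {P | P.re ∈ Ioo (0 : ℝ) 1 ∧ P.im ∈ Ioo (-1 : ℝ) 1}
/-- The cross section of a one-handle. -/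
def dd : Set ℂ := {v | |v.re| ≤ 1 ∧ |v.im| ≤ 1}
/-- The open square `(-1, 1)²`, the interior of a patch. -/
def ddo : Set ℂ := {v | |v.re| < 1 ∧ |v.im| < 1}

lemma sq_compact : IsCompact sq := by
  have : sq = Complex.equivRealProdCLM.toHomeomorph ⁻¹' (Icc 0 1 ×ˢ Icc (-1) 1) := by
    ext P; simp [sq]; tauto
  rw [this, Homeomorph.isCompact_preimage]
  exact isCompact_Icc.prod isCompact_Icc

lemma dd_compact : IsCompact dd := by
  have : dd = Complex.equivRealProdCLM.toHomeomorph ⁻¹' (Icc (-1) 1 ×ˢ Icc (-1) 1) := by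
    ext P; simp [dd, abs_le]; tauto
  rw [this, Homeomorph.isCompact_preimage]
  exact isCompact_Icc.prod isCompact_Icc

lemma sqo_sub : sqo ⊆ sq := fun _ h => ⟨⟨h.1.1.le, h.1.2.le⟩, ⟨h.2.1.le, h.2.2.le⟩⟩

/-- Identifications in the core: the two radial sides of the cut annulus are glued, and the vertical
fibres over the boundary circles of the annulus are collapsed. -/
def CR (P : ℂ) (z : ℝ) (P' : ℂ) (z' : ℝ) : Prop :=
  (P.re : 𝕋) = P'.re ∧ P.im = P'.im ∧ (z = z' ∨ |P.im| = 1)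

/-- `c` and `k` present the pair `(V, bd)` as a solid torus with one-handles attached along the
patches `e i false`, `e i true` of its front face. -/
structure IsNF {ι W : Type*} [TopologicalSpace W] (e : ι → Bool → ℂ → ℂ) (V bd : Set W)
    (c : ℂ × ℝ → W) (k : ι → ℂ × ℝ → W) : Prop where
  c_cont : ContinuousOn c (sq ×ˢ Icc 0 1)
  k_cont : ∀ i, ContinuousOn (k i) (dd ×ˢ Icc 0 1)
  c_mem : ∀ P ∈ sq, ∀ z ∈ 𝕀, c (P, z) ∈ V
  k_mem : ∀ i, ∀ v ∈ dd, ∀ z ∈ 𝕀, k i (v, z) ∈ V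
  surj : ∀ x ∈ V, (∃ P ∈ sq, ∃ z ∈ 𝕀, c (P, z) = x) ∨
    ∃ i, ∃ v ∈ dd, ∃ z ∈ 𝕀, k i (v, z) = x
  c_ker : ∀ P ∈ sq, ∀ z ∈ 𝕀, ∀ P' ∈ sq, ∀ z' ∈ 𝕀,
    (c (P, z) = c (P', z') ↔ CR P z P' z')
  k_inj : ∀ i, ∀ v ∈ dd, ∀ z ∈ Ioo (0 : ℝ) 1, ∀ i', ∀ v' ∈ dd, ∀ z' ∈ Ioo (0 : ℝ) 1,
    k i (v, z) = k i' (v', z') → i = i' ∧ v = v' ∧ z = z'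
  ck : ∀ i, ∀ v ∈ dd, ∀ z ∈ Ioo (0 : ℝ) 1, ∀ P ∈ sq, ∀ z' ∈ 𝕀, c (P, z') ≠ k i (v, z)
  k0 : ∀ i, ∀ v ∈ dd, k i (v, 0) = c (e i false v, 0)
  k1 : ∀ i, ∀ v ∈ dd, k i (v, 1) = c (e i true v, 0)
  e_mem : ∀ i ε, ∀ v ∈ dd, e i ε v ∈ sqo
  bd_c : ∀ P ∈ sq, ∀ z ∈ 𝕀, (c (P, z) ∈ bd ↔
    |P.im| = 1 ∨ z = 1 ∨ z = 0 ∧ ∀ i ε, ∀ v ∈ ddo, e i ε v ≠ P)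
  bd_k : ∀ i, ∀ v ∈ dd, ∀ z ∈ Ioo (0 : ℝ) 1, (k i (v, z) ∈ bd ↔ v ∉ ddo)

/-- `(V, bd)` is a solid torus with one-handles attached along the patches `e`. -/
def NF {ι W : Type*} [TopologicalSpace W] (e : ι → Bool → ℂ → ℂ) (V bd : Set W) : Prop :=
  ∃ c k, IsNF e V bd c k

section
variable {ι W W' : Type*} [TopologicalSpace W] [TopologicalSpace W'] {e : ι → Bool → ℂ → ℂ}
  {V bd : Set W} {V' bd' : Set W'}

/-- The domain of the core map and the handle maps, as one compact space. -/
def glueK (ι : Type*) : Set (Option ι × (ℂ × ℝ)) :=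
  ⋃ o : Option ι, Prod.mk o '' o.elim (sq ×ˢ Icc 0 1) fun _ => dd ×ˢ Icc 0 1

lemma mem_glueK (o : Option ι) (p : ℂ × ℝ) :
    (o, p) ∈ glueK ι ↔ p ∈ o.elim (sq ×ˢ 𝕀) fun _ => dd ×ˢ Icc 0 1 := by
  simp only [glueK, mem_iUnion, mem_image, Prod.mk.injEq]
  simp

lemma IsNF.glue_image {c : ℂ × ℝ → W} {k} (h : IsNF e V bd c k) :
    (fun q : Option ι × (ℂ × ℝ) => q.1.elim (c q.2) fun i => k i q.2) '' glueK ι = V := by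
  ext x
  constructor
  · rintro ⟨⟨_ | i, p⟩, hq, rfl⟩ <;> rw [mem_glueK] at hq
    · exact h.c_mem p.1 hq.1 p.2 hq.2
    · exact h.k_mem i p.1 hq.1 p.2 hq.2
  · intro hx
    rcases h.surj x hx with ⟨P, hP, z, hz, rfl⟩ | ⟨i, v, hv, z, hz, rfl⟩
    · exact ⟨(none, (P, z)), (mem_glueK _ _).2 ⟨hP, hz⟩, rfl⟩
    · exact ⟨(some i, (v, z)), (mem_glueK _ _).2 ⟨hv, hz⟩, rfl⟩

lemma IsNF.glue_cont [TopologicalSpace (Option ι)] [DiscreteTopology (Option ι)] {c : ℂ × ℝ → W} {k}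
    (h : IsNF e V bd c k) :
    ContinuousOn (fun q : Option ι × (ℂ × ℝ) => q.1.elim (c q.2) fun i => k i q.2) (glueK ι) := by
  rw [continuousOn_prod_of_discrete_left]
  rintro (_ | i)
  · exact h.c_cont.mono fun p hp => (mem_glueK _ _).1 hp
  · exact (h.k_cont i).mono fun p hp => (mem_glueK _ _).1 hp

lemma NF.unique [Finite ι] [T2Space W] [T2Space W'] (h : NF e V bd) (h' : NF e V' bd') :
    PH V bd V' bd' := by
  obtain ⟨c, k, h⟩ := h
  obtain ⟨c', k', h'⟩ := h'
  let : TopologicalSpace (Option ι) := ⊥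
  have : DiscreteTopology (Option ι) := ⟨rfl⟩
  let K : Set (Option ι × (ℂ × ℝ)) := glueK ι
  have hK : IsCompact K := by
    refine isCompact_iUnion fun o => IsCompact.image ?_ (by fun_prop)
    rcases o with _ | i
    · exact sq_compact.prod isCompact_Icc
    · exact dd_compact.prod isCompact_Icc
  let f : Option ι × (ℂ × ℝ) → W := fun q => q.1.elim (c q.2) fun i => k i q.2
  let f' : Option ι × (ℂ × ℝ) → W' := fun q => q.1.elim (c' q.2) fun i => k' i q.2
  have red : ∀ q ∈ K, (∃ P ∈ sq, ∃ z ∈ 𝕀, f q = c (P, z) ∧ f' q = c' (P, z)) ∨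
      ∃ i, ∃ v ∈ dd, ∃ z ∈ Ioo (0 : ℝ) 1, q = (some i, (v, z)) := by
    rintro ⟨o, p⟩ hq
    rw [mem_glueK] at hq
    obtain ⟨P, z⟩ := p
    rcases o with _ | i
    · grind
    · obtain ⟨hv, hz⟩ := hq
      rcases eq_or_ne z 0 with rfl | h0
      · exact .inl ⟨_, sqo_sub (h.e_mem i false P hv), 0, by simp, h.k0 i P hv, h'.k0 i P hv⟩
      rcases eq_or_ne z 1 with rfl | h1
      · exact .inl ⟨_, sqo_sub (h.e_mem i true P hv), 0, by simp, h.k1 i P hv, h'.k1 i P hv⟩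
      grind
  refine PH.of_param hK (f := f) (f' := f') h.glue_cont h'.glue_cont h.glue_image h'.glue_image ?_ ?_
  · intro a ha b hb
    rcases red a ha with ⟨P, hP, z, hz, e1, e2⟩ | ⟨i, v, hv, z, hz, rfl⟩ <;>
    rcases red b hb with ⟨P', hP', z', hz', e1', e2'⟩ | ⟨i', v', hv', z', hz', rfl⟩
    · rw [e1, e2, e1', e2', h.c_ker P hP z hz P' hP' z' hz', h'.c_ker P hP z hz P' hP' z' hz']
    · rw [e1, e2]
      exact iff_of_false (h.ck i' v' hv' z' hz' P hP z hz) (h'.ck i' v' hv' z' hz' P hP z hz)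
    · rw [e1', e2']
      exact iff_of_false (h.ck i v hv z hz P' hP' z' hz').symm (h'.ck i v hv z hz P' hP' z' hz').symm
    · constructor
      · intro h1
        obtain ⟨rfl, rfl, rfl⟩ := h.k_inj i v hv z hz i' v' hv' z' hz' h1
        rfl
      · intro h1
        obtain ⟨rfl, rfl, rfl⟩ := h'.k_inj i v hv z hz i' v' hv' z' hz' h1
        rfl
  · intro a ha
    rcases red a ha with ⟨P, hP, z, hz, e1, e2⟩ | ⟨i, v, hv, z, hz, rfl⟩
    · rw [e1, e2, h.bd_c P hP z hz, h'.bd_c P hP z hz]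
    · exact (h.bd_k i v hv z hz).trans (h'.bd_k i v hv z hz).symm

lemma CR_iff {P P' : ℂ} (hP : P ∈ sq) (hP' : P' ∈ sq) {z z' : ℝ} : CR P z P' z' ↔
    (P = P' ∨ P ∉ sqo ∧ P' ∉ sqo ∧ (P.re : 𝕋) = P'.re ∧ P.im = P'.im) ∧
      (z = z' ∨ |P.im| = 1) := by
  unfold CR
  rw [← and_assoc]
  refine and_congr_left fun _ => ⟨?_, ?_⟩
  · rintro ⟨h1, h2⟩
    rcases ((circ_eq_Icc hP.1 hP'.1).1 h1) with h | ⟨h, h'⟩ | ⟨h, h'⟩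
    · exact .inl (Complex.ext h h2)
    all_goals exact .inr ⟨fun hh => by simpa [h] using hh.1, fun hh => by simpa [h'] using hh.1, h1, h2⟩
  · grind

/-- The patches may be moved by a homeomorphism of the annulus with support in the chart. -/
lemma NF.move (h : NF e V bd) (Φ : ℂ ≃ₜ ℂ) (hΦ : ∀ P ∉ sqo, Φ P = P) {e' : ι → Bool → ℂ → ℂ}
    (he : ∀ i ε, ∀ v ∈ dd, e' i ε v = Φ (e i ε v)) : NF e' V bd := by
  obtain ⟨c, k, h⟩ := h
  have hs : ∀ P ∉ sqo, Φ.symm P = P := fun P hP => by rw [Homeomorph.symm_apply_eq, hΦ P hP]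
  have ho : ∀ P, Φ.symm P ∈ sqo ↔ P ∈ sqo := by
    intro P
    by_cases hP : P ∈ sqo
    · refine iff_of_true ?_ hP
      by_contra h'
      have := hΦ _ h'
      rw [Φ.apply_symm_apply] at this
      grind
    · rw [hs P hP]
  have hq : ∀ P ∈ sq, Φ.symm P ∈ sq := by
    intro P hP
    by_cases hP' : P ∈ sqo
    · exact sqo_sub ((ho P).2 hP')
    · rwa [hs P hP']
  have him : ∀ P, |(Φ.symm P).im| = 1 ↔ |P.im| = 1 := by
    intro P
    by_cases hP : P ∈ sqo
    · have h1 := (ho P).2 hP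
      exact iff_of_false (abs_lt.2 h1.2).ne (abs_lt.2 hP.2).ne
    · rw [hs P hP]
  have heo : ∀ i ε, ∀ v ∈ dd, e' i ε v ∈ sqo := fun i ε v hv => by
    rw [he i ε v hv, ← ho, Φ.symm_apply_apply]; exact h.e_mem i ε v hv
  have hinv : ∀ i ε, ∀ v ∈ dd, Φ.symm (e' i ε v) = e i ε v := fun i ε v hv => by
    rw [he i ε v hv, Φ.symm_apply_apply]
  refine ⟨fun p => c (Φ.symm p.1, p.2), k, ?_, h.k_cont, fun P hP z hz => h.c_mem _ (hq P hP) z hz,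
    h.k_mem, ?_, ?_, h.k_inj, fun i v hv z hz P hP z' hz' => h.ck i v hv z hz _ (hq P hP) z' hz', ?_,
    ?_, heo, ?_, h.bd_k⟩
  · refine h.c_cont.comp (Continuous.continuousOn (by fun_prop)) ?_
    rintro ⟨P, z⟩ ⟨h1, h2⟩
    grind
  · intro x hx
    rcases h.surj x hx with ⟨P, hP, z, hz, rfl⟩ | h'
    · refine .inl ⟨Φ P, ?_, z, hz, by simp⟩
      by_cases hP' : P ∈ sqo
      · apply sqo_sub; rw [← ho]; simpa
      · rwa [hΦ P hP']
    · exact .inr h'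
  · intro P hP z hz P' hP' z' hz'
    rw [h.c_ker _ (hq P hP) z hz _ (hq P' hP') z' hz', CR_iff (hq P hP) (hq P' hP'), CR_iff hP hP', him,
      ho, ho, Φ.symm.injective.eq_iff]
    grind
  · intro i v hv; simp only [hinv i false v hv]; exact h.k0 i v hv
  · intro i v hv; simp only [hinv i true v hv]; exact h.k1 i v hv
  · intro P hP z hz
    rw [h.bd_c _ (hq P hP) z hz, him]
    refine or_congr_right (or_congr_right (and_congr_right fun _ => ?_))
    refine forall_congr' fun i => forall_congr' fun ε => forall₂_congr fun v hv => not_congr ?_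
    have hv' : v ∈ dd := ⟨hv.1.le, hv.2.le⟩
    rw [he i ε v hv', eq_comm, Homeomorph.symm_apply_eq, eq_comm]

lemma NF.reindex {κ : Type*} (h : NF e V bd) (r : κ ≃ ι) : NF (fun i => e (r i)) V bd := by
  obtain ⟨c, k, h⟩ := h
  refine ⟨c, fun i => k (r i), h.c_cont, fun i => h.k_cont _, h.c_mem, fun i => h.k_mem _, ?_, h.c_ker,
    ?_, fun i => h.ck _, fun i => h.k0 _, fun i => h.k1 _, fun i => h.e_mem _, ?_, fun i => h.bd_k _⟩
  · intro x hx
    refine (h.surj x hx).imp_right ?_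
    rintro ⟨i, hi⟩
    exact ⟨r.symm i, by simpa using hi⟩
  · intro i v hv z hz i' v' hv' z' hz' he
    have := h.k_inj _ v hv z hz _ v' hv' z' hz' he
    exact ⟨r.injective this.1, this.2⟩
  · intro P hP z hz
    rw [h.bd_c P hP z hz, ← r.forall_congr_right (q := fun i => ∀ ε, ∀ v ∈ ddo, e i ε v ≠ P)]

end

/-! ### Moving disjoint patches in the plane -/

open Filter Topology ComplexConjugate

/-- A perturbation of the identity with small Lipschitz constant, prescribed along `f`, extends to a
homeomorphism of the plane. -/
lemma exists_homeo_of_small : ∃ κ : ℝ, 0 < κ ∧ ∀ (T : Type) (f d : T → ℂ),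
    (∀ s t, ‖d s - d t‖ ≤ κ * ‖f s - f t‖) → ∃ Φ : ℂ ≃ₜ ℂ, ∀ t, Φ (f t) = f t + d t := by
  have hC := lipschitzExtensionConstant_pos ℂ
  set C := lipschitzExtensionConstant ℂ
  refine ⟨((2 * C)⁻¹ : NNReal), by positivity, fun T f d h => ?_⟩
  have hsel : ∃ G : ℂ → ℂ, ∀ t, G (f t) = d t := by
    classical
    refine ⟨fun x => if hx : ∃ t, f t = x then d hx.choose else 0, fun t => ?_⟩
    have hx : ∃ s, f s = f t := ⟨t, rfl⟩
    change (if hx : ∃ s, f s = f t then d hx.choose else 0) = d t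
    rw [dif_pos hx]
    have := h hx.choose t
    rw [hx.choose_spec, sub_self, norm_zero, mul_zero] at this
    exact sub_eq_zero.1 (norm_eq_zero.1 (le_antisymm this (norm_nonneg _)))
  obtain ⟨G, hG⟩ := hsel
  have hL : LipschitzOnWith (2 * C)⁻¹ G (range f) := by
    refine LipschitzOnWith.of_dist_le_mul ?_
    rintro _ ⟨s, rfl⟩ _ ⟨t, rfl⟩
    rw [hG, hG, dist_eq_norm, dist_eq_norm]
    exact h s t
  obtain ⟨G', hG', heq⟩ := hL.extend_finite_dimension
  have hA : ApproximatesLinearOn (fun x => x + G' x)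
      ((ContinuousLinearEquiv.refl ℝ ℂ : ℂ ≃L[ℝ] ℂ) : ℂ →L[ℝ] ℂ) univ (C * (2 * C)⁻¹) := by
    intro x _ y _
    have := hG'.dist_le_mul x y
    rw [dist_eq_norm, dist_eq_norm] at this
    have e : (x + G' x) - (y + G' y) - (x - y) = G' x - G' y := by ring
    simpa [e] using this
  have hc : C * (2 * C)⁻¹ = 2⁻¹ := by field_simp
  refine ⟨hA.toHomeomorph _ (.inr ?_), fun t => ?_⟩
  · rw [hc, lt_inv_comm₀ (by norm_num)
      (ContinuousLinearEquiv.nnnorm_symm_pos (ContinuousLinearEquiv.refl ℝ ℂ))]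
    simp
  · change f t + G' (f t) = _
    rw [← heq (mem_range_self t), hG]

/-- The affine patch with centre `q.1 i` and linear part `v ↦ α v + β v̄`, `(α, β) = q.2 i`. -/
def ev {ι : Type*} (q : (ι → ℂ) × (ι → ℂ × ℂ)) (i : ι) (v : ℂ) : ℂ :=
  q.1 i + (q.2 i).1 * v + (q.2 i).2 * conj v

/-- The patches are nondegenerate, lie in the chart, and are pairwise disjoint. -/
structure Good {ι : Type*} (q : (ι → ℂ) × (ι → ℂ × ℂ)) : Prop where
  nd : ∀ i, ‖(q.2 i).1‖ ≠ ‖(q.2 i).2‖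
  mem : ∀ i, ∀ v ∈ dd, ev q i v ∈ sqo
  disj : ∀ i j, i ≠ j → ∀ v ∈ dd, ∀ w ∈ dd, ev q i v ≠ ev q j w

/-- The patches of `q` can be carried to those of `q'` by a homeomorphism supported in the chart. -/
def Rel {ι : Type*} (q q' : (ι → ℂ) × (ι → ℂ × ℂ)) : Prop :=
  ∃ Φ : ℂ ≃ₜ ℂ, (∀ P ∉ sqo, Φ P = P) ∧ ∀ i, ∀ v ∈ dd, ev q' i v = Φ (ev q i v)

/-- Rescaling of the patches of a configuration about their centres. -/
def scl {ι : Type*} (s : ℝ) (q : (ι → ℂ) × (ι → ℂ × ℂ)) : (ι → ℂ) × (ι → ℂ × ℂ) :=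
  (q.1, fun i => ((s : ℂ) * (q.2 i).1, (s : ℂ) * (q.2 i).2))

lemma sqo_open : IsOpen sqo :=
  (isOpen_Ioo.preimage Complex.continuous_re).inter (isOpen_Ioo.preimage Complex.continuous_im)

lemma dd_norm {v : ℂ} (hv : v ∈ dd) : ‖v‖ ≤ 2 :=
  (Complex.norm_le_abs_re_add_abs_im v).trans (by linarith [hv.1, hv.2])

lemma zero_mem_dd : (0 : ℂ) ∈ dd := by simp [dd]

lemma dd_smul {v : ℂ} (hv : v ∈ dd) {s : ℝ} (h0 : 0 ≤ s) (h1 : s ≤ 1) : (s : ℂ) * v ∈ dd := by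
  obtain ⟨ha, hb⟩ := hv
  constructor
  · rw [Complex.re_ofReal_mul, abs_mul, abs_of_nonneg h0]
    nlinarith [abs_nonneg v.re]
  · rw [Complex.im_ofReal_mul, abs_mul, abs_of_nonneg h0]
    nlinarith [abs_nonneg v.im]

section
variable {ι : Type} {q q' q'' : (ι → ℂ) × (ι → ℂ × ℂ)}

lemma ev_scl (s : ℝ) (i : ι) (v : ℂ) : ev (scl s q) i v = ev q i (s * v) := by
  simp [ev, scl]; ring

lemma scl_scl (s t : ℝ) : scl s (scl t q) = scl (s * t) q := by
  simp [scl, mul_assoc]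

lemma Rel.symm (h : Rel q q') : Rel q' q := by
  obtain ⟨Φ, h1, h2⟩ := h
  exact ⟨Φ.symm, fun P hP => by rw [Homeomorph.symm_apply_eq, h1 P hP],
    fun i v hv => by rw [h2 i v hv, Φ.symm_apply_apply]⟩

lemma Rel.trans (h : Rel q q') (h' : Rel q' q'') : Rel q q'' := by
  obtain ⟨Φ, h1, h2⟩ := h
  obtain ⟨Ψ, k1, k2⟩ := h'
  exact ⟨Φ.trans Ψ, fun P hP => by simp [h1 P hP, k1 P hP],
    fun i v hv => by simp [k2 i v hv, h2 i v hv]⟩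

lemma Rel.good (h : Rel q q') (hq : Good q) (nd : ∀ i, ‖(q'.2 i).1‖ ≠ ‖(q'.2 i).2‖) : Good q' := by
  obtain ⟨Φ, h1, h2⟩ := h
  refine ⟨nd, fun i v hv => ?_, fun i j hij v hv w hw => ?_⟩
  · by_contra hc
    have e := h1 _ hc
    rw [h2 i v hv] at e hc
    rw [Φ.injective e] at hc
    exact hc (hq.mem i v hv)
  · rw [h2 i v hv, h2 j w hw, Φ.injective.ne_iff]
    exact hq.disj i j hij v hv w hw

lemma ev_sub_norm (q : (ι → ℂ) × (ι → ℂ × ℂ)) (i : ι) (v w : ℂ) :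
    |‖(q.2 i).1‖ - ‖(q.2 i).2‖| * ‖v - w‖ ≤ ‖ev q i v - ev q i w‖ := by
  have e : ev q i v - ev q i w = (q.2 i).1 * (v - w) - (-((q.2 i).2 * conj (v - w))) := by
    simp [ev]; ring
  rw [e]
  refine le_trans (le_of_eq ?_) (abs_norm_sub_norm_le _ _)
  rw [norm_neg, norm_mul, norm_mul, RCLike.norm_conj, ← sub_mul, abs_mul, abs_of_nonneg (norm_nonneg (v - w))]

lemma ev_continuous (q : (ι → ℂ) × (ι → ℂ × ℂ)) (i : ι) : Continuous (ev q i) := by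
  exact (continuous_const.add (continuous_const.mul continuous_id)).add
    (continuous_const.mul Complex.continuous_conj)

lemma sep_eventually {A B : Set ℂ} (hA : IsCompact A) (hB : IsClosed B) (h : Disjoint A B) :
    ∀ᶠ m : ℝ in 𝓝[>] 0, ∀ x ∈ A, ∀ y ∈ B, m ≤ ‖x - y‖ := by
  obtain ⟨r, hr, hh⟩ := Metric.exists_pos_forall_lt_edist hA hB h
  filter_upwards [Ioc_mem_nhdsGT (show (0 : ℝ) < r by exact_mod_cast hr)] with m hm x hx y hy
  have := hh x hx y hy
  rw [edist_nndist, ENNReal.coe_lt_coe] at this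
  rw [← dist_eq_norm, ← coe_nndist]
  exact hm.2.trans (by exact_mod_cast this.le)

variable [Finite ι]

/-- Nearby configurations are related. -/
lemma Good.eventually_rel (h : Good q) : ∀ᶠ q' in 𝓝 q, Rel q q' := by
  have : Fintype ι := Fintype.ofFinite ι
  obtain ⟨κ, hκ, hom⟩ := exists_homeo_of_small
  have hm : ∀ᶠ m : ℝ in 𝓝[>] 0, 0 < m ∧ (∀ i, m ≤ |‖(q.2 i).1‖ - ‖(q.2 i).2‖|) ∧
      (∀ i, ∀ x ∈ ev q i '' dd, ∀ y ∈ sqoᶜ, m ≤ ‖x - y‖) ∧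
      (∀ i j, i ≠ j → ∀ x ∈ ev q i '' dd, ∀ y ∈ ev q j '' dd, m ≤ ‖x - y‖) := by
    refine Filter.Eventually.and self_mem_nhdsWithin (.and ?_ (.and ?_ ?_))
    · rw [eventually_all]
      intro i
      filter_upwards [Ioc_mem_nhdsGT (abs_pos.2 (sub_ne_zero.2 (h.nd i)))] with m hm
      exact hm.2
    · rw [eventually_all]
      intro i
      refine sep_eventually (dd_compact.image (ev_continuous q i)) sqo_open.isClosed_compl ?_
      rw [disjoint_compl_right_iff_subset]
      rintro _ ⟨v, hv, rfl⟩
      exact h.mem i v hv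
    · rw [eventually_all]
      intro i
      rw [eventually_all]
      intro j
      rw [eventually_imp_distrib_left]
      intro hij
      refine sep_eventually (dd_compact.image (ev_continuous q i))
        (dd_compact.image (ev_continuous q j)).isClosed ?_
      rw [Set.disjoint_left]
      rintro _ ⟨v, hv, rfl⟩ ⟨w, hw, e⟩
      exact h.disj i j hij v hv w hw e.symm
  obtain ⟨m, hm0, hm1, hm2, hm3⟩ := hm.exists
  filter_upwards [Metric.ball_mem_nhds q (show 0 < κ * m / 10 by positivity)] with q' hq'
  rw [mem_ball, dist_eq_norm] at hq'
  set η := κ * m / 10 with hη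
  have n1 : ∀ i, ‖q'.1 i - q.1 i‖ ≤ η := fun i =>
    ((norm_le_pi_norm (q' - q).1 i).trans (norm_fst_le _)).trans hq'.le
  have n2 : ∀ i, ‖(q'.2 i).1 - (q.2 i).1‖ ≤ η := fun i =>
    (((norm_fst_le _).trans (norm_le_pi_norm (q' - q).2 i)).trans (norm_snd_le _)).trans hq'.le
  have n3 : ∀ i, ‖(q'.2 i).2 - (q.2 i).2‖ ≤ η := fun i =>
    (((norm_snd_le _).trans (norm_le_pi_norm (q' - q).2 i)).trans (norm_snd_le _)).trans hq'.le
  have b1 : ∀ i, ∀ v ∈ dd, ‖ev q' i v - ev q i v‖ ≤ 5 * η := by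
    intro i v hv
    have e : ev q' i v - ev q i v = (q'.1 i - q.1 i) + ((q'.2 i).1 - (q.2 i).1) * v
        + ((q'.2 i).2 - (q.2 i).2) * conj v := by simp [ev]; ring
    rw [e]
    refine (norm_add₃_le).trans ?_
    rw [norm_mul, norm_mul, RCLike.norm_conj]
    nlinarith [n1 i, n2 i, n3 i, dd_norm hv, norm_nonneg v, norm_nonneg (q'.1 i - q.1 i)]
  have b2 : ∀ i, ∀ v w, ‖(ev q' i v - ev q i v) - (ev q' i w - ev q i w)‖ ≤ 2 * η * ‖v - w‖ := by
    intro i v w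
    have e : (ev q' i v - ev q i v) - (ev q' i w - ev q i w) = ((q'.2 i).1 - (q.2 i).1) * (v - w)
        + ((q'.2 i).2 - (q.2 i).2) * conj (v - w) := by simp [ev]; ring
    rw [e]
    refine (norm_add_le _ _).trans ?_
    rw [norm_mul, norm_mul, RCLike.norm_conj]
    nlinarith [n2 i, n3 i, norm_nonneg (v - w)]
  have hη0 : 0 ≤ η := by positivity
  obtain ⟨Φ, hΦ⟩ := hom ((sqoᶜ : Set ℂ) ⊕ ι × dd)
    (Sum.elim (fun P => (P : ℂ)) fun x => ev q x.1 x.2)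
    (Sum.elim (fun _ => 0) fun x => ev q' x.1 x.2 - ev q x.1 x.2) (by
      rintro (P | ⟨i, v⟩) (P' | ⟨j, w⟩)
      · simp only [Sum.elim_inl, sub_self, norm_zero]; positivity
      · simp only [Sum.elim_inl, Sum.elim_inr, zero_sub, norm_neg]
        have := hm2 j _ (mem_image_of_mem _ w.2) P P.2
        rw [norm_sub_rev] at this
        nlinarith [b1 j w w.2]
      · simp only [Sum.elim_inl, Sum.elim_inr, sub_zero]
        nlinarith [b1 i v v.2, hm2 i _ (mem_image_of_mem _ v.2) P' P'.2]
      · simp only [Sum.elim_inr]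
        by_cases hij : i = j
        · subst hij
          have h1 := ev_sub_norm q i v w
          have h2 := b2 i v w
          have h3 : m * ‖(v : ℂ) - w‖ ≤ ‖ev q i v - ev q i w‖ :=
            (mul_le_mul_of_nonneg_right (hm1 i) (norm_nonneg _)).trans h1
          nlinarith [norm_nonneg ((v : ℂ) - w)]
        · have h1 := hm3 i j hij _ (mem_image_of_mem _ v.2) _ (mem_image_of_mem _ w.2)
          have h2 := norm_sub_le (ev q' i v - ev q i v) (ev q' j w - ev q j w)
          nlinarith [b1 i v v.2, b1 j w w.2])
  refine ⟨Φ, fun P hP => ?_, fun i v hv => ?_⟩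
  · simpa using hΦ (.inl ⟨P, hP⟩)
  · simpa using (hΦ (.inr (i, ⟨v, hv⟩))).symm

lemma Good.scl (h : Good q) {s : ℝ} (h0 : 0 < s) (h1 : s ≤ 1) : Good (scl s q) := by
  refine ⟨fun i => ?_, fun i v hv => ?_, fun i j hij v hv w hw => ?_⟩
  · simp only [AS.scl, norm_mul, ne_eq, mul_eq_mul_left_iff, norm_eq_zero, Complex.ofReal_eq_zero,
      h0.ne', or_false]
    exact h.nd i
  · rw [ev_scl]; exact h.mem i _ (dd_smul hv h0.le h1)
  · rw [ev_scl, ev_scl]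
    exact h.disj i j hij _ (dd_smul hv h0.le h1) _ (dd_smul hw h0.le h1)

lemma scl_continuous : Continuous fun p : ℝ × ((ι → ℂ) × (ι → ℂ × ℂ)) => scl p.1 p.2 := by
  unfold AS.scl
  fun_prop

lemma Good.rel_scl (h : Good q) {s : ℝ} (h0 : 0 < s) (h1 : s ≤ 1) : Rel q (AS.scl s q) := by
  have hq : AS.scl 1 q = q := by simp [AS.scl]
  have := (isPreconnected_Ioc (a := (0 : ℝ)) (b := 1)).induction₂
    (fun s t => Rel (AS.scl s q) (AS.scl t q)) (fun x hx => ?_) (fun x y z _ _ _ => Rel.trans)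
    (fun x y _ _ => Rel.symm) (x := 1) (y := s) (by simp) ⟨h0, h1⟩
  · rwa [hq] at this
  · have hc : Continuous fun s : ℝ => AS.scl s q := scl_continuous.comp (by fun_prop : Continuous fun s => (s, q))
    exact nhdsWithin_le_nhds (hc.continuousAt.eventually (h.scl hx.1 hx.2).eventually_rel)

/-- The centres are distinct points of the chart and the linear parts are nondegenerate. -/
structure Loose (q : (ι → ℂ) × (ι → ℂ × ℂ)) : Prop where
  nd : ∀ i, ‖(q.2 i).1‖ ≠ ‖(q.2 i).2‖
  mem : ∀ i, q.1 i ∈ sqo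
  inj : Function.Injective q.1

lemma Good.loose (h : Good q) : Loose q := by
  have e : ∀ i, ev q i 0 = q.1 i := fun i => by simp [ev]
  refine ⟨h.nd, fun i => e i ▸ h.mem i 0 zero_mem_dd, fun i j hij => ?_⟩
  by_contra hne
  exact h.disj i j hne 0 zero_mem_dd 0 zero_mem_dd (by rw [e, e, hij])

lemma Loose.exists_good (h : Loose q) : ∃ s : ℝ, 0 < s ∧ Good (AS.scl s q) := by
  have : Fintype ι := Fintype.ofFinite ι
  have hm : ∀ᶠ m : ℝ in 𝓝[>] 0, 0 < m ∧ (∀ i, ∀ x ∈ ({q.1 i} : Set ℂ), ∀ y ∈ sqoᶜ, m ≤ ‖x - y‖) ∧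
      (∀ i j, i ≠ j → ∀ x ∈ ({q.1 i} : Set ℂ), ∀ y ∈ ({q.1 j} : Set ℂ), m ≤ ‖x - y‖) := by
    refine Filter.Eventually.and self_mem_nhdsWithin (.and ?_ ?_)
    · rw [eventually_all]
      intro i
      exact sep_eventually isCompact_singleton sqo_open.isClosed_compl (by simpa using h.mem i)
    · rw [eventually_all]
      intro i
      rw [eventually_all]
      intro j
      rw [eventually_imp_distrib_left]
      intro hij
      exact sep_eventually isCompact_singleton isClosed_singleton (by simpa using h.inj.ne hij)
  obtain ⟨m, hm0, hm1, hm2⟩ := hm.exists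
  have hs0 : 0 < m / (8 * (‖q.2‖ + 1)) := by positivity
  set s := m / (8 * (‖q.2‖ + 1)) with hs
  have hsm : s * (8 * (‖q.2‖ + 1)) = m := by rw [hs]; field_simp
  have key : ∀ i, ∀ v ∈ dd, ‖ev (AS.scl s q) i v - q.1 i‖ ≤ m / 2 - s := by
    intro i v hv
    have e : ev (AS.scl s q) i v - q.1 i = s * ((q.2 i).1 * v + (q.2 i).2 * conj v) := by
      simp [ev, AS.scl]; ring
    have n1 : ‖(q.2 i).1‖ ≤ ‖q.2‖ := (norm_fst_le _).trans (norm_le_pi_norm _ i)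
    have n2 : ‖(q.2 i).2‖ ≤ ‖q.2‖ := (norm_snd_le _).trans (norm_le_pi_norm _ i)
    rw [e, norm_mul, Complex.norm_of_nonneg hs0.le]
    have : ‖(q.2 i).1 * v + (q.2 i).2 * conj v‖ ≤ 4 * ‖q.2‖ := by
      refine (norm_add_le _ _).trans ?_
      rw [norm_mul, norm_mul, RCLike.norm_conj]
      have m1 := mul_le_mul n1 (dd_norm hv) (norm_nonneg v) (norm_nonneg _)
      linarith [mul_le_mul n2 (dd_norm hv) (norm_nonneg v) (norm_nonneg _)]
    nlinarith
  refine ⟨s, hs0, fun i => ?_, fun i v hv => ?_, fun i j hij v hv w hw e => ?_⟩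
  · simp only [AS.scl, norm_mul, ne_eq, mul_eq_mul_left_iff, norm_eq_zero, Complex.ofReal_eq_zero,
      hs0.ne', or_false]
    exact h.nd i
  · by_contra hc
    have h1 := hm1 i _ rfl _ hc
    have h2 := key i v hv
    rw [norm_sub_rev] at h2
    linarith
  · have h1 := hm2 i j hij _ rfl _ rfl
    have h2 := key i v hv
    have h3 := key j w hw
    rw [e] at h2
    have h4 := norm_sub_le_norm_sub_add_norm_sub (q.1 i) (ev (AS.scl s q) j w) (q.1 j)
    rw [norm_sub_rev] at h2
    linarith

/-- Configurations are loosely related if they are related after rescaling both. -/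
def LRel (q q' : (ι → ℂ) × (ι → ℂ × ℂ)) : Prop :=
  ∃ s s' : ℝ, 0 < s ∧ 0 < s' ∧ Good (scl s q) ∧ Good (scl s' q') ∧ Rel (scl s q) (scl s' q')

lemma rel_scl_scl {s s' : ℝ} (h0 : 0 < s) (h0' : 0 < s') (h : Good (scl s q)) (h' : Good (scl s' q)) :
    Rel (scl s q) (scl s' q) := by
  wlog hle : s' ≤ s generalizing s s'
  · exact (this h0' h0 h' h (le_of_not_ge hle)).symm
  have := h.rel_scl (s := s' / s) (by positivity) (div_le_one_of_le₀ hle h0.le)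
  rwa [scl_scl, div_mul_cancel₀ _ h0.ne'] at this

lemma LRel.symm (h : LRel q q') : LRel q' q := by
  obtain ⟨s, s', h1, h2, h3, h4, h5⟩ := h
  exact ⟨s', s, h2, h1, h4, h3, h5.symm⟩

lemma LRel.trans (h : LRel q q') (h' : LRel q' q'') : LRel q q'' := by
  obtain ⟨s, s', h1, h2, h3, h4, h5⟩ := h
  obtain ⟨t, t', k1, k2, k3, k4, k5⟩ := h'
  exact ⟨s, t', h1, k2, h3, k4, (h5.trans (rel_scl_scl h2 k1 h4 k3)).trans k5⟩

lemma LRel.of_preconnected {S : Set ((ι → ℂ) × (ι → ℂ × ℂ))} (hS : IsPreconnected S)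
    (hL : ∀ q ∈ S, Loose q) (hq : q ∈ S) (hq' : q' ∈ S) : LRel q q' := by
  refine hS.induction₂ LRel (fun x hx => ?_) (fun x y z _ _ _ => LRel.trans)
    (fun x y _ _ => LRel.symm) hq hq'
  obtain ⟨s, hs, hg⟩ := (hL x hx).exists_good
  have hc : Continuous fun q : (ι → ℂ) × (ι → ℂ × ℂ) => AS.scl s q :=
    scl_continuous.comp (by fun_prop : Continuous fun q => (s, q))
  filter_upwards [nhdsWithin_le_nhds (hc.continuousAt.eventually hg.eventually_rel),
    self_mem_nhdsWithin] with y hy hyS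
  refine ⟨s, s, hs, hs, hg, hy.good hg fun i => ?_, hy⟩
  simp only [AS.scl, norm_mul, ne_eq, mul_eq_mul_left_iff, norm_eq_zero, Complex.ofReal_eq_zero,
      hs.ne', or_false]
  exact (hL y hyS).nd i

omit [Finite ι] in
lemma isPreconnected_nd_pos : IsPreconnected {a : ℂ × ℂ | ‖a.2‖ < ‖a.1‖} := by
  have h1 : IsPreconnected ({0}ᶜ : Set ℂ) :=
    (isConnected_compl_singleton_of_one_lt_rank (by simp) 0).isPreconnected
  have := (h1.prod (isPreconnected_ball (x := (0 : ℂ)) (r := 1))).image (fun a => (a.1, a.2 * a.1))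
    (Continuous.continuousOn (by fun_prop))
  convert this using 1
  ext ⟨a, b⟩
  constructor
  · intro h
    simp only [Set.mem_ofPred_eq] at h
    have ha : a ≠ 0 := by rintro rfl; simp at h; linarith [norm_nonneg b]
    refine ⟨(a, b / a), ⟨ha, ?_⟩, by simp [ha]⟩
    rw [mem_ball_zero_iff, norm_div, div_lt_one (norm_pos_iff.2 ha)]
    exact h
  · rintro ⟨⟨a', w⟩, ⟨h1, h2⟩, e⟩
    obtain ⟨rfl, rfl⟩ := Prod.ext_iff.1 e
    simp only [mem_ball_zero_iff] at h2
    simp only [Set.mem_ofPred_eq, norm_mul]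
    have : 0 < ‖a'‖ := norm_pos_iff.2 h1
    nlinarith

omit [Finite ι] in
lemma isPreconnected_nd_neg : IsPreconnected {a : ℂ × ℂ | ‖a.1‖ < ‖a.2‖} := by
  have := isPreconnected_nd_pos.image Prod.swap (Continuous.continuousOn (by fun_prop))
  rwa [Set.image_swap_eq_preimage_swap] at this

lemma isPreconnected_injective : IsPreconnected {p : ι → ℂ | Function.Injective p} := by
  refine isPreconnected_of_forall_pair fun p hp q hq => ?_
  let L : ℂ → ι → ℂ := fun z i => p i + z * (q i - p i)
  have hbad : {z | ¬ Function.Injective (L z)}.Countable := by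
    have : {z | ¬ Function.Injective (L z)} ⊆
        ⋃ i : ι × ι, {z | i.1 ≠ i.2 ∧ L z i.1 = L z i.2} := by
      intro z hz
      simp only [Function.Injective, Set.mem_ofPred_eq] at hz
      push Not at hz
      obtain ⟨i, j, h1, h2⟩ := hz
      exact mem_iUnion.2 ⟨(i, j), h2, h1⟩
    refine Set.Countable.mono this (Set.countable_iUnion fun i => Set.Subsingleton.countable ?_)
    rintro z ⟨h1, h2⟩ w ⟨-, h3⟩
    grind
  refine ⟨L '' {z | ¬ Function.Injective (L z)}ᶜ, ?_, ⟨0, ?_, ?_⟩, ⟨1, ?_, ?_⟩,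
    (hbad.isConnected_compl_of_one_lt_rank (by simp)).isPreconnected.image _
      (Continuous.continuousOn (by fun_prop))⟩
  · grind
  · simpa [L] using hp
  · simp [L]
  · simpa [L] using hq
  · simp [L]

/-- A homeomorphism from the line to `(-1, 1)`. -/
def squash (x : ℝ) : ℝ := x / (1 + |x|)

lemma squash_cont : Continuous squash :=
  continuous_id.div (by fun_prop) fun x => by positivity

lemma squash_lt (x : ℝ) : |squash x| < 1 := by
  unfold squash
  rw [abs_div, abs_of_pos (show 0 < 1 + |x| by positivity), div_lt_one (by positivity)]
  linarith

lemma squash_inv {y : ℝ} (hy : |y| < 1) : squash (y / (1 - |y|)) = y := by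
  unfold squash
  grind

lemma squash_inv' (x : ℝ) : squash x / (1 - |squash x|) = x := by
  unfold squash
  have h : 0 < 1 + |x| := by positivity
  grind

lemma squash_inj : Function.Injective squash := fun x y h => by
  rw [← squash_inv' x, ← squash_inv' y, h]

lemma isPreconnected_injective_sqo :
    IsPreconnected {p : ι → ℂ | Function.Injective p ∧ ∀ i, p i ∈ sqo} := by
  let s : ℂ → ℂ := fun z => ⟨(1 + squash z.re) / 2, squash z.im⟩
  have hs : Continuous s := by
    have h := squash_cont
    have : s = fun z => Complex.equivRealProdCLM.symm ((1 + squash z.re) / 2, squash z.im) := by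
      ext z; rfl
    rw [this]
    exact (ContinuousLinearEquiv.continuous _).comp
      (((continuous_const.add (h.comp Complex.continuous_re)).div_const 2).prodMk
        (h.comp Complex.continuous_im))
  have hinj : Function.Injective s := by
    intro z w h
    obtain ⟨h1, h2⟩ := Complex.ext_iff.1 h
    simp only [s] at h1 h2
    exact Complex.ext (squash_inj (by linarith)) (squash_inj h2)
  have := (isPreconnected_injective (ι := ι)).image (fun p i => s (p i))
    (Continuous.continuousOn (by fun_prop))
  convert this using 1
  ext p
  constructor
  · rintro ⟨h1, h2⟩
    have hr : ∀ i, s ⟨(2 * (p i).re - 1) / (1 - |2 * (p i).re - 1|), (p i).im / (1 - |(p i).im|)⟩ = p i := by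
      intro i
      have ha : |2 * (p i).re - 1| < 1 := abs_lt.2 ⟨by linarith [(h2 i).1.1], by linarith [(h2 i).1.2]⟩
      have hb : |(p i).im| < 1 := abs_lt.2 (h2 i).2
      simp only [s, squash_inv ha, squash_inv hb]
      simp
    refine ⟨_, fun i j hij => ?_, funext hr⟩
    grind
  · rintro ⟨p, hp, rfl⟩
    refine ⟨hinj.comp hp, fun i => ?_⟩
    have ha := abs_lt.1 (squash_lt (p i).re)
    exact ⟨⟨by simp only [s]; linarith, by simp only [s]; linarith⟩, (abs_lt.1 (squash_lt (p i).im))⟩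

/-- Two configurations of disjoint patches with the same orientations are related. -/
lemma Good.rel (h : Good q) (h' : Good q')
    (ho : ∀ i, ‖(q.2 i).2‖ < ‖(q.2 i).1‖ ↔ ‖(q'.2 i).2‖ < ‖(q'.2 i).1‖) : Rel q q' := by
  let N : ι → Set (ℂ × ℂ) := fun i =>
    {a | ‖a.1‖ ≠ ‖a.2‖ ∧ (‖(q.2 i).2‖ < ‖(q.2 i).1‖ ↔ ‖a.2‖ < ‖a.1‖)}
  have hN : ∀ i, IsPreconnected (N i) := by
    intro i
    by_cases hi : ‖(q.2 i).2‖ < ‖(q.2 i).1‖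
    · convert isPreconnected_nd_pos using 1
      grind
    · convert isPreconnected_nd_neg using 1
      grind
  have hS := (isPreconnected_injective_sqo (ι := ι)).prod (isPreconnected_univ_pi hN)
  have hl := h.loose
  have hl' := h'.loose
  obtain ⟨s, s', h0, h0', g, g', r⟩ := LRel.of_preconnected hS (q := q) (q' := q')
    (fun x hx => ⟨fun i => (hx.2 i trivial).1, hx.1.2, hx.1.1⟩)
    ⟨⟨hl.inj, hl.mem⟩, fun i _ => ⟨hl.nd i, Iff.rfl⟩⟩ ⟨⟨hl'.inj, hl'.mem⟩, fun i _ => ⟨hl'.nd i, ho i⟩⟩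
  have e : ∀ x : (ι → ℂ) × (ι → ℂ × ℂ), AS.scl 1 x = x := fun x => by simp [AS.scl]
  have r1 := rel_scl_scl one_pos h0 (by rwa [e]) g
  have r2 := rel_scl_scl one_pos h0' (by rwa [e]) g'
  rw [e] at r1 r2
  exact (r1.trans r).trans r2.symm

end

/-! ### Normal forms with affine patches -/

open ComplexConjugate

lemma hIoo {z : ℝ} (h : z ∈ Ioo (0 : ℝ) 1) : z ∈ 𝕀 := Ioo_subset_Icc_self h

/-- The real matrix `(a b; c d)` in the form `v ↦ α v + β v̄`. -/
def lin (a b c d : ℝ) : ℂ × ℂ :=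
  (⟨(a + d) / 2, (c - b) / 2⟩, ⟨(a - d) / 2, (c + b) / 2⟩)

lemma lin_apply (a b c d : ℝ) (v : ℂ) : (lin a b c d).1 * v + (lin a b c d).2 * conj v =
    ⟨a * v.re + b * v.im, c * v.re + d * v.im⟩ := by
  apply Complex.ext <;> simp [lin] <;> ring

lemma lin_norm (a b c d : ℝ) :
    ‖(lin a b c d).1‖ ^ 2 - ‖(lin a b c d).2‖ ^ 2 = a * d - b * c := by
  rw [← Complex.normSq_eq_norm_sq, ← Complex.normSq_eq_norm_sq]
  simp [lin, Complex.normSq_apply]; ring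

lemma lin_nd {a b c d : ℝ} (h : a * d - b * c ≠ 0) : ‖(lin a b c d).1‖ ≠ ‖(lin a b c d).2‖ := by
  intro e
  rw [← lin_norm, e, sub_self] at h
  exact h rfl

lemma lin_pos {a b c d : ℝ} : ‖(lin a b c d).2‖ < ‖(lin a b c d).1‖ ↔ 0 < a * d - b * c := by
  rw [← lin_norm, sub_pos, sq_lt_sq₀ (norm_nonneg _) (norm_nonneg _)]

/-- An affine map of the plane: image of the origin, and matrix. -/
structure Aff where
  o : ℂ
  a : ℝ
  b : ℝ
  c : ℝ
  d : ℝ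

/-- Evaluation of an affine map of the plane. -/
def Aff.app (A : Aff) (v : ℂ) : ℂ := ⟨A.o.re + A.a * v.re + A.b * v.im, A.o.im + A.c * v.re + A.d * v.im⟩

/-- The determinant of the linear part. -/
def Aff.det (A : Aff) : ℝ := A.a * A.d - A.b * A.c

/-- The configuration of patches with index set `ι × Bool` given by affine maps. -/
def toConf {ι : Type} (A : ι → Bool → Aff) : (ι × Bool → ℂ) × (ι × Bool → ℂ × ℂ) :=
  (fun i => (A i.1 i.2).o, fun i => lin (A i.1 i.2).a (A i.1 i.2).b (A i.1 i.2).c (A i.1 i.2).d)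

lemma ev_toConf {ι : Type} (A : ι → Bool → Aff) (i : ι × Bool) (v : ℂ) :
    ev (toConf A) i v = (A i.1 i.2).app v := by
  rw [ev, add_assoc]
  simp only [toConf]
  rw [lin_apply]
  apply Complex.ext <;> simp [Aff.app, add_assoc]

/-- Disjoint patches in the chart, with the orientation convention that `false` patches reverse and
`true` patches preserve orientation. -/
structure GoodAff {ι : Type} (A : ι → Bool → Aff) : Prop where
  neg : ∀ i, (A i false).det < 0
  pos : ∀ i, 0 < (A i true).det
  mem : ∀ i ε, ∀ v ∈ dd, (A i ε).app v ∈ sqo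
  disj : ∀ i ε j δ, (i, ε) ≠ (j, δ) → ∀ v ∈ dd, ∀ w ∈ dd, (A i ε).app v ≠ (A j δ).app w

lemma GoodAff.good {ι : Type} {A : ι → Bool → Aff} (h : GoodAff A) : Good (toConf A) := by
  refine ⟨?_, ?_, ?_⟩
  · rintro ⟨i, _ | _⟩
    · exact lin_nd (h.neg i).ne
    · exact lin_nd (h.pos i).ne'
  · rintro ⟨i, ε⟩ v hv
    rw [ev_toConf]; exact h.mem i ε v hv
  · rintro ⟨i, ε⟩ ⟨j, δ⟩ hne v hv w hw
    rw [ev_toConf, ev_toConf]; exact h.disj i ε j δ hne v hv w hw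

/-- Solid tori with the same number of orientably attached handles are homeomorphic. -/
lemma NF.compare {ι : Type} [Finite ι] {W W' : Type*} [TopologicalSpace W] [TopologicalSpace W']
    [T2Space W] [T2Space W'] {V bd : Set W} {V' bd' : Set W'} {A A' : ι → Bool → Aff}
    (hA : GoodAff A) (hA' : GoodAff A') (h : NF (fun i ε => (A i ε).app) V bd)
    (h' : NF (fun i ε => (A' i ε).app) V' bd') : PH V bd V' bd' := by
  obtain ⟨Φ, h1, h2⟩ := hA.good.rel hA'.good (by
    rintro ⟨i, _ | _⟩
    · exact iff_of_false (fun h => (lin_pos.1 h).not_gt (hA.neg i))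
        (fun h => (lin_pos.1 h).not_gt (hA'.neg i))
    · exact iff_of_true (lin_pos.2 (hA.pos i)) (lin_pos.2 (hA'.pos i)))
  refine NF.unique (h.move Φ h1 (e' := fun i ε => (A' i ε).app) fun i ε v hv => ?_) h'
  have := h2 (i, ε) v hv
  rwa [ev_toConf, ev_toConf] at this

section
variable {ι W W' : Type*} [TopologicalSpace W] [TopologicalSpace W'] {e : ι → Bool → ℂ → ℂ}
  {V bd : Set W} {c : ℂ × ℝ → W} {k : ι → ℂ × ℝ → W}

lemma IsNF.map (h : IsNF e V bd c k) {φ : W → W'} (hc : ContinuousOn φ V) (hi : InjOn φ V)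
    {V' bd' : Set W'} (hV : φ '' V = V') (hb : ∀ x ∈ V, φ x ∈ bd' ↔ x ∈ bd) :
    IsNF e V' bd' (φ ∘ c) (fun i => φ ∘ k i) := by
  subst hV
  refine ⟨hc.comp h.c_cont fun p hp => h.c_mem p.1 hp.1 p.2 hp.2,
    fun i => hc.comp (h.k_cont i) fun p hp => h.k_mem i p.1 hp.1 p.2 hp.2,
    fun P hP z hz => mem_image_of_mem _ (h.c_mem P hP z hz),
    fun i v hv z hz => mem_image_of_mem _ (h.k_mem i v hv z hz), ?_, ?_, ?_, ?_, ?_, ?_, h.e_mem, ?_, ?_⟩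
  · rintro _ ⟨x, hx, rfl⟩
    rcases h.surj x hx with ⟨P, hP, z, hz, rfl⟩ | ⟨i, v, hv, z, hz, rfl⟩
    · grind
    · grind
  · intro P hP z hz P' hP' z' hz'
    rw [← h.c_ker P hP z hz P' hP' z' hz']
    exact hi.eq_iff (h.c_mem P hP z hz) (h.c_mem P' hP' z' hz')
  · intro i v hv z hz i' v' hv' z' hz' he
    exact h.k_inj i v hv z hz i' v' hv' z' hz'
      (hi (h.k_mem i v hv z (hIoo hz)) (h.k_mem i' v' hv' z' (hIoo hz')) he)
  · intro i v hv z hz P hP z' hz' he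
    exact h.ck i v hv z hz P hP z' hz' (hi (h.c_mem P hP z' hz') (h.k_mem i v hv z (hIoo hz)) he)
  · intro i v hv; simp [h.k0 i v hv]
  · intro i v hv; simp [h.k1 i v hv]
  · intro P hP z hz
    rw [← h.bd_c P hP z hz]
    exact hb _ (h.c_mem P hP z hz)
  · intro i v hv z hz
    rw [← h.bd_k i v hv z hz]
    exact hb _ (h.k_mem i v hv z (hIoo hz))

/-- Further handles `l` may be attached along further patches `e'` of the front face. -/
lemma IsNF.add {κ : Type*} (h : IsNF e V bd c k) {e' : κ → Bool → ℂ → ℂ} {l : κ → ℂ × ℝ → W}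
    {V' bd' : Set W} (hcont : ∀ i, ContinuousOn (l i) (dd ×ˢ Icc 0 1))
    (hV' : ∀ x, x ∈ V' ↔ x ∈ V ∨ ∃ i, ∃ v ∈ dd, ∃ z ∈ 𝕀, l i (v, z) = x)
    (l_inj : ∀ i, ∀ v ∈ dd, ∀ z ∈ Ioo (0 : ℝ) 1, ∀ i', ∀ v' ∈ dd, ∀ z' ∈ Ioo (0 : ℝ) 1,
      l i (v, z) = l i' (v', z') → i = i' ∧ v = v' ∧ z = z')
    (l_V : ∀ i, ∀ v ∈ dd, ∀ z ∈ Ioo (0 : ℝ) 1, l i (v, z) ∉ V)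
    (l0 : ∀ i, ∀ v ∈ dd, l i (v, 0) = c (e' i false v, 0))
    (l1 : ∀ i, ∀ v ∈ dd, l i (v, 1) = c (e' i true v, 0))
    (e'_mem : ∀ i ε, ∀ v ∈ dd, e' i ε v ∈ sqo)
    (hbd : ∀ x ∈ V, x ∈ bd' ↔ x ∈ bd ∧ ∀ i ε, ∀ v ∈ ddo, c (e' i ε v, 0) ≠ x)
    (bd_l : ∀ i, ∀ v ∈ dd, ∀ z ∈ Ioo (0 : ℝ) 1, (l i (v, z) ∈ bd' ↔ v ∉ ddo)) :
    IsNF (Sum.elim e e') V' bd' c (Sum.elim k l) := by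
  have ddd : ∀ {v : ℂ}, v ∈ ddo → v ∈ dd := fun hv => ⟨hv.1.le, hv.2.le⟩
  have key : ∀ P ∈ sq, ∀ z ∈ 𝕀, ∀ i ε, ∀ v ∈ ddo,
      (c (e' i ε v, 0) = c (P, z) ↔ z = 0 ∧ e' i ε v = P) := by
    intro P hP z hz i ε v hv
    have hm := e'_mem i ε v (ddd hv)
    rw [h.c_ker _ (sqo_sub hm) 0 (by simp) P hP z hz, CR_iff (sqo_sub hm) hP]
    have h2 : |(e' i ε v).im| ≠ 1 := (abs_lt.2 hm.2).ne
    grind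
  refine ⟨h.c_cont, Sum.rec h.k_cont hcont, fun P hP z hz => (hV' _).2 (.inl (h.c_mem P hP z hz)),
    Sum.rec (fun i v hv z hz => (hV' _).2 (.inl (h.k_mem i v hv z hz)))
      (fun i v hv z hz => (hV' _).2 (.inr ⟨i, v, hv, z, hz, rfl⟩)), ?_, h.c_ker, ?_, ?_,
    Sum.rec h.k0 l0, Sum.rec h.k1 l1, Sum.rec h.e_mem e'_mem, ?_, ?_⟩
  · intro x hx
    rcases (hV' x).1 hx with hx | ⟨i, hi⟩
    · rcases h.surj x hx with hx | ⟨i, hi⟩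
      · exact .inl hx
      · exact .inr ⟨.inl i, hi⟩
    · exact .inr ⟨.inr i, hi⟩
  · rintro (i | i) v hv z hz (i' | i') v' hv' z' hz' he
    · obtain ⟨rfl, h2⟩ := h.k_inj i v hv z hz i' v' hv' z' hz' he
      exact ⟨rfl, h2⟩
    · have he' : k i (v, z) = l i' (v', z') := he
      exact absurd (he' ▸ h.k_mem i v hv z (hIoo hz)) (l_V i' v' hv' z' hz')
    · have he' : l i (v, z) = k i' (v', z') := he
      exact absurd (he' ▸ h.k_mem i' v' hv' z' (hIoo hz')) (l_V i v hv z hz)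
    · obtain ⟨rfl, h2⟩ := l_inj i v hv z hz i' v' hv' z' hz' he
      exact ⟨rfl, h2⟩
  · rintro (i | i) v hv z hz P hP z' hz' he
    · exact h.ck i v hv z hz P hP z' hz' he
    · have he' : c (P, z') = l i (v, z) := he
      exact absurd (he' ▸ h.c_mem P hP z' hz') (l_V i v hv z hz)
  · intro P hP z hz
    rw [hbd _ (h.c_mem P hP z hz), h.bd_c P hP z hz]
    constructor
    · rintro ⟨h1 | h1 | ⟨h1, h2⟩, h3⟩
      · exact .inl h1
      · grind
      · refine .inr (.inr ⟨h1, Sum.rec h2 fun i ε v hv he => h3 i ε v hv ?_⟩)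
        rw [key P hP z hz i ε v hv]; exact ⟨h1, he⟩
    · intro h1
      refine ⟨h1.imp_right (Or.imp_right fun h2 => ⟨h2.1, fun i => h2.2 (.inl i)⟩), fun i ε v hv he => ?_⟩
      rw [key P hP z hz i ε v hv] at he
      obtain ⟨rfl, rfl⟩ := he
      rcases h1 with h1 | h1 | ⟨-, h2⟩
      · exact (abs_lt.2 (e'_mem i ε v (ddd hv)).2).ne h1
      · norm_num at h1
      · exact h2 (.inr i) ε v hv rfl
  · rintro (i | i) v hv z hz
    · change k i (v, z) ∈ bd' ↔ _
      rw [hbd _ (h.k_mem i v hv z (hIoo hz)), h.bd_k i v hv z hz]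
      refine and_iff_left fun i' ε v' hv' => h.ck i v hv z hz _ (sqo_sub (e'_mem i' ε v' (ddd hv'))) 0 (by simp)
    · exact bd_l i v hv z hz

end

/-! ### Planar regions with holes in a row -/

/-- A planar region bounded by graphs: over `x ∈ [l, r]` it consists of the intervals `[b x, d x]` and
`[u x, t x]`, which touch except over the open set `H`, and which degenerate exactly at the ends. -/
structure VF (l r : ℝ) (H H' : Set ℝ) (b d u t : ℝ → ℝ) : Prop where
  bc : Continuous b
  dc : Continuous d
  uc : Continuous u
  tc : Continuous t
  bd : ∀ x ∈ Icc l r, b x ≤ d x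
  ut : ∀ x ∈ Icc l r, u x ≤ t x
  bd_eq : ∀ x ∈ Icc l r, (b x = d x ↔ x = l ∨ x = r)
  ut_eq : ∀ x ∈ Icc l r, (u x = t x ↔ x = l ∨ x = r)
  du : ∀ x ∈ Icc l r, d x ≤ u x
  du_eq : ∀ x ∈ Icc l r, (d x = u x ↔ x ∉ H)

/-- The region bounded by four graphs. -/
def reg (l r : ℝ) (b d u t : ℝ → ℝ) : Set ℝ² :=
  {z | z.1 ∈ Icc l r ∧ (b z.1 ≤ z.2 ∧ z.2 ≤ d z.1 ∨ u z.1 ≤ z.2 ∧ z.2 ≤ t z.1)}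

/-- The boundary of the region; the inner graphs count over the closed intervals `H'`. -/
def regBd (l r : ℝ) (H' : Set ℝ) (b d u t : ℝ → ℝ) : Set ℝ² :=
  {z | z.1 ∈ Icc l r ∧ (z.2 = b z.1 ∨ z.2 = t z.1 ∨ (z.2 = d z.1 ∨ z.2 = u z.1) ∧ z.1 ∈ H')}

lemma interval_param {p q y : ℝ} (hp : p ≤ y) (hq : y ≤ q) : ∃ s ∈ 𝕀, p + s * (q - p) = y := by
  rcases (hp.trans hq).eq_or_lt with h | h
  · exact ⟨0, by simp, by linarith⟩
  · refine ⟨(y - p) / (q - p), ⟨div_nonneg (by linarith) (by linarith),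
      div_le_one_of_le₀ (by linarith) (by linarith)⟩, ?_⟩
    grind

lemma interval_mem {p q s : ℝ} (h : p ≤ q) (hs : s ∈ 𝕀) :
    p ≤ p + s * (q - p) ∧ p + s * (q - p) ≤ q := by
  obtain ⟨h0, h1⟩ := hs
  constructor <;> nlinarith

lemma interval_ker {p q s s' : ℝ} : p + s * (q - p) = p + s' * (q - p) ↔ s = s' ∨ p = q := by
  grind

lemma interval_left {p q s : ℝ} : p + s * (q - p) = p ↔ s = 0 ∨ p = q := by
  grind

lemma interval_right {p q s : ℝ} : p + s * (q - p) = q ↔ s = 1 ∨ p = q := by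
  grind

section
variable {l r : ℝ} {H H' : Set ℝ} {b d u t : ℝ → ℝ}

/-- Parametrization of the region by the lower (`false`) and the upper (`true`) strip. -/
def regMap (b d u t : ℝ → ℝ) (q : Bool × ℝ²) : ℝ × ℝ :=
  (q.2.1, if q.1 then u q.2.1 + q.2.2 * (t q.2.1 - u q.2.1) else b q.2.1 + q.2.2 * (d q.2.1 - b q.2.1))

lemma VF.map_cont (h : VF l r H H' b d u t) : Continuous (regMap b d u t) := by
  have := h.bc; have := h.dc; have := h.uc; have := h.tc
  rw [continuous_prod_of_discrete_left]
  rintro (_ | _)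
  · simp only [regMap, Bool.false_eq_true, if_false]; fun_prop
  · simp only [regMap, if_true]; fun_prop

lemma VF.map_image (h : VF l r H H' b d u t) :
    regMap b d u t '' (univ ×ˢ (Icc l r ×ˢ Icc 0 1)) = reg l r b d u t := by
  ext ⟨x, y⟩
  constructor
  · rintro ⟨⟨ε, x', z⟩, ⟨-, hx, hz⟩, e⟩
    obtain ⟨rfl, rfl⟩ := Prod.ext_iff.1 e
    refine ⟨hx, ?_⟩
    rcases ε with _ | _
    · exact .inl (interval_mem (h.bd x' hx) hz)
    · exact .inr (interval_mem (h.ut x' hx) hz)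
  · rintro ⟨hx, ⟨h1, h2⟩ | ⟨h1, h2⟩⟩ <;> obtain ⟨s, hs, e⟩ := interval_param h1 h2
    · exact ⟨(false, x, s), ⟨trivial, hx, hs⟩, Prod.ext rfl e⟩
    · exact ⟨(true, x, s), ⟨trivial, hx, hs⟩, Prod.ext rfl e⟩

lemma VF.map_ker (h : VF l r H H' b d u t) {ε δ : Bool} {x x' z z' : ℝ} (hx : x ∈ Icc l r)
    (hz : z ∈ 𝕀) (hz' : z' ∈ 𝕀) :
    regMap b d u t (ε, x, z) = regMap b d u t (δ, x', z') ↔ x = x' ∧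
      (ε = δ ∧ (z = z' ∨ x = l ∨ x = r) ∨ ε = false ∧ δ = true ∧ x ∉ H ∧
        (z = 1 ∨ x = l ∨ x = r) ∧ (z' = 0 ∨ x = l ∨ x = r) ∨ ε = true ∧ δ = false ∧ x ∉ H ∧
        (z' = 1 ∨ x = l ∨ x = r) ∧ (z = 0 ∨ x = l ∨ x = r)) := by
  simp only [regMap, Prod.mk.injEq]
  refine and_congr_right ?_
  rintro rfl
  have cross : ∀ {z z' : ℝ}, z ∈ 𝕀 → z' ∈ 𝕀 →
      (b x + z * (d x - b x) = u x + z' * (t x - u x) ↔ x ∉ H ∧ (z = 1 ∨ x = l ∨ x = r) ∧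
      (z' = 0 ∨ x = l ∨ x = r)) := by
    intro z z' hz hz'
    have a1 : (z = 1 ∨ x = l ∨ x = r) ↔ b x + z * (d x - b x) = d x := by
      rw [interval_right, h.bd_eq x hx]
    have a2 : (z' = 0 ∨ x = l ∨ x = r) ↔ u x + z' * (t x - u x) = u x := by
      rw [interval_left, h.ut_eq x hx]
    rw [← h.du_eq x hx, a1, a2]
    have h1 := interval_mem (h.bd x hx) hz
    have h2 := interval_mem (h.ut x hx) hz'
    have h3 := h.du x hx
    grind
  rcases ε with _ | _ <;> rcases δ with _ | _
  · simp only [Bool.false_eq_true, if_false, interval_ker, h.bd_eq x hx]; simp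
  · grind
  · grind
  · simp only [if_true, interval_ker, h.ut_eq x hx]; simp

lemma VF.map_bd (h : VF l r H H' b d u t) (hH : H ⊆ H') (hlr : l ∉ H') (hlr' : r ∉ H') {ε : Bool}
    {x z : ℝ} (hx : x ∈ Icc l r) (hz : z ∈ 𝕀) :
    regMap b d u t (ε, x, z) ∈ regBd l r H' b d u t ↔ x = l ∨ x = r ∨ x ∈ H' ∧ (z = 0 ∨ z = 1) ∨
      x ∉ H' ∧ (z = 0 ∧ ε = false ∨ z = 1 ∧ ε = true) := by
  have e1 := h.bd_eq x hx
  have e2 := h.ut_eq x hx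
  have e4 := h.du x hx
  by_cases hl : x = l ∨ x = r
  · refine iff_of_true ⟨hx, ?_⟩ (by tauto)
    have := e1.2 hl
    have := e2.2 hl
    rcases ε with _ | _
    · simp [regMap, *]
    · simp [regMap, *]
  have n1 : b x ≠ d x := fun h => hl (e1.1 h)
  have n2 : u x ≠ t x := fun h => hl (e2.1 h)
  have n1' := lt_of_le_of_ne (h.bd x hx) n1
  have n2' := lt_of_le_of_ne (h.ut x hx) n2
  rw [not_or] at hl
  rcases ε with _ | _
  · have h1 := interval_mem (h.bd x hx) hz
    have k1 : b x + z * (d x - b x) ≠ t x := by intro h; linarith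
    have k2 : b x + z * (d x - b x) = b x ↔ z = 0 := by rw [interval_left]; tauto
    have k3 : b x + z * (d x - b x) = d x ↔ z = 1 := by rw [interval_right]; tauto
    have k4 : b x + z * (d x - b x) = u x → b x + z * (d x - b x) = d x := by intro h; linarith
    have k5 : (b x + z * (d x - b x) = d x ∨ b x + z * (d x - b x) = u x) ↔ z = 1 :=
      ⟨fun h => k3.1 (h.elim id k4), fun h => .inl (k3.2 h)⟩
    simp only [regBd, regMap, Set.mem_ofPred_eq, hx, true_and, k1, k2, k5, false_or, hl.1, hl.2,
      Bool.false_eq_true, if_false]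
    grind
  · have h1 := interval_mem (h.ut x hx) hz
    have k1 : u x + z * (t x - u x) ≠ b x := by intro h; linarith
    have k2 : u x + z * (t x - u x) = u x ↔ z = 0 := by rw [interval_left]; tauto
    have k3 : u x + z * (t x - u x) = t x ↔ z = 1 := by rw [interval_right]; tauto
    have k4 : u x + z * (t x - u x) = d x → u x + z * (t x - u x) = u x := by intro h; linarith
    have k5 : (u x + z * (t x - u x) = d x ∨ u x + z * (t x - u x) = u x) ↔ z = 0 :=
      ⟨fun h => k2.1 (h.elim k4 id), fun h => .inr (k2.2 h)⟩
    simp only [regBd, regMap, Set.mem_ofPred_eq, hx, true_and, k1, k3, k5, false_or, hl.1, hl.2, if_true]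
    grind

/-- Planar regions over the same interval with holes in the same places are homeomorphic. -/
lemma VF.compare (h : VF l r H H' b d u t) {b' d' u' t' : ℝ → ℝ} (h' : VF l r H H' b' d' u' t')
    (hH : H ⊆ H') (hl : l ∉ H') (hr : r ∉ H') :
    PH (reg l r b d u t) (regBd l r H' b d u t) (reg l r b' d' u' t') (regBd l r H' b' d' u' t') := by
  refine PH.of_param (isCompact_univ.prod (isCompact_Icc.prod isCompact_Icc)) h.map_cont.continuousOn
    h'.map_cont.continuousOn h.map_image h'.map_image ?_ ?_
  · rintro ⟨ε, x, z⟩ ⟨-, hx, hz⟩ ⟨δ, x', z'⟩ ⟨-, hx', hz'⟩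
    rw [h.map_ker hx hz hz', h'.map_ker hx hz hz']
  · rintro ⟨ε, x, z⟩ ⟨-, hx, hz⟩
    rw [h.map_bd hH hl hr hx hz, h'.map_bd hH hl hr hx hz]

lemma VF.compact (h : VF l r H H' b d u t) : IsCompact (reg l r b d u t) := by
  rw [← h.map_image]
  exact (isCompact_univ.prod (isCompact_Icc.prod isCompact_Icc)).image h.map_cont

end

/-! ### Tent functions -/

/-- The distance from `x` to the points `c j`, truncated at `1`, when these are at mutual distance at
least `2`. -/
def cdist {n : ℕ} (c : Fin n → ℝ) (x : ℝ) : ℝ := 1 - ∑ j, max 0 (1 - |x - c j|)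

lemma cdist_cont {n : ℕ} (c : Fin n → ℝ) : Continuous (cdist c) := by
  unfold cdist
  fun_prop

section
variable {n : ℕ} {c : Fin n → ℝ} (hc : ∀ i j, i ≠ j → 2 ≤ |c i - c j|)
include hc

lemma cdist_eq {x : ℝ} {j : Fin n} (h : |x - c j| ≤ 1) : cdist c x = |x - c j| := by
  unfold cdist
  rw [Finset.sum_eq_single j, max_eq_right (by linarith)]
  · ring
  · intro i _ hij
    have h1 := hc i j hij
    grind
  · simp

lemma cdist_cases (x : ℝ) : (cdist c x = 1 ∧ ∀ j, 1 ≤ |x - c j|) ∨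
    ∃ j, |x - c j| ≤ 1 ∧ cdist c x = |x - c j| := by
  by_cases h : ∃ j, |x - c j| ≤ 1
  · obtain ⟨j, h⟩ := h
    exact .inr ⟨j, h, cdist_eq hc h⟩
  · push Not at h
    refine .inl ⟨?_, fun j => (h j).le⟩
    unfold cdist
    rw [Finset.sum_eq_zero fun j _ => max_eq_left (by linarith [h j])]
    ring

lemma cdist_bound (x : ℝ) : 0 ≤ cdist c x ∧ cdist c x ≤ 1 := by
  rcases cdist_cases hc x with ⟨h, -⟩ | ⟨j, h1, h2⟩
  · rw [h]; norm_num
  · grind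

lemma cdist_lt {x r : ℝ} (hr : r ≤ 1) : cdist c x < r ↔ ∃ j, |x - c j| < r := by
  constructor
  · intro h
    rcases cdist_cases hc x with ⟨h1, -⟩ | ⟨j, h1, h2⟩
    · linarith
    · grind
  · rintro ⟨j, h⟩
    rwa [cdist_eq hc (h.le.trans hr)]

lemma cdist_le {x r : ℝ} (hr : r < 1) : cdist c x ≤ r ↔ ∃ j, |x - c j| ≤ r := by
  constructor
  · intro h
    rcases cdist_cases hc x with ⟨h1, -⟩ | ⟨j, h1, h2⟩
    · linarith
    · grind
  · rintro ⟨j, h⟩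
    rwa [cdist_eq hc (h.trans hr.le)]

end

/-! ### The standard handlebody in normal form -/

lemma PH.of_inj {W W' : Type*} [TopologicalSpace W] [TopologicalSpace W'] [T2Space W] [T2Space W']
    {V bd : Set W} {V' bd' : Set W'} (hK : IsCompact V) {φ : W → W'} (hc : ContinuousOn φ V)
    (hi : InjOn φ V) (hV : φ '' V = V') (hb : ∀ x ∈ V, x ∈ bd ↔ φ x ∈ bd') : PH V bd V' bd' :=
  PH.of_param hK continuousOn_id hc (by simp) hV (fun _ ha _ hb => (hi.eq_iff ha hb).symm) hb

section
variable (n : ℕ)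

/-- The gauge of the hexagon with vertices `(± (n + 1/2), 0)` and `(± n, ± 1)`. -/
def tnu (u : ℝ × ℝ) : ℝ := max |u.2| ((|u.1| + |u.2| / 2) / (n + 1 / 2))

/-- Height of the hexagon over `X`. -/
def tp (X : ℝ) : ℝ := min 1 (2 * (n + 1 / 2 - |X|))

/-- Parametrization of the boundary of the hexagon by `[0, 1]`. -/
def tn (s : ℝ) : ℝ × ℝ :=
  if s ≤ 1 / 2 then ((n + 1 / 2) * (4 * s - 1), tp n ((n + 1 / 2) * (4 * s - 1)))
  else ((n + 1 / 2) * (4 * (1 - s) - 1), - tp n ((n + 1 / 2) * (4 * (1 - s) - 1)))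

/-- Centers of the rungs. -/
def trho (i : Fin n) : ℝ := 2 * (i : ℝ) + 1 - n

/-- Thickness function of the rungs. -/
def tk (u : ℝ × ℝ) : ℝ := ∑ i : Fin n, 1 / 2 * max 0 (1 - |u.1 - trho n i| / (1 / 2 + |u.2| / 4))

/-- The ratio of the outer to the inner hexagon. -/
def tb : ℝ := (n + 3 / 2) / (n + 1 / 2)

/-- A hexagonal ring with `n` rungs. -/
def tQ : Set ℝ² := {u | tnu n u ≤ tb n ∧ (1 ≤ tnu n u ∨ ∃ i, |u.1 - trho n i| ≤ 1 / 2 + |u.2| / 4)}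

/-- Radial coordinate in the ring. -/
def tbb (u : ℝ × ℝ) : ℝ := (max (tnu n u) 1 - 1) / (tb n - 1)

/-- Thickness at the projection to the inner hexagon. -/
def tkk (u : ℝ × ℝ) : ℝ := tk n (u.1 / max (tnu n u) 1, u.2 / max (tnu n u) 1)

/-- A height function on the ring with rungs. -/
def th (u : ℝ × ℝ) : ℝ := min (2 * (1 - tbb n u)) (tkk n u + 2 * (1 - tkk n u) * tbb n u)

variable {n}

lemma tA_pos : (0 : ℝ) < n + 1 / 2 := by positivity

lemma tb_gt : 1 < tb n := by
  rw [tb, one_lt_div tA_pos]; linarith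

lemma tnu_cont : Continuous (tnu n) := by
  unfold tnu; fun_prop

lemma tk_cont : Continuous (tk n) := by
  unfold tk
  have : ∀ u : ℝ × ℝ, 1 / 2 + |u.2| / 4 ≠ 0 := fun u => by positivity
  fun_prop (disch := assumption)

lemma th_cont : Continuous (th n) := by
  have h := tnu_cont (n := n)
  have hm : ∀ u, max (tnu n u) 1 ≠ 0 := fun u => (lt_max_of_lt_right one_pos).ne'
  have h1 : Continuous (tbb n) := by unfold tbb; fun_prop
  have h2 : Continuous (tkk n) := by
    refine tk_cont.comp (.prodMk ?_ ?_)
    · exact continuous_fst.div (h.max continuous_const) hm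
    · exact continuous_snd.div (h.max continuous_const) hm
  unfold th
  fun_prop

lemma rho_sep {i j : Fin n} (h : i ≠ j) : 2 ≤ |trho n i - trho n j| := by
  have h1 : (1 : ℤ) ≤ |(i : ℤ) - j| := by
    grind
  have h2 : (1 : ℝ) ≤ |(i : ℝ) - j| := by exact_mod_cast h1
  have : trho n i - trho n j = 2 * ((i : ℝ) - j) := by unfold trho; ring
  grind

lemma rho_bound (i : Fin n) : |trho n i| ≤ n - 1 := by
  have h : ((i : ℕ) : ℝ) + 1 ≤ n := by exact_mod_cast i.2
  unfold trho
  grind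

/-- On a rung of half-width less than `1` only one summand is non-zero. -/
lemma tk_eq {u : ℝ × ℝ} (hu : |u.2| ≤ 1) {i : Fin n} (h : |u.1 - trho n i| ≤ 1 / 2 + |u.2| / 4) :
    tk n u = 1 / 2 * (1 - |u.1 - trho n i| / (1 / 2 + |u.2| / 4)) := by
  have hp : 0 < 1 / 2 + |u.2| / 4 := by positivity
  unfold tk
  rw [Finset.sum_eq_single i, max_eq_right]
  · rw [sub_nonneg, div_le_one hp]; exact h
  · intro j _ hj
    have h1 := rho_sep hj
    have h2 := abs_sub_le (trho n j) u.1 (trho n i)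
    rw [abs_sub_comm (trho n j) u.1] at h2
    rw [max_eq_left, mul_zero]
    rw [sub_nonpos, one_le_div hp]
    linarith
  · simp

lemma tk_zero {u : ℝ × ℝ} (h : ∀ i, 1 / 2 + |u.2| / 4 ≤ |u.1 - trho n i|) : tk n u = 0 := by
  have hp : 0 < 1 / 2 + |u.2| / 4 := by positivity
  refine Finset.sum_eq_zero fun i _ => ?_
  rw [max_eq_left, mul_zero]
  rw [sub_nonpos, one_le_div hp]
  grind

lemma tk_bound {u : ℝ × ℝ} (hu : |u.2| ≤ 1) : 0 ≤ tk n u ∧ tk n u ≤ 1 / 2 := by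
  by_cases h : ∃ i, |u.1 - trho n i| ≤ 1 / 2 + |u.2| / 4
  · obtain ⟨i, h⟩ := h
    rw [tk_eq hu h]
    have hp : 0 < 1 / 2 + |u.2| / 4 := by positivity
    have h1 := (div_le_one hp).2 h
    have h2 : 0 ≤ |u.1 - trho n i| / (1 / 2 + |u.2| / 4) := by positivity
    grind
  · push Not at h
    rw [tk_zero fun i => (h i).le]; norm_num

/-- The core and handle inequalities: `r` is below the rung height iff it lies in the diamond. -/
lemma tk_lt {u : ℝ × ℝ} (hu : |u.2| ≤ 1) {r : ℝ} (hr : 0 ≤ r) :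
    r < tk n u ↔ ∃ i, |u.1 - trho n i| < (1 / 2 + |u.2| / 4) * (1 - 2 * r) := by
  have hp : 0 < 1 / 2 + |u.2| / 4 := by positivity
  constructor
  · intro h
    by_cases h' : ∃ i, |u.1 - trho n i| ≤ 1 / 2 + |u.2| / 4
    · obtain ⟨i, h'⟩ := h'
      refine ⟨i, ?_⟩
      rw [tk_eq hu h'] at h
      have : |u.1 - trho n i| / (1 / 2 + |u.2| / 4) < 1 - 2 * r := by linarith
      rwa [div_lt_iff₀ hp, mul_comm] at this
    · push Not at h'
      rw [tk_zero fun i => (h' i).le] at h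
      linarith
  · rintro ⟨i, h⟩
    have h' : |u.1 - trho n i| ≤ 1 / 2 + |u.2| / 4 := by nlinarith
    rw [tk_eq hu h']
    rw [mul_comm, ← div_lt_iff₀ hp] at h
    linarith

lemma tnu_smul {t : ℝ} (ht : 0 ≤ t) (u : ℝ × ℝ) : tnu n (t * u.1, t * u.2) = t * tnu n u := by
  unfold tnu
  simp only [abs_mul, abs_of_nonneg ht]
  rw [mul_max_of_nonneg _ _ ht]
  grind

lemma tp_nonneg {X : ℝ} (hX : |X| ≤ n + 1 / 2) : 0 ≤ tp n X := le_min (by norm_num) (by linarith)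

lemma tnu_one {u : ℝ × ℝ} : tnu n u = 1 ↔ |u.1| ≤ n + 1 / 2 ∧ |u.2| = tp n u.1 := by
  have hA := tA_pos (n := n)
  unfold tnu tp
  constructor
  · intro h
    have h3 : (|u.1| + |u.2| / 2) / (n + 1 / 2) ≤ 1 := (le_max_right _ _).trans h.le
    rw [div_le_one hA] at h3
    grind
  · rintro ⟨h2, h3⟩
    have h4 : |u.2| ≤ 1 := h3 ▸ min_le_left _ _
    have h5 : |u.2| ≤ 2 * (n + 1 / 2 - |u.1|) := h3 ▸ min_le_right _ _
    apply le_antisymm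
    · exact max_le h4 ((div_le_one hA).2 (by linarith))
    · grind

lemma tn_X {s : ℝ} (hs : s ∈ 𝕀) : |(tn n s).1| ≤ n + 1 / 2 := by
  have hA := tA_pos (n := n)
  obtain ⟨h0, h1⟩ := hs
  unfold tn
  split_ifs with h
  · rw [abs_mul, abs_of_pos hA]
    have : |4 * s - 1| ≤ 1 := abs_le.2 ⟨by linarith, by linarith⟩
    nlinarith
  · rw [abs_mul, abs_of_pos hA]
    have : |4 * (1 - s) - 1| ≤ 1 := abs_le.2 ⟨by linarith, by linarith⟩
    nlinarith

lemma tn_nu {s : ℝ} (hs : s ∈ 𝕀) : tnu n (tn n s) = 1 := by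
  have h := tn_X (n := n) hs
  refine tnu_one.2 ⟨h, ?_⟩
  have := tp_nonneg h
  unfold tn at this ⊢
  grind

lemma tn_cont : Continuous (tn n) := by
  have h : Continuous (tp n) := by unfold tp; fun_prop
  refine Continuous.if_le ?_ ?_ continuous_id continuous_const ?_
  · exact .prodMk (by fun_prop) (h.comp (by fun_prop))
  · exact .prodMk (by fun_prop) (h.comp (by fun_prop)).neg
  · have : tp n ((n + 1 / 2) * 1) = 0 := by
      unfold tp
      grind
    grind

lemma tn_inj {s s' : ℝ} (hs : s ∈ 𝕀) (hs' : s' ∈ 𝕀) :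
    tn n s = tn n s' ↔ (s : 𝕋) = s' := by
  have hA := tA_pos (n := n)
  rw [circ_eq_Icc hs hs']
  -- a point with `s < 1/2` has positive height unless `s = 0`
  have pos : ∀ a, a ∈ 𝕀 → 0 < a → a < 1 / 2 → 0 < tp n ((n + 1 / 2) * (4 * a - 1)) := by
    intro a ha h0 h1
    refine lt_min one_pos ?_
    rw [abs_mul, abs_of_pos hA]
    have : |4 * a - 1| < 1 := abs_lt.2 ⟨by linarith, by linarith⟩
    nlinarith
  have nonneg : ∀ a, 0 ≤ a → a ≤ 1 / 2 → 0 ≤ tp n ((n + 1 / 2) * (4 * a - 1)) := by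
    intro a h0 h1
    apply tp_nonneg
    rw [abs_mul, abs_of_pos hA]
    have : |4 * a - 1| ≤ 1 := abs_le.2 ⟨by linarith, by linarith⟩
    nlinarith
  have cross : ∀ a b, a ∈ 𝕀 → b ∈ 𝕀 → a ≤ 1 / 2 → 1 / 2 < b → tn n a = tn n b →
      a = 0 ∧ b = 1 := by
    intro a b ha hb h1 h2 e
    unfold tn at e
    grind
  constructor
  · intro e
    by_cases h1 : s ≤ 1 / 2 <;> by_cases h2 : s' ≤ 1 / 2
    · unfold tn at e
      grind
    · grind
    · grind
    · unfold tn at e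
      rw [if_neg h1, if_neg h2, Prod.mk.injEq] at e
      have := mul_left_cancel₀ hA.ne' e.1
      grind
  · have h01 : tn n 0 = tn n 1 := by
      have : tp n ((n + 1 / 2) * (-1)) = 0 := by
        unfold tp
        rw [abs_mul, abs_of_pos hA]; norm_num
      unfold tn
      norm_num at this ⊢
      grind
    rintro (rfl | ⟨rfl, rfl⟩ | ⟨rfl, rfl⟩)
    · rfl
    · grind
    · grind

lemma tn_surj {u : ℝ × ℝ} (hu : tnu n u = 1) : ∃ s ∈ 𝕀, tn n s = u := by
  have hA := tA_pos (n := n)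
  obtain ⟨h1, h2⟩ := tnu_one.1 hu
  obtain ⟨h3, h4⟩ := abs_le.1 h1
  have k1 : (0 : ℝ) ≤ (u.1 / (n + 1 / 2) + 1) / 4 := by
    have : -1 ≤ u.1 / (n + 1 / 2) := by rw [le_div_iff₀ hA]; linarith
    linarith
  have k2 : (u.1 / (n + 1 / 2) + 1) / 4 ≤ 1 / 2 := by
    have : u.1 / (n + 1 / 2) ≤ 1 := by rw [div_le_iff₀ hA]; linarith
    linarith
  have e : (n + 1 / 2) * (4 * ((u.1 / (n + 1 / 2) + 1) / 4) - 1) = u.1 := by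
    grind
  by_cases hy : 0 ≤ u.2
  · refine ⟨(u.1 / (n + 1 / 2) + 1) / 4, ⟨k1, by linarith⟩, ?_⟩
    unfold tn
    rw [if_pos k2, e, ← h2, abs_of_nonneg hy]
  · have k3 : (u.1 / (n + 1 / 2) + 1) / 4 < 1 / 2 := by
      refine lt_of_le_of_ne k2 fun h => ?_
      rw [h] at e
      have : |u.1| = n + 1 / 2 := by rw [← e, abs_of_pos]; ring; norm_num; exact hA
      have h5 : |u.2| ≤ 0 := by
        rw [h2]; unfold tp; rw [this, sub_self, mul_zero]; exact min_le_right _ _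
      grind
    refine ⟨1 - (u.1 / (n + 1 / 2) + 1) / 4, ⟨by linarith, by linarith⟩, ?_⟩
    unfold tn
    grind

/-- Points on a ray through the inner hexagon. -/
lemma ray_nu {s b : ℝ} (hs : s ∈ 𝕀) (hb : 0 ≤ b) :
    tnu n ((1 + (tb n - 1) * b) * (tn n s).1, (1 + (tb n - 1) * b) * (tn n s).2) =
      1 + (tb n - 1) * b := by
  have := tb_gt (n := n)
  rw [tnu_smul (by nlinarith), tn_nu hs, mul_one]

lemma ray_bb {s b : ℝ} (hs : s ∈ 𝕀) (hb : 0 ≤ b) :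
    tbb n ((1 + (tb n - 1) * b) * (tn n s).1, (1 + (tb n - 1) * b) * (tn n s).2) = b := by
  have := tb_gt (n := n)
  unfold tbb
  rw [ray_nu hs hb, max_eq_left (by nlinarith)]
  grind

lemma ray_kk {s b : ℝ} (hs : s ∈ 𝕀) (hb : 0 ≤ b) :
    tkk n ((1 + (tb n - 1) * b) * (tn n s).1, (1 + (tb n - 1) * b) * (tn n s).2) = tk n (tn n s) := by
  have := tb_gt (n := n)
  have h1 : 1 + (tb n - 1) * b ≠ 0 := by nlinarith
  unfold tkk
  rw [ray_nu hs hb, max_eq_left (by nlinarith), mul_div_cancel_left₀ _ h1, mul_div_cancel_left₀ _ h1]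

lemma ray_inj {s s' b b' : ℝ} (hs : s ∈ 𝕀) (hb : 0 ≤ b) (hs' : s' ∈ 𝕀)
    (hb' : 0 ≤ b')
    (h : ((1 + (tb n - 1) * b) * (tn n s).1, (1 + (tb n - 1) * b) * (tn n s).2) =
      ((1 + (tb n - 1) * b') * (tn n s').1, (1 + (tb n - 1) * b') * (tn n s').2)) :
    b = b' ∧ tn n s = tn n s' := by
  have e : b = b' := by
    have := ray_bb (n := n) hs hb
    rw [h, ray_bb hs' hb'] at this
    linarith
  have := tb_gt (n := n)
  have h1 : 1 + (tb n - 1) * b ≠ 0 := by nlinarith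
  grind

lemma ray_surj {u : ℝ × ℝ} (h1 : 1 ≤ tnu n u) (h2 : tnu n u ≤ tb n) : ∃ s ∈ 𝕀,
    ∃ b ∈ 𝕀, ((1 + (tb n - 1) * b) * (tn n s).1, (1 + (tb n - 1) * b) * (tn n s).2) = u := by
  have h0 : tnu n u ≠ 0 := by linarith
  have h3 : tnu n ((tnu n u)⁻¹ * u.1, (tnu n u)⁻¹ * u.2) = 1 := by
    rw [tnu_smul (by positivity), inv_mul_cancel₀ h0]
  obtain ⟨s, hs, e⟩ := tn_surj h3
  refine ⟨s, hs, (tnu n u - 1) / (tb n - 1), ⟨div_nonneg (by linarith) (by linarith),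
    div_le_one_of_le₀ (by linarith) (by linarith)⟩, ?_⟩
  grind

/-- The lower end of the radial interval over a point of the front face. -/
def tlo (n : ℕ) (P : ℂ) : ℝ := max 0 ((|P.im| - tk n (tn n P.re)) / (2 * (1 - tk n (tn n P.re))))

/-- The upper end of the radial interval over a point of the front face. -/
def thi (P : ℂ) : ℝ := 1 - |P.im| / 2

/-- Radial coordinate of the core chart. -/
def tbc (n : ℕ) (p : ℂ × ℝ) : ℝ := tlo n p.1 + p.2 * (thi p.1 - tlo n p.1)

/-- The core chart. -/
def tc (n : ℕ) (p : ℂ × ℝ) : ℝ² × ℝ :=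
  (((1 + (tb n - 1) * tbc n p) * (tn n p.1.re).1, (1 + (tb n - 1) * tbc n p) * (tn n p.1.re).2), p.1.im)

/-- The rungs as handles. -/
def tkm (n : ℕ) (i : Fin n) (p : ℂ × ℝ) : ℝ² × ℝ :=
  ((trho n i + (p.1.re + p.1.im) / 2 * (1 / 2 + |1 - 2 * p.2| / 4), 1 - 2 * p.2),
    (p.1.re - p.1.im) / 4)

/-- The patches along which the rungs are attached. -/
def tA (n : ℕ) (i : Fin n) (ε : Bool) : Aff :=
  if ε then ⟨⟨1 - (trho n i + (n + 1 / 2)) / (4 * (n + 1 / 2)), 0⟩, -(3 / 8 / (4 * (n + 1 / 2))),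
    -(3 / 8 / (4 * (n + 1 / 2))), 1 / 4, -1 / 4⟩
  else ⟨⟨(trho n i + (n + 1 / 2)) / (4 * (n + 1 / 2)), 0⟩, 3 / 8 / (4 * (n + 1 / 2)),
    3 / 8 / (4 * (n + 1 / 2)), 1 / 4, -1 / 4⟩

lemma tn_y {s : ℝ} (hs : s ∈ 𝕀) : |(tn n s).2| ≤ 1 := by
  rw [(tnu_one.1 (tn_nu hs)).2]; exact min_le_left _ _

lemma tlo_le {P : ℂ} (hP : P ∈ sq) : tlo n P ≤ thi P ∧ (tlo n P = thi P ↔ |P.im| = 1) := by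
  obtain ⟨k0, k1⟩ := tk_bound (n := n) (tn_y (n := n) hP.1)
  have h1 : |P.im| ≤ 1 := abs_le.2 hP.2
  unfold tlo thi
  set κ := tk n (tn n P.re)
  have h2 : 0 < 2 * (1 - κ) := by linarith
  have h3 : (|P.im| - κ) / (2 * (1 - κ)) ≤ |P.im| / 2 := by
    rw [div_le_iff₀ h2]; nlinarith
  grind

lemma tbc_mem {P : ℂ} (hP : P ∈ sq) {z : ℝ} (hz : z ∈ 𝕀) :
    tlo n P ≤ tbc n (P, z) ∧ tbc n (P, z) ≤ thi P := interval_mem (tlo_le hP).1 hz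

lemma tlo_nonneg (P : ℂ) : 0 ≤ tlo n P := le_max_left _ _

lemma tc_th {P : ℂ} (hP : P ∈ sq) {z : ℝ} (hz : z ∈ 𝕀) :
    th n (tc n (P, z)).1 = min (2 * (1 - tbc n (P, z)))
      (tk n (tn n P.re) + 2 * (1 - tk n (tn n P.re)) * tbc n (P, z)) := by
  have h := (tlo_nonneg P).trans (tbc_mem (n := n) hP hz).1
  unfold th
  simp only [tc]
  rw [ray_bb hP.1 h, ray_kk hP.1 h]

lemma th_in {u : ℝ × ℝ} (h : tnu n u ≤ 1) : th n u = tk n u := by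
  have hy : |u.2| ≤ 1 := (le_max_left _ _).trans h
  have := tk_bound (n := n) hy
  unfold th tbb tkk
  grind

lemma diam (v : ℂ) : |(v.re + v.im) / 2| + |(v.re - v.im) / 2| = max |v.re| |v.im| := by
  grind

lemma diam_dd {v : ℂ} : v ∈ dd ↔ |(v.re + v.im) / 2| + |(v.re - v.im) / 2| ≤ 1 := by
  rw [diam, max_le_iff]; rfl

lemma diam_ddo {v : ℂ} : v ∈ ddo ↔ |(v.re + v.im) / 2| + |(v.re - v.im) / 2| < 1 := by
  rw [diam, max_lt_iff]; rfl

lemma half_abs (a : ℝ) : |a / 4| = |a / 2| / 2 := by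
  grind

section
variable {i : Fin n} {v : ℂ} {z : ℝ}

lemma km_sub : |(tkm n i (v, z)).1.1 - trho n i| =
    |(v.re + v.im) / 2| * (1 / 2 + |(tkm n i (v, z)).1.2| / 4) := by
  simp only [tkm]
  rw [add_sub_cancel_left, abs_mul, abs_of_nonneg (by positivity : 0 ≤ 1 / 2 + |1 - 2 * z| / 4)]

lemma km_y (hz : z ∈ 𝕀) : |(tkm n i (v, z)).1.2| ≤ 1 := by
  obtain ⟨h0, h1⟩ := hz
  exact abs_le.2 ⟨by simp only [tkm]; linarith, by simp only [tkm]; linarith⟩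

lemma d1_le (hv : v ∈ dd) : |(v.re + v.im) / 2| ≤ 1 :=
  (le_add_of_nonneg_right (abs_nonneg _)).trans (diam_dd.1 hv)

lemma km_rung (hv : v ∈ dd) :
    |(tkm n i (v, z)).1.1 - trho n i| ≤ 1 / 2 + |(tkm n i (v, z)).1.2| / 4 := by
  rw [km_sub]
  exact mul_le_of_le_one_left (by positivity) (d1_le hv)

lemma rung_nu {u : ℝ × ℝ} (hy : |u.2| ≤ 1) (h : |u.1 - trho n i| ≤ 1 / 2 + |u.2| / 4) :
    (|u.1| + |u.2| / 2) / (n + 1 / 2) < 1 := by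
  have h1 := rho_bound i
  have h2 := abs_sub_abs_le_abs_sub u.1 (trho n i)
  rw [div_lt_one tA_pos]; linarith

lemma km_nu (hv : v ∈ dd) (hz : z ∈ 𝕀) : tnu n (tkm n i (v, z)).1 ≤ 1 :=
  max_le (km_y hz) (rung_nu (km_y hz) (km_rung hv)).le

lemma km_nu_lt (hv : v ∈ dd) (hz : z ∈ Ioo (0 : ℝ) 1) : tnu n (tkm n i (v, z)).1 < 1 := by
  refine max_lt ?_ (rung_nu (km_y (Ioo_subset_Icc_self hz)) (km_rung hv))
  obtain ⟨h0, h1⟩ := hz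
  exact abs_lt.2 ⟨by simp only [tkm]; linarith, by simp only [tkm]; linarith⟩

lemma km_th (hv : v ∈ dd) (hz : z ∈ 𝕀) :
    th n (tkm n i (v, z)).1 = 1 / 2 * (1 - |(v.re + v.im) / 2|) := by
  have hp : 1 / 2 + |(tkm n i (v, z)).1.2| / 4 ≠ 0 := by positivity
  rw [th_in (km_nu hv hz), tk_eq (km_y hz) (km_rung hv), km_sub, mul_div_cancel_right₀ _ hp]

lemma patch_false (hv : v ∈ dd) : ((tA n i false).app v).re ∈ Ioo (0 : ℝ) 1 ∧
    tn n ((tA n i false).app v).re = (trho n i + (v.re + v.im) / 2 * (3 / 4), 1) := by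
  have h1 := rho_bound i
  have h2 := d1_le hv
  rw [abs_le] at h1 h2
  have e : ((tA n i false).app v).re =
      (trho n i + (v.re + v.im) / 2 * (3 / 4) + (n + 1 / 2)) / (4 * (n + 1 / 2)) := by
    simp only [tA, Aff.app]; simp; ring
  have e' : (n + 1 / 2) * (4 * ((tA n i false).app v).re - 1) =
      trho n i + (v.re + v.im) / 2 * (3 / 4) := by rw [e]; field_simp; ring
  have k0 : 0 < ((tA n i false).app v).re := by
    rw [e]; exact div_pos (by linarith) (by linarith)
  have k1 : ((tA n i false).app v).re ≤ 1 / 2 := by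
    rw [e, div_le_iff₀ (by linarith)]; linarith
  refine ⟨⟨k0, by linarith⟩, ?_⟩
  unfold tn
  rw [if_pos k1, e']
  refine Prod.ext rfl (min_eq_left ?_)
  grind

lemma patch_re : ((tA n i true).app v).re = 1 - ((tA n i false).app v).re ∧
    ∀ ε, ((tA n i ε).app v).im = (v.re - v.im) / 4 := by
  exact ⟨by simp [tA, Aff.app]; ring, by rintro (_ | _) <;> simp [tA, Aff.app] <;> ring⟩

lemma tn_symm (s : ℝ) : tn n (1 - s) = ((tn n s).1, - (tn n s).2) := by
  unfold tn
  by_cases h1 : s = 1 / 2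
  · have h2 : tp n (n + 1 / 2) = 0 := by
      unfold tp
      grind
    rw [h1]; norm_num at h2 ⊢; rw [h2]; simp
  · grind

lemma patch_tn (ε : Bool) (hv : v ∈ dd) : ((tA n i ε).app v).re ∈ Ioo (0 : ℝ) 1 ∧
    tn n ((tA n i ε).app v).re = (trho n i + (v.re + v.im) / 2 * (3 / 4), if ε then -1 else 1) := by
  rcases ε with _ | _
  · simpa using patch_false hv
  · obtain ⟨⟨h0, h1⟩, h2⟩ := patch_false (i := i) hv
    rw [patch_re.1, tn_symm, h2]
    grind

lemma patch_mem (ε : Bool) (hv : v ∈ dd) : (tA n i ε).app v ∈ sqo := by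
  refine ⟨(patch_tn ε hv).1, abs_lt.1 ?_⟩
  have := diam_dd.1 hv
  have := abs_nonneg ((v.re + v.im) / 2)
  rw [patch_re.2, half_abs]; linarith

end

lemma tA_good (n : ℕ) : GoodAff (tA n) := by
  have hA : (0 : ℝ) < 3 / 8 / (4 * (n + 1 / 2)) := by have := tA_pos (n := n); positivity
  refine ⟨fun i => ?_, fun i => ?_, fun i ε v hv => patch_mem ε hv, ?_⟩
  · simp only [Aff.det, tA, Bool.false_eq_true, if_false]; linarith
  · simp only [Aff.det, tA, if_true]; linarith
  · intro i ε j δ hne v hv w hw e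
    have h1 := (patch_tn (i := i) ε hv).2
    rw [e, (patch_tn (i := j) δ hw).2, Prod.mk.injEq] at h1
    have hε : ε = δ := by
      grind
    subst hε
    have hij : i ≠ j := fun h => hne (by rw [h])
    have h2 := rho_sep hij
    have h3 := abs_le.1 (d1_le hv)
    have h4 := abs_le.1 (d1_le hw)
    grind

/-- A point of the front face lies in an open patch iff it is strictly below the rung height. -/
lemma patch_iff {P : ℂ} (hP : P ∈ sq) :
    |P.im| < tk n (tn n P.re) ↔ ∃ i ε, ∃ v ∈ ddo, (tA n i ε).app v = P := by
  rw [tk_lt (tn_y hP.1) (abs_nonneg _)]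
  constructor
  · rintro ⟨i, h⟩
    refine ⟨i, ?_⟩
    have hX : |(tn n P.re).1 - trho n i| < 3 / 4 := by
      nlinarith [abs_nonneg (tn n P.re).2, abs_nonneg P.im, tn_y (n := n) hP.1]
    have hy : tp n (tn n P.re).1 = 1 := by
      have h1 := rho_bound i
      have h2 := abs_sub_abs_le_abs_sub (tn n P.re).1 (trho n i)
      exact min_eq_left (by linarith)
    have hy' : |(tn n P.re).2| = 1 := by rw [(tnu_one.1 (tn_nu hP.1)).2, hy]
    rw [hy'] at h
    set d := ((tn n P.re).1 - trho n i) / (3 / 4) with hd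
    let v : ℂ := ⟨d + 2 * P.im, d - 2 * P.im⟩
    have hv1 : (v.re + v.im) / 2 = d := by simp [v]
    have hv2 : (v.re - v.im) / 2 = 2 * P.im := by simp only [v]; ring
    have hv : v ∈ ddo := by
      rw [diam_ddo, hv1, hv2, hd, abs_div, abs_mul, abs_two, abs_of_pos (by norm_num : (0 : ℝ) < 3 / 4)]
      linarith
    have him : ∀ ε, ((tA n i ε).app v).im = P.im := by
      intro ε; rw [patch_re.2]; linarith
    have hre : (tA n i false).app v = (⟨((tn n P.re).1 + (n + 1 / 2)) / (4 * (n + 1 / 2)), P.im⟩ : ℂ) := by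
      simp only [tA, Aff.app, Bool.false_eq_true, if_false]
      grind
    by_cases hs : P.re ≤ 1 / 2
    · refine ⟨false, v, hv, ?_⟩
      rw [hre]
      refine Complex.ext ?_ rfl
      simp only [tn, if_pos hs]
      grind
    · refine ⟨true, v, hv, Complex.ext ?_ (him true)⟩
      rw [patch_re.1, hre]
      simp only [tn, if_neg hs]
      grind
  · rintro ⟨i, ε, v, hv, rfl⟩
    have hv' : v ∈ dd := ⟨hv.1.le, hv.2.le⟩
    refine ⟨i, ?_⟩
    have hy : |(tn n ((tA n i ε).app v).re).2| = 1 := by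
      rw [(patch_tn ε hv').2]; rcases ε with _ | _ <;> simp
    rw [hy, (patch_tn ε hv').2, patch_re.2, half_abs, add_sub_cancel_left, abs_mul,
      abs_of_pos (by norm_num : (0 : ℝ) < 3 / 4)]
    linarith [diam_ddo.1 hv]

lemma tc_cont : ContinuousOn (tc n) (sq ×ˢ Icc 0 1) := by
  have h1 := tn_cont (n := n)
  have h2 := tk_cont (n := n)
  have h3 : Continuous fun p : ℂ × ℝ => tn n p.1.re := h1.comp (by fun_prop)
  have h5 : ContinuousOn (fun p : ℂ × ℝ => tlo n p.1) (sq ×ˢ Icc 0 1) := by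
    refine (continuousOn_const (c := (0 : ℝ))).sup (.div (by fun_prop) (by fun_prop) ?_)
    rintro p ⟨hp, -⟩
    linarith [(tk_bound (n := n) (tn_y (n := n) hp.1)).2]
  have h6 : Continuous fun p : ℂ × ℝ => thi p.1 := by unfold thi; fun_prop
  have h7 : ContinuousOn (tbc n) (sq ×ˢ Icc 0 1) := by
    exact h5.add (continuousOn_snd.mul (h6.continuousOn.sub h5))
  refine .prodMk (.prodMk ?_ ?_) (by fun_prop)
  · exact (continuousOn_const.add (continuousOn_const.mul h7)).mul (continuous_fst.comp h3).continuousOn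
  · exact (continuousOn_const.add (continuousOn_const.mul h7)).mul (continuous_snd.comp h3).continuousOn

lemma lo_iff {P : ℂ} (hP : P ∈ sq) {b : ℝ} (hb : 0 ≤ b) : tlo n P ≤ b ↔
    |P.im| ≤ tk n (tn n P.re) + 2 * (1 - tk n (tn n P.re)) * b := by
  have h := (tk_bound (n := n) (tn_y (n := n) hP.1)).2
  unfold tlo
  rw [max_le_iff, div_le_iff₀ (by linarith)]
  grind

lemma std_NF (n : ℕ) : IsNF (fun i ε => (tA n i ε).app) (Pin (tQ n) (th n)) (PinBd (tQ n) (th n))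
    (tc n) (tkm n) := by
  have hb1 := tb_gt (n := n)
  have bnn : ∀ P ∈ sq, ∀ z ∈ 𝕀, 0 ≤ tbc n (P, z) := fun P hP z hz =>
    (tlo_nonneg P).trans (tbc_mem (n := n) hP hz).1
  have cnu : ∀ P ∈ sq, ∀ z ∈ 𝕀, tnu n (tc n (P, z)).1 = 1 + (tb n - 1) * tbc n (P, z) :=
    fun P hP z hz => ray_nu hP.1 (bnn P hP z hz)
  have cQ : ∀ P ∈ sq, ∀ z ∈ 𝕀, (tc n (P, z)).1 ∈ tQ n := by
    intro P hP z hz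
    have h0 := bnn P hP z hz
    have h1 := (tbc_mem (n := n) hP hz).2
    have h2 : thi P ≤ 1 := by unfold thi; linarith [abs_nonneg P.im]
    refine ⟨?_, .inl ?_⟩
    · rw [cnu P hP z hz]; nlinarith
    · rw [cnu P hP z hz]; nlinarith
  have kQ : ∀ i, ∀ v ∈ dd, ∀ z ∈ 𝕀, (tkm n i (v, z)).1 ∈ tQ n := fun i v hv z hz =>
    ⟨(km_nu hv hz).trans hb1.le, .inr ⟨i, km_rung hv⟩⟩
  have k_eq : ∀ i (v : ℂ) (z : ℝ), |(tkm n i (v, z)).2| = |(v.re - v.im) / 2| / 2 := fun i v z => half_abs _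
  have hk01 : ∀ i ε, ∀ v ∈ dd, tkm n i (v, if ε then 1 else 0) = tc n ((tA n i ε).app v, 0) := by
    intro i ε v hv
    obtain ⟨hp1, hp2⟩ := patch_tn (i := i) ε hv
    have hlo : tlo n ((tA n i ε).app v) = 0 := by
      refine le_antisymm ((lo_iff (sqo_sub (patch_mem ε hv)) le_rfl).2 ?_) (tlo_nonneg _)
      have e : tn n ((tA n i ε).app v).re = (tkm n i (v, if ε then 1 else 0)).1 := by
        rw [hp2]; rcases ε with _ | _ <;> simp [tkm] <;> norm_num
      have hz : (if ε then (1 : ℝ) else 0) ∈ 𝕀 := by rcases ε with _ | _ <;> simp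
      rw [e, mul_zero, add_zero, ← th_in (km_nu hv hz), km_th hv hz, patch_re.2, half_abs]
      linarith [diam_dd.1 hv]
    simp only [tc, tbc, hlo, zero_mul, add_zero, mul_zero, one_mul, hp2, patch_re.2]
    rcases ε with _ | _ <;> simp [tkm] <;> norm_num
  refine ⟨tc_cont, fun i => ?_, fun P hP z hz => ⟨cQ P hP z hz, ?_⟩, fun i v hv z hz =>
    ⟨kQ i v hv z hz, ?_⟩, ?_, ?_, ?_, ?_, fun i v hv => by simpa using hk01 i false v hv,
    fun i v hv => by simpa using hk01 i true v hv, fun i ε v hv => patch_mem ε hv, ?_, ?_⟩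
  · exact Continuous.continuousOn (.prodMk (by fun_prop) (by fun_prop))
  · rw [tc_th hP hz]
    have h0 := bnn P hP z hz
    have h1 := tbc_mem (n := n) hP hz
    refine le_min ?_ ((lo_iff hP h0).1 h1.1)
    have := h1.2
    unfold thi at this
    change |P.im| ≤ _
    linarith
  · rw [km_th hv hz, k_eq]
    linarith [diam_dd.1 hv]
  · rintro ⟨u, r⟩ ⟨⟨h1, h2⟩, h3⟩
    by_cases h4 : 1 ≤ tnu n u
    · left
      obtain ⟨s, hs, b, hb, rfl⟩ := ray_surj h4 h1
      unfold th at h3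
      rw [ray_bb hs hb.1, ray_kk hs hb.1, le_min_iff] at h3
      have hr : |r| ≤ 1 := by
        have := (tk_bound (n := n) (tn_y (n := n) hs)).2
        nlinarith [hb.1, hb.2]
      let P : ℂ := ⟨s, r⟩
      have hP : P ∈ sq := ⟨hs, abs_le.1 hr⟩
      have k1 : tlo n P ≤ b := (lo_iff hP hb.1).2 h3.2
      have k2 : b ≤ thi P := by
        change b ≤ 1 - |r| / 2
        linarith
      obtain ⟨z, hz, e⟩ := interval_param k1 k2
      refine ⟨P, hP, z, hz, ?_⟩
      have e' : tbc n (P, z) = b := e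
      unfold tc
      rw [e']
    · right
      have h4' := not_le.1 h4
      obtain ⟨i, hi⟩ := h2.resolve_left h4
      have hy : |u.2| ≤ 1 := (le_max_left _ _).trans h4'.le
      rw [th_in h4'.le, tk_eq hy hi] at h3
      have hp : 0 < 1 / 2 + |u.2| / 4 := by positivity
      set d := (u.1 - trho n i) / (1 / 2 + |u.2| / 4) with hd
      have hd' : |d| = |u.1 - trho n i| / (1 / 2 + |u.2| / 4) := by rw [hd, abs_div, abs_of_pos hp]
      let v : ℂ := ⟨d + 2 * r, d - 2 * r⟩
      have hv1 : (v.re + v.im) / 2 = d := by simp [v]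
      have hv2 : (v.re - v.im) / 2 = 2 * r := by simp only [v]; ring
      have hv3 : (v.re - v.im) / 4 = r := by linarith
      have hv : v ∈ dd := by
        rw [diam_dd, hv1, hv2, abs_mul, abs_two]; linarith
      have hy' := abs_le.1 hy
      refine ⟨i, v, hv, (1 - u.2) / 2, ⟨by linarith, by linarith⟩, ?_⟩
      have hz : 1 - 2 * ((1 - u.2) / 2) = u.2 := by ring
      simp only [tkm, hv1, hv3, hz, hd, div_mul_cancel₀ _ hp.ne', add_sub_cancel]
  · intro P hP z hz P' hP' z' hz'
    constructor
    · intro e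
      have e1 := congrArg Prod.fst e
      have e2 : P.im = P'.im := congrArg Prod.snd e
      obtain ⟨e3, e4⟩ := ray_inj hP.1 (bnn P hP z hz) hP'.1 (bnn P' hP' z' hz') e1
      refine ⟨(tn_inj hP.1 hP'.1).1 e4, e2, ?_⟩
      have e5 : tlo n P' = tlo n P := by unfold tlo; rw [e2, e4]
      have e6 : thi P' = thi P := by unfold thi; rw [e2]
      unfold tbc at e3
      simp only [e5, e6] at e3
      rw [interval_ker] at e3
      exact e3.imp_right (tlo_le hP).2.1
    · rintro ⟨e1, e2, e3⟩
      have e4 := (tn_inj (n := n) hP.1 hP'.1).2 e1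
      have e5 : tlo n P' = tlo n P := by unfold tlo; rw [e2, e4]
      have e6 : thi P' = thi P := by unfold thi; rw [e2]
      have e7 : tbc n (P, z) = tbc n (P', z') := by
        unfold tbc
        simp only [e5, e6]
        rw [interval_ker]
        exact e3.imp_right (tlo_le hP).2.2
      unfold tc
      grind
  · intro i v hv z hz i' v' hv' z' hz' e
    have e1 : 1 - 2 * z = 1 - 2 * z' := congrArg (fun x => x.1.2) e
    have ez : z = z' := by linarith
    subst ez
    have hii : i = i' := by
      by_contra hne
      have h1 := rho_sep hne
      have h2 := km_rung (i := i) (z := z) hv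
      have h3 := km_rung (i := i') (z := z) hv'
      have h4 := km_y (i := i) (v := v) (hIoo hz)
      grind
    subst hii
    have e2 : trho n i + (v.re + v.im) / 2 * (1 / 2 + |1 - 2 * z| / 4) =
      trho n i + (v'.re + v'.im) / 2 * (1 / 2 + |1 - 2 * z| / 4) := congrArg (fun x => x.1.1) e
    have e3 : (v.re - v.im) / 4 = (v'.re - v'.im) / 4 := congrArg (fun x => x.2) e
    have e4 := mul_right_cancel₀ (by positivity) (add_left_cancel e2)
    exact ⟨rfl, Complex.ext (by linarith) (by linarith), rfl⟩
  · intro i v hv z hz P hP z' hz' e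
    have h1 := km_nu_lt (i := i) hv hz
    rw [← e, cnu P hP z' hz'] at h1
    nlinarith [bnn P hP z' hz']
  · intro P hP z hz
    have hlt := patch_iff (n := n) hP
    have hκ := (tk_bound (n := n) (tn_y (n := n) hP.1)).2
    have hb := tbc_mem (n := n) hP hz
    have h0 := bnn P hP z hz
    have hL := (tlo_le (n := n) hP)
    have hm : tc n (P, z) ∈ PinBd (tQ n) (th n) ↔ |P.im| = th n (tc n (P, z)).1 :=
      and_iff_right (cQ P hP z hz)
    have hfr : (z = 0 ∧ ∀ i ε, ∀ v ∈ ddo, (tA n i ε).app v ≠ P) ↔ z = 0 ∧ tk n (tn n P.re) ≤ |P.im| := by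
      grind
    have hbz : tbc n (P, z) = tlo n P ↔ z = 0 ∨ |P.im| = 1 := by
      rw [← hL.2]; exact interval_left
    have hbz' : tbc n (P, z) = thi P ↔ z = 1 ∨ |P.im| = 1 := by
      rw [← hL.2]; exact interval_right
    rw [hm, tc_th hP hz, hfr]
    constructor
    · intro e
      rcases min_choice (2 * (1 - tbc n (P, z)))
        (tk n (tn n P.re) + 2 * (1 - tk n (tn n P.re)) * tbc n (P, z)) with h | h <;> rw [h] at e
      · have : tbc n (P, z) = thi P := by unfold thi; linarith
        grind
      · have k1 : tk n (tn n P.re) ≤ |P.im| := by rw [e]; nlinarith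
        have k2 : tbc n (P, z) = tlo n P := by
          unfold tlo
          rw [max_eq_right (div_nonneg (by linarith) (by linarith)), eq_div_iff (by linarith), e]
          ring
        grind
    · have hge : |P.im| ≤ min (2 * (1 - tbc n (P, z)))
          (tk n (tn n P.re) + 2 * (1 - tk n (tn n P.re)) * tbc n (P, z)) := by
        refine le_min ?_ ((lo_iff (n := n) hP h0).1 hb.1)
        have := hb.2
        unfold thi at this
        linarith
      have hup : tbc n (P, z) = thi P → |P.im| = min (2 * (1 - tbc n (P, z)))
          (tk n (tn n P.re) + 2 * (1 - tk n (tn n P.re)) * tbc n (P, z)) := by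
        intro h
        refine le_antisymm hge ((min_le_left _ _).trans ?_)
        rw [h]; unfold thi; linarith
      rintro (h | h | ⟨h, h'⟩)
      · grind
      · grind
      · refine le_antisymm hge ((min_le_right _ _).trans ?_)
        rw [hbz.2 (.inl h)]
        unfold tlo
        rw [max_eq_right (div_nonneg (by linarith) (by linarith))]
        apply le_of_eq
        grind
  · intro i v hv z hz
    have hm : tkm n i (v, z) ∈ PinBd (tQ n) (th n) ↔ |(tkm n i (v, z)).2| = th n (tkm n i (v, z)).1 :=
      and_iff_right (kQ i v hv z (hIoo hz))
    have := diam_dd.1 hv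
    rw [hm, km_th hv (hIoo hz), k_eq, diam_ddo]
    grind

end

/-! ### The planar regions as regions between graphs -/

/-- The open intervals over which the standard region with `k` holes has a hole. -/
def Hs (k : ℕ) : Set ℝ := {x | ∃ j < k, x ∈ Ioo (2 * (j : ℝ) + 1 / 2) (2 * j + 3 / 2)}
/-- The closures of the intervals in `Hs`. -/
def Hs' (k : ℕ) : Set ℝ := {x | ∃ j < k, x ∈ Icc (2 * (j : ℝ) + 1 / 2) (2 * j + 3 / 2)}

lemma Hs_sub (k : ℕ) : Hs k ⊆ Hs' k := fun _ ⟨j, hj, h⟩ => ⟨j, hj, Ioo_subset_Icc_self h⟩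

lemma Hs_left (k : ℕ) : (-1 / 2 : ℝ) ∉ Hs' k := by
  rintro ⟨j, -, h, -⟩
  linarith

lemma Hs_right (k : ℕ) : (2 * k + 1 / 2 : ℝ) ∉ Hs' k := by
  rintro ⟨j, h1, -, h⟩
  have : (j : ℝ) + 1 ≤ k := by exact_mod_cast h1
  linarith

lemma abs_between {y a b : ℝ} (ha : 0 ≤ a) :
    (-b ≤ y ∧ y ≤ -a ∨ a ≤ y ∧ y ≤ b) ↔ a ≤ |y| ∧ |y| ≤ b := by
  grind

/-- Symmetric regions between graphs. -/
lemma VF.symm_mk {l r : ℝ} {H H' : Set ℝ} {lo f : ℝ → ℝ} (hlo : Continuous lo) (hf : Continuous f)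
    (h0 : ∀ x, 0 ≤ lo x) (hlt : ∀ x ∈ Ioo l r, lo x < f x) (hl : lo l = 0 ∧ f l = 0)
    (hr : lo r = 0 ∧ f r = 0) (hH : ∀ x, 0 < lo x ↔ x ∈ H) :
    VF l r H H' (fun x => - f x) (fun x => - lo x) lo f := by
  have key : ∀ x ∈ Icc l r, lo x ≤ f x ∧ (lo x = f x ↔ x = l ∨ x = r) := by
    grind
  refine ⟨hf.neg, hlo.neg, hlo, hf, fun x hx => neg_le_neg (key x hx).1, fun x hx => (key x hx).1,
    fun x hx => ?_, fun x hx => (key x hx).2, fun x _ => by linarith [h0 x], fun x _ => ?_⟩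
  · grind
  · grind

lemma reg_symm {l r : ℝ} {lo f : ℝ → ℝ} (h0 : ∀ x, 0 ≤ lo x) {u : ℝ × ℝ} :
    u ∈ reg l r (fun x => - f x) (fun x => - lo x) lo f ↔
      u.1 ∈ Icc l r ∧ lo u.1 ≤ |u.2| ∧ |u.2| ≤ f u.1 :=
  and_congr_right fun _ => abs_between (h0 _)

lemma regBd_symm {l r : ℝ} {H' : Set ℝ} {lo f : ℝ → ℝ} (h0 : ∀ x, 0 ≤ lo x) {u : ℝ × ℝ}
    (hu : u ∈ reg l r (fun x => - f x) (fun x => - lo x) lo f) :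
    u ∈ regBd l r H' (fun x => - f x) (fun x => - lo x) lo f ↔
      |u.2| = f u.1 ∨ |u.2| = lo u.1 ∧ u.1 ∈ H' := by
  have h := (reg_symm h0).1 hu
  have e1 : |u.2| = f u.1 ↔ u.2 = f u.1 ∨ u.2 = - f u.1 := abs_eq ((abs_nonneg _).trans h.2.2)
  have e2 : |u.2| = lo u.1 ↔ u.2 = lo u.1 ∨ u.2 = - lo u.1 := abs_eq (h0 _)
  simp only [regBd, Set.mem_ofPred_eq, h.1, true_and]
  tauto

/-- Every planar region with holes over the same intervals is homeomorphic to the standard one. -/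
lemma FF_PH {k : ℕ} {b d u t : ℝ → ℝ} (h : VF (-1 / 2) (2 * k + 1 / 2) (Hs k) (Hs' k) b d u t) :
    PH (FF k) {x | hh k x = 0} (reg (-1 / 2) (2 * k + 1 / 2) b d u t)
      (regBd (-1 / 2) (2 * k + 1 / 2) (Hs' k) b d u t) := by
  obtain ⟨S, hS, hF⟩ := chain_shape k
  have hlo : ∀ x, x ∉ Hs k → S.lo x = 0 := fun x hx =>
    le_antisymm (not_lt.1 fun h => hx ((S.lo_pos x).1 h)) (S.lo_nonneg x)
  have hV : VF (-1 / 2) (2 * k + 1 / 2) (Hs k) (Hs' k) (fun x => - S.f x) (fun x => - S.lo x) S.lo S.f :=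
    VF.symm_mk S.lo_cont S.f_cont S.lo_nonneg S.lo_lt
      ⟨hlo _ fun h => Hs_left k (Hs_sub k h), S.f_left⟩
      ⟨hlo _ fun h => Hs_right k (Hs_sub k h), S.f_right⟩ S.lo_pos
  have hE : FF k = reg (-1 / 2) (2 * k + 1 / 2) (fun x => - S.f x) (fun x => - S.lo x) S.lo S.f := by
    rw [FF_eq hF]
    ext u
    exact (reg_symm S.lo_nonneg).symm
  obtain ⟨Φ, hΦ⟩ := hV.compare h (Hs_sub k) (Hs_left k) (Hs_right k)
  rw [hE]
  refine ⟨Φ, fun x => ?_⟩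
  rw [← hΦ, regBd_symm S.lo_nonneg x.2]
  have := (reg_symm S.lo_nonneg).1 x.2
  have e := S.h_zero x this.1 this.2.1 this.2.2
  rw [hS] at e
  exact e

section
variable (n : ℕ)

/-- Centers of the holes of the ring with rungs. -/
def teta (j : Fin (n + 1)) : ℝ := 2 * (j : ℝ) - n

/-- The (signed) height of the holes of the ring with rungs. -/
def tlow (X : ℝ) : ℝ := min (tp n X) (4 * (1 / 2 - cdist (teta n) X))

/-- The outer height of the ring with rungs. -/
def tf (X : ℝ) : ℝ := min (tb n) (2 * (n + 3 / 2 - |X|))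

variable {n}

lemma eta_sep (i j : Fin (n + 1)) (h : i ≠ j) : 2 ≤ |teta n i - teta n j| := by
  have h1 : (1 : ℤ) ≤ |(i : ℤ) - j| := by
    grind
  have h2 : (1 : ℝ) ≤ |(i : ℝ) - j| := by exact_mod_cast h1
  have : teta n i - teta n j = 2 * ((i : ℝ) - j) := by unfold teta; ring
  grind

lemma eta_rho (j : Fin (n + 1)) (i : Fin n) : 1 ≤ |trho n i - teta n j| := by
  have h1 : (1 : ℤ) ≤ |2 * ((i : ℤ) - j) + 1| := by
    grind
  have h2 : (1 : ℝ) ≤ |2 * ((i : ℝ) - j) + 1| := by exact_mod_cast h1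
  have : trho n i - teta n j = 2 * ((i : ℝ) - j) + 1 := by unfold teta trho; ring
  rwa [this]

lemma eta_cover {X : ℝ} (h : |X| ≤ n + 1 / 2) : ∃ j, |X - teta n j| ≤ 1 := by
  obtain ⟨h1, h2⟩ := abs_le.1 h
  have h3 := Nat.floor_le (a := (X + n + 1) / 2) (by linarith)
  have h4 := Nat.lt_floor_add_one ((X + n + 1) / 2)
  have h5 : ⌊(X + n + 1) / 2⌋₊ < n + 1 := by
    rw [Nat.floor_lt (by linarith)]; push_cast; linarith
  refine ⟨⟨_, h5⟩, abs_le.2 ⟨?_, ?_⟩⟩ <;> simp only [teta] <;> linarith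

/-- Key comparison: within the inner hexagon, the complement of the rungs is the union of the holes. -/
lemma holes_of {X t : ℝ} (h : t ≤ tp n X) (ht : 0 ≤ t)
    (hr : ∀ i, t ≤ 4 * (|X - trho n i| - 1 / 2)) : t ≤ 4 * (1 / 2 - cdist (teta n) X) := by
  have hX : t ≤ 2 * (n + 1 / 2 - |X|) := h.trans (min_le_right _ _)
  obtain ⟨j, hj⟩ := eta_cover (n := n) (X := X) (by linarith)
  rw [cdist_eq eta_sep hj]
  have e1 := le_abs_self X
  have e2 := neg_abs_le X
  rcases abs_cases (X - teta n j) with ⟨k1, k2⟩ | ⟨k1, k2⟩ <;> rw [k1]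
  · by_cases hjn : (j : ℕ) < n
    · have e : trho n ⟨j, hjn⟩ = teta n j + 1 := by simp [trho, teta]; ring
      grind
    · have hj' : (j : ℕ) = n := by omega
      have e : teta n j = n := by simp [teta, hj']; ring
      rw [e]; linarith
  · by_cases hj0 : 0 < (j : ℕ)
    · have hlt : (j : ℕ) - 1 < n := by omega
      have e : trho n ⟨j - 1, hlt⟩ = teta n j - 1 := by
        simp [trho, teta]; push_cast [Nat.cast_sub hj0]; ring
      grind
    · have hj' : (j : ℕ) = 0 := by omega
      have e : teta n j = -n := by simp [teta, hj']
      rw [e]; linarith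

lemma of_holes {X t : ℝ} (ht : 0 ≤ t) (h : t ≤ 4 * (1 / 2 - cdist (teta n) X)) (i : Fin n) :
    t ≤ 4 * (|X - trho n i| - 1 / 2) := by
  obtain ⟨j, hj⟩ := (cdist_le eta_sep (by norm_num : (1 / 2 : ℝ) < 1)).1
    (by linarith : cdist (teta n) X ≤ 1 / 2)
  rw [cdist_eq eta_sep (hj.trans (by norm_num))] at h
  have h1 := eta_rho j i
  grind

lemma tlow_le {X t : ℝ} (ht : 0 ≤ t) :
    t ≤ tlow n X ↔ t ≤ tp n X ∧ ∀ i, 1 / 2 + t / 4 ≤ |X - trho n i| := by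
  unfold tlow
  rw [le_min_iff]
  refine and_congr_right fun h => ⟨fun h' i => ?_, fun h' => holes_of h ht fun i => ?_⟩
  · linarith [of_holes ht h' i]
  · linarith [h' i]

lemma tp_cont : Continuous (tp n) := by unfold tp; fun_prop

lemma tlow_cont : Continuous (tlow n) := by
  have := cdist_cont (teta n)
  have := tp_cont (n := n)
  unfold tlow; fun_prop

lemma nu_le {u : ℝ × ℝ} : tnu n u ≤ 1 ↔ |u.2| ≤ tp n u.1 := by
  unfold tnu tp
  rw [max_le_iff, le_min_iff, div_le_one tA_pos]
  grind

lemma nu_lt {u : ℝ × ℝ} : tnu n u < 1 ↔ |u.2| < tp n u.1 := by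
  unfold tnu tp
  rw [max_lt_iff, lt_min_iff, div_lt_one tA_pos]
  grind

lemma nu_f {u : ℝ × ℝ} : tnu n u ≤ tb n ↔ |u.2| ≤ tf n u.1 := by
  unfold tnu tf
  rw [max_le_iff, le_min_iff]
  unfold tb
  rw [div_le_div_iff_of_pos_right tA_pos]
  grind

lemma nu_f_lt {u : ℝ × ℝ} : tnu n u < tb n ↔ |u.2| < tf n u.1 := by
  unfold tnu tf
  rw [max_lt_iff, lt_min_iff]
  unfold tb
  rw [div_lt_div_iff_of_pos_right tA_pos]
  grind

lemma lt_tlow {u : ℝ × ℝ} : |u.2| < tlow n u.1 ↔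
    tnu n u < 1 ∧ ∀ i, 1 / 2 + |u.2| / 4 < |u.1 - trho n i| := by
  rw [nu_lt]
  constructor
  · intro h
    obtain ⟨h1, h2⟩ := (tlow_le ((abs_nonneg u.2).trans h.le)).1 le_rfl
    grind
  · rintro ⟨h1, h2⟩
    -- finitely many strict inequalities leave some room
    obtain ⟨t, ht, h3⟩ : ∃ t > |u.2|, t ≤ tp n u.1 ∧ ∀ i, 1 / 2 + t / 4 ≤ |u.1 - trho n i| := by
      have hev : ∀ᶠ t in nhdsWithin |u.2| (Ioi |u.2|), t ≤ tp n u.1 ∧ ∀ i, 1 / 2 + t / 4 ≤ |u.1 - trho n i| := by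
        refine Filter.Eventually.filter_mono nhdsWithin_le_nhds ?_
        refine ((eventually_lt_nhds h1).mono fun _ => le_of_lt).and (Filter.eventually_all.2 fun i => ?_)
        have hc : Continuous fun t : ℝ => 1 / 2 + t / 4 := by fun_prop
        exact ((hc.tendsto |u.2|).eventually_lt_const (h2 i)).mono fun _ => le_of_lt
      obtain ⟨t, h3, h4⟩ := (hev.and self_mem_nhdsWithin).exists
      exact ⟨t, h4, h3⟩
    linarith [(tlow_le ((abs_nonneg u.2).trans ht.le)).2 h3]

lemma tQ_iff {u : ℝ × ℝ} : u ∈ tQ n ↔ tlow n u.1 ≤ |u.2| ∧ |u.2| ≤ tf n u.1 := by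
  rw [← not_lt, lt_tlow, ← nu_f, and_comm]
  simp only [tQ, Set.mem_ofPred_eq, not_and_or, not_lt, not_forall]

lemma th_nonneg {u : ℝ × ℝ} (hu : u ∈ tQ n) : 0 ≤ th n u := by
  by_cases h : tnu n u ≤ 1
  · rw [th_in h]; exact (tk_bound ((le_max_left _ _).trans h)).1
  · obtain ⟨s, hs, b, hb, rfl⟩ := ray_surj (not_le.1 h).le hu.1
    unfold th
    rw [ray_bb hs hb.1, ray_kk hs hb.1]
    have := tk_bound (n := n) (tn_y (n := n) hs)
    obtain ⟨b0, b1⟩ := hb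
    exact le_min (by linarith) (by nlinarith)

lemma th_zero {u : ℝ × ℝ} (hu : u ∈ tQ n) : th n u = 0 ↔ |u.2| = tf n u.1 ∨ |u.2| = tlow n u.1 := by
  have hu' := tQ_iff.1 hu
  by_cases h : tnu n u ≤ 1
  · have h1 : |u.2| ≠ tf n u.1 := (nu_f_lt.1 (h.trans_lt (tb_gt (n := n)))).ne
    have hy : |u.2| ≤ 1 := (le_max_left _ _).trans h
    rw [th_in h]
    have h2 : tk n u = 0 ↔ |u.2| ≤ tlow n u.1 := by
      rw [tlow_le (abs_nonneg _), ← nu_le, and_iff_right h, ← not_iff_not]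
      have : tk n u ≠ 0 ↔ 0 < tk n u := ⟨fun h => lt_of_le_of_ne (tk_bound hy).1 h.symm, fun h => h.ne'⟩
      rw [← ne_eq, this, tk_lt hy le_rfl]
      simp
    grind
  · have h3 : |u.2| ≠ tlow n u.1 := fun e => h (nu_le.2 ((tlow_le (abs_nonneg _)).1 e.le).1)
    have h' := not_le.1 h
    have e : |u.2| = tf n u.1 ↔ tb n ≤ tnu n u := by
      rw [← not_lt, nu_f_lt, not_lt]
      grind
    rw [e]
    obtain ⟨s, hs, b, hb, rfl⟩ := ray_surj h'.le hu.1
    rw [ray_nu hs hb.1] at h' ⊢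
    unfold th
    rw [ray_bb hs hb.1, ray_kk hs hb.1, or_iff_left h3]
    have := tk_bound (n := n) (tn_y (n := n) hs)
    have hb0 : 0 < b := by
      grind
    have hpos : 0 < tk n (tn n s) + 2 * (1 - tk n (tn n s)) * b := by
      have : 0 < (1 - tk n (tn n s)) * b := mul_pos (by linarith) hb0
      linarith
    obtain ⟨b0, b1⟩ := hb
    constructor
    · grind
    · intro h4
      have : b = 1 := by
        by_contra hne
        nlinarith [lt_of_le_of_ne b1 hne]
      grind

lemma tlow_H {x : ℝ} : 0 < tlow n (x - (n + 1)) ↔ x ∈ Hs (n + 1) := by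
  have e : ∀ j : ℕ, x ∈ Ioo (2 * (j : ℝ) + 1 / 2) (2 * j + 3 / 2) ↔ |x - (n + 1) - (2 * j - n)| < 1 / 2 := by
    grind
  unfold tlow
  rw [lt_min_iff]
  constructor
  · rintro ⟨-, h⟩
    obtain ⟨j, hj⟩ := (cdist_lt eta_sep (by norm_num : (1 / 2 : ℝ) ≤ 1)).1
      (by linarith : cdist (teta n) (x - (n + 1)) < 1 / 2)
    exact ⟨j, j.2, (e j).2 hj⟩
  · rintro ⟨j, hj, h⟩
    have h' : |x - (n + 1) - teta n ⟨j, hj⟩| < 1 / 2 := (e j).1 h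
    have h1 : ((j : ℕ) : ℝ) ≤ n := by exact_mod_cast Nat.lt_succ_iff.1 hj
    refine ⟨lt_min one_pos ?_, ?_⟩
    · grind
    · rw [cdist_eq eta_sep (h'.le.trans (by norm_num))]; linarith

lemma tlow_H' {x : ℝ} : 0 ≤ tlow n (x - (n + 1)) ↔ x ∈ Hs' (n + 1) := by
  have e : ∀ j : ℕ, x ∈ Icc (2 * (j : ℝ) + 1 / 2) (2 * j + 3 / 2) ↔ |x - (n + 1) - (2 * j - n)| ≤ 1 / 2 := by
    grind
  unfold tlow
  rw [le_min_iff]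
  constructor
  · rintro ⟨-, h⟩
    obtain ⟨j, hj⟩ := (cdist_le eta_sep (by norm_num : (1 / 2 : ℝ) < 1)).1
      (by linarith : cdist (teta n) (x - (n + 1)) ≤ 1 / 2)
    exact ⟨j, j.2, (e j).2 hj⟩
  · rintro ⟨j, hj, h⟩
    have h' : |x - (n + 1) - teta n ⟨j, hj⟩| ≤ 1 / 2 := (e j).1 h
    have h1 : ((j : ℕ) : ℝ) ≤ n := by exact_mod_cast Nat.lt_succ_iff.1 hj
    refine ⟨le_min one_pos.le ?_, ?_⟩
    · grind
    · rw [cdist_eq eta_sep (h'.trans (by norm_num))]; linarith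

variable (n)

lemma tQ_PH : PH (FF (n + 1)) {x | hh (n + 1) x = 0} (tQ n) {x | th n x = 0} := by
  have hb := tb_gt (n := n)
  set lo : ℝ → ℝ := fun x => max 0 (tlow n (x - (n + 1))) with hlo
  set f : ℝ → ℝ := fun x => tf n (x - (n + 1)) with hf
  have lo0 : ∀ x, 0 ≤ lo x := fun x => le_max_left _ _
  have hfc : Continuous f := by simp only [hf]; unfold tf; fun_prop
  have hloc : Continuous lo := continuous_const.max (tlow_cont.comp (by fun_prop))
  have lo_H : ∀ x, 0 < lo x ↔ x ∈ Hs (n + 1) := fun x => by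
    rw [← tlow_H]; simp [hlo]
  have lo_e : ∀ x, x ∉ Hs (n + 1) → lo x = 0 := fun x hx =>
    le_antisymm (not_lt.1 fun h => hx ((lo_H x).1 h)) (lo0 x)
  have hV : VF (-1 / 2) (2 * (n + 1 : ℕ) + 1 / 2) (Hs (n + 1)) (Hs' (n + 1)) (fun x => - f x)
      (fun x => - lo x) lo f := by
    refine VF.symm_mk hloc hfc lo0 ?_ ⟨lo_e _ fun h => Hs_left _ (Hs_sub _ h), ?_⟩
      ⟨lo_e _ fun h => Hs_right _ (Hs_sub _ h), ?_⟩ lo_H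
    · rintro x ⟨h1, h2⟩
      push_cast at h2
      have hX : |x - (n + 1)| < n + 3 / 2 := abs_lt.2 ⟨by linarith, by linarith⟩
      refine max_lt (lt_min (by linarith) (by linarith)) ?_
      refine (min_le_left _ _).trans_lt (lt_min ((min_le_left _ _).trans_lt hb) ?_)
      exact (min_le_right _ _).trans_lt (by linarith)
    · simp only [hf, tf]
      grind
    · simp only [hf, tf]
      grind
  refine (FF_PH hV).trans ?_
  have mem : ∀ u : ℝ × ℝ, u ∈ reg (-1 / 2) (2 * (n + 1 : ℕ) + 1 / 2) (fun x => - f x) (fun x => - lo x) lo f ↔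
      (u.1 - (n + 1), u.2) ∈ tQ n := by
    intro u
    rw [reg_symm lo0, tQ_iff]
    constructor
    · grind
    · rintro ⟨h1, h2⟩
      have h3 : |u.2| ≤ 2 * (n + 3 / 2 - |u.1 - (n + 1)|) := h2.trans (min_le_right _ _)
      grind
  refine PH.of_inj hV.compact (φ := fun u => (u.1 - (n + 1), u.2)) (by fun_prop) ?_ ?_ ?_
  · simp
  · ext u
    constructor
    · grind
    · intro hu
      refine ⟨(u.1 + (n + 1), u.2), (mem _).2 ?_, ?_⟩ <;> simp [hu]
  · intro u hu
    rw [regBd_symm lo0 hu]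
    change _ ↔ th n (u.1 - (n + 1), u.2) = 0
    rw [th_zero ((mem u).1 hu)]
    rw [← tlow_H']
    grind

lemma std_PH : PH (Pin (FF (n + 1)) (hh (n + 1))) (PinBd (FF (n + 1)) (hh (n + 1)))
    (Pin (tQ n) (th n)) (PinBd (tQ n) (th n)) :=
  (tQ_PH n).pin (FF_compact _) (hh_cont _).continuousOn th_cont.continuousOn (fun _ _ => hh_nonneg _ _)
    (fun _ hx => th_nonneg hx) (fun _ _ => Iff.rfl) (fun _ _ => Iff.rfl)

/-- A solid torus with `n` orientably attached handles is a handlebody of genus `n + 1`. -/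
lemma NF.std {ι : Type} [Finite ι] {W : Type*} [TopologicalSpace W] [T2Space W] {V bd : Set W}
    {A : ι → Bool → Aff} (hA : GoodAff A) (h : NF (fun i ε => (A i ε).app) V bd) (r : Fin n ≃ ι) :
    PH V bd (Pin (FF (n + 1)) (hh (n + 1))) (PinBd (FF (n + 1)) (hh (n + 1))) := by
  have hA' : GoodAff (fun i => A (r i)) := ⟨fun i => hA.neg _, fun i => hA.pos _,
    fun i ε => hA.mem _ _, fun i ε j δ hne => hA.disj _ _ _ _ fun e => hne (by
      obtain ⟨e1, e2⟩ := Prod.mk.inj e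
      rw [r.injective e1, e2])⟩
  exact (NF.compare hA' (tA_good n) (h.reindex r) ⟨_, _, std_NF n⟩).trans (std_PH n).symm

end

/-! ### The comb -/

section
variable (g : ℕ)

/-- Centers of the teeth of the comb. -/
def gc (j : Fin g) : ℝ := 2 * (j : ℝ) + 1

/-- The signed depth inside the intervals over which the comb has a hole. -/
def gt (x : ℝ) : ℝ := 1 / 2 - cdist (gc g) x

/-- The bottom of the comb. -/
def gB (x : ℝ) : ℝ := - min 1 (min (2 * (x + 1 / 2)) (2 * (2 * g + 1 / 2 - x)))

/-- The top of the comb. -/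
def gT (x : ℝ) : ℝ := min 4 (min (8 * (x + 1 / 2)) (8 * (2 * g + 1 / 2 - x)))

/-- The upper walls of the holes of the comb. -/
def gU (x : ℝ) : ℝ := min 3 (12 * max (gt g x) 0)

/-- The lower side of the rectangular part of the comb. -/
def gN (x : ℝ) : ℝ := max (gB g x) (4 * min (gt g x) 0 + gU g x)

/-- A planar region with `g` holes: a rectangle (`gE ≥ 0`) together with `g` bands (`gE ≤ 0`). -/
def GG : Set ℝ² := reg (-1 / 2) (2 * g + 1 / 2) (gB g) (fun _ => 0) (gU g) (gT g)

/-- The boundary curves of the comb. -/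
def dG : Set ℝ² := regBd (-1 / 2) (2 * g + 1 / 2) (Hs' g) (gB g) (fun _ => 0) (gU g) (gT g)

/-- The function separating the bands of the comb from its rectangle. -/
def gE (u : ℝ × ℝ) : ℝ := u.2 / 4 - gt g u.1

lemma gc_sep (i j : Fin g) (h : i ≠ j) : 2 ≤ |gc g i - gc g j| := by
  have h' : (i : ℤ) - j ≠ 0 := by
    grind
  have h2 : (1 : ℝ) ≤ |(i : ℝ) - j| := by exact_mod_cast (Int.one_le_abs h')
  have : gc g i - gc g j = 2 * ((i : ℝ) - j) := by unfold gc; ring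
  grind

lemma gt_cont : Continuous (gt g) := by
  have := cdist_cont (gc g)
  unfold gt; fun_prop
lemma gB_cont : Continuous (gB g) := by unfold gB; fun_prop
lemma gT_cont : Continuous (gT g) := by unfold gT; fun_prop
lemma gU_cont : Continuous (gU g) := by have := gt_cont g; unfold gU; fun_prop
lemma gN_cont : Continuous (gN g) := by
  have := gt_cont g; have := gU_cont g; have := gB_cont g; unfold gN; fun_prop
lemma gE_cont : Continuous (gE g) := by
  have := gt_cont g; unfold gE; fun_prop

variable {g}

lemma gc_bd (j : Fin g) : 1 ≤ gc g j ∧ gc g j ≤ 2 * g - 1 := by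
  have h1 : ((j : ℕ) : ℝ) + 1 ≤ g := by exact_mod_cast j.2
  unfold gc
  grind

lemma gt_eq {x : ℝ} {j : Fin g} (h : |x - gc g j| ≤ 1) : gt g x = 1 / 2 - |x - gc g j| := by
  rw [gt, cdist_eq (gc_sep g) h]

lemma gBT_near {x : ℝ} {j : Fin g} (h : |x - gc g j| ≤ 1) : gB g x = -1 ∧ gT g x = 4 := by
  have h1 := gc_bd j
  have h2 := abs_le.1 h
  constructor
  · rw [gB, min_eq_left (le_min (by linarith) (by linarith))]
  · rw [gT, min_eq_left (le_min (by linarith) (by linarith))]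

lemma gBT_ends {x : ℝ} (hx : x ∈ Icc (-1 / 2 : ℝ) (2 * g + 1 / 2)) :
    -1 ≤ gB g x ∧ (gB g x = 0 ∧ gT g x = 0 ∧ (x = -1 / 2 ∨ x = 2 * g + 1 / 2) ∨
      gB g x < 0 ∧ 0 < gT g x ∧ ¬ (x = -1 / 2 ∨ x = 2 * g + 1 / 2)) := by
  obtain ⟨h1, h2⟩ := hx
  refine ⟨neg_le_neg (min_le_left _ _), ?_⟩
  by_cases h : x = -1 / 2 ∨ x = 2 * g + 1 / 2
  · left
    refine ⟨?_, ?_, h⟩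
    · rcases h with rfl | rfl
      · rw [gB, min_eq_left (a := 2 * (-1 / 2 + 1 / 2 : ℝ)) (by linarith), min_eq_right (by linarith)]; norm_num
      · rw [gB, min_eq_right (b := 2 * (2 * (g : ℝ) + 1 / 2 - (2 * g + 1 / 2))) (by linarith), min_eq_right (by linarith)]; ring
    · rcases h with rfl | rfl
      · rw [gT, min_eq_left (a := 8 * (-1 / 2 + 1 / 2 : ℝ)) (by linarith), min_eq_right (by linarith)]; norm_num
      · rw [gT, min_eq_right (b := 8 * (2 * (g : ℝ) + 1 / 2 - (2 * g + 1 / 2))) (by linarith), min_eq_right (by linarith)]; ring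
  · right
    have h' := not_or.1 h
    have h3 : -1 / 2 < x := lt_of_le_of_ne h1 (Ne.symm h'.1)
    have h4 : x < 2 * g + 1 / 2 := lt_of_le_of_ne h2 h'.2
    refine ⟨?_, ?_, h⟩
    · rw [gB, neg_lt_zero]; exact lt_min one_pos (lt_min (by linarith) (by linarith))
    · exact lt_min (by norm_num) (lt_min (by linarith) (by linarith))

/-- Near the tooth `j`, and away from the teeth, the functions bounding the comb are explicit. -/
lemma gcases (x : ℝ) (hx : x ∈ Icc (-1 / 2 : ℝ) (2 * g + 1 / 2)) :
    (∃ j, |x - gc g j| ≤ 1 ∧ gt g x = 1 / 2 - |x - gc g j| ∧ gB g x = -1 ∧ gT g x = 4 ∧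
      ¬ (x = -1 / 2 ∨ x = 2 * g + 1 / 2)) ∨ (∀ j, 1 ≤ |x - gc g j|) ∧ gt g x = -1 / 2 := by
  rcases cdist_cases (gc_sep g) x with ⟨h, h'⟩ | ⟨j, h, h'⟩
  · right; exact ⟨h', by rw [gt, h]; norm_num⟩
  · left
    refine ⟨j, h, gt_eq h, (gBT_near h).1, (gBT_near h).2, fun e => ?_⟩
    rcases gBT_ends hx with ⟨-, h1 | h1⟩
    · have := (gBT_near h).1; linarith
    · exact h1.2.2 e

lemma gt_le (x : ℝ) : gt g x ≤ 1 / 2 ∧ -1 / 2 ≤ gt g x := by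
  have := cdist_bound (gc_sep g) x
  unfold gt; constructor <;> linarith

/-- The values of the functions bounding the comb, by the sign of `gt`. -/
lemma gN_cases (x : ℝ) (hx : x ∈ Icc (-1 / 2 : ℝ) (2 * g + 1 / 2)) :
    (0 ≤ gt g x ∧ gN g x = gU g x ∧ (∃ j, |x - gc g j| ≤ 1 / 2 ∧ gt g x = 1 / 2 - |x - gc g j|) ∧ gB g x = -1 ∧ gT g x = 4) ∨
    (-1 / 4 < gt g x ∧ gt g x < 0 ∧ gN g x = 4 * gt g x ∧ gU g x = 0 ∧
      (∃ j, |x - gc g j| < 3 / 4 ∧ gt g x = 1 / 2 - |x - gc g j|) ∧ gB g x = -1 ∧ gT g x = 4) ∨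
    (gt g x ≤ -1 / 4 ∧ gN g x = gB g x ∧ gU g x = 0) := by
  have hU : gt g x ≤ 0 → gU g x = 0 := fun h => by
    rw [gU, max_eq_right h]; norm_num
  have hU0 : 0 ≤ gU g x := le_min (by norm_num) (mul_nonneg (by norm_num) (le_max_right _ _))
  have hb := (gBT_ends hx).1
  rcases gcases x hx with ⟨j, h1, h2, h3, h4, -⟩ | ⟨-, h2⟩
  · rcases le_or_gt 0 (gt g x) with h | h
    · refine .inl ⟨h, ?_, ⟨j, by linarith, h2⟩, h3, h4⟩
      rw [gN, min_eq_right h, h3, max_eq_right (by linarith)]; ring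
    · rcases lt_or_ge (-1 / 4) (gt g x) with h' | h'
      · refine .inr (.inl ⟨h', h, ?_, hU h.le, ⟨j, by linarith, h2⟩, h3, h4⟩)
        rw [gN, min_eq_left h.le, h3, hU h.le, max_eq_right (by linarith)]; ring
      · refine .inr (.inr ⟨h', ?_, hU h.le⟩)
        rw [gN, min_eq_left h.le, hU h.le, max_eq_left (by linarith)]
  · have h : gt g x < 0 := by rw [h2]; norm_num
    refine .inr (.inr ⟨by rw [h2]; norm_num, ?_, hU h.le⟩)
    rw [gN, min_eq_left h.le, hU h.le, max_eq_left (by linarith)]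

lemma gU_bd (x : ℝ) : 0 ≤ gU g x ∧ gU g x ≤ 3 ∧ (0 ≤ gt g x → 4 * gt g x ≤ gU g x) ∧
    (0 < gt g x ↔ 0 < gU g x) := by
  have h := gt_le (g := g) x
  refine ⟨le_min (by norm_num) (mul_nonneg (by norm_num) (le_max_right _ _)), min_le_left _ _, fun h0 => ?_, ?_⟩
  · rw [gU, max_eq_left h0]; exact le_min (by linarith) (by linarith)
  · constructor
    · intro h0; rw [gU, max_eq_left h0.le]; exact lt_min (by linarith) (by linarith)
    · intro h0
      by_contra hn
      rw [gU, max_eq_right (not_lt.1 hn)] at h0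
      norm_num at h0

lemma gH (x : ℝ) : 0 < gt g x ↔ x ∈ Hs g := by
  rw [gt, sub_pos, cdist_lt (gc_sep g) (by norm_num)]
  constructor
  · rintro ⟨j, h⟩
    have h := abs_lt.1 h
    unfold gc at h
    exact ⟨j, j.2, by linarith, by linarith⟩
  · rintro ⟨j, hj, h⟩
    refine ⟨⟨j, hj⟩, abs_lt.2 ?_⟩
    unfold gc
    grind

lemma gH' (x : ℝ) : 0 ≤ gt g x ↔ x ∈ Hs' g := by
  rw [gt, sub_nonneg, cdist_le (gc_sep g) (by norm_num)]
  constructor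
  · rintro ⟨j, h⟩
    have h := abs_le.1 h
    unfold gc at h
    exact ⟨j, j.2, by linarith, by linarith⟩
  · rintro ⟨j, hj, h⟩
    refine ⟨⟨j, hj⟩, abs_le.2 ?_⟩
    unfold gc
    grind

lemma GG_VF : VF (-1 / 2) (2 * g + 1 / 2) (Hs g) (Hs' g) (gB g) (fun _ => 0) (gU g) (gT g) := by
  refine ⟨gB_cont g, continuous_const, gU_cont g, gT_cont g, fun x hx => ?_, fun x hx => ?_,
    fun x hx => ?_, fun x hx => ?_, fun x hx => (gU_bd x).1, fun x hx => ?_⟩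
  · rcases gBT_ends hx with ⟨-, h | h⟩ <;> linarith [h.1]
  · have := gU_bd (g := g) x
    rcases gN_cases x hx with h | h | h
    · linarith
    · linarith
    · rcases gBT_ends hx with ⟨-, h | h⟩ <;> linarith [h.2.1]
  · rcases gBT_ends hx with ⟨-, h | h⟩
    · grind
    · grind
  · have h1 := gU_bd (g := g) x
    rcases gBT_ends hx with ⟨-, h | h⟩
    · refine iff_of_true ?_ h.2.2
      rcases gN_cases x hx with h' | h' | h'
      · linarith
      · linarith
      · rw [h'.2.2, h.2.1]
    · refine iff_of_false ?_ h.2.2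
      rcases gN_cases x hx with h' | h' | h'
      · linarith
      · linarith
      · linarith
  · rw [← gH, (gU_bd x).2.2.2, not_lt]
    exact ⟨by grind, by intro e; exact le_antisymm (gU_bd x).1 e⟩

lemma GG_compact : IsCompact (GG g) := GG_VF.compact

lemma dG_sub : dG g ⊆ GG g := by
  rintro u ⟨hx, h⟩
  have h1 := (GG_VF (g := g)).bd _ hx
  have h2 := (GG_VF (g := g)).ut _ hx
  refine ⟨hx, ?_⟩
  grind

/-- The rectangular part of the comb. -/
lemma GG_rect {u : ℝ × ℝ} : u ∈ GG g ∧ 0 ≤ gE g u ↔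
    u.1 ∈ Icc (-1 / 2 : ℝ) (2 * g + 1 / 2) ∧ gN g u.1 ≤ u.2 ∧ u.2 ≤ gT g u.1 := by
  simp only [GG, reg, Set.mem_ofPred_eq, gE]
  constructor
  · rintro ⟨⟨hx, h⟩, hE⟩
    have h1 := gU_bd (g := g) u.1
    refine ⟨hx, ?_⟩
    rcases gN_cases u.1 hx with ⟨h2, h3, h4, h5, h6⟩ | ⟨h2, h2', h3, h4, h5, h6, h7⟩ | ⟨h2, h3, h4⟩
    · grind
    · grind
    · rcases h with h | h
      · rcases gBT_ends hx with ⟨-, h' | h'⟩ <;> constructor <;> linarith [h'.1, h'.2.1]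
      · rcases gBT_ends hx with ⟨-, h' | h'⟩ <;> constructor <;> linarith [h'.1, h'.2.1]
  · rintro ⟨hx, h, h'⟩
    have h1 := gU_bd (g := g) u.1
    rcases gN_cases u.1 hx with ⟨h2, h3, h4, h5, h6⟩ | ⟨h2, h2', h3, h4, h5, h6, h7⟩ | ⟨h2, h3, h4⟩
    · grind
    · grind
    · have hb := (gBT_ends hx).1
      grind

/-- The bands of the comb. -/
lemma GG_band {u : ℝ × ℝ} : u ∈ GG g ∧ gE g u ≤ 0 ↔
    ∃ j, |u.1 - gc g j| ≤ 1 / 2 - u.2 / 4 ∧ -1 ≤ u.2 ∧ u.2 ≤ 0 := by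
  constructor
  · rintro ⟨⟨hx, h⟩, hE⟩
    have h1 := gU_bd (g := g) u.1
    have hb := (gBT_ends hx).1
    simp only [gE] at hE
    have hy : u.2 ≤ 0 := by
      rcases h with h | h
      · exact h.2
      · by_contra hn
        have h3 : 0 < gt g u.1 := by linarith
        have h4 := gt_le (g := g) u.1
        have h5 : 4 * gt g u.1 < gU g u.1 := by
          rw [gU, max_eq_left h3.le]; exact lt_min (by linarith) (by linarith)
        linarith
    have hy' : -1 ≤ u.2 := by
      grind
    rcases gcases u.1 hx with ⟨j, h2, h3, -⟩ | ⟨-, h2⟩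
    · grind
    · linarith
  · rintro ⟨j, h, h1, h2⟩
    have hs : |u.1 - gc g j| ≤ 1 := by linarith
    have := gBT_near hs
    have hc := gc_bd j
    have h' := abs_le.1 hs
    refine ⟨⟨⟨by linarith, by linarith⟩, .inl ⟨by linarith, h2⟩⟩, ?_⟩
    rw [gE, gt_eq hs]
    linarith

/-- The boundary of the comb along a band. -/
lemma dG_band {u : ℝ × ℝ} {j : Fin g} (hj : |u.1 - gc g j| ≤ 1 / 2 - u.2 / 4) (h1 : -1 ≤ u.2)
    (h2 : u.2 ≤ 0) : u ∈ dG g ↔ u.2 = -1 ∨ u.2 = 0 := by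
  have hs : |u.1 - gc g j| ≤ 1 := by linarith
  obtain ⟨hB, hT⟩ := gBT_near hs
  have hU := gU_bd (g := g) u.1
  have hx : u.1 ∈ Icc (-1 / 2 : ℝ) (2 * g + 1 / 2) := by
    have hc := gc_bd j
    grind
  simp only [dG, regBd, Set.mem_ofPred_eq, hx, true_and, hB, hT, ← gH', gt_eq hs]
  grind

/-- The boundary of the comb along its rectangular part. -/
lemma dG_rect {u : ℝ × ℝ} (hx : u.1 ∈ Icc (-1 / 2 : ℝ) (2 * g + 1 / 2)) (h : gN g u.1 ≤ u.2) : u ∈ dG g ↔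
      u.2 = gT g u.1 ∨ u.2 = gN g u.1 ∧ ¬ (-1 / 4 < gt g u.1 ∧ gt g u.1 < 0) := by
  simp only [dG, regBd, Set.mem_ofPred_eq, hx, true_and, ← gH']
  have h1 := gU_bd (g := g) u.1
  rcases gN_cases u.1 hx with ⟨h2, h3, h4, h5, h6⟩ | ⟨h2, h2', h3, h4, h5, h6, h7⟩ | ⟨h2, h3, h4⟩
  · grind
  · grind
  · grind

lemma gN_T {x : ℝ} (hx : x ∈ Icc (-1 / 2 : ℝ) (2 * g + 1 / 2)) :
    gN g x ≤ gT g x ∧ (gN g x = gT g x ↔ x = -1 / 2 ∨ x = 2 * g + 1 / 2) := by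
  have h1 := gU_bd (g := g) x
  rcases gBT_ends hx with ⟨h0, h⟩
  rcases gN_cases x hx with ⟨h2, h3, h4, h5, h6⟩ | ⟨h2, h2', h3, h4, h5, h6, h7⟩ | ⟨h2, h3, h4⟩
  · grind
  · grind
  · grind

end

/-! ### Circle times rectangle, with bands over arcs -/

/-- Disjoint closed arcs in the circle, away from the base point. -/
structure Arcs {κ : Type} (α β : κ → ℝ) : Prop where
  pos : ∀ i, 0 < α i
  lt : ∀ i, α i < β i
  one : ∀ i, β i < 1
  disj : ∀ i j, i ≠ j → ∀ s ∈ Icc (α i) (β i), s ∉ Icc (α j) (β j)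

section
variable {g : ℕ} {κ : Type} {α β : κ → ℝ}

/-- The rectangle of the comb times the circle, and the bands of the comb times the given arcs. -/
def VV (g : ℕ) (α β : κ → ℝ) : Set (𝕋 × ℝ²) :=
  {p | p.2 ∈ GG g ∧ (0 ≤ gE g p.2 ∨ ∃ i, ∃ s ∈ Icc (α i) (β i), p.1 = (s : 𝕋))}

/-- The boundary of `VV`. -/
def bV (g : ℕ) (α β : κ → ℝ) : Set (𝕋 × ℝ²) :=
  {p | p.2 ∈ dG g ∨ gE g p.2 ≤ 0 ∧ ∀ i, ∀ s ∈ Ioo (α i) (β i), p.1 ≠ (s : 𝕋)}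

/-- The feet of the bands in the chart of the front face. -/
def vA (g : ℕ) (α β : κ → ℝ) (i : Fin g × κ) (ε : Bool) : Aff :=
  ⟨⟨(α i.2 + β i.2) / 2, (gc g i.1 + (bif ε then 1 else -1) * (5 / 8) - g) / (g + 1 / 2)⟩,
    (β i.2 - α i.2) / 2, 0, 0, (bif ε then 1 else -1) * (1 / 8) / (g + 1 / 2)⟩

/-- The position in the comb of a point of the chart. -/
def vX (g : ℕ) (r : ℝ) : ℝ := g + (g + 1 / 2) * r

/-- The parametrization of the solid torus. -/
def vc (g : ℕ) (p : ℂ × ℝ) : 𝕋 × ℝ² :=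
  ((p.1.re : 𝕋), (vX g p.1.im,
    gN g (vX g p.1.im) + p.2 * (gT g (vX g p.1.im) - gN g (vX g p.1.im))))

/-- The parametrization of a band times an arc. -/
def vk (g : ℕ) (α β : κ → ℝ) (i : Fin g × κ) (p : ℂ × ℝ) : 𝕋 × ℝ² :=
  ((((α i.2 + β i.2) / 2 + (β i.2 - α i.2) / 2 * p.1.re : ℝ) : 𝕋),
    (gc g i.1 + (2 * p.2 - 1) * (5 / 8 + p.1.im / 8), - (1 + p.1.im) / 2))


lemma vX_mem {r : ℝ} : vX g r ∈ Icc (-1 / 2 : ℝ) (2 * g + 1 / 2) ↔ r ∈ Icc (-1 : ℝ) 1 := by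
  unfold vX
  constructor
  · rintro ⟨h1, h2⟩
    constructor <;> nlinarith
  · rintro ⟨h1, h2⟩
    constructor <;> nlinarith

lemma vX_end {r : ℝ} : (vX g r = -1 / 2 ∨ vX g r = 2 * g + 1 / 2) ↔ |r| = 1 := by
  rw [abs_eq zero_le_one, or_comm]
  unfold vX
  grind

lemma vX_inj {r r' : ℝ} : vX g r = vX g r' ↔ r = r' := by
  unfold vX
  constructor
  · intro h
    have : (g + 1 / 2 : ℝ) * (r - r') = 0 := by linarith
    rcases mul_eq_zero.1 this with h | h <;> linarith
  · rintro rfl; rfl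

lemma vX_surj {x : ℝ} : vX g ((x - g) / (g + 1 / 2)) = x := by
  unfold vX
  field_simp
  ring

lemma vA_re (i : Fin g × κ) (ε : Bool) (v : ℂ) :
    ((vA g α β i ε).app v).re = (α i.2 + β i.2) / 2 + (β i.2 - α i.2) / 2 * v.re := by
  simp [vA, Aff.app]

lemma vA_X (i : Fin g × κ) (ε : Bool) (v : ℂ) :
    vX g ((vA g α β i ε).app v).im = gc g i.1 + (bif ε then 1 else -1) * (5 / 8 + v.im / 8) := by
  have : ((vA g α β i ε).app v).im =
      ((gc g i.1 + (bif ε then 1 else -1) * (5 / 8 + v.im / 8)) - g) / (g + 1 / 2) := by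
    simp only [vA, Aff.app]; ring
  rw [this, vX_surj]

lemma foot_abs (ε : Bool) {c r : ℝ} (h : 0 ≤ r) : |c + (bif ε then 1 else -1) * r - c| = r := by
  grind

/-- At the foot of a band the function `gt` is affine. -/
lemma gt_foot (j : Fin g) (ε : Bool) {r : ℝ} (h0 : 0 ≤ r) (h1 : r ≤ 1) :
    gt g (gc g j + (bif ε then 1 else -1) * r) = 1 / 2 - r := by
  have := foot_abs ε (c := gc g j) h0
  rw [gt_eq (j := j) (by rw [this]; exact h1), this]

lemma arc_mem {a b r : ℝ} (h : a < b) : (a + b) / 2 + (b - a) / 2 * r ∈ Icc a b ↔ |r| ≤ 1 := by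
  rw [abs_le]
  exact ⟨by rintro ⟨h1, h2⟩; constructor <;> nlinarith, by rintro ⟨h1, h2⟩; constructor <;> nlinarith⟩

lemma arc_mem' {a b r : ℝ} (h : a < b) : (a + b) / 2 + (b - a) / 2 * r ∈ Ioo a b ↔ |r| < 1 := by
  rw [abs_lt]
  exact ⟨by rintro ⟨h1, h2⟩; constructor <;> nlinarith, by rintro ⟨h1, h2⟩; constructor <;> nlinarith⟩

lemma arc_surj {a b s : ℝ} (h : a < b) : ∃ r, (a + b) / 2 + (b - a) / 2 * r = s := by
  refine ⟨(s - (a + b) / 2) / ((b - a) / 2), ?_⟩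
  grind

lemma arc_inj {a b r r' : ℝ} (h : a < b)
    (e : (a + b) / 2 + (b - a) / 2 * r = (a + b) / 2 + (b - a) / 2 * r') : r = r' := by
  grind

lemma circ_Ioo {a b : ℝ} (ha : a ∈ 𝕀) (hb : b ∈ Ioo (0 : ℝ) 1) :
    (a : 𝕋) = b ↔ a = b := by
  rw [circ_eq_Icc ha (Ioo_subset_Icc_self hb)]
  grind

lemma gc_eq {i j : Fin g} {x : ℝ} (h : |x - gc g i| < 1) (h' : |x - gc g j| < 1) : i = j := by
  by_contra hne
  have h1 := gc_sep g i j hne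
  grind

lemma vA_im (i : Fin g × κ) (ε : Bool) (v : ℂ) (x : ℝ) (hx : vX g x = gc g i.1 + (bif ε then 1 else -1) * (5 / 8 + v.im / 8)) :
    ((vA g α β i ε).app v).im = x := by
  rw [← vA_X (α := α) (β := β), vX_inj] at hx
  exact hx.symm

variable (h : Arcs α β)
include h

lemma vA_mem (i : Fin g × κ) (ε : Bool) {v : ℂ} (hv : v ∈ dd) : (vA g α β i ε).app v ∈ sqo := by
  have h2 := abs_le.1 hv.2
  have hr := (arc_mem (h.lt i.2)).2 hv.1
  refine ⟨?_, ?_⟩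
  · rw [vA_re]
    exact ⟨(h.pos _).trans_le hr.1, hr.2.trans_lt (h.one _)⟩
  · have e := foot_abs ε (c := gc g i.1) (r := 5 / 8 + v.im / 8) (by linarith)
    have hn : |gc g i.1 + (bif ε then 1 else -1) * (5 / 8 + v.im / 8) - gc g i.1| ≤ 1 := by linarith
    have hb := gc_bd i.1
    have hn' := abs_le.1 hn
    have hI : vX g ((vA g α β i ε).app v).im ∈ Icc (-1 / 2 : ℝ) (2 * g + 1 / 2) := by
      rw [vA_X]; exact ⟨by linarith, by linarith⟩
    have h3 := vX_mem.1 hI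
    have h4 : |((vA g α β i ε).app v).im| ≠ 1 := by
      rw [Ne, ← vX_end (g := g), vA_X]
      grind
    grind

lemma vA_good : GoodAff (vA g α β) := by
  refine ⟨fun i => ?_, fun i => ?_, fun i ε v hv => vA_mem h i ε hv, ?_⟩
  · have := h.lt i.2
    have : 0 < (β i.2 - α i.2) / 2 * (1 / 8 / (g + 1 / 2)) := by
      positivity
    simp only [Aff.det, vA, cond_false]
    grind
  · have := h.lt i.2
    have : 0 < (β i.2 - α i.2) / 2 * (1 / 8 / (g + 1 / 2)) := by
      positivity
    simp only [Aff.det, vA, cond_true]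
    linarith
  · intro i ε j δ hne v hv w hw e
    have e1 := congrArg Complex.re e
    have e2 := congrArg (fun P : ℂ => vX g P.im) e
    simp only [vA_re, vA_X] at e1 e2
    have hv2 := abs_le.1 hv.2
    have hw2 := abs_le.1 hw.2
    have m1 := foot_abs ε (c := gc g i.1) (r := 5 / 8 + v.im / 8) (by linarith)
    have m2 := foot_abs δ (c := gc g j.1) (r := 5 / 8 + w.im / 8) (by linarith)
    have hij : i.1 = j.1 := gc_eq (x := gc g i.1 + (bif ε then 1 else -1) * (5 / 8 + v.im / 8))
      (by linarith) (by rw [e2]; linarith)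
    have hij2 : i.2 = j.2 := by
      by_contra hne
      refine h.disj _ _ hne _ ((arc_mem (h.lt i.2)).2 hv.1) ?_
      rw [e1]; exact (arc_mem (h.lt j.2)).2 hw.1
    grind

lemma vk_foot (i : Fin g × κ) (ε : Bool) {v : ℂ} (hv : v ∈ dd) :
    vk g α β i (v, bif ε then 1 else 0) = vc g ((vA g α β i ε).app v, 0) := by
  have hv2 := abs_le.1 hv.2
  have hI := (vX_mem (g := g)).2 (Ioo_subset_Icc_self (vA_mem h i ε hv).2)
  have ht := gt_foot i.1 ε (r := 5 / 8 + v.im / 8) (by linarith) (by linarith)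
  have hX := vA_X (α := α) (β := β) i ε v
  simp only [vk, vc, vA_re, zero_mul, add_zero]
  refine Prod.ext rfl (Prod.ext ?_ ?_)
  · grind
  · have hm := foot_abs ε (c := gc g i.1) (r := 5 / 8 + v.im / 8) (by linarith)
    rw [hX] at hI ⊢
    have hn := gBT_near (g := g) (j := i.1) (hm.trans_le (by linarith))
    rcases gN_cases _ hI with ⟨h2, h3, h4, h5, h6⟩ | ⟨h2, h2', h3, h4, h5, h6, h7⟩ | ⟨h2, h3, h4⟩
    · have h8 := gU_bd (g := g) (gc g i.1 + (bif ε then 1 else -1) * (5 / 8 + v.im / 8))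
      grind
    · linarith
    · linarith

lemma vk_band (i : Fin g × κ) {v : ℂ} (hv : v ∈ dd) {z : ℝ} (hz : z ∈ 𝕀) :
    |(vk g α β i (v, z)).2.1 - gc g i.1| ≤ 1 / 2 - (vk g α β i (v, z)).2.2 / 4 ∧
      -1 ≤ (vk g α β i (v, z)).2.2 ∧ (vk g α β i (v, z)).2.2 ≤ 0 := by
  have hv2 := abs_le.1 hv.2
  obtain ⟨h0, h1⟩ := hz
  refine ⟨?_, ?_, ?_⟩ <;> simp only [vk]
  · rw [add_sub_cancel_left, abs_mul, abs_of_nonneg (a := 5 / 8 + v.im / 8) (by linarith)]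
    have : |2 * z - 1| ≤ 1 := abs_le.2 ⟨by linarith, by linarith⟩
    nlinarith
  · linarith
  · linarith

lemma vk_E (i : Fin g × κ) {v : ℂ} (hv : v ∈ dd) {z : ℝ} (hz : z ∈ Ioo (0 : ℝ) 1) :
    gE g (vk g α β i (v, z)).2 < 0 := by
  have hv2 := abs_le.1 hv.2
  obtain ⟨h0, h1⟩ := hz
  have hb := vk_band h i hv (Ioo_subset_Icc_self ⟨h0, h1⟩)
  rw [gE, gt_eq (j := i.1) (by linarith [hb.1])]
  simp only [vk]
  rw [add_sub_cancel_left, abs_mul, abs_of_nonneg (a := 5 / 8 + v.im / 8) (by linarith)]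
  have : |2 * z - 1| < 1 := abs_lt.2 ⟨by linarith, by linarith⟩
  nlinarith

lemma base_NF : IsNF (fun i ε => (vA g α β i ε).app) (VV g α β) (bV g α β) (vc g) (vk g α β) := by
  have arcI : ∀ i, ∀ s ∈ Icc (α i) (β i), s ∈ Ioo (0 : ℝ) 1 := fun i s hs =>
    ⟨(h.pos i).trans_le hs.1, hs.2.trans_lt (h.one i)⟩
  have cR : ∀ P ∈ sq, ∀ z ∈ 𝕀, (vc g (P, z)).2 ∈ GG g ∧ 0 ≤ gE g (vc g (P, z)).2 := by
    intro P hP z hz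
    have hI := (vX_mem (g := g)).2 hP.2
    exact GG_rect.2 ⟨hI, interval_mem (gN_T hI).1 hz⟩
  have hcc : Continuous (vc g) := by
    have hX : Continuous (vX g) := by unfold vX; fun_prop
    have h1 := gN_cont g
    have h2 := gT_cont g
    have h3 : Continuous fun t : ℝ => (t : 𝕋) := AddCircle.continuous_mk' 1
    unfold vc
    exact (h3.comp (Complex.continuous_re.comp continuous_fst)).prodMk (by fun_prop)
  have hkc : ∀ i, Continuous (vk g α β i) := by
    intro i
    have h3 : Continuous fun t : ℝ => (t : 𝕋) := AddCircle.continuous_mk' 1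
    unfold vk
    exact (h3.comp (by fun_prop)).prodMk (by fun_prop)
  refine ⟨hcc.continuousOn, fun i => (hkc i).continuousOn,
    fun P hP z hz => ⟨(cR P hP z hz).1, .inl (cR P hP z hz).2⟩, ?_, ?_, ?_, ?_, ?_,
    fun i v hv => vk_foot h i false hv, fun i v hv => vk_foot h i true hv,
    fun i ε v hv => vA_mem h i ε hv, ?_, ?_⟩
  · intro i v hv z hz
    exact ⟨(GG_band.2 ⟨i.1, vk_band h i hv hz⟩).1, .inr ⟨i.2, _, (arc_mem (h.lt i.2)).2 hv.1, rfl⟩⟩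
  · rintro ⟨t, x, y⟩ ⟨hG, hx⟩
    simp only at hG hx
    by_cases hE : 0 ≤ gE g (x, y)
    · left
      obtain ⟨hI, h1, h2⟩ := GG_rect.1 ⟨hG, hE⟩
      obtain ⟨s, hs, rfl⟩ : ∃ s ∈ 𝕀, (s : 𝕋) = t := by
        obtain ⟨s, hs, e⟩ := AddCircle.eq_coe_Ico t
        grind
      obtain ⟨z, hz, e⟩ := interval_param h1 h2
      simp only at hI h1 h2 e
      have hX := vX_surj (g := g) (x := x)
      refine ⟨⟨s, (x - g) / (g + 1 / 2)⟩, ⟨hs, (vX_mem (g := g)).1 (by simp only [hX]; exact hI)⟩, z, hz, ?_⟩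
      simp only [vc, hX, e]
    · right
      have hE' := (not_le.1 hE).le
      obtain ⟨j, hj, h1, h2⟩ := GG_band.1 ⟨hG, hE'⟩
      obtain ⟨i, s, hs, rfl⟩ := hx.resolve_left hE
      simp only at hj h1 h2
      obtain ⟨r, rfl⟩ := arc_surj (s := s) (h.lt i)
      have hr := (arc_mem (h.lt i)).1 hs
      have hw : 0 < 1 / 2 - y / 4 := by linarith
      have hj' := abs_le.1 hj
      refine ⟨(j, i), ⟨r, -1 - 2 * y⟩, ⟨hr, abs_le.2 ⟨by simp only; linarith, by simp only; linarith⟩⟩,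
        (1 + (x - gc g j) / (1 / 2 - y / 4)) / 2, ⟨?_, ?_⟩, ?_⟩
      · have : -1 ≤ (x - gc g j) / (1 / 2 - y / 4) := by rw [le_div_iff₀ hw]; linarith
        linarith
      · have : (x - gc g j) / (1 / 2 - y / 4) ≤ 1 := by rw [div_le_iff₀ hw]; linarith
        linarith
      · simp only [vk]
        grind
  · intro P hP z hz P' hP' z' hz'
    simp only [vc, CR, Prod.mk.injEq, vX_inj]
    refine and_congr_right fun _ => and_congr_right fun e => ?_
    rw [← e, interval_ker, (gN_T ((vX_mem (g := g)).2 hP.2)).2, vX_end]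
  · intro i v hv z hz i' v' hv' z' hz' e
    have b := vk_band h i hv (hIoo hz)
    have b' := vk_band h i' hv' (hIoo hz')
    have hij : i.1 = i'.1 := gc_eq (x := (vk g α β i (v, z)).2.1) (by linarith) (by rw [e]; linarith)
    obtain ⟨e1, e2⟩ := Prod.ext_iff.1 e
    obtain ⟨e2, e3⟩ := Prod.ext_iff.1 e2
    simp only [vk] at e1 e2 e3
    have ha := (arc_mem (h.lt i.2)).2 hv.1
    have ha' := (arc_mem (h.lt i'.2)).2 hv'.1
    rw [circ_Ioo (hIoo (arcI _ _ ha)) (arcI _ _ ha')] at e1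
    have hij2 : i.2 = i'.2 := by
      by_contra hne
      exact h.disj _ _ hne _ ha (e1 ▸ ha')
    obtain rfl : i = i' := Prod.ext hij hij2
    have hi : v.im = v'.im := by linarith
    have hv2 := abs_le.1 hv.2
    rw [← hi] at e2
    refine ⟨rfl, Complex.ext (arc_inj (h.lt _) e1) hi, ?_⟩
    have : (5 / 8 + v.im / 8) * (z - z') = 0 := by linarith
    rcases mul_eq_zero.1 this with h | h <;> linarith
  · intro i v hv z hz P hP z' hz' e
    have := (cR P hP z' hz').2
    rw [e] at this
    exact this.not_gt (vk_E h i hv hz)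
  · intro P hP z hz
    have hI := (vX_mem (g := g)).2 hP.2
    have hN := gN_T hI
    have hR := cR P hP z hz
    have hm := interval_mem hN.1 hz
    by_cases hend : |P.im| = 1
    · refine iff_of_true (.inl ?_) (.inl hend)
      have e := hN.2.2 (vX_end.2 hend)
      rw [dG_rect hI hm.1]
      left
      simp only [vc, e]; ring
    have hlt : gN g (vX g P.im) < gT g (vX g P.im) :=
      lt_of_le_of_ne hN.1 fun e => hend (vX_end.1 (hN.2.1 e))
    have hz1 : gN g (vX g P.im) + z * (gT g (vX g P.im) - gN g (vX g P.im)) = gT g (vX g P.im) ↔ z = 1 := by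
      grind
    have hz0 : gN g (vX g P.im) + z * (gT g (vX g P.im) - gN g (vX g P.im)) = gN g (vX g P.im) ↔ z = 0 := by
      grind
    have hd := dG_rect (u := (vc g (P, z)).2) hI hm.1
    simp only [vc, hz0, hz1] at hd
    simp only [bV, Set.mem_ofPred_eq, vc, hd, hend, false_or, or_assoc]
    refine or_congr_right ?_
    have patch : ∀ i : Fin g × κ, ∀ ε, ∀ v ∈ ddo, (vA g α β i ε).app v = P →
        (-1 / 4 < gt g (vX g P.im) ∧ gt g (vX g P.im) < 0) ∧ P.re ∈ Ioo (α i.2) (β i.2) := by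
      rintro i ε v hv rfl
      have hv2 := abs_lt.1 hv.2
      rw [vA_X, gt_foot i.1 ε (by linarith) (by linarith), vA_re, arc_mem' (h.lt _)]
      exact ⟨⟨by linarith, by linarith⟩, hv.1⟩
    constructor
    · rintro (⟨rfl, h1⟩ | ⟨h1, h2⟩)
      · grind
      · have hz' : z = 0 := by
          by_contra hne
          have hz' : 0 < z := lt_of_le_of_ne hz.1 (Ne.symm hne)
          have h3 := (GG_rect.2 ⟨hI, (interval_mem hN.1 (s := 0) (by simp))⟩ :
            (vX g P.im, gN g (vX g P.im) + 0 * (gT g (vX g P.im) - gN g (vX g P.im))) ∈ GG g ∧ _).2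
          simp only [gE] at h1 h3
          nlinarith
        grind
    · rintro ⟨rfl, h1⟩
      by_cases hg : -1 / 4 < gt g (vX g P.im) ∧ gt g (vX g P.im) < 0
      · right
        rcases gN_cases _ hI with ⟨h2, h3, h4, h5, h6⟩ | ⟨h2, h2', h3, h4, h5, h6, h7⟩ | ⟨h2, h3, h4⟩
        · linarith [hg.2]
        · refine ⟨by simp only [gE, h3]; linarith, fun i s hs e => ?_⟩
          obtain ⟨j, hj, hj'⟩ := h5
          rw [circ_Ioo hP.1 (arcI i s (Ioo_subset_Icc_self hs))] at e
          obtain ⟨r, rfl⟩ := arc_surj (s := s) (h.lt i)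
          have hr := (arc_mem' (h.lt i)).1 hs
          obtain ⟨ε, hε⟩ : ∃ ε : Bool, vX g P.im = gc g j + (bif ε then 1 else -1) * |vX g P.im - gc g j| := by
            rcases abs_cases (vX g P.im - gc g j) with ⟨ha, -⟩ | ⟨ha, -⟩
            · exact ⟨true, by rw [ha]; simp⟩
            · exact ⟨false, by rw [ha]; simp⟩
          refine h1 (j, i) ε ⟨r, 8 * |vX g P.im - gc g j| - 5⟩ ⟨hr, abs_lt.2 ⟨?_, ?_⟩⟩ (Complex.ext ?_ ?_)
          · simp only; linarith
          · simp only; linarith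
          · rw [vA_re, e]
          · refine vA_im _ _ _ _ ?_
            linarith
        · linarith [hg.1]
      · grind
  · intro i v hv z hz
    have b := vk_band h i hv (hIoo hz)
    have hE := vk_E h i hv hz
    simp only [bV, Set.mem_ofPred_eq]
    rw [dG_band b.1 b.2.1 b.2.2]
    have ha := (arc_mem (h.lt i.2)).2 hv.1
    have e1 : (∀ i', ∀ s ∈ Ioo (α i') (β i'), (vk g α β i (v, z)).1 ≠ (s : 𝕋)) ↔ ¬ |v.re| < 1 := by
      rw [← arc_mem' (h.lt i.2)]
      constructor
      · intro h1 h2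
        exact h1 _ _ h2 rfl
      · intro h1 i' s hs e
        simp only [vk] at e
        rw [circ_Ioo (hIoo (arcI _ _ ha)) (arcI i' s (Ioo_subset_Icc_self hs))] at e
        by_cases hii : i.2 = i'
        · rw [hii] at h1 e; exact h1 (e ▸ hs)
        · exact h.disj _ _ hii _ ha (e ▸ Ioo_subset_Icc_self hs)
    rw [e1]
    have e2 : ((vk g α β i (v, z)).2.2 = -1 ∨ (vk g α β i (v, z)).2.2 = 0) ↔ ¬ |v.im| < 1 := by
      have : |v.im| < 1 ↔ |v.im| ≠ 1 := ⟨fun h => h.ne, fun h => lt_of_le_of_ne hv.2 h⟩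
      rw [this, not_ne_iff, abs_eq zero_le_one]
      simp only [vk]
      refine or_congr ⟨fun h => by linarith, fun h => by rw [h]; norm_num⟩
        ⟨fun h => by linarith, fun h => by rw [h]; norm_num⟩
    rw [e2]
    simp only [ddo, Set.mem_ofPred_eq, hE.le, true_and]
    tauto

end

/-! ### Sliding along the bands -/

/-- Truncation to `[-1, 1]`. -/
def cl (p : ℝ) : ℝ := max (-1) (min p 1)

/-- Distance to `[-1, 1]`. -/
def ex (p : ℝ) : ℝ := max 0 (|p| - 1)

/-- Coordinates near a band with center `c`: `p` runs along the band, which is `|p| ≤ 1`, and `q` runs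
across it from the outer boundary of the comb to the boundary of the hole. -/
def chi (c p q : ℝ) : ℝ × ℝ :=
  (c + (cl p * (1 / 2 - (-1 + q * (1 + 6 * ex p)) / 4) + (p - cl p)), -1 + q * (1 + 6 * ex p))

/-- The first coordinate inverse to `chi`. -/
def lp (c : ℝ) (u : ℝ × ℝ) : ℝ := cl ((u.1 - c) / (1 / 2 - u.2 / 4)) +
  (u.1 - c - cl ((u.1 - c) / (1 / 2 - u.2 / 4)) * (1 / 2 - u.2 / 4))

/-- The second coordinate inverse to `chi`. -/
def lq (c : ℝ) (u : ℝ × ℝ) : ℝ := (u.2 + 1) / (1 + 6 * ex (lp c u))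

lemma cl_ex (p : ℝ) : (p ≤ -1 ∧ cl p = -1 ∧ ex p = -1 - p) ∨ (-1 ≤ p ∧ p ≤ 1 ∧ cl p = p ∧ ex p = 0) ∨
    (1 ≤ p ∧ cl p = 1 ∧ ex p = p - 1) := by
  rcases le_total p (-1) with h | h
  · refine .inl ⟨h, ?_, ?_⟩
    · rw [cl, min_eq_left (by linarith), max_eq_left h]
    · rw [ex, abs_of_nonpos (by linarith), max_eq_right (by linarith)]; ring
  · rcases le_total p 1 with h' | h'
    · refine .inr (.inl ⟨h, h', ?_, ?_⟩)
      · rw [cl, min_eq_left h', max_eq_right h]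
      · rw [ex, max_eq_left (by linarith [abs_le.2 ⟨h, h'⟩])]
    · refine .inr (.inr ⟨h', ?_, ?_⟩)
      · rw [cl, min_eq_right h', max_eq_right (by linarith)]
      · rw [ex, abs_of_nonneg (by linarith), max_eq_right (by linarith)]

lemma cl_cont : Continuous cl := by unfold cl; fun_prop
lemma ex_cont : Continuous ex := by unfold ex; fun_prop
lemma ex_nonneg (p : ℝ) : 0 ≤ ex p := le_max_left _ _

lemma cl_div {s w : ℝ} (hw : 0 < w) : (s ≤ -w ∧ cl (s / w) = -1) ∨ (-w ≤ s ∧ s ≤ w ∧ cl (s / w) * w = s ∧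
    cl (s / w) = s / w) ∨ (w ≤ s ∧ cl (s / w) = 1) := by
  rcases cl_ex (s / w) with ⟨h1, h2, -⟩ | ⟨h1, h1', h2, -⟩ | ⟨h1, h2, -⟩
  · rw [div_le_iff₀ hw] at h1
    grind
  · rw [div_le_iff₀ hw] at h1'
    rw [le_div_iff₀ hw] at h1
    grind
  · rw [le_div_iff₀ hw] at h1
    grind

lemma chi_spec {c p q : ℝ} (hp : |p| ≤ 6 / 5) (hq : q ∈ 𝕀) :
    (-1 ≤ (chi c p q).2 ∧ (chi c p q).2 ≤ 6 * ex p) ∧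
      ((chi c p q).2 = -1 ↔ q = 0) ∧ ((chi c p q).2 = 6 * ex p ↔ q = 1) ∧
      max 0 ((chi c p q).2 / 4 - 1 / 2 + |(chi c p q).1 - c|) = ex p ∧
      |(chi c p q).1 - c| < 1 ∧ (chi c p q).2 / 4 - 1 / 2 + |(chi c p q).1 - c| ≤ 1 / 5 ∧
      lp c (chi c p q) = p ∧ lq c (chi c p q) = q := by
  obtain ⟨hq0, hq1⟩ := hq
  have hp' := abs_le.1 hp
  have he0 := ex_nonneg p
  have he : ex p ≤ 1 / 5 := max_le (by norm_num) (by linarith)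
  have hy : (chi c p q).2 = -1 + q * (1 + 6 * ex p) := rfl
  have hs : (chi c p q).1 - c = cl p * (1 / 2 - (chi c p q).2 / 4) + (p - cl p) := by
    simp only [chi]; ring
  generalize hu : chi c p q = u at *
  have hy0 : -1 ≤ u.2 := by rw [hy]; nlinarith
  have hy1 : u.2 ≤ 6 * ex p := by rw [hy]; nlinarith
  have hw : 0 < 1 / 2 - u.2 / 4 := by linarith
  have hlp : lp c u = p := by
    rw [lp, hs]
    rcases cl_ex p with ⟨h1, h2, h3⟩ | ⟨h1, h1', h2, h3⟩ | ⟨h1, h2, h3⟩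
    · rw [h2]
      rcases cl_div (s := -1 * (1 / 2 - u.2 / 4) + (p - -1)) hw with ⟨e1, e2⟩ | ⟨e1, e1', e2, e3⟩ | ⟨e1, e2⟩
      · rw [e2]; ring
      · have : p = -1 := by linarith
        grind
      · linarith
    · grind
    · rw [h2]
      rcases cl_div (s := 1 * (1 / 2 - u.2 / 4) + (p - 1)) hw with ⟨e1, e2⟩ | ⟨e1, e1', e2, e3⟩ | ⟨e1, e2⟩
      · linarith
      · grind
      · rw [e2]; ring
  have hE : max 0 (u.2 / 4 - 1 / 2 + |u.1 - c|) = ex p := by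
    rw [hs]
    rcases cl_ex p with ⟨h1, h2, h3⟩ | ⟨h1, h1', h2, h3⟩ | ⟨h1, h2, h3⟩
    · rw [h2, h3, abs_of_nonpos (by linarith), max_eq_right (by linarith)]; ring
    · rw [h2, h3, sub_self, add_zero, abs_mul, abs_of_pos hw, max_eq_left]
      have := abs_le.2 ⟨h1, h1'⟩
      nlinarith
    · rw [h2, h3, abs_of_nonneg (by linarith), max_eq_right (by linarith)]; ring
  have hE' := le_max_right 0 (u.2 / 4 - 1 / 2 + |u.1 - c|)
  refine ⟨⟨hy0, hy1⟩, ?_, ?_, hE, by linarith, by linarith, hlp, ?_⟩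
  · rw [hy]
    constructor
    · intro h
      have : q * (1 + 6 * ex p) = 0 := by linarith
      rcases mul_eq_zero.1 this with h | h <;> linarith
    · rintro rfl; ring
  · rw [hy]
    constructor
    · intro h
      have : (q - 1) * (1 + 6 * ex p) = 0 := by linarith
      rcases mul_eq_zero.1 this with h | h <;> linarith
    · rintro rfl; ring
  · have : 1 + 6 * ex p ≠ 0 := by linarith
    rw [lq, hlp, hy]
    field_simp
    ring

lemma chi_surj {c : ℝ} {u : ℝ × ℝ} (h0 : -1 ≤ u.2) (h1 : u.2 / 4 - 1 / 2 + |u.1 - c| ≤ 1 / 5)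
    (h2 : u.2 ≤ 6 * max 0 (u.2 / 4 - 1 / 2 + |u.1 - c|)) :
    |lp c u| ≤ 6 / 5 ∧ lq c u ∈ 𝕀 ∧ chi c (lp c u) (lq c u) = u := by
  have hE0 := le_max_left 0 (u.2 / 4 - 1 / 2 + |u.1 - c|)
  have hw : 0 < 1 / 2 - u.2 / 4 := by
    grind
  have key : ex (lp c u) = max 0 (u.2 / 4 - 1 / 2 + |u.1 - c|) ∧
      cl (lp c u) * (1 / 2 - u.2 / 4) + (lp c u - cl (lp c u)) = u.1 - c := by
    rcases cl_div (s := u.1 - c) hw with ⟨e1, e2⟩ | ⟨e1, e1', e2, e3⟩ | ⟨e1, e2⟩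
    · have e : lp c u = -1 + (u.1 - c + (1 / 2 - u.2 / 4)) := by rw [lp, e2]; ring
      have hcl : cl (lp c u) = -1 ∧ ex (lp c u) = -1 - lp c u := by
        rcases cl_ex (lp c u) with ⟨-, h⟩ | ⟨h, h', h3⟩ | ⟨h, -⟩
        · exact h
        · grind
        · linarith
      grind
    · have e : lp c u = (u.1 - c) / (1 / 2 - u.2 / 4) := by rw [lp, e2, sub_self, add_zero, e3]
      have hcl : cl (lp c u) = lp c u ∧ ex (lp c u) = 0 := by
        rcases cl_ex (lp c u) with ⟨h, h', h3⟩ | ⟨-, -, h⟩ | ⟨h, h', h3⟩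
        · grind
        · exact h
        · grind
      grind
    · have e : lp c u = 1 + (u.1 - c - (1 / 2 - u.2 / 4)) := by rw [lp, e2]; ring
      have hcl : cl (lp c u) = 1 ∧ ex (lp c u) = lp c u - 1 := by
        rcases cl_ex (lp c u) with ⟨h, -⟩ | ⟨h, h', h3⟩ | ⟨-, h⟩
        · linarith
        · grind
        · exact h
      grind
  have hpos : 0 < 1 + 6 * ex (lp c u) := by linarith
  have hq : lq c u * (1 + 6 * ex (lp c u)) = u.2 + 1 := div_mul_cancel₀ _ hpos.ne'
  refine ⟨?_, ⟨div_nonneg (by linarith) hpos.le, ?_⟩, ?_⟩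
  · have h3 : ex (lp c u) ≤ 1 / 5 := by rw [key.1]; exact max_le (by norm_num) h1
    have := le_max_right 0 (|lp c u| - 1)
    rw [ex] at h3
    linarith
  · rw [lq, div_le_one hpos, key.1]; linarith
  · refine Prod.ext ?_ ?_
    · simp only [chi, hq]
      linarith
    · simp only [chi, hq]; ring

/-- The slide along the band moves `[-1.15, -1.05]` onto the band. -/
def C1 (p : ℝ) : ℝ := min (max (4 * p + 18 / 5) (20 * p + 22)) (1 + 4 / 45 * (p + 21 / 20))

/-- The isotopy from the identity to the slide. -/
def Cs (o p : ℝ) : ℝ := (1 - o) * p + o * C1 p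

lemma Cs_cont : Continuous fun x : ℝ × ℝ => Cs x.1 x.2 := by unfold Cs C1; fun_prop

lemma Cs_lt {o p p' : ℝ} (ho : o ∈ 𝕀) (h : p < p') : Cs o p < Cs o p' := by
  have h1 : C1 p < C1 p' := min_lt_min (max_lt_max (by linarith) (by linarith)) (by linarith)
  obtain ⟨h2, h3⟩ := ho
  unfold Cs
  rcases h2.eq_or_lt with rfl | h2
  · linarith
  · nlinarith

lemma Cs_inj {o p p' : ℝ} (ho : o ∈ 𝕀) (h : Cs o p = Cs o p') : p = p' := by
  rcases lt_trichotomy p p' with h1 | h1 | h1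
  · exact absurd h (Cs_lt ho h1).ne
  · exact h1
  · exact absurd h (Cs_lt ho h1).ne'

lemma Cs_end (o : ℝ) {p : ℝ} (h : |p| = 6 / 5) : Cs o p = p := by
  unfold Cs C1
  grind

lemma Cs_mem {o p : ℝ} (ho : o ∈ 𝕀) (h : |p| ≤ 6 / 5) : |Cs o p| ≤ 6 / 5 := by
  have h' := abs_le.1 h
  have e1 := Cs_end o (p := 6 / 5) (by norm_num)
  have e2 := Cs_end o (p := -(6 / 5)) (by norm_num)
  refine abs_le.2 ⟨?_, ?_⟩
  · rcases h'.1.eq_or_lt with e | e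
    · rw [← e, e2]
    · rw [← e2]; exact (Cs_lt ho e).le
  · rcases h'.2.eq_or_lt with e | e
    · rw [e, e1]
    · rw [← e1]; exact (Cs_lt ho e).le

lemma Cs_surj (o : ℝ) {r : ℝ} (h : |r| ≤ 6 / 5) : ∃ p, |p| ≤ 6 / 5 ∧ Cs o p = r := by
  have hc : ContinuousOn (Cs o) (Icc (-(6 / 5)) (6 / 5)) := by unfold Cs C1; fun_prop
  have := intermediate_value_Icc (by norm_num) hc
  rw [(Cs_end o (p := 6 / 5) (by norm_num)), (Cs_end o (p := -(6 / 5)) (by norm_num))] at this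
  obtain ⟨p, hp, e⟩ := this (abs_le.1 h)
  grind

section
variable {g : ℕ}

/-- The center of the band nearest to a point. -/
def ctr (x : ℝ) : ℝ := 2 * (⌊x / 2⌋ : ℝ) + 1

lemma ctr_eq {x : ℝ} {j : Fin g} (h : |x - gc g j| < 1) : ctr x = gc g j := by
  unfold gc at h
  have : ⌊x / 2⌋ = (j : ℤ) := by
    rw [Int.floor_eq_iff]
    push_cast
    grind
  rw [ctr, this, gc]
  push_cast
  ring

/-- The part of the comb near a band, and its boundary. -/
lemma GG_near {u : ℝ × ℝ} {j : Fin g} (hj : |u.1 - gc g j| ≤ 1) (hE : gE g u ≤ 1 / 5) :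
    (u ∈ GG g ↔ -1 ≤ u.2 ∧ u.2 ≤ 6 * max 0 (gE g u)) ∧
    (u ∈ GG g → (u ∈ dG g ↔ u.2 = -1 ∨ u.2 = 6 * max 0 (gE g u))) := by
  have hx : u.1 ∈ Icc (-1 / 2 : ℝ) (2 * g + 1 / 2) := by
    have h1 := gc_bd j
    grind
  obtain ⟨hB, hT⟩ := gBT_near hj
  have ht := gt_le (g := g) u.1
  have hU : gU g u.1 = min 3 (12 * max (gt g u.1) 0) := rfl
  simp only [GG, dG, reg, regBd, Set.mem_ofPred_eq, hx, true_and, hB, hT, ← gH']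
  simp only [gE] at hE ⊢
  generalize gt g u.1 = τ at *
  generalize u.2 = y at *
  rcases lt_or_ge τ 0 with h | h
  · grind
  · grind

lemma GG_ge {u : ℝ × ℝ} (h : u ∈ GG g) : -1 ≤ u.2 := by
  obtain ⟨hx, h | h⟩ := h
  · exact (gBT_ends hx).1.trans h.1
  · linarith [(gU_bd (g := g) u.1).1, h.1]

lemma gE_eq {u : ℝ × ℝ} {j : Fin g} (hj : |u.1 - gc g j| ≤ 1) :
    gE g u = u.2 / 4 - 1 / 2 + |u.1 - gc g j| := by
  rw [gE, gt_eq hj]; ring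

lemma chi_mem (j : Fin g) {p q : ℝ} (hp : |p| ≤ 6 / 5) (hq : q ∈ 𝕀) :
    chi (gc g j) p q ∈ GG g ∧ (chi (gc g j) p q ∈ dG g ↔ q = 0 ∨ q = 1) ∧ gE g (chi (gc g j) p q) ≤ 1 / 5 ∧
      max 0 (gE g (chi (gc g j) p q)) = ex p ∧ ctr (chi (gc g j) p q).1 = gc g j := by
  obtain ⟨h1, h2, h3, h4, h5, h6, -⟩ := chi_spec (c := gc g j) hp hq
  rw [← gE_eq h5.le] at h4 h6
  have h := GG_near h5.le h6
  rw [h4] at h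
  have hm := h.1.2 h1
  exact ⟨hm, by rw [h.2 hm, h2, h3], h6, h4, ctr_eq h5⟩

/-- The points of the comb near the bands are parametrised by `chi`. -/
lemma near_chi {u : ℝ × ℝ} (hu : u ∈ GG g) (hE : gE g u ≤ 1 / 5) : ∃ j : Fin g, |u.1 - gc g j| < 1 ∧
    ∃ p q, |p| ≤ 6 / 5 ∧ q ∈ 𝕀 ∧ u = chi (gc g j) p q := by
  have hy := GG_ge hu
  rcases gcases u.1 hu.1 with ⟨j, h, h', -⟩ | ⟨-, h⟩
  · rw [gE] at hE
    have := chi_surj (c := gc g j) hy (by linarith) (by rw [← gE_eq h]; exact ((GG_near h (by rw [gE]; exact hE)).1.1 hu).2)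
    grind
  · rw [gE, h] at hE; linarith

variable (g) in
/-- The slide of the comb along its bands, at time `o`. -/
def slide (o : ℝ) (u : ℝ × ℝ) : ℝ × ℝ :=
  if gE g u ≤ 1 / 5 then chi (ctr u.1) (Cs o (lp (ctr u.1) u)) (lq (ctr u.1) u) else u

lemma slide_chi (o : ℝ) (j : Fin g) {p q : ℝ} (hp : |p| ≤ 6 / 5) (hq : q ∈ 𝕀) :
    slide g o (chi (gc g j) p q) = chi (gc g j) (Cs o p) q := by
  obtain ⟨-, -, h, -, h'⟩ := chi_mem j hp hq
  obtain ⟨-, -, -, -, -, -, e1, e2⟩ := chi_spec (c := gc g j) hp hq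
  rw [slide, if_pos h, h', e1, e2]

lemma slide_zero {u : ℝ × ℝ} (hu : u ∈ GG g) : slide g 0 u = u := by
  by_cases hE : gE g u ≤ 1 / 5
  · obtain ⟨j, -, p, q, hp, hq, rfl⟩ := near_chi hu hE
    rw [slide_chi _ _ hp hq]; simp [Cs]
  · rw [slide, if_neg hE]

lemma slide_mem {o : ℝ} (ho : o ∈ 𝕀) {u : ℝ × ℝ} (hu : u ∈ GG g) :
    slide g o u ∈ GG g ∧ (slide g o u ∈ dG g ↔ u ∈ dG g) ∧ (gE g (slide g o u) ≤ 1 / 5 ↔ gE g u ≤ 1 / 5) := by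
  by_cases hE : gE g u ≤ 1 / 5
  · obtain ⟨j, -, p, q, hp, hq, rfl⟩ := near_chi hu hE
    have h := chi_mem j (Cs_mem ho hp) hq
    rw [slide_chi _ _ hp hq, h.2.1, (chi_mem j hp hq).2.1]
    grind
  · rw [slide, if_neg hE]
    grind

lemma slide_inj {o : ℝ} (ho : o ∈ 𝕀) : InjOn (slide g o) (GG g) := by
  intro u hu u' hu' h
  have e := (slide_mem ho hu).2.2
  rw [h, (slide_mem ho hu').2.2] at e
  by_cases hE : gE g u ≤ 1 / 5
  · obtain ⟨j, -, p, q, hp, hq, rfl⟩ := near_chi hu hE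
    obtain ⟨j', -, p', q', hp', hq', rfl⟩ := near_chi hu' (e.2 hE)
    rw [slide_chi _ _ hp hq, slide_chi _ _ hp' hq'] at h
    have hj : gc g j = gc g j' := by
      rw [← (chi_mem j (Cs_mem ho hp) hq).2.2.2.2, h, (chi_mem j' (Cs_mem ho hp') hq').2.2.2.2]
    obtain ⟨-, -, -, -, -, -, e1, e2⟩ := chi_spec (c := gc g j) (Cs_mem ho hp) hq
    obtain ⟨-, -, -, -, -, -, e1', e2'⟩ := chi_spec (c := gc g j') (Cs_mem ho hp') hq'
    rw [h, hj] at e1 e2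
    rw [hj, Cs_inj ho (e1.symm.trans e1'), e2.symm.trans e2']
  · rwa [slide, slide, if_neg hE, if_neg (fun h => hE (e.1 h))] at h

lemma slide_surj {o : ℝ} {u : ℝ × ℝ} (hu : u ∈ GG g) : ∃ u' ∈ GG g, slide g o u' = u := by
  by_cases hE : gE g u ≤ 1 / 5
  · obtain ⟨j, -, p, q, hp, hq, rfl⟩ := near_chi hu hE
    obtain ⟨p', hp', rfl⟩ := Cs_surj o hp
    exact ⟨_, (chi_mem j hp' hq).1, slide_chi _ _ hp' hq⟩
  · exact ⟨u, hu, by rw [slide, if_neg hE]⟩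

lemma lp_cont (c : ℝ) : ContinuousOn (lp c) {u | u.2 < 2} := by
  have h1 : ContinuousOn (fun u : ℝ × ℝ => (u.1 - c) / (1 / 2 - u.2 / 4)) {u | u.2 < 2} :=
    ContinuousOn.div (by fun_prop) (by fun_prop) fun u (hu : u.2 < 2) => by linarith
  have h2 := cl_cont.comp_continuousOn h1
  exact h2.add ((by fun_prop : Continuous fun u : ℝ × ℝ => u.1 - c).continuousOn.sub
    (h2.mul (by fun_prop)))

lemma slide_cont : ContinuousOn (fun x : ℝ × ℝ² => slide g x.1 x.2) (univ ×ˢ GG g) := by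
  let A : Option (Fin g) → Set ℝ² := fun i => i.elim {u | u ∈ GG g ∧ 1 / 5 ≤ gE g u}
    fun j => {u | u ∈ GG g ∧ gE g u ≤ 1 / 5 ∧ |u.1 - gc g j| ≤ 1}
  have hG := (GG_compact (g := g)).isClosed
  have hcE := gE_cont g
  have hA : ∀ i, IsClosed (A i) := by
    rintro (_ | j)
    · exact hG.inter (isClosed_le (by fun_prop) hcE)
    · exact hG.inter ((isClosed_le hcE (by fun_prop)).inter
        (isClosed_le (f := fun u : ℝ × ℝ => |u.1 - gc g j|) (by fun_prop) continuous_const))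
  have hU : (univ : Set ℝ) ×ˢ GG g = ⋃ i, univ ×ˢ A i := by
    rw [← prod_iUnion]
    congr 1
    refine subset_antisymm (fun u hu => ?_) (iUnion_subset ?_)
    · rcases le_total (1 / 5) (gE g u) with h | h
      · exact mem_iUnion.2 ⟨none, hu, h⟩
      · obtain ⟨j, hj, -⟩ := near_chi hu h
        exact mem_iUnion.2 ⟨some j, hu, h, hj.le⟩
    · rintro (_ | j) u hu <;> exact hu.1
  rw [hU]
  refine (locallyFinite_of_finite _).continuousOn_iUnion (fun i => isClosed_univ.prod (hA i)) ?_
  rintro (_ | j)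
  · refine continuous_snd.continuousOn.congr ?_
    rintro ⟨o, u⟩ ⟨-, hu, hE⟩
    rcases hE.eq_or_lt with hE | hE
    · obtain ⟨j, -, p, q, hp, hq, rfl⟩ := near_chi hu hE.ge
      have := (chi_mem j hp hq).2.2.2.1
      rw [← hE, max_eq_right (by norm_num), ex, max_def_lt] at this
      split_ifs at this with h
      · simp only [slide_chi _ _ hp hq, Cs_end o (show |p| = 6 / 5 by linarith)]
      · norm_num at this
    · simp only [slide, if_neg hE.not_ge]
  · have hs : MapsTo Prod.snd (univ ×ˢ A (some j) : Set (ℝ × ℝ²)) {u | u.2 < 2} := by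
      rintro ⟨o, u⟩ ⟨-, hu, hE, hj⟩
      have := ((GG_near hj hE).1.1 hu).2
      grind
    have h1 := (lp_cont (gc g j)).comp continuous_snd.continuousOn hs
    have hc : ContinuousOn (fun x : ℝ × ℝ² => lq (gc g j) x.2) (univ ×ˢ A (some j)) := by
      refine ContinuousOn.div (by fun_prop)
        (continuousOn_const.add (continuousOn_const.mul (ex_cont.comp_continuousOn h1))) fun x hx => ?_
      linarith [ex_nonneg (lp (gc g j) x.2)]
    have h3 : Continuous fun x : ℝ × ℝ => chi (gc g j) x.1 x.2 := by
      have := cl_cont; have := ex_cont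
      unfold chi; fun_prop
    refine (h3.comp_continuousOn ((Cs_cont.comp_continuousOn (continuous_fst.continuousOn.prodMk h1)).prodMk hc)).congr ?_
    rintro ⟨o, u⟩ ⟨-, hu, hE, hj⟩
    have : |u.1 - gc g j| < 1 := by
      have := GG_ge hu
      rw [gE_eq hj] at hE; linarith
    simp only [slide, if_pos hE, ctr_eq this, Function.comp]

end

/-! ### The three sectors -/

section
variable (g : ℕ)

/-- A function on the comb vanishing exactly on the boundary curves. -/
def gh (u : ℝ × ℝ) : ℝ := infDist u (dG g)

/-- The point with argument `θ` in the circle of radius `gh` over `y`. -/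
def PP (y : 𝕋 × ℝ²) (θ : 𝕋) : (𝕋 × ℝ²) × ℂ :=
  (y, gh g y.2 * (θ.toCircle : ℂ))

/-- The circle times the connected sum, as a family of circles collapsing over the boundary of the
comb. -/
def XC : Set ((𝕋 × ℝ²) × ℂ) := {x | x.1.2 ∈ GG g ∧ ‖x.2‖ = gh g x.1.2}

/-- The rotation of the circle by a third of a turn. -/
def ro (y : 𝕋 × ℝ²) : 𝕋 × ℝ² := (y.1 + ((1 / 3 : ℝ) : 𝕋), y.2)

/-- A function with values in `[0, 1]`, vanishing on the bands over the arc of radius `1 / 12` about `0`. -/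
def lam (y : 𝕋 × ℝ²) : ℝ := min 1 (12 * max 0 (‖y.1‖ - 1 / 12) + max 0 (gE g y.2))

/-- The complement of the interior of the zero set of `lam`. -/
def NN : Set (𝕋 × ℝ²) := {y | y.2 ∈ GG g ∧ (0 ≤ gE g y.2 ∨ 1 / 12 ≤ ‖y.1‖)}

/-- The first sector. -/
def S0 : Set ((𝕋 × ℝ²) × ℂ) := {x | x.1 ∈ NN g ∧
  ∃ θ ∈ Icc ((lam g (ro x.1) - 1) / 3) (lam g x.1 / 3), x = PP g x.1 (θ : ℝ)}

/-- The second sector. -/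
def S1 : Set ((𝕋 × ℝ²) × ℂ) := {x | ro (ro x.1) ∈ NN g ∧
  ∃ θ ∈ Icc (lam g x.1 / 3) ((lam g (ro (ro x.1)) + 1) / 3), x = PP g x.1 (θ : ℝ)}

/-- The third sector. -/
def S2 : Set ((𝕋 × ℝ²) × ℂ) := {x | ro x.1 ∈ NN g ∧
  ∃ θ ∈ Icc ((lam g (ro (ro x.1)) + 1) / 3) ((lam g (ro x.1) + 2) / 3), x = PP g x.1 (θ : ℝ)}

variable {g}

lemma dG_closed : IsClosed (dG g) := by
  obtain ⟨Φ, hΦ⟩ := FF_PH (GG_VF (g := g))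
  have : CompactSpace (FF g) := isCompact_iff_compactSpace.1 (FF_compact g)
  have hc : IsCompact {x : FF g | hh g x = 0} :=
    (isClosed_singleton.preimage ((hh_cont g).comp continuous_subtype_val)).isCompact
  have e : dG g = (fun x => (Φ x : ℝ × ℝ)) '' {x : FF g | hh g x = 0} := by
    ext u
    constructor
    · intro hu
      refine ⟨Φ.symm ⟨u, dG_sub hu⟩, (hΦ _).2 ?_, by simp⟩
      rw [Φ.apply_symm_apply]; exact hu
    · rintro ⟨x, hx, rfl⟩
      exact (hΦ x).1 hx
  rw [e]
  exact (hc.image (continuous_subtype_val.comp Φ.continuous)).isClosed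

lemma gh_cont : Continuous (gh g) := continuous_infDist_pt _
lemma gh_nonneg (u : ℝ × ℝ) : 0 ≤ gh g u := infDist_nonneg

lemma gh_zero {u : ℝ × ℝ} : gh g u = 0 ↔ u ∈ dG g := by
  have hx : (-1 / 2 : ℝ) ∈ Icc (-1 / 2 : ℝ) (2 * g + 1 / 2) := ⟨le_rfl, by linarith [(Nat.cast_nonneg g : (0 : ℝ) ≤ g)]⟩
  exact (dG_closed.mem_iff_infDist_zero ⟨(-1 / 2, gB g (-1 / 2)), hx, .inl rfl⟩).symm

lemma ro3 (y : 𝕋 × ℝ²) : ro (ro (ro y)) = y := by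
  refine Prod.ext ?_ rfl
  show y.1 + ((1 / 3 : ℝ) : 𝕋) + ((1 / 3 : ℝ) : 𝕋) + ((1 / 3 : ℝ) : 𝕋) = y.1
  rw [add_assoc, add_assoc, ← AddCircle.coe_add, ← AddCircle.coe_add,
    show (1 / 3 + (1 / 3 + 1 / 3) : ℝ) = 1 by norm_num, AddCircle.coe_period, add_zero]

lemma ro_cont : Continuous ro := by unfold ro; fun_prop

lemma lam_cont : Continuous (lam g) := by
  have := gE_cont g
  unfold lam
  fun_prop

lemma lam_mem (y : 𝕋 × ℝ²) : 0 ≤ lam g y ∧ lam g y ≤ 1 :=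
  ⟨le_min zero_le_one (by positivity), min_le_left _ _⟩

lemma lam_zero {y : 𝕋 × ℝ²} : lam g y = 0 ↔ gE g y.2 ≤ 0 ∧ ‖y.1‖ ≤ 1 / 12 := by
  constructor
  · intro h
    rw [lam, min_def] at h
    grind
  · rintro ⟨h, h'⟩
    rw [lam, max_eq_left h, max_eq_left (by linarith)]; norm_num

/-- The circle has no point close both to `0` and to a point a third of a turn away. -/
lemma norm_third (t : 𝕋) : 1 / 3 ≤ ‖t‖ + ‖t + ((1 / 3 : ℝ) : 𝕋)‖ := by
  have h : ‖((1 / 3 : ℝ) : 𝕋)‖ = 1 / 3 := by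
    rw [(AddCircle.norm_coe_eq_abs_iff 1 one_ne_zero).2 (by norm_num)]; norm_num
  have := norm_sub_le (t + ((1 / 3 : ℝ) : 𝕋)) t
  rw [add_sub_cancel_left, h] at this
  linarith

lemma lam_one {y : 𝕋 × ℝ²} (h : 1 / 6 ≤ ‖y.1‖) : lam g y = 1 := by
  have h1 := le_max_right 0 (‖y.1‖ - 1 / 12)
  have h2 := le_max_left 0 (gE g y.2)
  rw [lam, min_eq_left (by linarith)]

lemma norm_ro {y : 𝕋 × ℝ²} (h : ‖y.1‖ ≤ 1 / 6) : 1 / 6 ≤ ‖(ro y).1‖ ∧ 1 / 6 ≤ ‖(ro (ro y)).1‖ := by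
  have h1 : 1 / 3 ≤ ‖y.1‖ + ‖(ro y).1‖ := norm_third y.1
  have h2 : 1 / 3 ≤ ‖(ro (ro y)).1‖ + ‖(ro (ro (ro y))).1‖ := norm_third _
  rw [ro3] at h2
  grind

lemma lam_ro {y : 𝕋 × ℝ²} (h : lam g y = 0) : lam g (ro y) = 1 ∧ lam g (ro (ro y)) = 1 :=
  have := norm_ro ((lam_zero.1 h).2.trans (by norm_num))
  ⟨lam_one this.1, lam_one this.2⟩

lemma NN_of_lam {y : 𝕋 × ℝ²} (hy : y.2 ∈ GG g) (h : lam g y ≠ 0) : y ∈ NN g := by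
  refine ⟨hy, ?_⟩
  by_contra hn
  rw [not_or, not_le, not_le] at hn
  exact h (lam_zero.2 ⟨hn.1.le, hn.2.le⟩)

lemma PP_eq {y y' : 𝕋 × ℝ²} {θ θ' : 𝕋} :
    PP g y θ = PP g y' θ' ↔ y = y' ∧ (y.2 ∈ dG g ∨ θ = θ') := by
  rw [PP, PP, Prod.mk.injEq]
  refine and_congr_right fun h => ?_
  subst h
  rw [mul_eq_mul_left_iff, or_comm, Complex.ofReal_eq_zero, gh_zero, Circle.coe_inj,
    (AddCircle.injective_toCircle one_ne_zero).eq_iff]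

lemma PP_cont : Continuous fun p : (𝕋 × ℝ²) × 𝕋 => PP g p.1 p.2 := by
  have h1 := gh_cont (g := g)
  have h2 : Continuous fun θ : 𝕋 => (θ.toCircle : ℂ) :=
    continuous_subtype_val.comp AddCircle.continuous_toCircle
  exact continuous_fst.prodMk ((Complex.continuous_ofReal.comp (by fun_prop)).mul (h2.comp continuous_snd))

lemma PP_mem {y : 𝕋 × ℝ²} (hy : y.2 ∈ GG g) (θ : 𝕋) : PP g y θ ∈ XC g := by
  refine ⟨hy, ?_⟩
  simp [PP, abs_of_nonneg (gh_nonneg y.2), Circle.norm_coe]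

lemma polar (z : ℂ) : ∃ θ : 𝕋, z = ‖z‖ * (θ.toCircle : ℂ) := by
  obtain ⟨w, hw⟩ : ∃ w : Circle, z = ‖z‖ * (w : ℂ) :=
    ⟨Circle.exp z.arg, by rw [Circle.coe_exp, Complex.norm_mul_exp_arg_mul_I]⟩
  obtain ⟨θ, rfl⟩ := (AddCircle.homeomorphCircle (T := 1) one_ne_zero).surjective w
  exact ⟨θ, by rwa [AddCircle.homeomorphCircle_apply] at hw⟩

lemma XC_PP {x : (𝕋 × ℝ²) × ℂ} (hx : x ∈ XC g) : ∃ θ : 𝕋, x = PP g x.1 θ := by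
  obtain ⟨θ, h⟩ := polar x.2
  rw [hx.2] at h
  exact ⟨θ, Prod.ext rfl h⟩

lemma PP_dG {y : 𝕋 × ℝ²} {θ : 𝕋} (h : y.2 ∈ dG g) (θ' : 𝕋) :
    PP g y θ = PP g y θ' := PP_eq.2 ⟨rfl, .inl h⟩

/-- Equality of points of a circle, for representatives of the arguments differing by less than two turns. -/
lemma PP_cases {y : 𝕋 × ℝ²} {a b : ℝ} (h : PP g y (a : 𝕋) = PP g y (b : 𝕋))
    (h1 : a - 1 / 3 ≤ b) (h2 : b ≤ a + 1) : y.2 ∈ dG g ∨ b = a ∨ b = a + 1 := by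
  rcases (PP_eq.1 h).2 with h | h
  · grind
  · obtain ⟨n, hn⟩ := circ_eq_iff.1 h
    have e1 : (-1 : ℝ) < n := by linarith
    have e2 : (n : ℝ) < 2 := by linarith
    have : n = 0 ∨ n = 1 := by
      have e1 : -1 < n := by exact_mod_cast e1
      have e2 : n < 2 := by exact_mod_cast e2
      omega
    rcases this with rfl | rfl
    · grind
    · grind

/-- The intersection of the first two sectors consists of two sheets. -/
lemma mem_S01 {x : (𝕋 × ℝ²) × ℂ} : x ∈ S0 g ∩ S1 g ↔ x.1 ∈ NN g ∧ ro (ro x.1) ∈ NN g ∧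
    (x = PP g x.1 ((lam g x.1 / 3 : ℝ)) ∨ lam g (ro x.1) = 0 ∧ x = PP g x.1 ((-1 / 3 : ℝ))) := by
  have l0 := lam_mem (g := g) x.1
  have l1 := lam_mem (g := g) (ro (ro x.1))
  have l2 := lam_mem (g := g) (ro x.1)
  constructor
  · rintro ⟨⟨h, a, ha, ea⟩, h', b, hb, eb⟩
    refine ⟨h, h', ?_⟩
    rcases PP_cases (ea.symm.trans eb) (by linarith [ha.2, hb.1]) (by linarith [ha.1, hb.2]) with hd | e | e
    · left; rw [ea]; exact PP_dG hd _
    · grind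
    · have : a = -1 / 3 := by linarith [ha.1, hb.2]
      grind
  · rintro ⟨h, h', e | ⟨h2, e⟩⟩
    · exact ⟨⟨h, _, ⟨by linarith, le_rfl⟩, e⟩, h', _, ⟨le_rfl, by linarith⟩, e⟩
    · have e1 := (lam_ro h2).1
      refine ⟨⟨h, _, ⟨by linarith, by linarith⟩, e⟩, h', 2 / 3, ⟨by linarith, by linarith⟩, ?_⟩
      rw [e]
      exact PP_eq.2 ⟨rfl, .inr (circ_eq_iff.2 ⟨1, by norm_num⟩)⟩

/-- The part of the main sheet in the third sector. -/
lemma mem_S2 {y : 𝕋 × ℝ²} (hy : y.2 ∈ GG g) : PP g y ((lam g y / 3 : ℝ)) ∈ S2 g ↔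
    y.2 ∈ dG g ∧ ro y ∈ NN g ∨ lam g y = 0 ∨ lam g (ro (ro y)) = 0 := by
  have l0 := lam_mem (g := g) y
  have l1 := lam_mem (g := g) (ro (ro y))
  have l2 := lam_mem (g := g) (ro y)
  constructor
  · rintro ⟨h, b, hb, eb⟩
    change b ∈ Icc ((lam g (ro (ro y)) + 1) / 3) ((lam g (ro y) + 2) / 3) at hb
    rcases PP_cases eb (by linarith [hb.1]) (by linarith [hb.2]) with hd | e | e
    · exact .inl ⟨hd, h⟩
    · grind
    · grind
  · rintro (⟨hd, h⟩ | h | h)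
    · exact ⟨h, (lam g (ro y) + 2) / 3, ⟨by change (lam g (ro (ro y)) + 1) / 3 ≤ _; linarith, le_rfl⟩, PP_dG hd _⟩
    · have e := lam_ro h
      refine ⟨NN_of_lam hy (by show lam g (ro y) ≠ 0; rw [e.1]; norm_num), 1, ?_, PP_eq.2 ⟨rfl, .inr ?_⟩⟩
      · change (1 : ℝ) ∈ Icc ((lam g (ro (ro y)) + 1) / 3) ((lam g (ro y) + 2) / 3)
        grind
      · exact circ_eq_iff.2 ⟨1, by rw [h]; norm_num⟩
    · have e := lam_ro h
      rw [ro3] at e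
      refine ⟨NN_of_lam hy (by show lam g (ro y) ≠ 0; rw [e.2]; norm_num), _, ?_, rfl⟩
      change lam g y / 3 ∈ Icc ((lam g (ro (ro y)) + 1) / 3) ((lam g (ro y) + 2) / 3)
      grind

/-- The part of the second sheet in the third sector. -/
lemma mem_S2' {y : 𝕋 × ℝ²} (h : lam g (ro y) = 0) :
    PP g y ((-1 / 3 : ℝ)) ∈ S2 g ↔ ro y ∈ NN g := by
  refine ⟨fun h => h.1, fun h' => ⟨h', 2 / 3, ?_, PP_eq.2 ⟨rfl, .inr (circ_eq_iff.2 ⟨1, by norm_num⟩)⟩⟩⟩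
  change (2 / 3 : ℝ) ∈ Icc ((lam g (ro (ro y)) + 1) / 3) ((lam g (ro y) + 2) / 3)
  rw [h, (lam_ro h).1]; norm_num

lemma S_cover {x : (𝕋 × ℝ²) × ℂ} (hx : x ∈ XC g) : x ∈ S0 g ∪ S1 g ∪ S2 g := by
  obtain ⟨θ, e⟩ := XC_PP hx
  obtain ⟨s, rfl⟩ := QuotientAddGroup.mk_surjective θ
  obtain ⟨r, hr, rs⟩ : ∃ r ∈ Icc ((lam g (ro x.1) - 1) / 3) ((lam g (ro x.1) + 2) / 3),
      (s : 𝕋) = (r : ℝ) := by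
    have h1 := Int.floor_le (s - (lam g (ro x.1) - 1) / 3)
    have h2 := Int.lt_floor_add_one (s - (lam g (ro x.1) - 1) / 3)
    exact ⟨s - ⌊s - (lam g (ro x.1) - 1) / 3⌋, ⟨by linarith, by linarith⟩,
      circ_eq_iff.2 ⟨-⌊s - (lam g (ro x.1) - 1) / 3⌋, by push_cast; ring⟩⟩
  have e : x = PP g x.1 (r : 𝕋) := by rw [← rs]; exact e
  have shift : ∀ r' : ℝ, r' = r + 1 ∨ r' = r - 1 → x = PP g x.1 (r' : 𝕋) := by
    rintro r' (h | h)
    · rw [e]; exact PP_eq.2 ⟨rfl, .inr (circ_eq_iff.2 ⟨1, by rw [h]; simp⟩)⟩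
    · rw [e]; exact PP_eq.2 ⟨rfl, .inr (circ_eq_iff.2 ⟨-1, by rw [h]; simp⟩)⟩
  have hN0 : x.1 ∈ NN g ∨ lam g x.1 = 0 := or_iff_not_imp_right.2 (NN_of_lam hx.1)
  have hN1 : ro (ro x.1) ∈ NN g ∨ lam g (ro (ro x.1)) = 0 := or_iff_not_imp_right.2 (NN_of_lam hx.1)
  have hN2 : ro x.1 ∈ NN g ∨ lam g (ro x.1) = 0 := or_iff_not_imp_right.2 (NN_of_lam hx.1)
  -- a sector containing `r` by its arguments but not lying over `x.1` is degenerate there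
  have nz : ∀ {y : 𝕋 × ℝ²}, lam g y = 0 → y.2 ∈ GG g → ro y ∈ NN g ∧ ro (ro y) ∈ NN g :=
    fun h hy => ⟨NN_of_lam hy (by rw [(lam_ro h).1]; norm_num), NN_of_lam hy (by rw [(lam_ro h).2]; norm_num)⟩
  rcases le_total r (lam g x.1 / 3) with h0 | h0
  · rcases hN0 with hN | hN
    · exact .inl (.inl ⟨hN, r, ⟨hr.1, h0⟩, e⟩)
    · have := lam_ro hN
      exact .inl (.inr ⟨(nz hN hx.1).2, r, ⟨by linarith [hr.1], by linarith⟩, e⟩)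
  · rcases le_total r ((lam g (ro (ro x.1)) + 1) / 3) with h1 | h1
    · rcases hN1 with hN | hN
      · exact .inl (.inr ⟨hN, r, ⟨h0, h1⟩, e⟩)
      · have := lam_ro hN
        have hz := nz hN hx.1
        rw [ro3] at this hz
        exact .inl (.inl ⟨hz.1, r, ⟨by linarith, by linarith⟩, e⟩)
    · rcases hN2 with hN | hN
      · exact .inr ⟨hN, r, ⟨h1, hr.2⟩, e⟩
      · have := lam_ro hN
        have hz := nz hN hx.1
        rw [ro3] at this hz
        exact .inl (.inl ⟨hz.2, r - 1, ⟨by linarith, by linarith [hr.2]⟩, shift _ (.inr rfl)⟩)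

lemma S_sub : S0 g ⊆ XC g ∧ S1 g ⊆ XC g ∧ S2 g ⊆ XC g := by
  refine ⟨?_, ?_, ?_⟩ <;> rintro x ⟨h, θ, -, e⟩ <;> rw [e] <;> exact PP_mem h.1 _

/-- The rotation permuting the sectors. -/
def RR : (𝕋 × ℝ²) × ℂ ≃ₜ (𝕋 × ℝ²) × ℂ :=
  ((Homeomorph.addRight ((1 / 3 : ℝ) : 𝕋)).prodCongr (Homeomorph.refl _)).prodCongr
    (Homeomorph.mulLeft₀ (AddCircle.toCircle ((1 / 3 : ℝ) : 𝕋) : ℂ) (Circle.coe_ne_zero _))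

lemma RR_fst (x : (𝕋 × ℝ²) × ℂ) : (RR x).1 = ro x.1 := rfl

lemma RR_PP (x : (𝕋 × ℝ²) × ℂ) (θ θ' : ℝ) (h : θ' = θ + 1 / 3 ∨ θ' = θ + 1 / 3 - 1) :
    RR x = PP g (RR x).1 (θ' : 𝕋) ↔ x = PP g x.1 (θ : 𝕋) := by
  have h1 : (θ' : 𝕋) = ((θ + 1 / 3 : ℝ) : 𝕋) := by
    rcases h with rfl | rfl
    · rfl
    · simp
  have h2 : RR (PP g x.1 (θ : 𝕋)) = PP g (RR x).1 (θ' : 𝕋) := by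
    rw [h1, AddCircle.coe_add]
    refine Prod.ext rfl ?_
    show (AddCircle.toCircle ((1 / 3 : ℝ) : 𝕋) : ℂ) * (_ * _) = _ * _
    rw [AddCircle.toCircle_add]
    simp only [RR_fst, ro, Circle.coe_mul]
    ring
  rw [← h2, RR.injective.eq_iff]

lemma RR_S : (∀ x, x ∈ S0 g ↔ RR x ∈ S1 g) ∧ (∀ x, x ∈ S1 g ↔ RR x ∈ S2 g) ∧ ∀ x, x ∈ S2 g ↔ RR x ∈ S0 g := by
  refine ⟨fun x => ?_, fun x => ?_, fun x => ?_⟩ <;>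
    simp only [S0, S1, S2, Set.mem_ofPred_eq, RR_fst, ro3, mem_Icc] <;>
    refine and_congr_right fun _ => ⟨?_, ?_⟩ <;> rintro ⟨θ, h, e⟩
  · exact ⟨θ + 1 / 3, by constructor <;> linarith, (RR_PP x θ _ (.inl rfl)).2 e⟩
  · exact ⟨θ - 1 / 3, by constructor <;> linarith, (RR_PP x _ θ (.inl (by ring))).1 e⟩
  · exact ⟨θ + 1 / 3, by constructor <;> linarith, (RR_PP x θ _ (.inl rfl)).2 e⟩
  · exact ⟨θ - 1 / 3, by constructor <;> linarith, (RR_PP x _ θ (.inl (by ring))).1 e⟩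
  · exact ⟨θ + 1 / 3 - 1, by constructor <;> linarith, (RR_PP x θ _ (.inr rfl)).2 e⟩
  · exact ⟨θ + 2 / 3, by constructor <;> linarith, (RR_PP x _ θ (.inr (by ring))).1 e⟩

end

/-! ### The intersection of two sectors as a solid torus with handles -/

section
variable {g : ℕ}

lemma norm_arc {s : ℝ} (h : s ∈ 𝕀) : ‖(s : 𝕋)‖ = min s (1 - s) := by
  rcases le_total s (1 / 2) with h' | h'
  · rw [(AddCircle.norm_coe_eq_abs_iff 1 one_ne_zero).2 (by rw [abs_of_nonneg h.1]; norm_num; linarith),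
      abs_of_nonneg h.1, min_eq_left (by linarith)]
  · have e : (s : 𝕋) = ((s - 1 : ℝ) : 𝕋) := circ_eq_iff.2 ⟨-1, by push_cast; ring⟩
    rw [e, (AddCircle.norm_coe_eq_abs_iff 1 one_ne_zero).2 (by rw [abs_of_nonpos (by linarith [h.2])]; norm_num; linarith),
      abs_of_nonpos (by linarith [h.2]), min_eq_right (by linarith)]
    ring

lemma norm_ro2 {s : ℝ} (h : s ∈ 𝕀) (u : ℝ × ℝ) : ‖(ro (ro ((s : 𝕋), u))).1‖ =
    if s ≤ 1 / 3 then min (s + 2 / 3) (1 / 3 - s) else min (s - 1 / 3) (4 / 3 - s) := by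
  have e : (ro (ro ((s : 𝕋), u))).1 = ((s + 2 / 3 : ℝ) : 𝕋) := by
    simp only [ro]; rw [← AddCircle.coe_add, ← AddCircle.coe_add]; congr 1; ring
  rw [e]
  split_ifs with h'
  · rw [norm_arc ⟨by linarith [h.1], by linarith⟩]; congr 1; ring
  · have e : ((s + 2 / 3 : ℝ) : 𝕋) = ((s - 1 / 3 : ℝ) : 𝕋) :=
      circ_eq_iff.2 ⟨-1, by push_cast; ring⟩
    rw [e, norm_arc ⟨by linarith, by linarith [h.2]⟩]; congr 1; ring

lemma arc_iff {s : ℝ} (h : s ∈ 𝕀) {I : Set ℝ} (hI : I ⊆ Ioo 0 1) :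
    (∃ s' ∈ I, (s : 𝕋) = (s' : 𝕋)) ↔ s ∈ I := by
  constructor
  · rintro ⟨s', h1, e⟩
    rwa [(circ_Ioo h (hI h1)).1 e]
  · grind

lemma arcs_unit : Arcs (fun _ : Unit => (1 / 12 : ℝ)) fun _ => 11 / 12 :=
  ⟨by norm_num, by norm_num, by norm_num, fun i j h => (h rfl).elim⟩

lemma VV_unit : VV g (fun _ : Unit => (1 / 12 : ℝ)) (fun _ => 11 / 12) = NN g := by
  ext ⟨t, u⟩
  obtain ⟨s, hs, rfl⟩ := AddCircle.eq_coe_Ico t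
  have hs := Ico_subset_Icc_self hs
  simp only [VV, NN, Set.mem_ofPred_eq]
  rw [norm_arc hs, Unique.exists_iff, arc_iff hs (I := Icc (1 / 12) (11 / 12)) fun x hx => ⟨by linarith [hx.1], by linarith [hx.2]⟩, le_min_iff,
    le_sub_comm, show (1 - 1 / 12 : ℝ) = 11 / 12 by norm_num]
  rfl

lemma bV_unit (y : 𝕋 × ℝ²) :
    y ∈ bV g (fun _ : Unit => (1 / 12 : ℝ)) (fun _ => 11 / 12) ↔ y.2 ∈ dG g ∨ lam g y = 0 := by
  obtain ⟨t, u⟩ := y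
  obtain ⟨s, hs, rfl⟩ := AddCircle.eq_coe_Ico t
  have hs := Ico_subset_Icc_self hs
  have := arc_iff hs (I := Ioo (1 / 12) (11 / 12)) fun x hx => ⟨by linarith [hx.1], by linarith [hx.2]⟩
  simp only [bV, Set.mem_ofPred_eq, lam_zero, forall_const]
  refine or_congr_right (and_congr_right fun _ => ?_)
  rw [← not_iff_not, not_le, norm_arc hs, lt_min_iff, lt_sub_comm, show (1 - 1 / 12 : ℝ) = 11 / 12 by norm_num]
  grind

/-- The starts of two arcs which avoid neighbourhoods of `0` and `1 / 3`. -/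
def aB (b : Bool) : ℝ := bif b then 5 / 12 else 1 / 12

/-- The ends of these arcs. -/
def bB (b : Bool) : ℝ := bif b then 11 / 12 else 1 / 4

lemma arcs_bool : Arcs aB bB := by
  refine ⟨?_, ?_, ?_, ?_⟩
  · rintro (_ | _) <;> norm_num [aB]
  · rintro (_ | _) <;> norm_num [aB, bB]
  · rintro (_ | _) <;> norm_num [bB]
  · rintro (_ | _) (_ | _) h s ⟨h1, h2⟩ ⟨h3, h4⟩ <;> first | exact h rfl | (simp only [aB, bB, cond_true, cond_false] at h1 h2 h3 h4; linarith)

variable (g) in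
/-- The common domain of the two sheets of the intersection of two sectors. -/
def H0 : Set (𝕋 × ℝ²) := {y | y ∈ NN g ∧ ro (ro y) ∈ NN g}

variable (g) in
/-- The boundary of `H0`. -/
def B0 : Set (𝕋 × ℝ²) := {y | y.2 ∈ dG g ∨ lam g y = 0 ∨ lam g (ro (ro y)) = 0}

lemma VV_bool : VV g aB bB = H0 g := by
  ext ⟨t, u⟩
  obtain ⟨s, hs, rfl⟩ := AddCircle.eq_coe_Ico t
  have hs := Ico_subset_Icc_self hs
  have h1 := arc_iff hs (I := Icc (1 / 12) (1 / 4)) fun x hx => ⟨by linarith [hx.1], by linarith [hx.2]⟩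
  have h2 := arc_iff hs (I := Icc (5 / 12) (11 / 12)) fun x hx => ⟨by linarith [hx.1], by linarith [hx.2]⟩
  simp only [VV, H0, NN, Set.mem_ofPred_eq, Bool.exists_bool]
  rw [norm_arc hs, norm_ro2 hs]
  simp only [aB, bB, cond_true, cond_false, h1, h2]
  change u ∈ GG g ∧ (0 ≤ gE g u ∨ _) ↔ (u ∈ GG g ∧ (0 ≤ gE g u ∨ _)) ∧ u ∈ GG g ∧ (0 ≤ gE g u ∨ _)
  grind

lemma bV_bool (y : 𝕋 × ℝ²) : y ∈ bV g aB bB ↔ y ∈ B0 g := by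
  obtain ⟨t, u⟩ := y
  obtain ⟨s, hs, rfl⟩ := AddCircle.eq_coe_Ico t
  have hs := Ico_subset_Icc_self hs
  have h1 := arc_iff hs (I := Ioo (1 / 12) (1 / 4)) fun x hx => ⟨by linarith [hx.1], by linarith [hx.2]⟩
  have h2 := arc_iff hs (I := Ioo (5 / 12) (11 / 12)) fun x hx => ⟨by linarith [hx.1], by linarith [hx.2]⟩
  simp only [bV, B0, Set.mem_ofPred_eq, lam_zero, Bool.forall_bool, aB, bB, cond_true, cond_false]
  rw [norm_arc hs, norm_ro2 hs]
  change u ∈ dG g ∨ gE g u ≤ 0 ∧ _ ↔ u ∈ dG g ∨ gE g u ≤ 0 ∧ _ ∨ gE g u ≤ 0 ∧ _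
  grind

/-- The time of the slide over a point of the circle: it is `1` near `-1 / 3` and `0` away from it. -/
def om (t : 𝕋) : ℝ := max 0 (min 1 (2 - 12 * ‖t + ((1 / 3 : ℝ) : 𝕋)‖))

lemma om_mem (t : 𝕋) : om t ∈ 𝕀 := ⟨le_max_left _ _, max_le zero_le_one (min_le_left _ _)⟩

variable (g) in
/-- The slide of the comb over the circle. -/
def sl (y : 𝕋 × ℝ²) : 𝕋 × ℝ² := (y.1, slide g (om y.1) y.2)

lemma sl_cases {y : 𝕋 × ℝ²} (hy : y.2 ∈ GG g) :
    sl g y = y ∨ 1 / 6 ≤ ‖y.1‖ ∧ 1 / 6 ≤ ‖(ro (ro y)).1‖ := by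
  by_cases h : om y.1 = 0
  · left
    rw [sl, h, slide_zero hy]
  · right
    have h1 : ‖(ro y).1‖ ≤ 1 / 6 := by
      by_contra h2
      refine h (max_eq_left ((min_le_right _ _).trans ?_))
      change ¬ ‖y.1 + ((1 / 3 : ℝ) : 𝕋)‖ ≤ 1 / 6 at h2
      linarith
    have h2 := norm_ro h1
    rw [ro3] at h2
    exact h2.symm

lemma sl_spec {y : 𝕋 × ℝ²} (hy : y.2 ∈ GG g) :
    (sl g y).2 ∈ GG g ∧ (sl g y ∈ H0 g ↔ y ∈ H0 g) ∧ (sl g y ∈ B0 g ↔ y ∈ B0 g) := by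
  have hm := slide_mem (om_mem y.1) hy
  refine ⟨hm.1, ?_⟩
  rcases sl_cases hy with h | ⟨h1, h2⟩
  · grind
  · have h2' : 1 / 6 ≤ ‖(ro (ro (sl g y))).1‖ := h2
    have h3 : ∀ y' : 𝕋 × ℝ², y'.2 ∈ GG g → 1 / 6 ≤ ‖y'.1‖ → y' ∈ NN g := fun y' h h' => ⟨h, .inr (by linarith)⟩
    refine ⟨iff_of_true ⟨h3 _ hm.1 h1, h3 _ hm.1 h2'⟩ ⟨h3 _ hy h1, h3 _ hy h2⟩, ?_⟩
    simp only [B0, Set.mem_ofPred_eq]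
    rw [lam_one (y := sl g y) h1, lam_one h2', lam_one h1, lam_one h2]
    simp only [one_ne_zero, or_false]
    exact hm.2.1

lemma sl_cont : ContinuousOn (sl g) {y | y.2 ∈ GG g} := by
  have h : Continuous om := by unfold om; fun_prop
  have h2 : ContinuousOn (fun y : 𝕋 × ℝ² => slide g (om y.1) y.2) {y | y.2 ∈ GG g} :=
    slide_cont.comp ((h.comp continuous_fst).prodMk continuous_snd).continuousOn fun y hy => ⟨trivial, hy⟩
  exact continuousOn_fst.prodMk h2

variable (g) in
/-- The first sheet of the intersection of two sectors. -/
def sh0 (y : 𝕋 × ℝ²) : (𝕋 × ℝ²) × ℂ := PP g y ((lam g y / 3 : ℝ))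

lemma sh0_cont : Continuous (sh0 g) :=
  PP_cont.comp (continuous_id.prodMk ((AddCircle.continuous_mk' 1).comp (by have := lam_cont (g := g); fun_prop)))

/-- The parametrization of the second sheet: the part of the bands over a neighbourhood of `-1 / 3`. -/
def zm (j : Fin g) (p : ℂ × ℝ) : 𝕋 × ℝ² :=
  (((2 / 3 + p.1.re / 12 : ℝ) : 𝕋), chi (gc g j) (-p.1.im) p.2)

lemma zm_ro (r : ℝ) : ((2 / 3 + r / 12 : ℝ) : 𝕋) + ((1 / 3 : ℝ) : 𝕋) = ((r / 12 : ℝ) : 𝕋) := by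
  exact circ_eq_iff.2 ⟨-1, by push_cast; ring⟩

lemma zm_norm {r : ℝ} (h : |r| ≤ 1) : ‖((2 / 3 + r / 12 : ℝ) : 𝕋) + ((1 / 3 : ℝ) : 𝕋)‖ = |r| / 12 := by
  have e : |r / 12| = |r| / 12 := by rw [abs_div]; norm_num
  rw [zm_ro, (AddCircle.norm_coe_eq_abs_iff 1 one_ne_zero).2 (by rw [e]; norm_num; linarith), e]

lemma chi_E {j : Fin g} {p q : ℝ} (hp : |p| ≤ 1) (hq : q ∈ 𝕀) :
    gE g (chi (gc g j) p q) = (|p| - 1) * (3 / 4 - q / 4) := by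
  rw [gE_eq (chi_spec (c := gc g j) (hp.trans (by norm_num)) hq).2.2.2.2.1.le]
  have hp' := abs_le.1 hp
  have e : ex p = 0 := by rw [ex, max_eq_left (by linarith)]
  have e' : cl p = p := by rw [cl, min_eq_left hp'.2, max_eq_right hp'.1]
  simp only [chi, e, e', add_sub_cancel_left, sub_self, add_zero]
  grind

lemma zm_mem (j : Fin g) {v : ℂ} (hv : v ∈ dd) {z : ℝ} (hz : z ∈ 𝕀) :
    (zm j (v, z)).2 ∈ GG g ∧ ((zm j (v, z)).2 ∈ dG g ↔ z = 0 ∨ z = 1) ∧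
      lam g (ro (zm j (v, z))) = 0 ∧ (ro (zm j (v, z)) ∈ NN g ↔ v ∉ ddo) := by
  have hp : |(-v.im)| ≤ 1 := by rw [abs_neg]; exact hv.2
  have hc := chi_mem j (hp.trans (by norm_num)) hz
  have hE : gE g (ro (zm j (v, z))).2 = _ := chi_E hp hz
  have hn : ‖(ro (zm j (v, z))).1‖ = |v.re| / 12 := zm_norm hv.1
  have hpos : 0 < 3 / 4 - z / 4 := by linarith [hz.2]
  refine ⟨hc.1, hc.2.1, lam_zero.2 ⟨?_, ?_⟩, ?_⟩
  · rw [hE]; nlinarith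
  · rw [hn]; linarith [hv.1]
  · simp only [NN, ddo, Set.mem_ofPred_eq]
    rw [hE, hn, mul_nonneg_iff_of_pos_right hpos, sub_nonneg]
    constructor
    · grind
    · intro h
      refine ⟨hc.1, ?_⟩
      grind

lemma zm_surj {y : 𝕋 × ℝ²} (hy : y.2 ∈ GG g) (h : lam g (ro y) = 0) :
    ∃ j : Fin g, ∃ v ∈ dd, ∃ z ∈ 𝕀, zm j (v, z) = y := by
  obtain ⟨t, u⟩ := y
  obtain ⟨hE, hn⟩ := lam_zero.1 h
  change gE g u ≤ 0 at hE
  change ‖t + ((1 / 3 : ℝ) : 𝕋)‖ ≤ 1 / 12 at hn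
  obtain ⟨j, -, p, q, hp, hq, rfl⟩ := near_chi hy (by linarith)
  have he := (chi_mem j hp hq).2.2.2.1
  rw [max_eq_left hE] at he
  have hp1 : |p| ≤ 1 := by have := le_max_right 0 (|p| - 1); rw [ex] at he; linarith
  obtain ⟨s, rfl⟩ := QuotientAddGroup.mk_surjective t
  rw [← AddCircle.coe_add, UnitAddCircle.norm_eq] at hn
  refine ⟨j, ⟨12 * (s + 1 / 3 - round (s + 1 / 3)), -p⟩, ⟨?_, ?_⟩, q, hq, Prod.ext ?_ ?_⟩
  · grind
  · simpa using hp1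
  · exact circ_eq_iff.2 ⟨round (s + 1 / 3) - 1, by push_cast; ring⟩
  · simp [zm]

lemma zm_inj {j j' : Fin g} {v v' : ℂ} {z z' : ℝ} (hv : v ∈ dd) (hz : z ∈ 𝕀)
    (hv' : v' ∈ dd) (hz' : z' ∈ 𝕀) (h : zm j (v, z) = zm j' (v', z')) : j = j' ∧ v = v' ∧ z = z' := by
  obtain ⟨h1, h2⟩ := Prod.ext_iff.1 h
  simp only [zm] at h1 h2
  have b : ∀ {w : ℂ}, w ∈ dd → 2 / 3 + w.re / 12 ∈ Ioo (0 : ℝ) 1 := fun hw => by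
    have := abs_le.1 hw.1
    grind
  rw [circ_Ioo (Ioo_subset_Icc_self (b hv)) (b hv')] at h1
  have m : ∀ {w : ℂ}, w ∈ dd → |(-w.im)| ≤ 6 / 5 := fun hw => by rw [abs_neg]; linarith [hw.2]
  obtain ⟨-, -, -, -, s, -, e1, e2⟩ := chi_spec (c := gc g j) (m hv) hz
  obtain ⟨-, -, -, -, s', -, e1', e2'⟩ := chi_spec (c := gc g j') (m hv') hz'
  obtain rfl : j = j' := gc_eq s (by rw [h2]; exact s')
  rw [h2] at e1 e2
  exact ⟨rfl, Complex.ext (by linarith) (by linarith), e2.symm.trans e2'⟩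

variable (g) in
/-- The patches of the front face along which the second sheet is attached. -/
def eA (j : Fin g) (ε : Bool) : Aff :=
  ⟨⟨2 / 3, (gc g j - (bif ε then 9 / 20 else 17 / 20) - g) / (g + 1 / 2)⟩,
    1 / 12, 0, 0, (bif ε then 1 / 40 else -(1 / 20)) / (g + 1 / 2)⟩

lemma eA_re (j : Fin g) (ε : Bool) (v : ℂ) : ((eA g j ε).app v).re = 2 / 3 + v.re / 12 := by
  simp only [eA, Aff.app]; ring

lemma eA_X (j : Fin g) (ε : Bool) (v : ℂ) : vX g ((eA g j ε).app v).im =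
    gc g j + (bif false then 1 else -1) * (bif ε then 9 / 20 - v.im / 40 else 17 / 20 + v.im / 20) := by
  rw [← vX_surj (g := g) (x := gc g j + _)]
  cases ε <;> simp only [eA, Aff.app, cond_true, cond_false] <;> ring

lemma eA_r (ε : Bool) {v : ℂ} (hv : v ∈ dd) :
    (bif ε then 9 / 20 - v.im / 40 else 17 / 20 + v.im / 20 : ℝ) ∈ Icc (2 / 5 : ℝ) (9 / 10) := by
  have := abs_le.1 hv.2
  grind

lemma eA_mem (j : Fin g) (ε : Bool) {v : ℂ} (hv : v ∈ dd) : (eA g j ε).app v ∈ sqo := by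
  have h1 := abs_le.1 hv.1
  have hr := eA_r ε hv
  refine ⟨by rw [eA_re]; constructor <;> linarith, ?_⟩
  have hb := gc_bd j
  have hI : vX g ((eA g j ε).app v).im ∈ Icc (-1 / 2 : ℝ) (2 * g + 1 / 2) := by
    rw [eA_X, cond_false]; exact ⟨by linarith [hr.2], by linarith [hr.1]⟩
  have h4 : |((eA g j ε).app v).im| ≠ 1 := by
    rw [Ne, ← vX_end (g := g), eA_X, cond_false]
    grind
  exact abs_lt.1 (lt_of_le_of_ne (abs_le.2 (vX_mem.1 hI)) h4)

lemma eA_good : GoodAff (Sum.elim (vA g aB bB) (eA g)) := by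
  have hv := vA_good (g := g) arcs_bool
  have d1 : 0 < 1 / 12 * (1 / 20 / ((g : ℝ) + 1 / 2)) := by positivity
  have d2 : 0 < 1 / 12 * (1 / 40 / ((g : ℝ) + 1 / 2)) := by positivity
  have key : ∀ i : Fin g × Bool, ∀ ε, ∀ j : Fin g, ∀ δ, ∀ v ∈ dd, ∀ w ∈ dd, (vA g aB bB i ε).app v ≠ (eA g j δ).app w := by
    intro i ε j δ v hv w hw e
    have e2 := congrArg (fun P : ℂ => vX g P.im) e
    simp only [vA_X, eA_X] at e2
    have hv2 := abs_le.1 hv.2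
    have hw2 := abs_le.1 hw.2
    have hr := eA_r δ hw
    have m1 := foot_abs ε (c := gc g i.1) (r := 5 / 8 + v.im / 8) (by linarith)
    have m2 := foot_abs false (c := gc g j) (le_trans (by norm_num) hr.1)
    have hij : i.1 = j := gc_eq (x := gc g i.1 + (bif ε then 1 else -1) * (5 / 8 + v.im / 8))
      (by linarith) (by rw [e2, m2]; linarith [hr.2])
    grind
  refine ⟨?_, ?_, ?_, ?_⟩
  · rintro (i | j)
    · exact hv.neg i
    · simp only [Sum.elim_inr, Aff.det, eA, cond_false]; ring_nf at d1 ⊢; linarith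
  · rintro (i | j)
    · exact hv.pos i
    · simp only [Sum.elim_inr, Aff.det, eA, cond_true]; ring_nf at d2 ⊢; linarith
  · rintro (i | j) ε v h
    · exact hv.mem i ε v h
    · exact eA_mem j ε h
  · rintro (i | i) ε (j | j) δ hne v hv' w hw
    · exact hv.disj i ε j δ (fun e => hne (by rw [Prod.mk.injEq] at e ⊢; simpa using e)) v hv' w hw
    · exact key i ε j δ v hv' w hw
    · exact (key j δ i ε w hw v hv').symm
    · intro e
      have e2 := congrArg (fun P : ℂ => vX g P.im) e
      simp only [Sum.elim_inr, eA_X] at e2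
      have hr := eA_r ε hv'
      have hr' := eA_r δ hw
      have m1 := foot_abs false (c := gc g i) (le_trans (by norm_num) hr.1)
      have m2 := foot_abs false (c := gc g j) (le_trans (by norm_num) hr'.1)
      obtain rfl : i = j := gc_eq (by rw [m1]; linarith [hr.2]) (by rw [e2, m2]; linarith [hr'.2])
      have hv2 := abs_le.1 hv'.2
      have hw2 := abs_le.1 hw.2
      grind

/-- The slide takes the patches to the ends of the second sheet. -/
lemma sl_foot (j : Fin g) (ε : Bool) {v : ℂ} (hv : v ∈ dd) :
    sl g (vc g ((eA g j ε).app v, 0)) = zm j (v, bif ε then 1 else 0) := by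
  have hv2 := abs_le.1 hv.2
  have hr := eA_r ε hv
  have hI := (vX_mem (g := g)).2 (Ioo_subset_Icc_self (eA_mem j ε hv).2)
  have ht := gt_foot j false (le_trans (by norm_num) hr.1) (by linarith [hr.2])
  have hm := foot_abs false (c := gc g j) (le_trans (by norm_num) hr.1)
  have hB := (gBT_near (g := g) (j := j) (hm.trans_le (by linarith [hr.2]))).1
  rw [← eA_X] at ht hB
  set e : ℝ := 1 / 10 + v.im / 20 with he
  have hp : |(-1 - e)| ≤ 6 / 5 := abs_le.2 ⟨by linarith, by linarith⟩
  have hq : (bif ε then 1 else 0 : ℝ) ∈ 𝕀 := by cases ε <;> simp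
  have hcl : cl (-1 - e) = -1 ∧ ex (-1 - e) = e := by
    constructor
    · rw [cl, min_eq_left (by linarith), max_eq_left (by linarith)]
    · rw [ex, abs_of_nonpos (by linarith), max_eq_right (by linarith)]; ring
  have h1 : (vc g ((eA g j ε).app v, 0)).2 = chi (gc g j) (-1 - e) (bif ε then 1 else 0) := by
    simp only [vc, zero_mul, add_zero, chi, hcl.1, hcl.2]
    refine Prod.ext ?_ ?_
    · simp only [eA_X]
      cases ε <;> simp only [cond_true, cond_false] <;> linarith
    · rcases gN_cases _ hI with ⟨h2, h3, -⟩ | ⟨h2, h2', -⟩ | ⟨h2, h3, -⟩ <;> cases ε <;> simp only [cond_true, cond_false] at ht ⊢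
      · linarith
      · rw [h3, gU, ht, max_eq_left (by linarith), min_eq_right (by linarith)]; linarith
      · linarith
      · linarith
      · linarith
      · linarith
  have h2 : om ((2 / 3 + v.re / 12 : ℝ) : 𝕋) = 1 := by
    rw [om, zm_norm hv.1, min_eq_left (by linarith [hv.1]), max_eq_right zero_le_one]
  have h3 : (vc g ((eA g j ε).app v, 0)).1 = ((2 / 3 + v.re / 12 : ℝ) : 𝕋) := by
    simp only [vc, eA_re]
  have h4 : Cs 1 (-1 - e) = -v.im := by
    rw [Cs, C1, max_eq_right (by linarith), min_eq_left (by linarith)]; linarith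
  rw [sl, h1, h3, h2, slide_chi _ _ hp hq, h4, zm]

lemma sh0_mem {x : (𝕋 × ℝ²) × ℂ} : x ∈ sh0 g '' H0 g ↔ x.1 ∈ H0 g ∧ x = PP g x.1 ((lam g x.1 / 3 : ℝ)) :=
  ⟨by rintro ⟨y, hy, rfl⟩; exact ⟨hy, rfl⟩, fun h => ⟨x.1, h.1, h.2.symm⟩⟩

set_option maxHeartbeats 800000 in
/-- The intersection of two sectors is a solid torus with `3 g` handles: `2 g` of them are the bands times
arcs, and the other `g` form the second sheet. -/
lemma H_NF : NF (fun i ε => (Sum.elim (vA g aB bB) (eA g) i ε).app) (S0 g ∩ S1 g) (S0 g ∩ S1 g ∩ S2 g) := by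
  have hG : ∀ {y}, y ∈ H0 g → y.2 ∈ GG g := fun h => h.1.1
  have hbase := base_NF (g := g) arcs_bool
  rw [VV_bool] at hbase
  have hmap : IsNF (fun i ε => (vA g aB bB i ε).app) (sh0 g '' H0 g) {x | x.1 ∈ B0 g} ((sh0 g ∘ sl g) ∘ vc g)
      fun i => (sh0 g ∘ sl g) ∘ vk g aB bB i := by
    refine hbase.map (sh0_cont.comp_continuousOn (sl_cont.mono fun y hy => hG hy)) ?_ ?_ ?_
    · intro y hy y' hy' h
      have h1 := congrArg Prod.fst h
      change sl g y = sl g y' at h1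
      obtain ⟨e1, e2⟩ := Prod.ext_iff.1 h1
      change y.1 = y'.1 at e1
      change slide g (om y.1) y.2 = slide g (om y'.1) y'.2 at e2
      rw [← e1] at e2
      exact Prod.ext e1 (slide_inj (om_mem _) (hG hy) (hG hy') e2)
    · rw [image_comp]
      congr 1
      ext y
      constructor
      · rintro ⟨y, hy, rfl⟩; exact (sl_spec (hG hy)).2.1.2 hy
      · intro hy
        obtain ⟨u, hu, e⟩ := slide_surj (o := om y.1) (hG hy)
        have e' : sl g (y.1, u) = y := Prod.ext rfl e
        exact ⟨(y.1, u), (sl_spec hu).2.1.1 (e'.symm ▸ hy), e'⟩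
    · intro y hy
      rw [bV_bool]
      exact (sl_spec (hG hy)).2.2
  have hl : ∀ j : Fin g, ∀ v ∈ dd, ∀ z ∈ 𝕀, lam g (zm j (v, z)) = 1 ∧ lam g (ro (ro (zm j (v, z)))) = 1 ∧
      zm j (v, z) ∈ H0 g := by
    intro j v hv z hz
    have h := zm_mem j hv hz
    have e := lam_ro h.2.2.1
    rw [ro3] at e
    exact ⟨e.2, e.1, NN_of_lam h.1 (by rw [e.2]; norm_num), NN_of_lam h.1 (by rw [e.1]; norm_num)⟩
  have foot : ∀ (j : Fin g) (ε : Bool), ∀ v ∈ dd, PP g (zm j (v, bif ε then 1 else 0)) ((-1 / 3 : ℝ)) =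
      ((sh0 g ∘ sl g) ∘ vc g) ((eA g j ε).app v, 0) := by
    intro j ε v hv
    have hz : (bif ε then 1 else 0 : ℝ) ∈ 𝕀 := by cases ε <;> simp
    change _ = sh0 g (sl g _)
    rw [sl_foot j ε hv]
    exact PP_dG ((zm_mem j hv hz).2.1.2 (by cases ε <;> simp)) _
  have he : (fun i ε => (Sum.elim (vA g aB bB) (eA g) i ε).app) =
      Sum.elim (fun i ε => (vA g aB bB i ε).app) fun i ε => (eA g i ε).app := by ext (i | i) ε <;> rfl
  rw [he]
  refine ⟨_, _, hmap.add (κ := Fin g) (e' := fun i ε => (eA g i ε).app) (l := fun j p => PP g (zm j p) ((-1 / 3 : ℝ)))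
    (V' := S0 g ∩ S1 g) (bd' := S0 g ∩ S1 g ∩ S2 g) ?_ ?_ ?_ ?_ (fun j v hv => foot j false v hv)
    (fun j v hv => foot j true v hv) (fun j ε v hv => eA_mem j ε hv) ?_ ?_⟩
  · intro j
    refine Continuous.continuousOn (PP_cont.comp (Continuous.prodMk ?_ continuous_const))
    have h1 := cl_cont
    have h2 := ex_cont
    exact ((AddCircle.continuous_mk' 1).comp (by fun_prop)).prodMk (by unfold chi; fun_prop)
  · intro x
    rw [mem_S01, sh0_mem]
    constructor
    · rintro ⟨h1, h2, h3 | ⟨h3, h4⟩⟩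
      · exact .inl ⟨⟨h1, h2⟩, h3⟩
      · obtain ⟨j, v, hv, z, hz, e⟩ := zm_surj h1.1 h3
        exact .inr ⟨j, v, hv, z, hz, by rw [e]; exact h4.symm⟩
    · rintro (⟨⟨h1, h2⟩, h3⟩ | ⟨j, v, hv, z, hz, rfl⟩)
      · exact ⟨h1, h2, .inl h3⟩
      · have h := (hl j v hv z hz).2.2
        exact ⟨h.1, h.2, .inr ⟨(zm_mem j hv hz).2.2.1, rfl⟩⟩
  · intro j v hv z hz j' v' hv' z' hz' h
    exact zm_inj hv (hIoo hz) hv' (hIoo hz') (congrArg Prod.fst h)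
  · intro j v hv z hz h
    have h1 := (sh0_mem.1 h).2
    change PP g (zm j (v, z)) _ = PP g (zm j (v, z)) ((lam g (zm j (v, z)) / 3 : ℝ)) at h1
    rw [(hl j v hv z (hIoo hz)).1] at h1
    rcases (PP_eq.1 h1).2 with h2 | h2
    · rcases (zm_mem j hv (hIoo hz)).2.1.1 h2 with h3 | h3
      · exact hz.1.ne' h3
      · exact hz.2.ne h3
    · obtain ⟨n, hn⟩ := circ_eq_iff.1 h2
      have : ((3 * n : ℤ) : ℝ) = ((2 : ℤ) : ℝ) := by push_cast; linarith
      have := Int.cast_inj.1 this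
      omega
  · rintro x ⟨y, hy, rfl⟩
    have hS : sh0 g y ∈ S0 g ∩ S1 g := mem_S01.2 ⟨hy.1, hy.2, .inl rfl⟩
    rw [mem_inter_iff, and_iff_right hS]
    refine (mem_S2 (hG hy)).trans ?_
    constructor
    · intro h
      refine ⟨?_, ?_⟩
      · rcases h with h | h
        · exact .inl h.1
        · exact .inr h
      · intro j ε v hv e
        have hv' : v ∈ dd := ⟨hv.1.le, hv.2.le⟩
        have hz : (bif ε then 1 else 0 : ℝ) ∈ 𝕀 := by cases ε <;> simp
        rw [← foot j ε v hv'] at e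
        obtain rfl : zm j (v, bif ε then 1 else 0) = y := congrArg Prod.fst e
        have h1 := hl j v hv' _ hz
        rw [h1.1, h1.2.1] at h
        rcases h with h | h | h
        · exact (zm_mem j hv' hz).2.2.2.1 h.2 hv
        · norm_num at h
        · norm_num at h
    · rintro ⟨h1 | h1, h2⟩
      · refine .inl ⟨h1, ?_⟩
        by_contra hN
        have h0 : lam g (ro y) = 0 := by by_contra h; exact hN (NN_of_lam (y := ro y) hy.1.1 h)
        obtain ⟨j, v, hv, z, hz, rfl⟩ := zm_surj (hG hy) h0
        have hzm := zm_mem j hv hz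
        have hvo : v ∈ ddo := by by_contra h; exact hN (hzm.2.2.2.2 h)
        obtain ⟨ε, rfl⟩ : ∃ ε : Bool, z = bif ε then 1 else 0 := by
          rcases hzm.2.1.1 h1 with e | e
          · exact ⟨false, e⟩
          · exact ⟨true, e⟩
        refine h2 j ε v hvo ?_
        rw [← foot j ε v hv]
        exact PP_dG h1 _
      · exact .inr h1
  · intro j v hv z hz
    have h := zm_mem j hv (hIoo hz)
    have h' := (hl j v hv z (hIoo hz)).2.2
    have hS : PP g (zm j (v, z)) ((-1 / 3 : ℝ)) ∈ S0 g ∩ S1 g := mem_S01.2 ⟨h'.1, h'.2, .inr ⟨h.2.2.1, rfl⟩⟩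
    exact (and_iff_right hS).trans ((mem_S2' h.2.2.1).trans h.2.2.2)

end

/-! ### The trisection -/

section
variable {g : ℕ}

lemma Pin_eq (k : ℕ) : Pin (FF k) (hh k) = Hb3 (FF k) (hh k) := by
  ext z
  exact and_congr_right fun _ => by rw [sq_le_sq, abs_of_nonneg (hh_nonneg k _)]

lemma NN_compact : IsCompact (NN g) := by
  have h := gE_cont g
  refine IsCompact.of_isClosed_subset ((isCompact_univ (X := 𝕋)).prod (GG_compact (g := g))) ?_
    fun y hy => ⟨trivial, hy.1⟩
  have h1 : IsClosed {y : 𝕋 × ℝ² | 0 ≤ gE g y.2} := isClosed_le continuous_const (by fun_prop)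
  have h2 : IsClosed {y : 𝕋 × ℝ² | 1 / 12 ≤ ‖y.1‖} := isClosed_le continuous_const (by fun_prop)
  exact (GG_compact.isClosed.preimage continuous_snd).inter (h1.union h2)

variable (g) in
/-- Half the length of the interval of arguments of the first sector over a point. -/
def ha (y : 𝕋 × ℝ²) : ℝ := (lam g y - lam g (ro y) + 1) / 6

lemma ha_zero {y : 𝕋 × ℝ²} : ha g y = 0 ↔ lam g y = 0 := by
  have h1 := lam_mem (g := g) y
  have h2 := lam_mem (g := g) (ro y)
  unfold ha
  exact ⟨fun h => by linarith, fun h => by rw [h, (lam_ro h).1]; norm_num⟩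

lemma ha_cont : Continuous (ha g) := by
  have h1 := lam_cont (g := g)
  exact ((h1.sub (h1.comp ro_cont)).add continuous_const).div_const 6

lemma ha_mem (y : 𝕋 × ℝ²) : 0 ≤ ha g y ∧ ha g y ≤ 1 / 3 := by
  have h1 := lam_mem (g := g) y
  have h2 := lam_mem (g := g) (ro y)
  unfold ha
  grind

/-- The first sector is a pinched product over `NN`. -/
lemma S0_pin : PH (Pin (NN g) fun y => gh g y.2 * ha g y) ∅ (S0 g) ∅ := by
  have : CompactSpace (NN g) := isCompact_iff_compactSpace.1 NN_compact
  have c1 := ha_cont (g := g)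
  have c2 := lam_cont (g := g)
  have c3 := gh_cont (g := g)
  have c4 : Continuous fun p : NN g × ℝ => (p.1 : 𝕋 × ℝ²) := by fun_prop
  refine PH.of_param (α := NN g × ℝ) (K := univ ×ˢ Icc (-1) 1) (isCompact_univ.prod isCompact_Icc)
    (f' := fun p => PP g p.1 ((lam g p.1 / 3 - ha g p.1 + p.2 * ha g p.1 : ℝ)))
    (Continuous.continuousOn (by fun_prop)) (Continuous.continuousOn (PP_cont.comp (c4.prodMk
      ((AddCircle.continuous_mk' 1).comp (by fun_prop)))))
    (pin_image (NN g) _ fun y _ => mul_nonneg (gh_nonneg _) (ha_mem y).1) ?_ ?_ (fun _ _ => Iff.rfl)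
  · ext x
    constructor
    · rintro ⟨⟨y, σ⟩, ⟨-, hσ⟩, rfl⟩
      have h0 := (ha_mem (g := g) y).1
      refine ⟨y.2, _, ?_, rfl⟩
      have e : (lam g (ro y) - 1) / 3 = lam g y / 3 - 2 * ha g y := by unfold ha; ring
      change _ ∈ Icc ((lam g (ro y) - 1) / 3) (lam g y / 3)
      constructor <;> nlinarith [hσ.1, hσ.2]
    · rintro ⟨hN, θ, hθ, e⟩
      have e' : (lam g (ro x.1) - 1) / 3 = lam g x.1 / 3 - 2 * ha g x.1 := by unfold ha; ring
      have h0 := (ha_mem (g := g) x.1).1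
      by_cases hz : ha g x.1 = 0
      · refine ⟨(⟨x.1, hN⟩, 0), ⟨trivial, by norm_num⟩, ?_⟩
        rw [show θ = lam g x.1 / 3 by linarith [hθ.1, hθ.2]] at e
        grind
      · have hp : 0 < ha g x.1 := lt_of_le_of_ne h0 (Ne.symm hz)
        refine ⟨(⟨x.1, hN⟩, (θ - lam g x.1 / 3 + ha g x.1) / ha g x.1), ⟨trivial, ?_, ?_⟩, ?_⟩
        · simp only; rw [le_div_iff₀ hp]; linarith [hθ.1]
        · simp only; rw [div_le_iff₀ hp]; linarith [hθ.2]
        · grind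
  · rintro ⟨y, σ⟩ ⟨-, h⟩ ⟨y', σ'⟩ ⟨-, h'⟩
    rw [Prod.mk.injEq, PP_eq]
    refine and_congr_right fun e => ?_
    obtain rfl := Subtype.ext e
    have h0 := ha_mem (g := g) y
    rw [mul_eq_mul_right_iff, mul_eq_zero, gh_zero]
    constructor
    · grind
    · rintro (e | e)
      · exact .inr (.inl e)
      · obtain ⟨n, hn⟩ := circ_eq_iff.1 e
        have e1 : (n : ℝ) = (σ' - σ) * ha g y := by rw [← hn]; ring
        have e2 : (n : ℝ) < 1 := by rw [e1]; nlinarith [h.1, h.2, h'.1, h'.2]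
        have e3 : (-1 : ℝ) < n := by rw [e1]; nlinarith [h.1, h.2, h'.1, h'.2]
        obtain rfl : n = 0 := by
          have e2 : n < 1 := by exact_mod_cast e2
          have e3 : -1 < n := by exact_mod_cast e3
          omega
        grind

/-- A ball bundle is a pinched product over an interval bundle. -/
def pinHomeo (k : ℕ) : Pin (Pin (FF k) (hh k)) (fun z => √(hh k z.1 ^ 2 - z.2 ^ 2)) ≃ₜ Hb4 (FF k) (hh k) :=
  (Homeomorph.prodAssoc ℝ² ℝ ℝ).subtype fun z => by
    have h0 := hh_nonneg k z.1.1
    change (z.1.1 ∈ FF k ∧ |z.1.2| ≤ hh k z.1.1) ∧ |z.2| ≤ √(hh k z.1.1 ^ 2 - z.1.2 ^ 2) ↔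
      z.1.1 ∈ FF k ∧ z.1.2 ^ 2 + z.2 ^ 2 ≤ hh k z.1.1 ^ 2
    rw [and_assoc]
    refine and_congr_right fun _ => ?_
    rw [← abs_of_nonneg h0, ← sq_le_sq, abs_of_nonneg h0]
    constructor
    · rintro ⟨h1, h2⟩
      rw [Real.le_sqrt (abs_nonneg _) (by linarith), sq_abs] at h2
      linarith
    · intro h
      have h1 : z.1.2 ^ 2 ≤ hh k z.1.1 ^ 2 := by nlinarith [sq_nonneg z.2]
      refine ⟨h1, ?_⟩
      rw [Real.le_sqrt (abs_nonneg _) (by linarith), sq_abs]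
      linarith

lemma S0_hb : Nonempty (S0 g ≃ₜ handlebodySet 4 (g + 1)) := by
  have h := NF.std g (vA_good (g := g) arcs_unit) ⟨_, _, base_NF arcs_unit⟩ (Equiv.prodUnique (Fin g) Unit).symm
  rw [VV_unit] at h
  have c1 := ha_cont (g := g)
  have c2 := gh_cont (g := g)
  have c3 := hh_cont (g + 1)
  obtain ⟨Φ, -⟩ := h.pin NN_compact (r := fun y => gh g y.2 * ha g y)
    (r' := fun z => √(hh (g + 1) z.1 ^ 2 - z.2 ^ 2)) (Continuous.continuousOn (by fun_prop))
    (Continuous.continuousOn (by fun_prop)) (fun y _ => mul_nonneg (gh_nonneg _) (ha_mem y).1)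
    (fun _ _ => Real.sqrt_nonneg _) (fun y _ => by rw [bV_unit, mul_eq_zero, gh_zero, ha_zero])
    fun z hz => by
      have h0 := hh_nonneg (g + 1) z.1
      have : z.2 ^ 2 ≤ hh (g + 1) z.1 ^ 2 := sq_le_sq.2 (by rw [abs_of_nonneg h0]; exact hz.2)
      rw [Real.sqrt_eq_zero (by linarith), sub_eq_zero, sq_eq_sq_iff_abs_eq_abs, abs_of_nonneg h0]
      exact ⟨fun e => ⟨hz.1, e.symm⟩, fun e => e.2.symm⟩
  obtain ⟨Ψ, -⟩ := S0_pin (g := g)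
  exact ⟨Ψ.symm.trans (Φ.trans ((pinHomeo _).trans (hb4Homeo _).symm))⟩

lemma S01_PH : PH (S0 g ∩ S1 g) (S0 g ∩ S1 g ∩ S2 g) (Pin (FF (3 * g + 1)) (hh (3 * g + 1)))
    (PinBd (FF (3 * g + 1)) (hh (3 * g + 1))) := by
  refine NF.std (3 * g) eA_good H_NF (Fintype.equivOfCardEq ?_)
  simp
  ring

lemma S01_hb : Nonempty ((S0 g ∩ S1 g : Set _) ≃ₜ handlebodySet 3 (3 * g + 1)) := by
  obtain ⟨Φ, -⟩ := S01_PH (g := g)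
  exact ⟨(Φ.trans (Homeomorph.setCongr (Pin_eq _))).trans (hb3Homeo _).symm⟩

/-- The doubled region in two forms. -/
def twoHomeo (k : ℕ) : PinBd (FF k) (hh k) ≃ₜ Two (FF k) (hh k) where
  toFun z := ⟨(z.1.1, (z.1.2, 0)), z.2.1, (sq_eq_sq_iff_abs_eq_abs _ _).2 (by
    rw [abs_of_nonneg (hh_nonneg k _)]; exact z.2.2), rfl⟩
  invFun z := ⟨(z.1.1, z.1.2.1), z.2.1, by
    have := (sq_eq_sq_iff_abs_eq_abs _ _).1 z.2.2.1
    rwa [abs_of_nonneg (hh_nonneg k _)] at this⟩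
  left_inv z := rfl
  right_inv z := Subtype.ext (Prod.ext rfl (Prod.ext rfl z.2.2.2.symm))
  continuous_toFun := by fun_prop
  continuous_invFun := by fun_prop

lemma S012_surf : Nonempty ((S0 g ∩ S1 g ∩ S2 g : Set _) ≃ₜ surfaceSet (3 * g + 1)) := by
  obtain ⟨Φ⟩ := S01_PH (g := g).homeo_bd inter_subset_left fun z hz => ⟨hz.1, hz.2.le⟩
  exact ⟨(Φ.trans (twoHomeo _)).trans (surfHomeo _).symm⟩

lemma circle_param (r x y : ℝ) (hr : 0 ≤ r) (h : x ^ 2 + y ^ 2 = r ^ 2) :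
    ∃ θ : 𝕋, x = r * (θ.toCircle : ℂ).re ∧ y = r * (θ.toCircle : ℂ).im := by
  obtain ⟨θ, h'⟩ := polar ⟨x, y⟩
  have hn : ‖(⟨x, y⟩ : ℂ)‖ = r := by
    rw [Complex.norm_def, Complex.normSq_mk, ← pow_two, ← pow_two, h, Real.sqrt_sq hr]
  rw [hn] at h'
  have h1 := congrArg Complex.re h'
  have h2 := congrArg Complex.im h'
  rw [Complex.re_ofReal_mul] at h1
  rw [Complex.im_ofReal_mul] at h2
  exact ⟨θ, h1, h2⟩

/-- The circle times the connected sum, in two forms. -/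
lemma XX_XC : PH (XX g) ∅ (XC g) ∅ := by
  obtain ⟨Φ, hΦ⟩ := FF_PH (GG_VF (g := g))
  have : CompactSpace (FF g) := isCompact_iff_compactSpace.1 (FF_compact g)
  have hΦG : ∀ x, ((Φ x : ℝ × ℝ) ∈ GG g) := fun x => (Φ x).2
  have hc : Continuous fun θ : 𝕋 => (θ.toCircle : ℂ) :=
    continuous_subtype_val.comp AddCircle.continuous_toCircle
  have hci : Function.Injective fun θ : 𝕋 => (θ.toCircle : ℂ) :=
    Circle.coe_injective.comp (AddCircle.injective_toCircle one_ne_zero)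
  have hcs : ∀ θ : 𝕋, (θ.toCircle : ℂ).re ^ 2 + (θ.toCircle : ℂ).im ^ 2 = 1 := fun θ => by
    have := Circle.normSq_coe θ.toCircle
    rw [Complex.normSq_apply] at this
    linarith
  have c1 := hh_cont g
  have c2 := Complex.continuous_re.comp hc
  have c3 := Complex.continuous_im.comp hc
  refine PH.of_param (α := 𝕋 × (FF g × 𝕋)) isCompact_univ
    (f := fun p => (((p.2.1 : ℝ × ℝ), (hh g p.2.1 * (p.2.2.toCircle : ℂ).re, hh g p.2.1 * (p.2.2.toCircle : ℂ).im)),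
      ((p.1.toCircle : ℂ).re, (p.1.toCircle : ℂ).im)))
    (f' := fun p => PP g (p.1, (Φ p.2.1 : ℝ × ℝ)) p.2.2) (Continuous.continuousOn ?_) (Continuous.continuousOn ?_) ?_ ?_ ?_
    (fun _ _ => Iff.rfl)
  · have c4 : Continuous fun p : 𝕋 × (FF g × 𝕋) => hh g p.2.1 := by fun_prop
    have c5 : Continuous fun p : 𝕋 × (FF g × 𝕋) => p.2.2 := by fun_prop
    exact ((by fun_prop : Continuous fun p : 𝕋 × (FF g × 𝕋) => (p.2.1 : ℝ × ℝ)).prodMk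
      ((c4.mul (c2.comp c5)).prodMk (c4.mul (c3.comp c5)))).prodMk
      ((c2.comp continuous_fst).prodMk (c3.comp continuous_fst))
  · exact PP_cont.comp (by fun_prop : Continuous fun p : 𝕋 × (FF g × 𝕋) =>
      (((p.1, (Φ p.2.1 : ℝ × ℝ)), p.2.2) : (𝕋 × ℝ²) × 𝕋))
  · ext ⟨⟨x, a, b⟩, c, d⟩
    constructor
    · rintro ⟨⟨t, x, θ⟩, -, e⟩
      rw [← e]
      refine ⟨⟨x.2, ?_⟩, ?_⟩
      · grind
      · grind
    · rintro ⟨⟨hx, h1⟩, h2⟩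
      obtain ⟨θ, hθ⟩ := circle_param (hh g x) a b (hh_nonneg g x) h1
      obtain ⟨t, ht⟩ := circle_param 1 c d zero_le_one h2
      rw [one_mul, one_mul] at ht
      exact ⟨(t, ⟨x, hx⟩, θ), trivial, by simp only [← hθ.1, ← hθ.2, ← ht.1, ← ht.2]⟩
  · ext x
    constructor
    · rintro ⟨⟨t, x, θ⟩, -, rfl⟩
      exact PP_mem (hΦG x) θ
    · intro hx
      obtain ⟨θ, e⟩ := XC_PP hx
      exact ⟨(x.1.1, Φ.symm ⟨x.1.2, hx.1⟩, θ), trivial, by simp only [Φ.apply_symm_apply]; exact e.symm⟩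
  · rintro ⟨t, x, θ⟩ - ⟨t', x', θ'⟩ -
    rw [PP_eq]
    simp only [Prod.mk.injEq]
    have ec : ∀ a b : 𝕋, (a.toCircle : ℂ).re = (b.toCircle : ℂ).re ∧
        (a.toCircle : ℂ).im = (b.toCircle : ℂ).im ↔ a = b := fun a b => by
      rw [← Complex.ext_iff]; exact hci.eq_iff
    rw [ec, Subtype.coe_inj, Subtype.coe_inj, Φ.injective.eq_iff, and_comm, and_assoc]
    refine and_congr_right fun _ => and_congr_right fun e => ?_
    subst e
    rw [mul_eq_mul_left_iff, mul_eq_mul_left_iff, ← and_or_right, ec, or_comm]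
    exact or_congr_left (hΦ x)

/-- The trisection of the product of the circle with the connected sum. -/
lemma existence {X : Type*} [TopologicalSpace X]
    (e : X ≃ₜ (sphere (0 : EuclideanSpace ℝ (Fin 2)) 1) × sumS1S2Set g) :
    Nonempty (Trisection X (3 * g + 1) (g + 1) (g + 1) (g + 1)) := by
  obtain ⟨Ψ, -⟩ := XX_XC (g := g)
  let E := (e.trans (prodHomeo g)).trans Ψ
  let φ : X → (𝕋 × ℝ²) × ℂ := Subtype.val ∘ E
  have hφ : Topology.IsEmbedding φ := Topology.IsEmbedding.subtypeVal.comp E.isEmbedding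
  have hr : range φ = XC g := by
    rw [range_comp, E.surjective.range_eq, image_univ, Subtype.range_coe]
  have hp : ∀ A : Set ((𝕋 × ℝ²) × ℂ), A ⊆ XC g → Nonempty (φ ⁻¹' A ≃ₜ A) := fun A hA =>
    ⟨hφ.homeomorphOfSubsetRange (hr ▸ hA)⟩
  obtain ⟨s0, s1, s2⟩ := S_sub (g := g)
  obtain ⟨r0, r1, r2⟩ := RR_S (g := g)
  obtain ⟨h0⟩ := S0_hb (g := g)
  obtain ⟨h01⟩ := S01_hb (g := g)
  obtain ⟨h012⟩ := S012_surf (g := g)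
  let p01 : S0 g ≃ₜ S1 g := RR.subtype r0
  let p12 : S1 g ≃ₜ S2 g := RR.subtype r1
  let q01 : (S0 g ∩ S1 g : Set _) ≃ₜ (S1 g ∩ S2 g : Set _) := RR.subtype fun x => and_congr (r0 x) (r1 x)
  let q12 : (S1 g ∩ S2 g : Set _) ≃ₜ (S0 g ∩ S2 g : Set _) :=
    RR.subtype fun x => (and_congr (r1 x) (r2 x)).trans and_comm
  refine ⟨⟨φ ⁻¹' S0 g, φ ⁻¹' S1 g, φ ⁻¹' S2 g, ?_, ⟨(hp _ s0).some.trans h0⟩,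
    ⟨(hp _ s1).some.trans (p01.symm.trans h0)⟩, ⟨(hp _ s2).some.trans (p12.symm.trans (p01.symm.trans h0))⟩,
    ⟨(hp _ (inter_subset_left.trans s0)).some.trans h01⟩,
    ⟨(hp _ (inter_subset_left.trans s1)).some.trans (q01.symm.trans h01)⟩,
    ⟨(hp _ (inter_subset_left.trans s0)).some.trans (q12.symm.trans (q01.symm.trans h01))⟩,
    ⟨(hp _ (inter_subset_left.trans (inter_subset_left.trans s0))).some.trans h012⟩⟩⟩
  exact eq_univ_of_forall fun x => S_cover (hr ▸ mem_range_self x)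

end

end AS

/-- Let `M = #^g (S¹ × S²)` and `X = S¹ × M`.  Then every `(g₀; k₁, k₂, k₃)`–trisection of
`X` has `g₀ ≥ 3g+1` and `kᵢ ≥ g+1` for each `i`; moreover `X` does admit a
`(3g+1; g+1)`–trisection (the one obtained from the trivial monodromy fixing the standard
genus `g` Heegaard splitting of `M`), which is therefore of minimal genus: the bound `3g+1`
cannot be improved in general. -/
theorem minimal_genus_trisection_S1_times_sumS1S2 (g : ℕ)
    (X : Type) [TopologicalSpace X]
    (hX : Nonempty (X ≃ₜ
      (↥(Metric.sphere (0 : EuclideanSpace ℝ (Fin 2)) 1) × ↥(sumS1S2Set g)))) :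
    (∀ g₀ k1 k2 k3 : ℕ, Nonempty (Trisection X g₀ k1 k2 k3) →
      3 * g + 1 ≤ g₀ ∧ g + 1 ≤ k1 ∧ g + 1 ≤ k2 ∧ g + 1 ≤ k3) ∧
    Nonempty (Trisection X (3 * g + 1) (g + 1) (g + 1) (g + 1)) := by
  obtain ⟨e⟩ := hX
  exact ⟨fun _ _ _ _ ⟨T⟩ => AS.lower_bound e T, AS.existence e⟩
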